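/- Let ε > 0 be arbitrary, let (c_k)_{k≥1} be a real sequence satisfying c_k ≥ 925/348 + ε for all k ≥ 1, and set C_k = c_1 ⋯ c_k. Then the set W(c_k) = {A > 1 : ⌊A^{C_k}⌋ is prime for all k ≥ 1} is uncountable, nowhere dense in ℝ, and has Lebesgue measure 0. -/

import Mathlib

/-!
Everything is done in the variable `θ = log A`. For an exponent `C` and an integer `m ≥ 1`, the `θ`
with `⌊e^{Cθ}⌋ = m` form an interval, the node of `m` at `C` (`nodeI`). After raising the exponent by
a factor `c`, the nodes of the integers `p` with `m^c ≤ p` and `p + 1 < (m+1)^c` lie inside the node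
of `m`; those with `p` prime are its children (`chil`).

**Uncountability.** Strong bounds for gaps between consecutive primes would show that every large
node has children, but it suffices to know this for almost all nodes. `almost_all` states that, for every `c ≥ 13/5` and all large `Y`, all but `O(Y exp(-(log Y)^{1/20} / 8000))` of the integers
`m ∈ [Y, 2Y)` have at least a constant times the expected number of children. Since
`13/5 < 925/348`, this covers the theorem. Given any sequence of points `t j`, the nodes at level `j`
that are exceptional or contain `t j` are charged with a weighted Lebesgue measure (`charge`), whose
weights compensate for the thinning of the tree; the exceptional sets are so small that the total
charge is below the length of the root interval (`charge_univ`). By pigeonhole a lightly charged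
node has a lightly charged child (`step`), and the resulting infinite branch avoids all exceptional
nodes and all `t j` (`tree`). Hence no sequence exhausts the set.

**Primes in almost all short intervals.** `Λ` is written as `μ * (1 * Λ)` and the factor from `μ` is
split smoothly by size (`decomp`). The small factors give a function linear in `u = log n`, bounded
below through Chebyshev's estimates (`lin_lower`). The large factors give a convolution `Fsum` whose
mean square is controlled, by Plancherel (`l2_bound`), by smoothed sums of `μ(n) n^{-1-it}`
(`Fsum_l2`); Chebyshev's inequality then bounds the exceptional set (`block`). The sums over `μ` are
small (`mu_smooth_bound`) because `ζ` has no zeros, and `1/ζ` is of moderate size, in the region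
`1 - σ ≪ (log t)^{-19/20}` (`zero_free`, `inv_zeta_bound`). A region of width `(log t)^{-α}` with
`α < 1` is indispensable, as `t` ranges up to a power of the length of the sum. It follows from
Landau's method and a bound for `ζ` to the left of `σ = 1` (`zeta_bound`), which rests on
Vinogradov's estimates for `∑ n^{-it}` (`zeta_sum`) and thus on his mean value theorem (`vmvt`),
proved from Linnik's lemma (`linnik`) by the `p`-adic iteration.

**Measure and category.** An even number follows each odd prime, so just above each point of the set
there are, at arbitrarily small scales, gaps of proportional length (`hole`). Such a porous set has
no density points, hence is null by Lebesgue's density theorem, and its closure has empty interior.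
Both properties are carried from `θ` to `A` by the exponential function.
-/


/-! ### Linnik's lemma -/

namespace Wright
open Finset

/-- By Newton's identities, equal power sums of degrees `1, …, k` force equal elementary symmetric
functions as soon as `1, …, k` are invertible. -/
lemma esymm_eq_of_psum {R : Type*} [CommRing R] (k : ℕ) (hu : ∀ j, 1 ≤ j → j ≤ k → IsUnit (j : R))
    (x y : Fin k → R) (h : ∀ j, 1 ≤ j → j ≤ k → ∑ i, x i ^ j = ∑ i, y i ^ j) :
    ∀ j ≤ k, (univ.val.map x).esymm j = (univ.val.map y).esymm j := by
  intro j
  induction j using Nat.strong_induction_on with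
  | _ j ih =>
    intro hj
    rcases Nat.eq_zero_or_pos j with rfl | hj0
    · simp [Multiset.esymm]
    · have key : ∀ z : Fin k → R, (j : R) * (univ.val.map z).esymm j = (-1) ^ (j + 1) *
          ∑ a ∈ antidiagonal j with a.1 < j, (-1) ^ a.1 * (univ.val.map z).esymm a.1 * ∑ i, z i ^ a.2 := by
        intro z
        have := congrArg (MvPolynomial.aeval z) (MvPolynomial.mul_esymm_eq_sum (Fin k) R j)
        simpa [MvPolynomial.aeval_esymm_eq_multiset_esymm, map_sum, map_mul, MvPolynomial.psum] using this
      apply (hu j hj0 hj).mul_left_cancel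
      rw [key, key]
      congr 1
      apply Finset.sum_congr rfl
      intro a ha
      simp only [mem_filter, HasAntidiagonal.mem_antidiagonal] at ha
      rw [ih a.1 ha.2 (by omega), h a.2 (by omega) (by omega)]

lemma prod_sub_eq_zero {R : Type*} [CommRing R] (k : ℕ) (hu : ∀ j, 1 ≤ j → j ≤ k → IsUnit (j : R))
    (x y : Fin k → R) (h : ∀ j, 1 ≤ j → j ≤ k → ∑ i, x i ^ j = ∑ i, y i ^ j) (l : Fin k) :
    ∏ i, (y l - x i) = 0 := by
  have e := esymm_eq_of_psum k hu x y h
  have h1 := Multiset.prod_X_sub_X_eq_sum_esymm (univ.val.map x)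
  have h2 := Multiset.prod_X_sub_X_eq_sum_esymm (univ.val.map y)
  have h3 : ((univ.val.map x).map fun t => Polynomial.X - Polynomial.C t).prod =
     ((univ.val.map y).map fun t => Polynomial.X - Polynomial.C t).prod := by
    rw [h1, h2]
    have c1 : (univ.val.map x).card = k := by simp
    have c2 : (univ.val.map y).card = k := by simp
    rw [c1, c2]
    apply Finset.sum_congr rfl
    intro j hj
    rw [e j (by simpa [Nat.lt_succ_iff] using hj)]
  rw [Multiset.map_map, Multiset.map_map] at h3
  change ∏ i, (Polynomial.X - Polynomial.C (x i)) = ∏ i, (Polynomial.X - Polynomial.C (y i)) at h3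
  have h4 := congrArg (Polynomial.eval (y l)) h3
  rw [Polynomial.eval_prod, Polynomial.eval_prod] at h4
  simp only [Polynomial.eval_sub, Polynomial.eval_X, Polynomial.eval_C] at h4
  rw [h4]
  exact Finset.prod_eq_zero (mem_univ l) (sub_self _)

/-- If the `xᵢ` are distinct modulo `p` and the `yᵢ` are distinct, equal power sums modulo `p ^ k`,
`k < p`, of degrees up to `k` force `y` to be a permutation of `x`. -/
lemma exists_perm {k p : ℕ} (hp : p.Prime) (hkp : k < p) (x y : Fin k → ZMod (p ^ k))
    (hx : ∀ i i', i ≠ i' → IsUnit (x i - x i')) (hy : Function.Injective y)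
    (h : ∀ j, 1 ≤ j → j ≤ k → ∑ i, x i ^ j = ∑ i, y i ^ j) :
    ∃ π : Equiv.Perm (Fin k), y = x ∘ π := by
  rcases Nat.eq_zero_or_pos k with rfl | hk
  · exact ⟨1, by ext i; exact i.elim0⟩
  have : Fact p.Prime := ⟨hp⟩
  have hunit : ∀ n : ℕ, IsUnit (n : ZMod (p ^ k)) ↔ ¬ p ∣ n := by
    intro n
    rw [ZMod.isUnit_iff_coprime, Nat.coprime_pow_right_iff hk, Nat.coprime_comm,
      hp.coprime_iff_not_dvd]
  have hu : ∀ j, 1 ≤ j → j ≤ k → IsUnit (j : ZMod (p ^ k)) := by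
    intro j h1 h2
    rw [hunit]
    intro hd
    have := Nat.le_of_dvd (by omega) hd
    omega
  have : NeZero (p ^ k) := ⟨by have := hp.pos; positivity⟩
  have hloc : ∀ a b : ZMod (p ^ k), ¬ IsUnit a → ¬ IsUnit b → ¬ IsUnit (a - b) := by
    intro a b ha hb hab
    have h1 := hunit a.val
    have h2 := hunit b.val
    rw [ZMod.natCast_zmod_val] at h1 h2
    have ha' := not_not.mp (mt h1.mpr ha)
    have hb' := not_not.mp (mt h2.mpr hb)
    obtain ⟨c, hc⟩ := ha'
    obtain ⟨d, hd⟩ := hb'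
    have e1 : a - b = (p : ZMod (p ^ k)) * (c - d) := by
      rw [← ZMod.natCast_zmod_val a, ← ZMod.natCast_zmod_val b, hc, hd]; push_cast; ring
    rw [e1] at hab
    exact ((hunit p).mp (isUnit_of_mul_isUnit_left hab)) (dvd_refl p)
  have hmem : ∀ l, ∃ i, y l = x i := by
    intro l
    have h0 := prod_sub_eq_zero k hu x y h l
    by_cases hall : ∀ i, IsUnit (y l - x i)
    · have : IsUnit (∏ i, (y l - x i)) := by
        rw [IsUnit.prod_univ_iff]; exact hall
      rw [h0] at this
      have h1 : IsUnit ((p ^ k : ℕ) : ZMod (p ^ k)) := by simpa using this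
      rw [hunit] at h1
      exact absurd (dvd_pow_self p (by omega)) h1
    · push Not at hall
      obtain ⟨i, hi⟩ := hall
      refine ⟨i, ?_⟩
      rw [← Finset.mul_prod_erase univ _ (mem_univ i)] at h0
      have : IsUnit (∏ i' ∈ univ.erase i, (y l - x i')) := by
        rw [IsUnit.prod_iff]
        intro i' hi'
        by_contra hn
        have := hloc _ _ hi hn
        apply this
        have := hx i' i (by simpa using hi')
        convert this using 1; ring
      rw [this.mul_left_eq_zero] at h0
      exact sub_eq_zero.mp h0
  choose π hπ using hmem
  have hinj : Function.Injective π := by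
    intro a b hab
    apply hy
    rw [hπ a, hπ b, hab]
  refine ⟨Equiv.ofBijective π (Finite.injective_iff_bijective.mp hinj), ?_⟩
  ext l
  simp [hπ l]

lemma card_lift (p k j : ℕ) (hp : 0 < p) (hj : j ≤ k) (h : ℕ) :
    (univ.filter fun y : Fin (p ^ k) => (y : ℕ) % p ^ j = h).card ≤ p ^ (k - j) := by
  have : (range (p ^ (k - j))).card = p ^ (k - j) := card_range _
  rw [← this]
  apply Finset.card_le_card_of_injOn (fun y : Fin (p ^ k) => (y : ℕ) / p ^ j)
  · intro y _
    simp only [coe_range, Set.mem_Iio]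
    apply Nat.div_lt_of_lt_mul
    rw [← pow_add, Nat.add_sub_cancel' hj]
    exact y.2
  · intro y hy z hz hyz
    simp only [mem_filter, mem_univ, true_and, SetLike.mem_coe] at hy hz
    ext
    rw [← Nat.div_add_mod (y : ℕ) (p ^ j), ← Nat.div_add_mod (z : ℕ) (p ^ j), hy, hz]
    simp only at hyz
    rw [hyz]

lemma prod_pow_sub (p k : ℕ) : ∏ j : Fin k, p ^ (k - (j + 1 : ℕ)) = p ^ (k * (k - 1) / 2) := by
  rw [Finset.prod_pow_eq_pow_sum]
  congr 1
  rw [← Finset.sum_range_id_mul_two, Nat.mul_div_cancel _ (by norm_num)]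
  rw [Fin.sum_univ_eq_sum_range (fun j => k - (j + 1))]
  rw [← Finset.sum_range_reflect]
  apply Finset.sum_congr rfl
  intro j hj
  simp at hj
  omega

/-- Linnik's lemma: the number of `k`-tuples with entries distinct modulo `p` whose shifted power sums
of degree `j` are prescribed modulo `p ^ j`, `1 ≤ j ≤ k`, is at most `k! p^{k(k-1)/2}`. The factor
`p^{k(k-1)/2}` counts the lifts of the data to modulus `p ^ k`, where `exists_perm` applies. -/
lemma linnik {k p X : ℕ} (hp : p.Prime) (hkp : k < p) (hX : X ≤ p ^ k) (b : ℤ) (h : Fin k → ℤ) :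
    (univ.filter fun u : Fin k → Fin X => (∀ i i', i ≠ i' → ¬ (p : ℤ) ∣ ((u i : ℕ) : ℤ) - ((u i' : ℕ) : ℤ)) ∧
      ∀ j : Fin k, (p : ℤ) ^ (j + 1 : ℕ) ∣ ∑ i, (((u i : ℕ) : ℤ) - b) ^ (j + 1 : ℕ) - h j).card ≤
    k.factorial * p ^ (k * (k - 1) / 2) := by
  classical
  have : Fact p.Prime := ⟨hp⟩
  have : NeZero (p ^ k) := ⟨by have := hp.pos; positivity⟩
  let φ : (Fin k → Fin X) → (Fin k → ZMod (p ^ k)) := fun u i => (((u i : ℕ) : ℤ) - b : ℤ)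
  have φinj : Function.Injective φ := by
    intro u v huv
    ext i
    have h1 := congrFun huv i
    simp only [φ] at h1
    push_cast at h1
    have h2 : ((u i : ℕ) : ZMod (p ^ k)) = ((v i : ℕ) : ZMod (p ^ k)) := by
      simpa using h1
    rw [ZMod.natCast_eq_natCast_iff'] at h2
    rwa [Nat.mod_eq_of_lt (lt_of_lt_of_le (u i).2 hX), Nat.mod_eq_of_lt (lt_of_lt_of_le (v i).2 hX)] at h2
  -- the power sums, as residues modulo `p ^ k`
  let Φ : (Fin k → Fin X) → (Fin k → Fin (p ^ k)) := fun u j =>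
    ⟨(∑ i, φ u i ^ (j + 1 : ℕ)).val, ZMod.val_lt _⟩
  let T : Finset (Fin k → Fin (p ^ k)) := Fintype.piFinset fun j : Fin k =>
    univ.filter fun y : Fin (p ^ k) => (y : ℕ) % p ^ (j + 1 : ℕ) = ((h j) % ((p : ℤ) ^ (j + 1 : ℕ))).toNat
  have hT : T.card ≤ p ^ (k * (k - 1) / 2) := by
    rw [Fintype.card_piFinset, ← prod_pow_sub]
    apply Finset.prod_le_prod'
    intro j _
    exact card_lift p k (j + 1) hp.pos j.2 _
  refine le_trans (Finset.card_le_mul_card_image_of_maps_to (f := Φ) (t := T) ?_ k.factorial ?_)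
    (Nat.mul_le_mul_left _ hT)
  · intro u hu
    simp only [mem_filter, mem_univ, true_and, SetLike.mem_coe] at hu
    simp only [T, Fintype.mem_piFinset, mem_filter, mem_univ, true_and, SetLike.mem_coe]
    intro j
    have h1 := hu.2 j
    have e1 : (∑ i, φ u i ^ (j + 1 : ℕ)) = ((∑ i, (((u i : ℕ) : ℤ) - b) ^ (j + 1 : ℕ) : ℤ) : ZMod (p ^ k)) := by
      simp [φ]
    have e2 : ((Φ u j : ℕ) : ℤ) = (∑ i, (((u i : ℕ) : ℤ) - b) ^ (j + 1 : ℕ)) % ((p ^ k : ℕ) : ℤ) := by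
      simp only [Φ]
      rw [e1, ZMod.val_intCast]
    have e3 : ((Φ u j : ℕ) : ℤ) % (p : ℤ) ^ (j + 1 : ℕ) = h j % (p : ℤ) ^ (j + 1 : ℕ) := by
      rw [e2]
      have hd : (p : ℤ) ^ (j + 1 : ℕ) ∣ ((p ^ k : ℕ) : ℤ) := by
        push_cast; exact pow_dvd_pow _ j.2
      rw [Int.emod_emod_of_dvd _ hd]
      exact Int.emod_eq_emod_iff_emod_sub_eq_zero.mpr (Int.emod_eq_zero_of_dvd h1)
    zify
    rw [e3, Int.toNat_of_nonneg]
    apply Int.emod_nonneg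
    have := hp.pos
    positivity
  · intro H _
    rcases Finset.eq_empty_or_nonempty ({u ∈ univ.filter fun u : Fin k → Fin X => (∀ i i', i ≠ i' → ¬ (p : ℤ) ∣ ((u i : ℕ) : ℤ) - ((u i' : ℕ) : ℤ)) ∧
      ∀ j : Fin k, (p : ℤ) ^ (j + 1 : ℕ) ∣ ∑ i, (((u i : ℕ) : ℤ) - b) ^ (j + 1 : ℕ) - h j | Φ u = H}) with he | ⟨u₀, hu₀⟩
    · rw [he]; simp
    · simp only [mem_filter, mem_univ, true_and] at hu₀
      have hk : (univ : Finset (Equiv.Perm (Fin k))).card = k.factorial := by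
        rw [Finset.card_univ, Fintype.card_perm, Fintype.card_fin]
      rw [← hk]
      refine le_trans (Finset.card_le_card (t := univ.image fun π : Equiv.Perm (Fin k) => u₀ ∘ π) ?_) Finset.card_image_le
      intro u hu
      simp only [mem_filter, mem_univ, true_and] at hu
      simp only [mem_image, mem_univ, true_and]
      have hunit : ∀ v : Fin k → Fin X, (∀ i i', i ≠ i' → ¬ (p : ℤ) ∣ ((v i : ℕ) : ℤ) - ((v i' : ℕ) : ℤ)) →
          ∀ i i', i ≠ i' → IsUnit (φ v i - φ v i') := by
        intro v hv i i' hii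
        have : φ v i - φ v i' = ((((v i : ℕ) : ℤ) - ((v i' : ℕ) : ℤ) : ℤ) : ZMod (p ^ k)) := by
          simp [φ]
        rw [this]
        have h2 := hv i i' hii
        have hc : IsCoprime (((v i : ℕ) : ℤ) - ((v i' : ℕ) : ℤ)) ((p ^ k : ℕ) : ℤ) := by
          push_cast
          apply IsCoprime.pow_right
          exact ((Prime.coprime_iff_not_dvd (Nat.prime_iff_prime_int.mp hp)).mpr h2).symm
        obtain ⟨a, c, hac⟩ := hc
        apply IsUnit.of_mul_eq_one (a : ZMod (p ^ k))
        have := congrArg (Int.cast : ℤ → ZMod (p ^ k)) hac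
        push_cast at this
        simp only [← Nat.cast_pow, ZMod.natCast_self] at this
        rw [mul_comm]
        push_cast
        simpa using this
      have hps : ∀ j, 1 ≤ j → j ≤ k → ∑ i, φ u₀ i ^ j = ∑ i, φ u i ^ j := by
        intro j h1 h2
        have h3 := congrFun (hu₀.2.trans hu.2.symm) ⟨j - 1, by omega⟩
        simp only [Φ, Fin.mk.injEq] at h3
        have h4 := ZMod.val_injective _ h3
        rwa [Nat.sub_add_cancel h1] at h4
      have hinj : Function.Injective (φ u) := by
        intro i i' hii
        by_contra hne
        have h5 := hunit u hu.1.1 i i' hne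
        rw [hii, sub_self] at h5
        have hk0 : 0 < k := i.pos
        have h6 : IsUnit ((p ^ k : ℕ) : ZMod (p ^ k)) := by simpa using h5
        rw [ZMod.isUnit_iff_coprime, Nat.coprime_self] at h6
        have := Nat.one_lt_pow (by omega : k ≠ 0) hp.one_lt
        omega
      obtain ⟨π, hπ⟩ := exists_perm hp hkp (φ u₀) (φ u) (hunit u₀ hu₀.1.1) hinj hps
      refine ⟨π, ?_⟩
      apply φinj
      rw [hπ]
      rfl
end Wright

/-! ### Collision counts and finite Fourier analysis -/

namespace Wright
open Finset

/-- The number of pairs with equal image. -/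
def coll {α G : Type*} [Fintype α] [DecidableEq G] (f : α → G) : ℕ :=
  (univ.filter fun q : α × α => f q.1 = f q.2).card

lemma card_fiber_sq_le {α G : Type*} [Fintype α] [DecidableEq G] (f : α → G) (w : G) :
    (univ.filter fun a => f a = w).card ^ 2 ≤ coll f := by
  rw [sq, ← Finset.card_product]
  apply Finset.card_le_card
  intro q hq
  simp only [mem_product, mem_filter, mem_univ, true_and] at hq ⊢
  rw [hq.1, hq.2]

lemma coll_eq_sum {α G : Type*} [Fintype α] [DecidableEq G] (f : α → G) :
    coll f = ∑ w ∈ univ.image f, (univ.filter fun a => f a = w).card ^ 2 := by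
  classical
  rw [coll, Finset.card_eq_sum_card_fiberwise (f := fun q : α × α => f q.2) (t := univ.image f)]
  · apply Finset.sum_congr rfl
    intro w _
    rw [sq, ← Finset.card_product]
    congr 1
    ext q
    simp only [mem_filter, mem_univ, true_and, mem_product]
    constructor
    · rintro ⟨h1, h2⟩; exact ⟨h1.trans h2, h2⟩
    · rintro ⟨h1, h2⟩; exact ⟨h1.trans h2.symm, h2⟩
  · intro q _; simp

lemma card_shift_le {α G : Type*} [Fintype α] [DecidableEq G] [AddCommGroup G] (f : α → G) (h : G) :
    (univ.filter fun q : α × α => f q.1 = f q.2 + h).card ≤ coll f := by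
  classical
  let R : G → ℕ := fun w => (univ.filter fun a => f a = w).card
  have e1 : (univ.filter fun q : α × α => f q.1 = f q.2 + h).card =
      ∑ w ∈ univ.image f, R (w + h) * R w := by
    rw [Finset.card_eq_sum_card_fiberwise (f := fun q : α × α => f q.2) (t := univ.image f)]
    · apply Finset.sum_congr rfl
      intro w _
      rw [← Finset.card_product]
      congr 1
      ext q
      simp only [mem_filter, mem_univ, true_and, mem_product]
      constructor
      · rintro ⟨h1, h2⟩; exact ⟨by rw [h1, h2], h2⟩
      · rintro ⟨h1, h2⟩; exact ⟨by rw [h1, h2], h2⟩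
    · intro q _; simp
  have e2 : ∑ w ∈ univ.image f, R (w + h) ^ 2 ≤ ∑ w ∈ univ.image f, R w ^ 2 := by
    rw [← Finset.sum_image (f := fun w => R w ^ 2) (g := fun w => w + h) (s := univ.image f)
      (by intro a _ b _ hab; simpa using hab)]
    apply Finset.sum_le_sum_of_ne_zero
    intro w _ hw
    have : R w ≠ 0 := by intro h0; exact hw (by simp [h0])
    obtain ⟨a, ha⟩ := Finset.card_pos.mp (Nat.pos_of_ne_zero this)
    simp only [mem_filter, mem_univ, true_and] at ha
    simp only [mem_image, mem_univ, true_and]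
    exact ⟨a, ha⟩
  have e3 : 2 * ∑ w ∈ univ.image f, R (w + h) * R w ≤
      ∑ w ∈ univ.image f, R (w + h) ^ 2 + ∑ w ∈ univ.image f, R w ^ 2 := by
    rw [← Finset.sum_add_distrib, Finset.mul_sum]
    apply Finset.sum_le_sum
    intro w _
    nlinarith [two_mul_le_add_sq (R (w + h)) (R w)]
  rw [e1, coll_eq_sum]
  change _ ≤ ∑ w ∈ univ.image f, R w ^ 2
  omega

lemma coll_le_of_bij {α β G : Type*} [Fintype α] [Fintype β] [DecidableEq G] (f : α → G) (g : β → G)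
    (e : α → β) (he : Function.Injective e) (h : ∀ a, f a = g (e a)) : coll f ≤ coll g := by
  apply Finset.card_le_card_of_injOn (fun q => (e q.1, e q.2))
  · intro q hq
    simp only [coe_filter, mem_univ, true_and, Set.mem_ofPred_eq] at hq ⊢
    rw [← h, ← h, hq]
  · intro a _ b _ hab
    simp only [Prod.mk.injEq] at hab
    exact Prod.ext (he hab.1) (he hab.2)

lemma card_mul_coll {α G : Type*} [Fintype α] [DecidableEq G] [AddCommGroup G] [Fintype G]
    (f : α → G) : (Fintype.card G : ℝ) * coll f = ∑ ψ : AddChar G ℂ, ‖∑ a, ψ (f a)‖ ^ 2 := by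
  have h : ((Fintype.card G : ℂ)) * (coll f : ℂ) = ∑ ψ : AddChar G ℂ, ((‖∑ a, ψ (f a)‖ : ℂ)) ^ 2 := by
    have e1 : ∀ ψ : AddChar G ℂ, ((‖∑ a, ψ (f a)‖ : ℂ)) ^ 2 = ∑ q : α × α, ψ (f q.1 - f q.2) := by
      intro ψ
      rw [← Complex.mul_conj', map_sum, Finset.sum_mul_sum, ← Finset.univ_product_univ, Finset.sum_product]
      apply Finset.sum_congr rfl; intro a _
      apply Finset.sum_congr rfl; intro b _
      rw [AddChar.map_sub_eq_div, div_eq_mul_inv, ← AddChar.map_neg_eq_inv, AddChar.map_neg_eq_conj]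
    simp_rw [e1]
    rw [Finset.sum_comm]
    simp_rw [AddChar.sum_apply_eq_ite]
    rw [← Finset.sum_filter, Finset.sum_const, nsmul_eq_mul, mul_comm, coll]
    simp_rw [sub_eq_zero]
  exact_mod_cast h

lemma norm_sq_sum_char {U γ G : Type*} [Fintype U] [Fintype γ] [AddCommGroup G]
    (F : U → G) (g : γ → G) (s : ℕ) (ψ : AddChar G ℂ) :
    ‖∑ a : U × (Fin s → γ), ψ (F a.1 + ∑ i, g (a.2 i))‖ ^ 2 =
        ‖∑ u, ψ (F u)‖ ^ 2 * ‖∑ x, ψ (g x)‖ ^ (2 * s) := by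
  classical
  have e : ∑ x : Fin s → γ, ψ (∑ i, g (x i)) = (∑ x, ψ (g x)) ^ s := by
    rw [Finset.sum_pow', Fintype.piFinset_univ]
    apply Finset.sum_congr rfl
    intro x _
    exact map_prod ψ.toMonoidHom (fun i => Multiplicative.ofAdd (g (x i))) univ
  rw [← Finset.univ_product_univ, Finset.sum_product]
  simp only [AddChar.map_add_eq_mul]
  simp_rw [← Finset.mul_sum]
  rw [← Finset.sum_mul, norm_mul, mul_pow, e, norm_pow]
  ring

/-- Colour `β` with `p` colours. Writing `coll` as a sum over characters and applying Hölder's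
inequality to the colour decomposition of `∑ₓ ψ (g x)`, the count with arbitrary `s`-tuples is at most
`p ^ (2s)` times the worst count with monochromatic `s`-tuples. -/
lemma coll_holder_finite {U β G : Type*} [Fintype U] [Fintype β] [DecidableEq G] [AddCommGroup G] [Fintype G]
    (F : U → G) (g : β → G) (s p : ℕ) (hs : 1 ≤ s) (hp : 1 ≤ p) (col : β → Fin p) (E : ℕ)
    (hE : ∀ b, coll (fun a : U × (Fin s → {x : β // col x = b}) => F a.1 + ∑ i, g (a.2 i)) ≤ E) :
    coll (fun a : U × (Fin s → β) => F a.1 + ∑ i, g (a.2 i)) ≤ p ^ (2 * s) * E := by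
  classical
  have hG : (0 : ℝ) < Fintype.card G := by exact_mod_cast Fintype.card_pos
  have key : (Fintype.card G : ℝ) * coll (fun a : U × (Fin s → β) => F a.1 + ∑ i, g (a.2 i)) ≤
      (Fintype.card G : ℝ) * ((p : ℝ) ^ (2 * s) * E) := by
    rw [card_mul_coll]
    simp_rw [norm_sq_sum_char F g]
    calc ∑ ψ : AddChar G ℂ, ‖∑ u, ψ (F u)‖ ^ 2 * ‖∑ x, ψ (g x)‖ ^ (2 * s)
        ≤ ∑ ψ : AddChar G ℂ, ‖∑ u, ψ (F u)‖ ^ 2 * ((p : ℝ) ^ (2 * s - 1) *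
            ∑ b : Fin p, ‖∑ x : {x : β // col x = b}, ψ (g x)‖ ^ (2 * s)) := by
          apply Finset.sum_le_sum
          intro ψ _
          apply mul_le_mul_of_nonneg_left _ (by positivity)
          have h1 : ∑ x, ψ (g x) = ∑ b : Fin p, ∑ x : {x : β // col x = b}, ψ (g x) := by
            rw [← Finset.sum_fiberwise univ col]
            apply Finset.sum_congr rfl
            intro b _
            rw [Finset.sum_subtype _ (p := fun x => col x = b) (by simp)]
          rw [h1]
          have h2 := pow_sum_div_card_le_sum_pow (s := (univ : Finset (Fin p)))
            (f := fun b => ‖∑ x : {x : β // col x = b}, ψ (g x)‖) (by intros; positivity) (2 * s - 1)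
          rw [Nat.sub_add_cancel (by omega), Finset.card_univ, Fintype.card_fin, div_le_iff₀ (by positivity)] at h2
          refine le_trans ?_ (h2.trans_eq (mul_comm _ _))
          gcongr
          exact norm_sum_le _ _
      _ = (p : ℝ) ^ (2 * s - 1) * ∑ b : Fin p, ∑ ψ : AddChar G ℂ, ‖∑ u, ψ (F u)‖ ^ 2 *
            ‖∑ x : {x : β // col x = b}, ψ (g x)‖ ^ (2 * s) := by
          rw [Finset.sum_comm, Finset.mul_sum]
          apply Finset.sum_congr rfl
          intro ψ _
          rw [← Finset.mul_sum]; ring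
      _ ≤ (p : ℝ) ^ (2 * s - 1) * ∑ b : Fin p, (Fintype.card G : ℝ) * E := by
          apply mul_le_mul_of_nonneg_left _ (by positivity)
          apply Finset.sum_le_sum
          intro b _
          have := card_mul_coll (fun a : U × (Fin s → {x : β // col x = b}) => F a.1 + ∑ i, g (a.2 i))
          simp_rw [norm_sq_sum_char F (fun x : {x : β // col x = b} => g x)] at this
          rw [← this]
          gcongr
          exact hE b
      _ = _ := by
          rw [Finset.sum_const, Finset.card_univ, Fintype.card_fin, nsmul_eq_mul]
          have : (p : ℝ) ^ (2 * s) = p ^ (2 * s - 1) * p := by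
            rw [← pow_succ, Nat.sub_add_cancel (by omega)]
          rw [this]; ring
  have := le_of_mul_le_mul_left key hG
  exact_mod_cast this

/-- Finitely many integer vectors can be told apart modulo a single `Q`. -/
lemma exists_modulus {α κ : Type*} [Fintype α] [Fintype κ] (H : α → κ → ℤ) :
    ∃ Q : ℕ, 0 < Q ∧ ∀ a b, (∀ j, ((H a j : ℤ) : ZMod Q) = (H b j : ℤ)) → H a = H b := by
  refine ⟨1 + ∑ a, ∑ b, ∑ j, (H a j - H b j).natAbs, by omega, ?_⟩
  intro a b h
  ext j
  have h1 := (ZMod.intCast_eq_intCast_iff_dvd_sub _ _ _).mp (h j)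
  have h2 : (H a j - H b j).natAbs ≤ ∑ a, ∑ b, ∑ j, (H a j - H b j).natAbs := by
    refine le_trans ?_ (Finset.single_le_sum (f := fun a => ∑ b, ∑ j, (H a j - H b j).natAbs) (by intros; positivity) (mem_univ a))
    refine le_trans ?_ (Finset.single_le_sum (f := fun b => ∑ j, (H a j - H b j).natAbs) (by intros; positivity) (mem_univ b))
    exact Finset.single_le_sum (f := fun j => (H a j - H b j).natAbs) (by intros; positivity) (mem_univ j)
  by_contra hne
  have h3 := Int.natAbs_dvd_natAbs.mpr h1
  have h4 := Nat.le_of_dvd (by omega) h3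
  simp only [Int.natAbs_natCast] at h4
  omega

/-- The integer version of `coll_holder_finite`, obtained by reducing modulo a large `Q`. -/
lemma coll_holder {U β κ : Type*} [Fintype U] [Fintype β] [Fintype κ] [DecidableEq κ]
    (F : U → κ → ℤ) (g : β → κ → ℤ) (s p : ℕ) (hs : 1 ≤ s) (hp : 1 ≤ p) (col : β → Fin p) (E : ℕ)
    (hE : ∀ b, coll (fun a : U × (Fin s → {x : β // col x = b}) => F a.1 + ∑ i, g (a.2 i)) ≤ E) :
    coll (fun a : U × (Fin s → β) => F a.1 + ∑ i, g (a.2 i)) ≤ p ^ (2 * s) * E := by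
  classical
  obtain ⟨Q, hQ, hinj⟩ := exists_modulus (fun a : U × (Fin s → β) => F a.1 + ∑ i, g (a.2 i))
  have : NeZero Q := ⟨by omega⟩
  let r : (κ → ℤ) →+ (κ → ZMod Q) :=
    { toFun := fun v j => (v j : ZMod Q), map_zero' := by ext; simp, map_add' := by intros; ext; simp }
  have e1 : coll (fun a : U × (Fin s → β) => F a.1 + ∑ i, g (a.2 i)) ≤
      coll (fun a : U × (Fin s → β) => r (F a.1) + ∑ i, r (g (a.2 i))) := by
    apply Finset.card_le_card
    intro q hq
    simp only [mem_filter, mem_univ, true_and] at hq ⊢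
    have := congrArg r hq
    simpa [map_sum] using this
  refine e1.trans (coll_holder_finite (fun u => r (F u)) (fun x => r (g x)) s p hs hp col E ?_)
  intro b
  refine le_trans ?_ (hE b)
  apply Finset.card_le_card
  intro q hq
  simp only [mem_filter, mem_univ, true_and] at hq ⊢
  apply hinj (q.1.1, fun i => q.1.2 i) (q.2.1, fun i => q.2.2 i)
  intro j
  have h1 : r (F q.1.1 + ∑ i, g (q.1.2 i)) = r (F q.2.1 + ∑ i, g (q.2.2 i)) := by
    simpa [map_sum] using hq
  exact congrFun h1 j
end Wright

/-! ### Vinogradov's mean value theorem -/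

namespace Wright
open Finset

/-- The point `(n, n², …, nᵏ)` of the moment curve. -/
def nu (k : ℕ) (n : ℤ) : Fin k → ℤ := fun j => n ^ (j + 1 : ℕ)

/-- Vinogradov's mean value: the number of solutions of `∑ xᵢ ^ j = ∑ yᵢ ^ j`, `1 ≤ j ≤ k`, with
the `x`s and `y`s indexed by `ι` and lying in `[0, X)`. -/
def Jv (k : ℕ) (ι : Type) [Fintype ι] [DecidableEq ι] (X : ℕ) : ℕ :=
  coll (fun x : ι → Fin X => ∑ i, nu k ((x i : ℕ) : ℤ))

lemma Jv_congr (k : ℕ) {ι ι' : Type} [Fintype ι] [DecidableEq ι] [Fintype ι'] [DecidableEq ι']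
    (e : ι ≃ ι') (X : ℕ) : Jv k ι X ≤ Jv k ι' X := by
  apply coll_le_of_bij _ _ (fun x => x ∘ e.symm)
  · intro x y h
    ext i
    have := congrFun h (e i)
    simp at this
    rw [this]
  · intro x
    simp only [Function.comp]
    rw [← Equiv.sum_comp e]
    simp

/-- The `k`-tuples in `[0, X)` with coordinates pairwise distinct modulo `p`. -/
abbrev Udist (k p X : ℕ) : Type := {u : Fin k → Fin X // ∀ i i', i ≠ i' → ¬ (p : ℤ) ∣ ((u i : ℕ) : ℤ) - ((u i' : ℕ) : ℤ)}

lemma shift_eq {k : ℕ} {ι κ : Type} [Fintype ι] [Fintype κ] (u v : ι → ℤ) (x y : κ → ℤ) (b : ℤ)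
    (h : ∑ i, nu k (u i) + ∑ i, nu k (x i) = ∑ i, nu k (v i) + ∑ i, nu k (y i)) (j : Fin k) :
    ∑ i, (u i - b) ^ (j + 1 : ℕ) + ∑ i, (x i - b) ^ (j + 1 : ℕ) =
      ∑ i, (v i - b) ^ (j + 1 : ℕ) + ∑ i, (y i - b) ^ (j + 1 : ℕ) := by
  have h1 : ∀ r, r ≤ k → ∑ i, u i ^ r + ∑ i, x i ^ r = ∑ i, v i ^ r + ∑ i, y i ^ r := by
    intro r hr
    rcases Nat.eq_zero_or_pos r with rfl | h0
    · simp
    · have := congrFun h ⟨r - 1, by omega⟩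
      simpa [nu, Nat.sub_add_cancel h0] using this
  have h2 : ∀ {τ : Type} [Fintype τ] (w : τ → ℤ), ∑ i, (w i - b) ^ (j + 1 : ℕ) =
      ∑ r ∈ range (j + 1 + 1 : ℕ), (∑ i, w i ^ r) * ((-b) ^ (j + 1 - r : ℕ) * ((j + 1 : ℕ).choose r)) := by
    intro τ _ w
    simp_rw [Finset.sum_mul]
    rw [Finset.sum_comm]
    apply Finset.sum_congr rfl
    intro i _
    rw [sub_eq_add_neg, add_pow]
    apply Finset.sum_congr rfl
    intro r _
    ring
  simp only [h2]
  rw [← Finset.sum_add_distrib, ← Finset.sum_add_distrib]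
  apply Finset.sum_congr rfl
  intro r hr
  simp only [mem_range] at hr
  rw [← add_mul, ← add_mul, h1 r (by omega)]

/-- Solutions in which the last `s` variables lie in a single class modulo `p`: shifting by the class makes
them divisible by `p`, so the distinct block satisfies congruences modulo `p, p², …, pᵏ`, counted by
`linnik`, while the last `s` variables rescale to a mean value of length `X / p + 1`. -/
lemma residue_class_count {k s p X : ℕ} (hp : p.Prime) (hkp : k < p) (hX : X ≤ p ^ k) (b : Fin p) :
    coll (fun a : Udist k p X × (Fin s → {x : Fin X // (⟨(x : ℕ) % p, Nat.mod_lt _ hp.pos⟩ : Fin p) = b}) =>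
      ∑ i, nu k ((a.1.1 i : ℕ) : ℤ) + ∑ i, nu k (((a.2 i).1 : ℕ) : ℤ)) ≤
    X ^ k * (k.factorial * p ^ (k * (k - 1) / 2)) * Jv k (Fin s) (X / p + 1) := by
  classical
  set S := {x : Fin X // (⟨(x : ℕ) % p, Nat.mod_lt _ hp.pos⟩ : Fin p) = b} with hS
  have hpos : (0 : ℤ) < p := by exact_mod_cast hp.pos
  have hSx : ∀ x : S, ((x.1 : ℕ) : ℤ) - ((b : ℕ) : ℤ) = p * (((x.1 : ℕ) / p : ℕ) : ℤ) := by
    intro x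
    have h1 : (x.1 : ℕ) % p = b := congrArg Fin.val x.2
    have := Nat.div_add_mod (x.1 : ℕ) p
    rw [h1] at this
    have h3 : ((x.1 : ℕ) : ℤ) = p * (((x.1 : ℕ) / p : ℕ) : ℤ) + (b : ℕ) := by exact_mod_cast this.symm
    rw [h3]; ring
  let q : S → Fin (X / p + 1) := fun x => ⟨(x.1 : ℕ) / p, Nat.lt_succ_of_le (Nat.div_le_div_right (le_of_lt x.1.2))⟩
  have qinj : Function.Injective q := by
    intro x y h
    simp only [q, Fin.mk.injEq] at h
    have h1 := hSx x
    have h2 := hSx y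
    rw [h] at h1
    apply Subtype.ext
    apply Fin.ext
    have : ((x.1 : ℕ) : ℤ) = ((y.1 : ℕ) : ℤ) := by linarith
    exact_mod_cast this
  let L : Finset (Udist k p X × Udist k p X) := univ.filter fun w =>
    ∀ j : Fin k, (p : ℤ) ^ (j + 1 : ℕ) ∣ ∑ i, (((w.1.1 i : ℕ) : ℤ) - (b : ℕ)) ^ (j + 1 : ℕ) -
      ∑ i, (((w.2.1 i : ℕ) : ℤ) - (b : ℕ)) ^ (j + 1 : ℕ)
  have hL : L.card ≤ X ^ k * (k.factorial * p ^ (k * (k - 1) / 2)) := by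
    have := Finset.card_le_mul_card_image_of_maps_to (s := L) (f := fun w => w.2.1) (t := univ)
      (by intro w _; simp) (k.factorial * p ^ (k * (k - 1) / 2)) (by
        intro v _
        refine le_trans ?_ (linnik hp hkp hX (b : ℕ) (fun j => ∑ i, (((v i : ℕ) : ℤ) - (b : ℕ)) ^ (j + 1 : ℕ)))
        apply Finset.card_le_card_of_injOn (fun w => w.1.1)
        · intro w hw
          simp only [L, coe_filter, mem_filter, mem_univ, true_and, Set.mem_ofPred_eq] at hw ⊢
          refine ⟨w.1.2, fun j => ?_⟩
          have := hw.1 j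
          rwa [hw.2] at this
        · intro w hw w' hw' h
          simp only [L, coe_filter, mem_filter, mem_univ, true_and, Set.mem_ofPred_eq] at hw hw' h
          exact Prod.ext (Subtype.ext h) (Subtype.ext (hw.2.trans hw'.2.symm)))
    refine this.trans (le_of_eq ?_)
    rw [Finset.card_univ, Fintype.card_fun, Fintype.card_fin, Fintype.card_fin]
    ring
  refine le_trans (Finset.card_le_mul_card_image_of_maps_to (f := fun z => (z.1.1, z.2.1)) (t := L) ?_
    (Jv k (Fin s) (X / p + 1)) ?_) (by rw [mul_comm]; exact Nat.mul_le_mul_right _ hL)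
  · intro z hz
    simp only [mem_filter, mem_univ, true_and, SetLike.mem_coe, L] at hz ⊢
    intro j
    have h1 := shift_eq _ _ _ _ ((b : ℕ) : ℤ) hz j
    simp only [hSx, mul_pow] at h1
    rw [← Finset.mul_sum, ← Finset.mul_sum] at h1
    refine ⟨∑ i, ((((z.2.2 i).1 : ℕ) / p : ℕ) : ℤ) ^ (j + 1 : ℕ) - ∑ i, ((((z.1.2 i).1 : ℕ) / p : ℕ) : ℤ) ^ (j + 1 : ℕ), ?_⟩
    linear_combination h1
  · intro w hw
    refine le_trans ?_ (card_shift_le (fun x : Fin s → Fin (X / p + 1) => ∑ i, nu k ((x i : ℕ) : ℤ))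
      (fun j => (∑ i, (((w.2.1 i : ℕ) : ℤ) - (b : ℕ)) ^ (j + 1 : ℕ) -
        ∑ i, (((w.1.1 i : ℕ) : ℤ) - (b : ℕ)) ^ (j + 1 : ℕ)) / (p : ℤ) ^ (j + 1 : ℕ)))
    apply Finset.card_le_card_of_injOn (fun z => (fun i => q (z.1.2 i), fun i => q (z.2.2 i)))
    · intro z hz
      simp only [coe_filter, mem_filter, mem_univ, true_and, Set.mem_ofPred_eq] at hz ⊢
      ext j
      have h1 := shift_eq _ _ _ _ ((b : ℕ) : ℤ) hz.1 j
      simp only [hSx, mul_pow] at h1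
      rw [← Finset.mul_sum, ← Finset.mul_sum] at h1
      rw [← hz.2]
      simp only [Pi.add_apply, Finset.sum_apply, nu, q]
      have e : (∑ i, (((z.2.1.1 i : ℕ) : ℤ) - (b : ℕ)) ^ (j + 1 : ℕ) -
        ∑ i, (((z.1.1.1 i : ℕ) : ℤ) - (b : ℕ)) ^ (j + 1 : ℕ)) = (p : ℤ) ^ (j + 1 : ℕ) *
         (∑ i, ((((z.1.2 i).1 : ℕ) / p : ℕ) : ℤ) ^ (j + 1 : ℕ) - ∑ i, ((((z.2.2 i).1 : ℕ) / p : ℕ) : ℤ) ^ (j + 1 : ℕ)) := by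
        linear_combination -h1
      rw [e, Int.mul_ediv_cancel_left _ (by positivity)]
      ring
    · intro z hz z' hz' h
      simp only [coe_filter, mem_filter, mem_univ, true_and, Set.mem_ofPred_eq, Prod.mk.injEq] at hz hz' h
      have a1 := hz.2.trans hz'.2.symm
      rw [Prod.mk.injEq] at a1
      refine Prod.ext (Prod.ext a1.1 ?_) (Prod.ext a1.2 ?_)
      · funext i; exact qinj (congrFun h.1 i)
      · funext i; exact qinj (congrFun h.2 i)

/-- Solutions in which both sides have a block of `k` coordinates distinct modulo `p`. -/
lemma type_one {k s p X : ℕ} (hs : 1 ≤ s) (hp : p.Prime) (hkp : k < p) (hX : X ≤ p ^ k) :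
    coll (fun a : Udist k p X × (Fin s → Fin X) =>
      ∑ i, nu k ((a.1.1 i : ℕ) : ℤ) + ∑ i, nu k ((a.2 i : ℕ) : ℤ)) ≤
    p ^ (2 * s) * (X ^ k * (k.factorial * p ^ (k * (k - 1) / 2)) * Jv k (Fin s) (X / p + 1)) :=
  coll_holder (fun u : Udist k p X => ∑ i, nu k ((u.1 i : ℕ) : ℤ)) (fun x : Fin X => nu k ((x : ℕ) : ℤ))
    s p hs hp.one_le (fun x => ⟨(x : ℕ) % p, Nat.mod_lt _ hp.pos⟩) _
    (fun b => residue_class_count hp hkp hX b)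
end Wright

namespace Wright
open Finset

lemma exists_equiv_inl {k s : ℕ} (σ : Fin k → Fin k ⊕ Fin s) (hσ : Function.Injective σ) :
    ∃ e : Fin k ⊕ Fin s ≃ Fin k ⊕ Fin s, ∀ i, e (Sum.inl i) = σ i := by
  classical
  let e1 : Fin k ≃ Set.range σ := Equiv.ofInjective σ hσ
  have hc : Fintype.card (Fin s) = Fintype.card ((Set.range σ)ᶜ : Set (Fin k ⊕ Fin s)) := by
    rw [Fintype.card_compl_set, Fintype.card_congr e1.symm]
    simp
  let e2 : Fin s ≃ ((Set.range σ)ᶜ : Set (Fin k ⊕ Fin s)) := Fintype.equivOfCardEq hc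
  refine ⟨(Equiv.sumCongr e1 e2).trans (Equiv.Set.sumCompl (Set.range σ)), ?_⟩
  intro i
  simp [e1]

/-- The coordinates of `x` at the places `σ` are pairwise distinct modulo `p`. -/
def DistAt {k X : ℕ} {ι : Type} (p : ℕ) (x : ι → Fin X) (σ : Fin k → ι) : Prop :=
  ∀ i i', i ≠ i' → ¬ (p : ℤ) ∣ ((x (σ i) : ℕ) : ℤ) - ((x (σ i') : ℕ) : ℤ)

lemma card_mod_eq (X p : ℕ) (b : ℕ) :
    (univ.filter fun n : Fin X => (n : ℕ) % p = b).card ≤ X / p + 1 := by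
  have : (range (X / p + 1)).card = X / p + 1 := card_range _
  rw [← this]
  apply Finset.card_le_card_of_injOn (fun n : Fin X => (n : ℕ) / p)
  · intro n _
    simp only [coe_range, Set.mem_Iio]
    exact Nat.lt_succ_of_le (Nat.div_le_div_right n.2.le)
  · intro y hy z hz hyz
    simp only [mem_filter, mem_univ, true_and, SetLike.mem_coe] at hy hz
    ext
    rw [← Nat.div_add_mod (y : ℕ) p, ← Nat.div_add_mod (z : ℕ) p, hy, hz]
    simp only at hyz
    rw [hyz]

open Classical in
/-- Tuples without `k` coordinates distinct modulo `p` meet at most `k - 1` residue classes. -/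
lemma card_bad {k p X : ℕ} {ι : Type} [Fintype ι] (hk : 1 ≤ k) (hkp : k < p) :
    (univ.filter fun x : ι → Fin X => ¬ ∃ σ : Fin k → ι, DistAt p x σ).card ≤
      p ^ (k - 1) * (k * (X / p + 1)) ^ Fintype.card ι := by
  have hp0 : 0 < p := by omega
  let A : Finset (Fin p) → Finset (Fin X) := fun T =>
    univ.filter fun n => (⟨(n : ℕ) % p, Nat.mod_lt _ hp0⟩ : Fin p) ∈ T
  have hA : ∀ T ∈ powersetCard (k - 1) (univ : Finset (Fin p)), (A T).card ≤ k * (X / p + 1) := by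
    intro T hT
    have hT' := (mem_powersetCard.mp hT).2
    have : A T ⊆ T.biUnion fun b => univ.filter fun n : Fin X => (n : ℕ) % p = b := by
      intro n hn
      simp only [A, mem_filter, mem_univ, true_and] at hn
      simp only [mem_biUnion, mem_filter, mem_univ, true_and]
      exact ⟨_, hn, rfl⟩
    refine (card_le_card this).trans ((card_biUnion_le_card_mul _ _ (X / p + 1) ?_).trans ?_)
    · intro b _; exact card_mod_eq X p b
    · exact Nat.mul_le_mul_right _ (by omega)
  have hsub : (univ.filter fun x : ι → Fin X => ¬ ∃ σ : Fin k → ι, DistAt p x σ) ⊆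
      (powersetCard (k - 1) (univ : Finset (Fin p))).biUnion fun T => Fintype.piFinset fun _ : ι => A T := by
    intro x hx
    simp only [mem_filter, mem_univ, true_and] at hx
    let T := univ.image fun i => (⟨(x i : ℕ) % p, Nat.mod_lt _ hp0⟩ : Fin p)
    have hT : T.card ≤ k - 1 := by
      by_contra hcon
      apply hx
      obtain ⟨T', hT'T, hT'⟩ := Finset.exists_subset_card_eq (show k ≤ T.card by omega)
      have e := (Finset.equivFinOfCardEq hT').symm
      have hch : ∀ i : Fin k, ∃ j : ι, (⟨(x j : ℕ) % p, Nat.mod_lt _ hp0⟩ : Fin p) = (e i).1 := by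
        intro i
        have := hT'T (e i).2
        simpa [T] using this
      choose σ hσ using hch
      refine ⟨σ, fun i i' hii hd => hii ?_⟩
      apply e.injective
      apply Subtype.ext
      rw [← hσ, ← hσ]
      apply Fin.ext
      have h1 : (p : ℤ) ∣ ((x (σ i') : ℕ) : ℤ) - ((x (σ i) : ℕ) : ℤ) := by
        rw [← neg_sub]; exact (dvd_neg).mpr hd
      exact (Nat.modEq_iff_dvd.mpr h1)
    obtain ⟨T', hTT', -, hT'⟩ := Finset.exists_subsuperset_card_eq (subset_univ T) hT
      (by simp; omega)
    simp only [mem_biUnion, mem_powersetCard, Fintype.mem_piFinset]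
    refine ⟨T', ⟨subset_univ _, hT'⟩, fun i => ?_⟩
    simp only [A, mem_filter, mem_univ, true_and]
    exact hTT' (by simp only [T, mem_image, mem_univ, true_and]; exact ⟨i, rfl⟩)
  refine (card_le_card hsub).trans ((card_biUnion_le_card_mul _ _ ((k * (X / p + 1)) ^ Fintype.card ι) ?_).trans ?_)
  · intro T hT
    rw [Fintype.card_piFinset, Finset.prod_const, card_univ]
    exact Nat.pow_le_pow_left (hA T hT) _
  · apply Nat.mul_le_mul_right
    rw [card_powersetCard, card_univ, Fintype.card_fin]
    exact Nat.choose_le_pow _ _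

open Classical in
/-- Permuting the coordinates moves the distinct blocks, at `σ` and `τ`, to the front. -/
lemma card_dist_pair {k s p X : ℕ} (σ τ : Fin k → Fin k ⊕ Fin s) :
    (univ.filter fun q : (Fin k ⊕ Fin s → Fin X) × (Fin k ⊕ Fin s → Fin X) =>
      ∑ i, nu k ((q.1 i : ℕ) : ℤ) = ∑ i, nu k ((q.2 i : ℕ) : ℤ) ∧ DistAt p q.1 σ ∧ DistAt p q.2 τ).card ≤
    coll (fun a : Udist k p X × (Fin s → Fin X) =>
      ∑ i, nu k ((a.1.1 i : ℕ) : ℤ) + ∑ i, nu k ((a.2 i : ℕ) : ℤ)) := by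
  have hinj : ∀ (x : Fin k ⊕ Fin s → Fin X) (σ : Fin k → Fin k ⊕ Fin s), DistAt p x σ → Function.Injective σ := by
    intro x σ h i i' hii
    by_contra hne
    exact h i i' hne (by rw [hii]; simp)
  by_cases hσ : Function.Injective σ
  swap
  · rw [Finset.filter_false_of_mem]; · simp
    intro q _ h
    exact hσ (hinj _ _ h.2.1)
  by_cases hτ : Function.Injective τ
  swap
  · rw [Finset.filter_false_of_mem]; · simp
    intro q _ h
    exact hτ (hinj _ _ h.2.2)
  obtain ⟨e, he⟩ := exists_equiv_inl σ hσ
  obtain ⟨f, hf⟩ := exists_equiv_inl τ hτ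
  rw [← Fintype.card_coe]
  rw [coll, ← Fintype.card_coe]
  have hsum : ∀ (e : Fin k ⊕ Fin s ≃ Fin k ⊕ Fin s) (x : Fin k ⊕ Fin s → Fin X),
      ∑ i, nu k ((x (e (Sum.inl i)) : ℕ) : ℤ) + ∑ i, nu k ((x (e (Sum.inr i)) : ℕ) : ℤ) = ∑ i, nu k ((x i : ℕ) : ℤ) := by
    intro e x
    rw [← Equiv.sum_comp e (fun i => nu k ((x i : ℕ) : ℤ)), Fintype.sum_sum_type]
  refine Fintype.card_le_of_injective (fun q => ⟨((⟨fun i => q.1.1 (e (Sum.inl i)), ?_⟩, fun i => q.1.1 (e (Sum.inr i))),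
    (⟨fun i => q.1.2 (f (Sum.inl i)), ?_⟩, fun i => q.1.2 (f (Sum.inr i)))), ?_⟩) ?_
  · have := (mem_filter.mp q.2).2.2.1
    intro i i' h
    simp only [he]
    exact this i i' h
  · have := (mem_filter.mp q.2).2.2.2
    intro i i' h
    simp only [hf]
    exact this i i' h
  · have := (mem_filter.mp q.2).2.1
    simp only [mem_filter, mem_univ, true_and]
    rw [hsum, hsum]
    exact this
  · intro q q' h
    simp only [Subtype.mk.injEq, Prod.mk.injEq] at h
    obtain ⟨⟨h1, h2⟩, h3, h4⟩ := h
    apply Subtype.ext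
    refine Prod.ext ?_ ?_
    · funext i
      rw [← e.apply_symm_apply i]
      rcases e.symm i with j | j
      · exact congrFun h1 j
      · exact congrFun h2 j
    · funext i
      rw [← f.apply_symm_apply i]
      rcases f.symm i with j | j
      · exact congrFun h3 j
      · exact congrFun h4 j

/-- Vinogradov's recurrence: either one side lacks a distinct block (first term), or both sides have one
(second term, by `type_one` and a choice of the two blocks). -/
lemma recurrence {k s p X : ℕ} (hk : 1 ≤ k) (hs : 1 ≤ s) (hp : p.Prime) (hkp : k < p) (hX : X ≤ p ^ k) :
    Jv k (Fin k ⊕ Fin s) X ≤ 4 * (p ^ (k - 1) * (k * (X / p + 1)) ^ (k + s)) ^ 2 +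
      2 * ((k + s) ^ (2 * k) * (p ^ (2 * s) * (X ^ k * (k.factorial * p ^ (k * (k - 1) / 2)) *
        Jv k (Fin s) (X / p + 1)))) := by
  classical
  set J := Jv k (Fin k ⊕ Fin s) X with hJ
  set N := coll (fun a : Udist k p X × (Fin s → Fin X) =>
      ∑ i, nu k ((a.1.1 i : ℕ) : ℤ) + ∑ i, nu k ((a.2 i : ℕ) : ℤ)) with hN
  have hNle := type_one (X := X) hs hp hkp hX
  rw [← hN] at hNle
  let f : (Fin k ⊕ Fin s → Fin X) → Fin k → ℤ := fun x => ∑ i, nu k ((x i : ℕ) : ℤ)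
  let good : (Fin k ⊕ Fin s → Fin X) → Prop := fun x => ∃ σ : Fin k → Fin k ⊕ Fin s, DistAt p x σ
  set a := (univ.filter fun x => ¬ good x).card with ha
  have hale : a ≤ p ^ (k - 1) * (k * (X / p + 1)) ^ (k + s) := by
    have := card_bad (X := X) (ι := Fin k ⊕ Fin s) hk hkp
    rw [Fintype.card_sum, Fintype.card_fin, Fintype.card_fin] at this
    convert this
  have hR : ∀ w, (univ.filter fun x => f x = w).card ≤ Nat.sqrt J := by
    intro w
    rw [Nat.le_sqrt']
    exact card_fiber_sq_le f w
  have h1 : (univ.filter fun q : (Fin k ⊕ Fin s → Fin X) × (Fin k ⊕ Fin s → Fin X) => f q.1 = f q.2 ∧ ¬ good q.1).card ≤ Nat.sqrt J * a := by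
    apply Finset.card_le_mul_card_image_of_maps_to (f := Prod.fst)
    · intro q hq
      simp only [mem_filter, mem_univ, true_and, SetLike.mem_coe] at hq ⊢
      exact hq.2
    · intro x _
      refine le_trans ?_ (hR (f x))
      apply Finset.card_le_card_of_injOn Prod.snd
      · intro q hq
        simp only [mem_filter, mem_univ, true_and, SetLike.mem_coe] at hq ⊢
        rw [← hq.2, hq.1.1]
      · intro q hq q' hq' h
        simp only [mem_filter, mem_univ, true_and, SetLike.mem_coe] at hq hq'
        exact Prod.ext (hq.2.trans hq'.2.symm) h
  have h2 : (univ.filter fun q : (Fin k ⊕ Fin s → Fin X) × (Fin k ⊕ Fin s → Fin X) => f q.1 = f q.2 ∧ ¬ good q.2).card ≤ Nat.sqrt J * a := by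
    apply Finset.card_le_mul_card_image_of_maps_to (f := Prod.snd)
    · intro q hq
      simp only [mem_filter, mem_univ, true_and, SetLike.mem_coe] at hq ⊢
      exact hq.2
    · intro x _
      refine le_trans ?_ (hR (f x))
      apply Finset.card_le_card_of_injOn Prod.fst
      · intro q hq
        simp only [mem_filter, mem_univ, true_and, SetLike.mem_coe] at hq ⊢
        rw [← hq.2, hq.1.1]
      · intro q hq q' hq' h
        simp only [mem_filter, mem_univ, true_and, SetLike.mem_coe] at hq hq'
        exact Prod.ext h (hq.2.trans hq'.2.symm)
  have h3 : (univ.filter fun q : (Fin k ⊕ Fin s → Fin X) × (Fin k ⊕ Fin s → Fin X) => f q.1 = f q.2 ∧ good q.1 ∧ good q.2).card ≤ (k + s) ^ (2 * k) * N := by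
    have hsub : (univ.filter fun q : (Fin k ⊕ Fin s → Fin X) × (Fin k ⊕ Fin s → Fin X) => f q.1 = f q.2 ∧ good q.1 ∧ good q.2) ⊆
      (univ : Finset ((Fin k → Fin k ⊕ Fin s) × (Fin k → Fin k ⊕ Fin s))).biUnion fun w =>
        univ.filter fun q : (Fin k ⊕ Fin s → Fin X) × (Fin k ⊕ Fin s → Fin X) =>
      ∑ i, nu k ((q.1 i : ℕ) : ℤ) = ∑ i, nu k ((q.2 i : ℕ) : ℤ) ∧ DistAt p q.1 w.1 ∧ DistAt p q.2 w.2 := by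
      intro q hq
      simp only [mem_filter, mem_univ, true_and] at hq
      obtain ⟨h0, ⟨σ, hσ⟩, ⟨τ, hτ⟩⟩ := hq
      simp only [mem_biUnion, mem_filter, mem_univ, true_and]
      exact ⟨(σ, τ), h0, hσ, hτ⟩
    refine (card_le_card hsub).trans ((card_biUnion_le_card_mul _ _ N ?_).trans (le_of_eq ?_))
    · intro w _
      exact card_dist_pair w.1 w.2
    · congr 1
      rw [card_univ, Fintype.card_prod, Fintype.card_fun, Fintype.card_sum]
      simp only [Fintype.card_fin]
      rw [two_mul, pow_add]
  have h4 : J ≤ Nat.sqrt J * a + Nat.sqrt J * a + (k + s) ^ (2 * k) * N := by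
    refine le_trans ?_ (add_le_add (add_le_add h1 h2) h3)
    refine le_trans ?_ (Nat.add_le_add_right (card_union_le _ _) _)
    refine le_trans ?_ (card_union_le _ _)
    apply card_le_card
    intro q hq
    have hq' := (mem_filter.mp hq).2
    simp only [mem_union, mem_filter, mem_univ, true_and]
    have hq'' : f q.1 = f q.2 := hq'
    tauto
  have h5 : 2 * (Nat.sqrt J * a + Nat.sqrt J * a) ≤ J + 4 * a ^ 2 := by
    have := Nat.sqrt_le' J
    nlinarith [two_mul_le_add_sq (Nat.sqrt J) (2 * a)]
  have h6 : J ≤ 4 * a ^ 2 + 2 * ((k + s) ^ (2 * k) * N) := by omega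
  refine h6.trans ?_
  gcongr
end Wright

namespace Wright
open Finset

lemma Jv_trivial (k m X : ℕ) : (Jv k (Fin m) X : ℝ) ≤ (X : ℝ) ^ (2 * m) := by
  have h : Jv k (Fin m) X ≤ X ^ (2 * m) := by
    refine (card_filter_le _ _).trans (le_of_eq ?_)
    rw [card_univ, Fintype.card_prod, Fintype.card_fun, Fintype.card_fin, Fintype.card_fin, two_mul, pow_add]
  exact_mod_cast h

/-- Absorption of all the constants of `recurrence` into `(4k)^{6k³}`. -/
lemma numeric_D {k s : ℕ} (hk : 8 ≤ k) (hs2 : s + k ≤ 2 * k ^ 3) (A : ℝ) (hA : 1 ≤ A) :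
    4 * (2 * k : ℝ) ^ (2 * (k + s)) + 2 * ((k + s : ℕ) : ℝ) ^ (2 * k) * (k.factorial : ℝ) * 2 ^ (2 * s) * 4 ^ (k ^ 2) * A ≤
      (4 * k : ℝ) ^ (6 * k ^ 3) * A := by
  have hk' : (8 : ℝ) ≤ k := by exact_mod_cast hk
  have h2k : (1 : ℝ) ≤ 2 * k := by linarith
  have e0 : k ^ 3 = k * k * k := by ring
  have e1 : k ^ 2 = k * k := by ring
  have c1 : 8 * k ≤ k * k := Nat.mul_le_mul_right k hk
  have c2 : 8 * (k * k) ≤ k * k * k := by nlinarith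
  have hD : (4 * k : ℝ) ^ (6 * k ^ 3) = (2 * k : ℝ) ^ (6 * k ^ 3) * 2 ^ (6 * k ^ 3) := by
    rw [← mul_pow]; ring_nf
  have h8 : (8 : ℝ) ≤ 2 ^ (6 * k ^ 3) := by
    calc (8 : ℝ) = 2 ^ 3 := by norm_num
      _ ≤ 2 ^ (6 * k ^ 3) := pow_le_pow_right₀ (by norm_num) (by rw [e0]; omega)
  have a1 : (2 * k : ℝ) ^ (2 * (k + s)) ≤ (2 * k : ℝ) ^ (6 * k ^ 3) :=
    pow_le_pow_right₀ h2k (by omega)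
  have a2 : ((k + s : ℕ) : ℝ) ^ (2 * k) * (k.factorial : ℝ) * 2 ^ (2 * s) * 4 ^ (k ^ 2) ≤ (2 * k : ℝ) ^ (6 * k ^ 3) := by
    have b1 : ((k + s : ℕ) : ℝ) ≤ (2 * k : ℝ) ^ 3 := by
      have : ((k + s : ℕ) : ℝ) ≤ 2 * (k : ℝ) ^ 3 := by rw [add_comm]; exact_mod_cast hs2
      have : 0 ≤ (k : ℝ) ^ 3 := by positivity
      nlinarith
    have b2 : (k.factorial : ℝ) ≤ (2 * k : ℝ) ^ k := by
      have : (k.factorial : ℝ) ≤ (k : ℝ) ^ k := by exact_mod_cast Nat.factorial_le_pow k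
      refine this.trans (pow_le_pow_left₀ (by positivity) (by linarith) _)
    have b3 : (2 : ℝ) ^ (2 * s) ≤ (2 * k : ℝ) ^ (2 * s) := pow_le_pow_left₀ (by norm_num) (by linarith) _
    have b4 : (4 : ℝ) ^ (k ^ 2) ≤ (2 * k : ℝ) ^ (k ^ 2) := pow_le_pow_left₀ (by norm_num) (by linarith) _
    calc ((k + s : ℕ) : ℝ) ^ (2 * k) * (k.factorial : ℝ) * 2 ^ (2 * s) * 4 ^ (k ^ 2)
        ≤ ((2 * k : ℝ) ^ 3) ^ (2 * k) * (2 * k : ℝ) ^ k * (2 * k : ℝ) ^ (2 * s) * (2 * k : ℝ) ^ (k ^ 2) := by gcongr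
      _ = (2 * k : ℝ) ^ (3 * (2 * k) + k + 2 * s + k ^ 2) := by rw [← pow_mul, pow_add, pow_add, pow_add]
      _ ≤ _ := pow_le_pow_right₀ h2k (by rw [e0, e1]; rw [e0] at hs2; omega)
  rw [hD]
  have hP : 0 < (2 * k : ℝ) ^ (6 * k ^ 3) := by positivity
  nlinarith [mul_le_mul_of_nonneg_right a2 (by linarith : (0 : ℝ) ≤ A), mul_le_mul_of_nonneg_left h8 hP.le,
    mul_le_mul_of_nonneg_left hA hP.le, mul_le_mul_of_nonneg_right (mul_le_mul_of_nonneg_left h8 hP.le) (by linarith : (0:ℝ) ≤ A)]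

set_option maxHeartbeats 2000000 in
/-- One step of the iteration: with `p ≍ X^{1/k}` in `recurrence`, the excess `Δ` of the exponent over
`2s - k(k+1)/2` shrinks by the factor `1 - 1/k`. -/
lemma Jv_step {k s : ℕ} (hk : 8 ≤ k) (hs : k ^ 3 ≤ s) (hs2 : s + k ≤ 2 * k ^ 3) (A Δ : ℝ) (hA : 1 ≤ A)
    (hΔ0 : 0 ≤ Δ) (hΔ : Δ ≤ k * (k + 1) / 2)
    (ih : ∀ Y : ℕ, 1 ≤ Y → (Jv k (Fin s) Y : ℝ) ≤ A * (Y : ℝ) ^ (2 * s - k * (k + 1) / 2 + Δ : ℝ)) (X : ℕ) (hX : 1 ≤ X) :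
    (Jv k (Fin (k + s)) X : ℝ) ≤ (4 * k : ℝ) ^ (6 * k ^ 3) * A *
      (X : ℝ) ^ (2 * (k + s) - k * (k + 1) / 2 + Δ * (1 - 1 / k) : ℝ) := by
  have hk' : (8 : ℝ) ≤ k := by exact_mod_cast hk
  have hs' : (k : ℝ) ^ 3 ≤ s := by exact_mod_cast hs
  have hX0 : (1 : ℝ) ≤ X := by exact_mod_cast hX
  have hXpos : (0 : ℝ) < X := by linarith
  set κ : ℝ := k * (k + 1) / 2 with hκ
  have hκ1 : κ ≤ k ^ 2 := by rw [hκ]; nlinarith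
  have hκ0 : 0 ≤ κ := by positivity
  have hinv : 0 ≤ 1 - 1 / (k : ℝ) := by
    rw [sub_nonneg, div_le_one (by linarith)]; linarith
  have hinv1 : 1 - 1 / (k : ℝ) ≤ 1 := by
    have : 0 ≤ 1 / (k : ℝ) := by positivity
    linarith
  have hΔ'0 : 0 ≤ Δ * (1 - 1 / k) := mul_nonneg hΔ0 hinv
  have hk3 : (k : ℝ) ^ 2 ≤ k ^ 3 := by nlinarith [sq_nonneg (k : ℝ)]
  have h4k : (1 : ℝ) ≤ 4 * k := by linarith
  by_cases hsmall : (X : ℝ) ≤ (4 * k) ^ k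
  · refine (Jv_trivial k (k + s) X).trans ?_
    have e1 : (X : ℝ) ^ (2 * (k + s)) = (X : ℝ) ^ (κ - Δ * (1 - 1 / k) : ℝ) *
        (X : ℝ) ^ (2 * (k + s) - κ + Δ * (1 - 1 / k) : ℝ) := by
      rw [← Real.rpow_add hXpos, ← Real.rpow_natCast]; congr 1; push_cast; ring
    rw [e1]
    gcongr
    calc (X : ℝ) ^ (κ - Δ * (1 - 1 / k) : ℝ) ≤ (X : ℝ) ^ ((k ^ 2 : ℕ) : ℝ) :=
          Real.rpow_le_rpow_of_exponent_le hX0 (by push_cast; linarith)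
      _ ≤ ((4 * k : ℝ) ^ k) ^ (k ^ 2) := by rw [Real.rpow_natCast]; gcongr
      _ = (4 * k : ℝ) ^ (k ^ 3) := by rw [← pow_mul]; ring_nf
      _ ≤ (4 * k : ℝ) ^ (6 * k ^ 3) := pow_le_pow_right₀ h4k (by omega)
      _ ≤ _ := le_mul_of_one_le_right (by positivity) hA
  · push Not at hsmall
    set r : ℝ := (X : ℝ) ^ (1 / k : ℝ) with hr
    have hrk : r ^ k = X := by
      rw [hr, ← Real.rpow_natCast, ← Real.rpow_mul hXpos.le, one_div, inv_mul_cancel₀ (by positivity), Real.rpow_one]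
    have hr0 : 0 < r := by positivity
    have hr4 : 4 * (k : ℝ) < r := by
      by_contra hcon
      push Not at hcon
      have := pow_le_pow_left₀ hr0.le hcon k
      rw [hrk] at this
      linarith
    obtain ⟨p, hp, hp1, hp2⟩ := Nat.exists_prime_lt_and_le_two_mul ⌈r⌉₊ (by
      have := Nat.ceil_pos.mpr hr0; omega)
    have hpr : r ≤ p := (Nat.le_ceil r).trans (by exact_mod_cast hp1.le)
    have hp4 : (p : ℝ) ≤ 4 * r := by
      have h1 : (p : ℝ) ≤ 2 * ⌈r⌉₊ := by exact_mod_cast hp2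
      have h2 := Nat.ceil_lt_add_one hr0.le
      linarith
    have hp0 : (0 : ℝ) < p := by linarith
    have hkp : k < p := by
      have : (k : ℝ) < p := by linarith
      exact_mod_cast this
    have hXp : X ≤ p ^ k := by
      have : (X : ℝ) ≤ (p : ℝ) ^ k := by rw [← hrk]; gcongr
      exact_mod_cast this
    have hpX : (p : ℝ) ≤ X := by
      refine hp4.trans ?_
      rw [← hrk]
      calc 4 * r ≤ r ^ 2 := by nlinarith
        _ ≤ r ^ k := pow_le_pow_right₀ (by linarith) (by omega)
    have hY : ((X / p + 1 : ℕ) : ℝ) ≤ 2 * X / p := by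
      have h1 : ((X / p : ℕ) : ℝ) ≤ X / p := Nat.cast_div_le
      have h2 : (1 : ℝ) ≤ X / p := by rw [le_div_iff₀ hp0]; linarith
      push_cast
      rw [mul_div_assoc]
      linarith
    have hrec := recurrence (s := s) (by omega : 1 ≤ k) (le_trans (Nat.one_le_pow _ _ (by omega)) hs) hp hkp hXp
    have hrec' : (Jv k (Fin (k + s)) X : ℝ) ≤ 4 * ((p : ℝ) ^ (k - 1) * (k * ((X / p + 1 : ℕ) : ℝ)) ^ (k + s)) ^ 2 +
      2 * (((k + s : ℕ) : ℝ) ^ (2 * k) * ((p : ℝ) ^ (2 * s) * ((X : ℝ) ^ k * ((k.factorial : ℝ) * (p : ℝ) ^ (k * (k - 1) / 2)) *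
        (Jv k (Fin s) (X / p + 1) : ℝ)))) := by
      exact_mod_cast (Jv_congr k finSumFinEquiv.symm X).trans hrec
    have t1 : ((p : ℝ) ^ (k - 1) * (k * ((X / p + 1 : ℕ) : ℝ)) ^ (k + s)) ^ 2 ≤
        (2 * k : ℝ) ^ (2 * (k + s)) * (X : ℝ) ^ (2 * (k + s) - κ + Δ * (1 - 1 / k) : ℝ) := by
      have b1 : (p : ℝ) ^ (k - 1) * (k * ((X / p + 1 : ℕ) : ℝ)) ^ (k + s) ≤ (2 * k) ^ (k + s) * ((X : ℝ) ^ (k + s) / r ^ (s + 1)) := by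
        calc (p : ℝ) ^ (k - 1) * (k * ((X / p + 1 : ℕ) : ℝ)) ^ (k + s)
            ≤ (p : ℝ) ^ (k - 1) * (k * (2 * X / p)) ^ (k + s) := by gcongr
          _ = (2 * k) ^ (k + s) * ((X : ℝ) ^ (k + s) / p ^ (s + 1)) := by
            have : (p : ℝ) ^ (k + s) = p ^ (k - 1) * p ^ (s + 1) := by rw [← pow_add]; congr 1; omega
            rw [mul_pow, div_pow, this, mul_pow, mul_pow]
            field_simp
          _ ≤ _ := by gcongr
      have b2 : (X : ℝ) ^ (2 * (k + s)) / r ^ (2 * (s + 1)) ≤ (X : ℝ) ^ (2 * (k + s) - κ + Δ * (1 - 1 / k) : ℝ) := by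
        rw [hr, ← Real.rpow_natCast (_ ^ _), ← Real.rpow_mul hXpos.le, ← Real.rpow_natCast, ← Real.rpow_sub hXpos]
        apply Real.rpow_le_rpow_of_exponent_le hX0
        push_cast
        have : κ ≤ 1 / k * (2 * (s + 1)) := by
          rw [one_div, inv_mul_eq_div, le_div_iff₀ (by linarith)]
          nlinarith
        linarith
      calc ((p : ℝ) ^ (k - 1) * (k * ((X / p + 1 : ℕ) : ℝ)) ^ (k + s)) ^ 2
          ≤ ((2 * k) ^ (k + s) * ((X : ℝ) ^ (k + s) / r ^ (s + 1))) ^ 2 := by gcongr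
        _ = (2 * k : ℝ) ^ (2 * (k + s)) * ((X : ℝ) ^ (2 * (k + s)) / r ^ (2 * (s + 1))) := by
            rw [mul_pow, div_pow, ← pow_mul, ← pow_mul, ← pow_mul]; ring_nf
        _ ≤ _ := by gcongr
    have he0 : 0 ≤ 2 * (s : ℝ) - κ + Δ := by nlinarith
    have t2 : (p : ℝ) ^ (2 * s) * ((X : ℝ) ^ k * ((k.factorial : ℝ) * (p : ℝ) ^ (k * (k - 1) / 2)) *
        (Jv k (Fin s) (X / p + 1) : ℝ)) ≤ (k.factorial : ℝ) * 2 ^ (2 * s) * 4 ^ (k ^ 2) * A *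
          (X : ℝ) ^ (2 * (k + s) - κ + Δ * (1 - 1 / k) : ℝ) := by
      have b1 : (Jv k (Fin s) (X / p + 1) : ℝ) ≤ A * (2 ^ (2 * s) * (X : ℝ) ^ (2 * s - κ + Δ : ℝ) / (p : ℝ) ^ (2 * s - κ + Δ : ℝ)) := by
        refine (ih _ (Nat.le_add_left 1 _)).trans ?_
        gcongr
        calc ((X / p + 1 : ℕ) : ℝ) ^ (2 * s - κ + Δ : ℝ) ≤ (2 * X / p) ^ (2 * s - κ + Δ : ℝ) := by gcongr
          _ = 2 ^ (2 * s - κ + Δ : ℝ) * (X : ℝ) ^ (2 * s - κ + Δ : ℝ) / (p : ℝ) ^ (2 * s - κ + Δ : ℝ) := by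
            rw [Real.div_rpow (by positivity) hp0.le, Real.mul_rpow (by norm_num) hXpos.le]
          _ ≤ _ := by
            gcongr
            rw [← Real.rpow_natCast]
            apply Real.rpow_le_rpow_of_exponent_le (by norm_num)
            push_cast; linarith
      have b2 : (p : ℝ) ^ (2 * s) * (p : ℝ) ^ (k * (k - 1) / 2) / (p : ℝ) ^ (2 * s - κ + Δ : ℝ) ≤
          4 ^ (k ^ 2) * (X : ℝ) ^ (k - Δ / k : ℝ) := by
        have c0 : ((k * (k - 1) / 2 : ℕ) : ℝ) = k * (k - 1) / 2 := by
          rw [Nat.cast_div_charZero]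
          · push_cast [Nat.cast_sub (show 1 ≤ k by omega)]; ring
          · exact (Nat.even_mul_pred_self k).two_dvd
        have c1 : (p : ℝ) ^ (2 * s) * (p : ℝ) ^ (k * (k - 1) / 2) / (p : ℝ) ^ (2 * s - κ + Δ : ℝ) = (p : ℝ) ^ (k ^ 2 - Δ : ℝ) := by
          rw [← Real.rpow_natCast, ← Real.rpow_natCast, ← Real.rpow_add hp0, ← Real.rpow_sub hp0, c0]
          congr 1
          push_cast; rw [hκ]; ring
        rw [c1]
        have c2 : 0 ≤ (k : ℝ) ^ 2 - Δ := by linarith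
        calc (p : ℝ) ^ (k ^ 2 - Δ : ℝ) ≤ (4 * r) ^ (k ^ 2 - Δ : ℝ) := by gcongr
          _ = 4 ^ (k ^ 2 - Δ : ℝ) * (X : ℝ) ^ (k - Δ / k : ℝ) := by
            rw [Real.mul_rpow (by norm_num) hr0.le, hr, ← Real.rpow_mul hXpos.le]
            congr 2
            field_simp
          _ ≤ _ := by
            gcongr
            rw [← Real.rpow_natCast (4 : ℝ)]
            apply Real.rpow_le_rpow_of_exponent_le (by norm_num)
            push_cast; linarith
      have b3 : (X : ℝ) ^ (2 * (k + s) - κ + Δ * (1 - 1 / k) : ℝ) = (X : ℝ) ^ k * (X : ℝ) ^ (2 * s - κ + Δ : ℝ) * (X : ℝ) ^ (k - Δ / k : ℝ) := by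
        rw [← Real.rpow_natCast, ← Real.rpow_add hXpos, ← Real.rpow_add hXpos]
        congr 1; ring
      rw [b3]
      calc (p : ℝ) ^ (2 * s) * ((X : ℝ) ^ k * ((k.factorial : ℝ) * (p : ℝ) ^ (k * (k - 1) / 2)) *
            (Jv k (Fin s) (X / p + 1) : ℝ))
          ≤ (p : ℝ) ^ (2 * s) * ((X : ℝ) ^ k * ((k.factorial : ℝ) * (p : ℝ) ^ (k * (k - 1) / 2)) *
            (A * (2 ^ (2 * s) * (X : ℝ) ^ (2 * s - κ + Δ : ℝ) / (p : ℝ) ^ (2 * s - κ + Δ : ℝ)))) := by gcongr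
        _ = (k.factorial : ℝ) * 2 ^ (2 * s) * A * ((X : ℝ) ^ k * (X : ℝ) ^ (2 * s - κ + Δ : ℝ)) *
            ((p : ℝ) ^ (2 * s) * (p : ℝ) ^ (k * (k - 1) / 2) / (p : ℝ) ^ (2 * s - κ + Δ : ℝ)) := by ring
        _ ≤ (k.factorial : ℝ) * 2 ^ (2 * s) * A * ((X : ℝ) ^ k * (X : ℝ) ^ (2 * s - κ + Δ : ℝ)) *
            (4 ^ (k ^ 2) * (X : ℝ) ^ (k - Δ / k : ℝ)) := by
            apply mul_le_mul_of_nonneg_left b2; positivity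
        _ = _ := by ring
    have hnum := numeric_D hk hs2 A hA
    set Z := (X : ℝ) ^ (2 * (k + s) - κ + Δ * (1 - 1 / k) : ℝ) with hZ
    have hZ0 : 0 ≤ Z := by positivity
    calc (Jv k (Fin (k + s)) X : ℝ) ≤ 4 * ((2 * k : ℝ) ^ (2 * (k + s)) * Z) +
          2 * (((k + s : ℕ) : ℝ) ^ (2 * k) * ((k.factorial : ℝ) * 2 ^ (2 * s) * 4 ^ (k ^ 2) * A * Z)) := by
          refine hrec'.trans ?_
          gcongr
      _ = (4 * (2 * k : ℝ) ^ (2 * (k + s)) + 2 * ((k + s : ℕ) : ℝ) ^ (2 * k) * (k.factorial : ℝ) * 2 ^ (2 * s) * 4 ^ (k ^ 2) * A) * Z := by ring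
      _ ≤ _ := by gcongr

/-- The iteration starts from the trivial bound with `k³` variables, where the excess is `k(k+1)/2`. -/
lemma Jv_iter {k : ℕ} (hk : 8 ≤ k) (l : ℕ) (hl : l ≤ k ^ 2) : ∀ X : ℕ, 1 ≤ X →
    (Jv k (Fin (l * k + k ^ 3)) X : ℝ) ≤ ((4 * k : ℝ) ^ (6 * k ^ 3)) ^ l *
      (X : ℝ) ^ (2 * ((l * k + k ^ 3 : ℕ) : ℝ) - k * (k + 1) / 2 + k * (k + 1) / 2 * (1 - 1 / k) ^ l : ℝ) := by
  have hk' : (8 : ℝ) ≤ k := by exact_mod_cast hk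
  have hinv : 0 ≤ 1 - 1 / (k : ℝ) := by
    rw [sub_nonneg, div_le_one (by linarith)]; linarith
  have hinv1 : 1 - 1 / (k : ℝ) ≤ 1 := by
    have : 0 ≤ 1 / (k : ℝ) := by positivity
    linarith
  induction l with
  | zero =>
    intro X hX
    have h := Jv_trivial k (0 * k + k ^ 3) X
    refine h.trans (le_of_eq ?_)
    rw [← Real.rpow_natCast]
    simp
  | succ l ih =>
    intro X hX
    have hle : l * k + k ^ 3 + k ≤ 2 * k ^ 3 := by
      have : (l + 1) * k ≤ k ^ 2 * k := Nat.mul_le_mul_right k hl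
      nlinarith
    have h4 : (1 : ℝ) ≤ 4 * k := by linarith
    have := Jv_step (s := l * k + k ^ 3) hk (by omega) hle (((4 * k : ℝ) ^ (6 * k ^ 3)) ^ l)
      (k * (k + 1) / 2 * (1 - 1 / k) ^ l) (one_le_pow₀ (one_le_pow₀ h4)) (by positivity)
      (mul_le_of_le_one_right (by positivity) (pow_le_one₀ hinv hinv1)) (ih (by omega)) X hX
    have e : k + (l * k + k ^ 3) = (l + 1) * k + k ^ 3 := by ring
    rw [e] at this
    refine this.trans (le_of_eq ?_)
    rw [pow_succ' ((4 * k : ℝ) ^ (6 * k ^ 3)) l]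
    congr 2
    push_cast
    ring

/-- Vinogradov's mean value theorem with `2k³` variables on each side: the excess in the exponent over
the optimal `2s - k(k+1)/2` is at most `1/10`, since `(1 - 1/k)^{k²}` is exponentially small. -/
lemma vmvt {k : ℕ} (hk : 30 ≤ k) (X : ℕ) (hX : 1 ≤ X) :
    (Jv k (Fin (2 * k ^ 3)) X : ℝ) ≤ Real.exp (k ^ 7) * (X : ℝ) ^ (4 * (k : ℝ) ^ 3 - k * (k + 1) / 2 + 1 / 10 : ℝ) := by
  have hk' : (30 : ℝ) ≤ k := by exact_mod_cast hk
  have h := Jv_iter (k := k) (by omega) (k ^ 2) le_rfl X hX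
  have e : k ^ 2 * k + k ^ 3 = 2 * k ^ 3 := by ring
  rw [e] at h
  refine h.trans ?_
  have hX0 : (1 : ℝ) ≤ X := by exact_mod_cast hX
  have hx1 : (1 : ℝ) - 1 / k ≤ Real.exp (-(1 / k)) := by
    have := Real.add_one_le_exp (-(1 / k : ℝ)); linarith
  have hinv : 0 ≤ 1 - 1 / (k : ℝ) := by
    rw [sub_nonneg, div_le_one (by linarith)]; linarith
  refine mul_le_mul ?_ (Real.rpow_le_rpow_of_exponent_le hX0 ?_) (by positivity) (by positivity)
  · have hlog : Real.log (4 * k) ≤ 3 + k / 8 := by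
      have e1 : (4 * k : ℝ) = 32 * (k / 8) := by ring
      rw [e1, Real.log_mul (by norm_num) (by positivity)]
      have h1 := Real.log_le_sub_one_of_pos (show (0 : ℝ) < k / 8 by positivity)
      have h2 : Real.log 32 ≤ 3.6 := by
        have : (32 : ℝ) = 2 ^ 5 := by norm_num
        rw [this, Real.log_pow]
        have := Real.log_two_lt_d9
        norm_num; linarith
      linarith
    rw [← Real.exp_log (show (0 : ℝ) < 4 * k by positivity), ← Real.exp_nat_mul, ← Real.exp_nat_mul]
    apply Real.exp_le_exp.mpr
    push_cast
    have h5 : (0 : ℝ) ≤ (k : ℝ) ^ 5 := by positivity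
    have : (k : ℝ) ^ 2 * (6 * k ^ 3 * Real.log (4 * k)) = k ^ 5 * (6 * Real.log (4 * k)) := by ring
    rw [this]
    have : (k : ℝ) ^ 7 = k ^ 5 * k ^ 2 := by ring
    rw [this]
    apply mul_le_mul_of_nonneg_left _ h5
    nlinarith
  · push_cast
    have h1 : (1 - 1 / (k : ℝ)) ^ (k ^ 2) ≤ Real.exp (-k) := by
      calc (1 - 1 / (k : ℝ)) ^ (k ^ 2) ≤ (Real.exp (-(1 / k))) ^ (k ^ 2) := by gcongr
        _ = Real.exp (-k) := by
          rw [← Real.exp_nat_mul]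
          congr 1
          push_cast
          field_simp
    have h2 : (k : ℝ) * (k + 1) / 2 * Real.exp (-k) ≤ 1 / 10 := by
      rw [Real.exp_neg, ← div_eq_mul_inv, div_le_iff₀ (Real.exp_pos _)]
      have := Real.sum_le_exp_of_nonneg (show (0 : ℝ) ≤ k by positivity) 4
      simp [Finset.sum_range_succ, Nat.factorial] at this
      nlinarith [sq_nonneg (k : ℝ), mul_le_mul_of_nonneg_right hk' (sq_nonneg (k : ℝ))]
    have h3 : (k : ℝ) * (k + 1) / 2 * (1 - 1 / k) ^ (k ^ 2) ≤ k * (k + 1) / 2 * Real.exp (-k) := by gcongr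
    linarith
end Wright

/-! ### Exponential sums over dyadic blocks -/

namespace Wright
open Finset

/-- The unit complex number `exp (i x)`. -/
noncomputable def ph (x : ℝ) : ℂ := Complex.exp (x * Complex.I)

lemma norm_ph (x : ℝ) : ‖ph x‖ = 1 := Complex.norm_exp_ofReal_mul_I x

lemma ph_add (x y : ℝ) : ph (x + y) = ph x * ph y := by
  rw [ph, ph, ph, ← Complex.exp_add]; push_cast; ring_nf

lemma ph_sum {ι : Type*} (s : Finset ι) (f : ι → ℝ) : ph (∑ i ∈ s, f i) = ∏ i ∈ s, ph (f i) := by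
  simp only [ph]
  rw [← Complex.exp_sum, ← Finset.sum_mul]; push_cast; rfl

lemma conj_ph (x : ℝ) : (starRingEnd ℂ) (ph x) = ph (-x) := by
  rw [ph, ph, ← Complex.exp_conj]; simp

lemma ph_natCast_mul (x : ℝ) (n : ℕ) : ph (n * x) = ph x ^ n := by
  rw [ph, ph, ← Complex.exp_nat_mul]; push_cast; ring_nf

lemma norm_ph_sub_le (x y : ℝ) : ‖ph x - ph y‖ ≤ |x - y| := by
  have h : ph x - ph y = ph y * (Complex.exp (Complex.I * ((x - y : ℝ) : ℂ)) - 1) := by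
    have : Complex.exp (Complex.I * ((x - y : ℝ) : ℂ)) = ph (x - y) := by rw [ph, mul_comm]
    rw [this, mul_sub, mul_one, ← ph_add]; congr 2; ring
  rw [h, norm_mul, norm_ph, one_mul]
  exact Real.norm_exp_I_mul_ofReal_sub_one_le

/-- Geometric sums: the coordinate sums in the dual step. -/
lemma geom_ph (β : ℝ) (h0 : β ≠ 0) (h1 : |β| ≤ Real.pi) (H : ℕ) :
    ‖∑ h ∈ range H, ph (h * β)‖ ≤ Real.pi / |β| := by
  have hβ : 0 < |β| := abs_pos.mpr h0
  have hlow : 2 / Real.pi * |β| ≤ ‖ph β - 1‖ := by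
    have : ph β - 1 = Complex.exp (Complex.I * β) - 1 := by rw [ph, mul_comm]
    rw [this, Complex.norm_exp_I_mul_ofReal_sub_one]
    have := Real.mul_abs_le_abs_sin (x := β / 2) (by rw [abs_div, abs_two]; linarith)
    rw [norm_mul, Real.norm_eq_abs, Real.norm_eq_abs, abs_two]
    rw [abs_div, abs_two] at this
    linarith
  have hpos : 0 < 2 / Real.pi * |β| := by have := Real.pi_pos; positivity
  have hne : ph β ≠ 1 := by
    intro h
    rw [h, sub_self, norm_zero] at hlow
    linarith
  simp_rw [ph_natCast_mul]
  rw [geom_sum_eq hne, norm_div]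
  have hup : ‖ph β ^ H - 1‖ ≤ 2 := by
    refine (norm_sub_le _ _).trans ?_
    rw [norm_pow, norm_ph, one_pow, norm_one]; norm_num
  calc ‖ph β ^ H - 1‖ / ‖ph β - 1‖ ≤ 2 / (2 / Real.pi * |β|) := by gcongr
    _ = _ := by have := Real.pi_pos; field_simp

/-- Duality principle for a bilinear form with bounded Gram row sums. -/
lemma dual_le {ι η : Type*} (N : Finset ι) (Hs : Finset η) (a : η → ℂ) (φ : ι → η → ℂ) (D : ℝ) (hD0 : 0 ≤ D)
    (hD : ∀ n ∈ N, ∑ m ∈ N, ‖∑ h ∈ Hs, φ n h * (starRingEnd ℂ) (φ m h)‖ ≤ D) :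
    ∑ n ∈ N, ‖∑ h ∈ Hs, a h * φ n h‖ ^ 2 ≤ (∑ h ∈ Hs, ‖a h‖ ^ 2) * D := by
  set u : ι → ℂ := fun n => ∑ h ∈ Hs, a h * φ n h with hu
  set S : ℝ := ∑ n ∈ N, ‖u n‖ ^ 2 with hS
  set P : ℝ := ∑ h ∈ Hs, ‖a h‖ ^ 2 with hP
  set v : η → ℂ := fun h => ∑ n ∈ N, (starRingEnd ℂ) (u n) * φ n h with hv
  have hS0 : 0 ≤ S := sum_nonneg fun _ _ => by positivity
  have hP0 : 0 ≤ P := sum_nonneg fun _ _ => by positivity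
  have e1 : (S : ℂ) = ∑ h ∈ Hs, a h * v h := by
    rw [hS]; push_cast
    calc ∑ n ∈ N, ((‖u n‖ : ℂ)) ^ 2 = ∑ n ∈ N, (starRingEnd ℂ) (u n) * u n := by
          apply sum_congr rfl; intro n _; rw [Complex.conj_mul']
      _ = ∑ n ∈ N, ∑ h ∈ Hs, a h * ((starRingEnd ℂ) (u n) * φ n h) := by
          apply sum_congr rfl; intro n _
          conv_lhs => rw [show u n = ∑ h ∈ Hs, a h * φ n h from rfl]
          rw [mul_sum]
          apply sum_congr rfl; intro h _; ring
      _ = _ := by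
          rw [sum_comm]; apply sum_congr rfl; intro h _; rw [hv, mul_sum]
  have e2 : S ^ 2 ≤ P * ∑ h ∈ Hs, ‖v h‖ ^ 2 := by
    have : S ≤ ∑ h ∈ Hs, ‖a h‖ * ‖v h‖ := by
      calc S = ‖(S : ℂ)‖ := by rw [Complex.norm_real, Real.norm_of_nonneg hS0]
        _ ≤ ∑ h ∈ Hs, ‖a h * v h‖ := by rw [e1]; exact norm_sum_le _ _
        _ = _ := by simp_rw [norm_mul]
    calc S ^ 2 ≤ (∑ h ∈ Hs, ‖a h‖ * ‖v h‖) ^ 2 := by gcongr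
      _ ≤ _ := sum_mul_sq_le_sq_mul_sq _ _ _
  have e3 : ∑ h ∈ Hs, ‖v h‖ ^ 2 ≤ D * S := by
    have e4 : ((∑ h ∈ Hs, ‖v h‖ ^ 2 : ℝ) : ℂ) = ∑ n ∈ N, ∑ m ∈ N, (starRingEnd ℂ) (u n) * u m *
        ∑ h ∈ Hs, φ n h * (starRingEnd ℂ) (φ m h) := by
      push_cast
      calc ∑ h ∈ Hs, (‖v h‖ : ℂ) ^ 2 = ∑ h ∈ Hs, ∑ n ∈ N, ∑ m ∈ N, (starRingEnd ℂ) (u n) * u m * (φ n h * (starRingEnd ℂ) (φ m h)) := by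
            apply sum_congr rfl; intro h _
            rw [← Complex.mul_conj', hv]
            simp only [map_sum, map_mul, Complex.conj_conj]
            rw [sum_mul_sum]
            apply sum_congr rfl; intro n _
            apply sum_congr rfl; intro m _
            ring
        _ = _ := by
            rw [sum_comm]; apply sum_congr rfl; intro n _
            rw [sum_comm]; apply sum_congr rfl; intro m _
            exact (mul_sum _ _ _).symm
    set G : ι → ι → ℝ := fun n m => ‖∑ h ∈ Hs, φ n h * (starRingEnd ℂ) (φ m h)‖ with hG
    have hGs : ∀ n m, G n m = G m n := by
      intro n m
      simp only [hG]
      rw [← Complex.norm_conj]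
      congr 1
      rw [map_sum]; apply sum_congr rfl; intro h _
      rw [map_mul, Complex.conj_conj, mul_comm]
    have e5 : ∑ h ∈ Hs, ‖v h‖ ^ 2 ≤ ∑ n ∈ N, ∑ m ∈ N, ‖u n‖ * ‖u m‖ * G n m := by
      have hn : 0 ≤ ∑ h ∈ Hs, ‖v h‖ ^ 2 := sum_nonneg fun _ _ => by positivity
      rw [← Real.norm_of_nonneg hn, ← Complex.norm_real, e4]
      refine (norm_sum_le _ _).trans (sum_le_sum fun n _ => (norm_sum_le _ _).trans (sum_le_sum fun m _ => ?_))
      rw [norm_mul, norm_mul, Complex.norm_conj]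
    have e6 : ∑ n ∈ N, ∑ m ∈ N, ‖u n‖ ^ 2 * G n m ≤ D * S := by
      rw [hS, mul_sum]
      apply sum_le_sum; intro n hn
      rw [← mul_sum, mul_comm]
      exact mul_le_mul_of_nonneg_right (hD n hn) (by positivity)
    have e7 : ∑ n ∈ N, ∑ m ∈ N, ‖u m‖ ^ 2 * G n m ≤ D * S := by
      rw [sum_comm]
      refine le_trans (le_of_eq ?_) e6
      apply sum_congr rfl; intro n _; apply sum_congr rfl; intro m _; rw [hGs]
    have e8 : ∑ n ∈ N, ∑ m ∈ N, ‖u n‖ * ‖u m‖ * G n m ≤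
        (∑ n ∈ N, ∑ m ∈ N, ‖u n‖ ^ 2 * G n m + ∑ n ∈ N, ∑ m ∈ N, ‖u m‖ ^ 2 * G n m) / 2 := by
      rw [← sum_add_distrib, sum_div]
      apply sum_le_sum; intro n _
      rw [← sum_add_distrib, sum_div]
      apply sum_le_sum; intro m _
      have : 0 ≤ G n m := norm_nonneg _
      nlinarith [mul_nonneg this (sq_nonneg (‖u n‖ - ‖u m‖))]
    linarith
  have e9 : S ^ 2 ≤ P * (D * S) := e2.trans (mul_le_mul_of_nonneg_left e3 hP0)
  rcases hS0.eq_or_lt with h | h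
  · rw [← h]; positivity
  · nlinarith

end Wright

namespace Wright
open Finset

/-- The box-to-mean-value step: the `2s`-th moment over a family of phase vectors is controlled by
the mean value `Jv` and by the row sums of the dual box sums. -/
lemma moment_le {ι : Type*} (N : Finset ι) {k s B : ℕ} (α : ι → Fin k → ℝ) (D : ℝ) (hD0 : 0 ≤ D)
    (hD : ∀ n ∈ N, ∑ m ∈ N, ∏ r : Fin k, ‖∑ h ∈ range (s * B ^ (r + 1 : ℕ) + 1), ph (h * (α n r - α m r))‖ ≤ D) :
    ∑ n ∈ N, ‖∑ b ∈ range B, ph (∑ r : Fin k, α n r * (b : ℝ) ^ (r + 1 : ℕ))‖ ^ (2 * s) ≤ Jv k (Fin s) B * D := by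
  classical
  set g : (Fin s → Fin B) → (Fin k → ℕ) := fun x r => ∑ i, (x i : ℕ) ^ (r + 1 : ℕ) with hg
  set Hs : Finset (Fin k → ℕ) := Fintype.piFinset fun r : Fin k => range (s * B ^ (r + 1 : ℕ) + 1) with hHs
  set φ : ι → (Fin k → ℕ) → ℂ := fun n h => ph (∑ r : Fin k, α n r * (h r : ℝ)) with hφ
  set a : (Fin k → ℕ) → ℂ := fun h => ((univ.filter fun x => g x = h).card : ℂ) with ha
  have hmem : ∀ x, g x ∈ Hs := by
    intro x
    rw [hHs, Fintype.mem_piFinset]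
    intro r
    rw [mem_range, Nat.lt_succ_iff, hg]
    calc ∑ i, (x i : ℕ) ^ (r + 1 : ℕ) ≤ ∑ _i : Fin s, B ^ (r + 1 : ℕ) :=
          sum_le_sum fun i _ => Nat.pow_le_pow_left (x i).2.le _
      _ = _ := by simp
  have hcoll : Jv k (Fin s) B = coll g := by
    rw [Jv, coll, coll]
    congr 1
    apply filter_congr
    intro q _
    rw [funext_iff, funext_iff]
    apply forall_congr'
    intro r
    simp only [Finset.sum_apply, nu, hg]
    norm_cast
  have key := dual_le N Hs a φ D hD0 (by
    intro n hn
    refine le_trans (le_of_eq ?_) (hD n hn)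
    apply sum_congr rfl; intro m _
    rw [← norm_prod, hHs, Finset.prod_univ_sum]
    congr 1
    apply sum_congr rfl; intro h _
    rw [hφ, conj_ph, ← ph_add, ← ph_sum]
    congr 1
    rw [← sum_neg_distrib, ← sum_add_distrib]
    apply sum_congr rfl; intro r _; ring)
  have e1 : ∑ h ∈ Hs, ‖a h‖ ^ 2 ≤ Jv k (Fin s) B := by
    rw [hcoll, coll_eq_sum]
    push_cast
    have : ∀ h, ‖a h‖ ^ 2 = ((univ.filter fun x => g x = h).card : ℝ) ^ 2 := by
      intro h; rw [ha]; simp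
    simp_rw [this]
    refine le_of_eq (sum_subset (fun w hw => ?_) (fun w _ hw => ?_)).symm
    · obtain ⟨x, _, rfl⟩ := mem_image.mp hw
      exact hmem x
    · have : (univ.filter fun x => g x = w) = ∅ := by
        apply filter_eq_empty_iff.mpr
        intro x _ hx
        exact hw (mem_image.mpr ⟨x, mem_univ _, hx⟩)
      rw [this]; simp
  have e2 : ∀ n, (∑ b ∈ range B, ph (∑ r : Fin k, α n r * (b : ℝ) ^ (r + 1 : ℕ))) ^ s = ∑ h ∈ Hs, a h * φ n h := by
    intro n
    have : ∑ h ∈ Hs, a h * φ n h = ∑ x : Fin s → Fin B, φ n (g x) := by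
      rw [← sum_fiberwise_of_maps_to (t := Hs) (g := g) (fun x _ => hmem x)]
      apply sum_congr rfl; intro h _
      rw [ha, ← nsmul_eq_mul]
      symm
      apply sum_eq_card_nsmul
      intro x hx
      rw [(mem_filter.mp hx).2]
    rw [this, ← Fin.sum_univ_eq_sum_range (fun b => ph (∑ r : Fin k, α n r * (b : ℝ) ^ (r + 1 : ℕ))), ← Fin.prod_const, Finset.prod_univ_sum]
    rw [Fintype.piFinset_univ]
    apply sum_congr rfl; intro x _
    rw [hφ, ← ph_sum, hg, sum_comm]
    congr 1
    apply sum_congr rfl; intro r _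
    push_cast
    rw [mul_sum]
  calc _ = ∑ n ∈ N, ‖∑ h ∈ Hs, a h * φ n h‖ ^ 2 := by
        apply sum_congr rfl; intro n _
        rw [← e2, norm_pow, ← pow_mul, mul_comm]
    _ ≤ _ := key
    _ ≤ _ := mul_le_mul_of_nonneg_right e1 hD0

lemma card_range_norm (H : ℕ) (β : ℝ) : ‖∑ h ∈ range H, ph (h * β)‖ ≤ H := by
  refine (norm_sum_le _ _).trans ?_
  simp [norm_ph]

/-- Row sums: a product of box sums in which only the coordinate `j` is treated nontrivially. -/
lemma prod_box_le {k s B : ℕ} (hs : 1 ≤ s) (hB : 1 ≤ B) (j : Fin k) (γ : Fin k → ℝ) :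
    ∏ r : Fin k, ‖∑ h ∈ range (s * B ^ (r + 1 : ℕ) + 1), ph (h * γ r)‖ ≤
      ((2 * s : ℝ) ^ (k - 1) * ∏ r ∈ univ.erase j, (B : ℝ) ^ (r + 1 : ℕ)) *
        ‖∑ h ∈ range (s * B ^ (j + 1 : ℕ) + 1), ph (h * γ j)‖ := by
  rw [← Finset.prod_erase_mul _ _ (mem_univ j)]
  gcongr
  calc ∏ r ∈ univ.erase j, ‖∑ h ∈ range (s * B ^ (r + 1 : ℕ) + 1), ph (h * γ r)‖
      ≤ ∏ r ∈ univ.erase j, ((2 * s : ℝ) * (B : ℝ) ^ (r + 1 : ℕ)) := by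
        apply prod_le_prod (fun _ _ => norm_nonneg _)
        intro r _
        refine (card_range_norm _ _).trans ?_
        push_cast
        have h1 : (1 : ℝ) ≤ s := by exact_mod_cast hs
        have h2 : (1 : ℝ) ≤ (B : ℝ) ^ (r + 1 : ℕ) := one_le_pow₀ (by exact_mod_cast hB)
        nlinarith
    _ = _ := by rw [prod_mul_distrib]; simp

/-- `∑_{m ≠ n} 1/|n-m|` over an interval of integers. -/
lemma sum_inv_dist_le (M M' n : ℕ) (hM' : M' ≤ 2 * M) (hM : 1 ≤ M) (hn : n ∈ Ioc M M') :
    ∑ m ∈ (Ioc M M').erase n, 1 / |(n : ℝ) - m| ≤ 2 * (1 + Real.log M) := by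
  have hh : ∑ d ∈ Icc 1 M, 1 / (d : ℝ) ≤ 1 + Real.log M := by
    have := harmonic_le_one_add_log M
    rw [harmonic_eq_sum_Icc] at this
    push_cast at this
    simpa using this
  rw [mem_Ioc] at hn
  have hsub : (Ioc M M').erase n ⊆ (Ioc M M').filter (· < n) ∪ (Ioc M M').filter (n < ·) := by
    intro m hm
    rw [mem_erase] at hm
    rw [mem_union, mem_filter, mem_filter]
    rcases lt_or_gt_of_ne hm.1 with h | h
    · exact Or.inl ⟨hm.2, h⟩
    · exact Or.inr ⟨hm.2, h⟩
  refine (sum_le_sum_of_subset_of_nonneg hsub fun _ _ _ => by positivity).trans ?_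
  rw [sum_union (by
    rw [disjoint_left]; intro m h1 h2
    have := (mem_filter.mp h1).2; have := (mem_filter.mp h2).2; omega)]
  have h1 : ∑ m ∈ (Ioc M M').filter (· < n), 1 / |(n : ℝ) - m| ≤ ∑ d ∈ Icc 1 M, 1 / (d : ℝ) := by
    have e : ∑ m ∈ (Ioc M M').filter (· < n), 1 / |(n : ℝ) - m| =
        ∑ d ∈ ((Ioc M M').filter (· < n)).image (fun m => n - m), 1 / (d : ℝ) := by
      rw [sum_image (by
        intro a ha b hb hab
        have := (mem_filter.mp ha).2; have := (mem_filter.mp hb).2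
        simp only at hab; omega)]
      apply sum_congr rfl; intro m hm
      have := (mem_filter.mp hm).2
      rw [Nat.cast_sub this.le, abs_of_pos (sub_pos.mpr (by exact_mod_cast this))]
    rw [e]
    apply sum_le_sum_of_subset_of_nonneg _ fun _ _ _ => by positivity
    intro d hd
    obtain ⟨m, hm, rfl⟩ := mem_image.mp hd
    simp only [mem_filter, mem_Ioc] at hm
    rw [mem_Icc]; omega
  have h2 : ∑ m ∈ (Ioc M M').filter (n < ·), 1 / |(n : ℝ) - m| ≤ ∑ d ∈ Icc 1 M, 1 / (d : ℝ) := by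
    have e : ∑ m ∈ (Ioc M M').filter (n < ·), 1 / |(n : ℝ) - m| =
        ∑ d ∈ ((Ioc M M').filter (n < ·)).image (fun m => m - n), 1 / (d : ℝ) := by
      rw [sum_image (by
        intro a ha b hb hab
        have := (mem_filter.mp ha).2; have := (mem_filter.mp hb).2
        simp only at hab; omega)]
      apply sum_congr rfl; intro m hm
      have := (mem_filter.mp hm).2
      rw [Nat.cast_sub this.le, abs_sub_comm, abs_of_pos (sub_pos.mpr (by exact_mod_cast this))]
    rw [e]
    apply sum_le_sum_of_subset_of_nonneg _ fun _ _ _ => by positivity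
    intro d hd
    obtain ⟨m, hm, rfl⟩ := mem_image.mp hd
    simp only [mem_filter, mem_Ioc] at hm
    rw [mem_Icc]; omega
  linarith

/-- The coefficient of `b ^ (r+1)` in the Taylor expansion of `-t log (1 + b/n)`. -/
noncomputable def tay (k : ℕ) (t : ℝ) (n : ℕ) (r : Fin k) : ℝ :=
  t * (-1) ^ (r + 1 : ℕ) / ((r + 1 : ℕ) * (n : ℝ) ^ (r + 1 : ℕ))

lemma inv_pow_gap {j : ℕ} (hj : 1 ≤ j) {a b L : ℝ} (ha : 0 < a) (hab : a ≤ b) (hb : b ≤ L) :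
    j * (b - a) / L ^ (j + 1) ≤ 1 / a ^ j - 1 / b ^ j := by
  have hb0 : 0 < b := by linarith
  have hL : 0 < L := by linarith
  have h1 : a ^ j + j * a ^ (j - 1) * (b - a) ≤ b ^ j := by
    have := one_add_mul_le_pow (a := (b - a) / a) (by
      have : 0 ≤ (b - a) / a := div_nonneg (by linarith) ha.le
      linarith) j
    have e : b = a * (1 + (b - a) / a) := by field_simp; ring
    have e2 : b ^ j = a ^ j * (1 + (b - a) / a) ^ j := by rw [← mul_pow, ← e]
    rw [e2]
    have e3 : a ^ j + j * a ^ (j - 1) * (b - a) = a ^ j * (1 + j * ((b - a) / a)) := by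
      have : a ^ j = a ^ (j - 1) * a := by rw [← pow_succ]; congr 1; omega
      rw [this]; field_simp
    rw [e3]
    gcongr
  have h2 : 1 / a ^ j - 1 / b ^ j = (b ^ j - a ^ j) / (a ^ j * b ^ j) := by
    field_simp
  rw [h2, div_le_div_iff₀ (by positivity) (by positivity)]
  have h3 : a ^ j * b ^ j ≤ a ^ (j - 1) * L ^ (j + 1) := by
    have : a ^ j = a ^ (j - 1) * a := by rw [← pow_succ]; congr 1; omega
    rw [this, mul_assoc]
    gcongr
    calc a * b ^ j ≤ L * L ^ j := by gcongr <;> linarith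
      _ = _ := by ring
  calc j * (b - a) * (a ^ j * b ^ j) ≤ j * (b - a) * (a ^ (j - 1) * L ^ (j + 1)) := by
        apply mul_le_mul_of_nonneg_left h3
        exact mul_nonneg (by positivity) (by linarith)
    _ = (j * a ^ (j - 1) * (b - a)) * L ^ (j + 1) := by ring
    _ ≤ (b ^ j - a ^ j) * L ^ (j + 1) := by gcongr; linarith

/-- The coordinate `j` of the phase vectors is well spaced and does not wrap around. -/
lemma tay_gap {k : ℕ} (j : Fin k) {t : ℝ} (ht : 0 < t) {M : ℕ} (hM : 1 ≤ M) (htM : t ≤ (M : ℝ) ^ (j + 1 : ℕ))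
    {n m : ℕ} (hn : M < n) (hn' : n ≤ 2 * M) (hm : M < m) (hm' : m ≤ 2 * M) :
    |tay k t n j - tay k t m j| ≤ 1 ∧
      t * |(n : ℝ) - m| / (2 * M : ℝ) ^ (j + 2 : ℕ) ≤ |tay k t n j - tay k t m j| := by
  wlog hnm : n ≤ m generalizing n m
  · rw [abs_sub_comm (tay k t n j), abs_sub_comm (n : ℝ)]
    exact this hm hm' hn hn' (by omega)
  set J : ℕ := j + 1 with hJ
  have hJ0 : (0 : ℝ) < J := by positivity
  have hn0 : (0 : ℝ) < n := by exact_mod_cast (by omega)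
  have hm0 : (0 : ℝ) < m := by exact_mod_cast (by omega)
  have hnm' : (n : ℝ) ≤ m := by exact_mod_cast hnm
  have e : |tay k t n j - tay k t m j| = t / J * (1 / (n : ℝ) ^ J - 1 / (m : ℝ) ^ J) := by
    have : tay k t n j - tay k t m j = (-1) ^ J * (t / J * (1 / (n : ℝ) ^ J - 1 / (m : ℝ) ^ J)) := by
      simp only [tay, ← hJ]; field_simp
    rw [this, abs_mul, abs_pow, abs_neg, abs_one, one_pow, one_mul, abs_of_nonneg]
    apply mul_nonneg (by positivity)
    rw [sub_nonneg]
    gcongr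
  rw [e]
  have hM0 : (0 : ℝ) < M := by exact_mod_cast hM
  constructor
  · have h1 : 1 / (n : ℝ) ^ J - 1 / (m : ℝ) ^ J ≤ 1 / (M : ℝ) ^ J := by
      have : 1 / (n : ℝ) ^ J ≤ 1 / (M : ℝ) ^ J := by
        gcongr
      have : 0 ≤ 1 / (m : ℝ) ^ J := by positivity
      linarith
    have h2 : t / J ≤ t := div_le_self ht.le (by exact_mod_cast (show 1 ≤ J by omega))
    have h3 : 0 ≤ 1 / (n : ℝ) ^ J - 1 / (m : ℝ) ^ J := by rw [sub_nonneg]; gcongr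
    calc t / J * (1 / (n : ℝ) ^ J - 1 / (m : ℝ) ^ J) ≤ (M : ℝ) ^ J * (1 / (M : ℝ) ^ J) := by
          gcongr; exact h2.trans htM
      _ = 1 := by field_simp
  · have := inv_pow_gap (j := J) (by omega) hn0 hnm' (show (m : ℝ) ≤ 2 * M by exact_mod_cast hm')
    have e2 : (j + 2 : ℕ) = J + 1 := rfl
    rw [e2, abs_sub_comm, abs_of_nonneg (by linarith : (0 : ℝ) ≤ m - n)]
    calc t * (m - n : ℝ) / (2 * M) ^ (J + 1) = t / J * (J * (m - n) / (2 * M) ^ (J + 1)) := by field_simp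
      _ ≤ _ := by gcongr
end Wright

namespace Wright
open Finset

lemma prod_pow_succ (k : ℕ) (B : ℝ) (hB : 0 < B) :
    ∏ r : Fin k, B ^ (r + 1 : ℕ) = B ^ ((k : ℝ) * (k + 1) / 2) := by
  rw [Finset.prod_pow_eq_pow_sum, Fin.sum_univ_eq_sum_range (fun r => r + 1), ← Real.rpow_natCast]
  congr 1
  push_cast
  induction k with
  | zero => simp
  | succ k ih => rw [sum_range_succ, ih]; push_cast; ring

/-- The row sums required by `moment_le` for the Taylor phases: a saving is extracted from the single
coordinate `j`, whose phases are well spaced by `tay_gap`; the other coordinates are bounded trivially. -/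
lemma row_sum_le {k s B M M' : ℕ} (hs : 1 ≤ s) (hB : 1 ≤ B) (hM : 1 ≤ M) (hM' : M' ≤ 2 * M)
    (j : Fin k) {t : ℝ} (ht : 0 < t) (htM : t ≤ (M : ℝ) ^ (j + 1 : ℕ)) (Q : ℝ)
    (hQ : (M : ℝ) ^ (j + 2 : ℕ) / t ≤ Q * 2 ^ (j + 1 : ℕ) * (B : ℝ) ^ (j + 1 : ℕ)) (hQ1 : 1 ≤ Q)
    (n : ℕ) (hn : n ∈ Ioc M M') :
    ∑ m ∈ Ioc M M', ∏ r : Fin k, ‖∑ h ∈ range (s * B ^ (r + 1 : ℕ) + 1), ph (h * (tay k t n r - tay k t m r))‖ ≤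
      (2 * s : ℝ) ^ k * (B : ℝ) ^ ((k : ℝ) * (k + 1) / 2) * (16 * 4 ^ (j + 1 : ℕ) * Q * (1 + Real.log M)) := by
  have hk : 1 ≤ k := by have := j.2; omega
  have hB0 : (0 : ℝ) < B := by exact_mod_cast hB
  have hs1 : (1 : ℝ) ≤ s := by exact_mod_cast hs
  have hM1 : (1 : ℝ) ≤ M := by exact_mod_cast hM
  have hlog : 0 ≤ Real.log M := Real.log_nonneg hM1
  set J : ℕ := j + 1 with hJ
  set P : ℝ := ∏ r ∈ univ.erase j, (B : ℝ) ^ (r + 1 : ℕ) with hP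
  have hP0 : 0 < P := prod_pos fun _ _ => by positivity
  have hPB : P * (B : ℝ) ^ J = (B : ℝ) ^ ((k : ℝ) * (k + 1) / 2) := by
    rw [← prod_pow_succ k B hB0, hP, hJ]
    exact Finset.prod_erase_mul _ _ (mem_univ j)
  have h1 : ∀ m ∈ Ioc M M', ∏ r : Fin k, ‖∑ h ∈ range (s * B ^ (r + 1 : ℕ) + 1), ph (h * (tay k t n r - tay k t m r))‖ ≤
      ((2 * s : ℝ) ^ (k - 1) * P) * ‖∑ h ∈ range (s * B ^ J + 1), ph (h * (tay k t n j - tay k t m j))‖ :=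
    fun m _ => prod_box_le hs hB j _
  refine (sum_le_sum h1).trans ?_
  rw [← mul_sum]
  have hnn := mem_Ioc.mp hn
  have h2 : ∑ m ∈ Ioc M M', ‖∑ h ∈ range (s * B ^ J + 1), ph (h * (tay k t n j - tay k t m j))‖ ≤
      2 * s * (B : ℝ) ^ J + Real.pi * (2 * M : ℝ) ^ (J + 1) / t * (2 * (1 + Real.log M)) := by
    rw [← Finset.add_sum_erase _ _ hn]
    apply add_le_add
    · refine (card_range_norm _ _).trans ?_
      push_cast
      have h2 : (1 : ℝ) ≤ (B : ℝ) ^ J := one_le_pow₀ (by exact_mod_cast hB)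
      nlinarith
    · refine le_trans ?_ (mul_le_mul_of_nonneg_left (sum_inv_dist_le M M' n hM' hM hn) (by positivity))
      rw [mul_sum]
      apply sum_le_sum
      intro m hm
      rw [mem_erase, mem_Ioc] at hm
      obtain ⟨g1, g2⟩ := tay_gap j ht hM htM hnn.1 (by omega : n ≤ 2 * M) hm.2.1 (by omega : m ≤ 2 * M)
      have hd : 0 < |(n : ℝ) - m| := by
        rw [abs_pos, sub_ne_zero]; exact_mod_cast hm.1.symm
      have hpos : 0 < t * |(n : ℝ) - m| / (2 * M : ℝ) ^ (j + 2 : ℕ) := by positivity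
      refine (geom_ph _ (abs_pos.mp (hpos.trans_le g2)) (g1.trans (by linarith [Real.pi_gt_three])) _).trans ?_
      calc Real.pi / |tay k t n j - tay k t m j| ≤ Real.pi / (t * |(n : ℝ) - m| / (2 * M : ℝ) ^ (j + 2 : ℕ)) := by
            gcongr
        _ = _ := by rw [hJ]; field_simp
  have h3 : 2 * s * (B : ℝ) ^ J + Real.pi * (2 * M : ℝ) ^ (J + 1) / t * (2 * (1 + Real.log M)) ≤
      2 * s * ((B : ℝ) ^ J * (16 * 4 ^ J * Q * (1 + Real.log M))) := by
    have a1 : (2 * M : ℝ) ^ (J + 1) / t ≤ 2 * 4 ^ J * Q * (B : ℝ) ^ J := by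
      calc (2 * M : ℝ) ^ (J + 1) / t = 2 ^ (J + 1) * ((M : ℝ) ^ (J + 1) / t) := by rw [mul_pow]; ring
        _ ≤ 2 ^ (J + 1) * (Q * 2 ^ J * (B : ℝ) ^ J) := by gcongr
        _ = _ := by
          have : (4 : ℝ) ^ J = 2 ^ J * 2 ^ J := by rw [← mul_pow]; norm_num
          rw [this]; ring
    have hBJ : 0 < (B : ℝ) ^ J := by positivity
    have hW : 1 ≤ 4 ^ J * Q * (1 + Real.log M) := by
      have : (1 : ℝ) ≤ 4 ^ J := one_le_pow₀ (by norm_num)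
      calc (1 : ℝ) = 1 * 1 * 1 := by norm_num
        _ ≤ _ := by gcongr; linarith
    have a2 : Real.pi * (2 * M : ℝ) ^ (J + 1) / t * (2 * (1 + Real.log M)) ≤
        16 * (B : ℝ) ^ J * (4 ^ J * Q * (1 + Real.log M)) := by
      calc Real.pi * (2 * M : ℝ) ^ (J + 1) / t * (2 * (1 + Real.log M)) =
          Real.pi * ((2 * M : ℝ) ^ (J + 1) / t) * (2 * (1 + Real.log M)) := by ring
        _ ≤ 4 * (2 * 4 ^ J * Q * (B : ℝ) ^ J) * (2 * (1 + Real.log M)) := by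
          gcongr; exact Real.pi_le_four
        _ = _ := by ring
    set W := 4 ^ J * Q * (1 + Real.log M) with hWd
    have e : 2 * s * ((B : ℝ) ^ J * (16 * 4 ^ J * Q * (1 + Real.log M))) = 2 * s * ((B : ℝ) ^ J * (16 * W)) := by
      rw [hWd]; ring
    rw [e]
    have : (B : ℝ) ^ J ≤ (B : ℝ) ^ J * W := le_mul_of_one_le_right hBJ.le hW
    have hBW : 0 < (B : ℝ) ^ J * W := by positivity
    nlinarith [mul_le_mul_of_nonneg_right hs1 hBW.le, mul_le_mul_of_nonneg_left this (by linarith : (0:ℝ) ≤ s)]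
  calc (2 * s : ℝ) ^ (k - 1) * P * _ ≤ (2 * s : ℝ) ^ (k - 1) * P * (2 * s * ((B : ℝ) ^ J * (16 * 4 ^ J * Q * (1 + Real.log M)))) := by
        gcongr; exact h2.trans h3
    _ = ((2 * s : ℝ) ^ (k - 1) * (2 * s)) * (P * (B : ℝ) ^ J) * (16 * 4 ^ J * Q * (1 + Real.log M)) := by ring
    _ = _ := by rw [hPB, ← pow_succ]; congr 3; omega

lemma tel_sum (f : ℕ → ℂ) {M M' : ℕ} (h : M ≤ M') (b : ℕ) :
    ∑ n ∈ Ioc M M', f (n + (b + 1)) - ∑ n ∈ Ioc M M', f (n + b) = f (M' + 1 + b) - f (M + 1 + b) := by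
  induction M', h using Nat.le_induction with
  | base => simp
  | succ M' h ih2 =>
    rw [sum_Ioc_succ_top (by omega), sum_Ioc_succ_top (by omega)]
    have e : f (M' + 1 + (b + 1)) = f (M' + 1 + 1 + b) := by congr 1; ring
    rw [e]
    linear_combination ih2

lemma shift_sum (f : ℕ → ℂ) (hf : ∀ n, ‖f n‖ ≤ 1) {M M' : ℕ} (h : M ≤ M') (b : ℕ) :
    ‖∑ n ∈ Ioc M M', f n - ∑ n ∈ Ioc M M', f (n + b)‖ ≤ 2 * b := by
  induction b with
  | zero => simp
  | succ b ih =>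
    have tel := tel_sum f h b
    have : ∑ n ∈ Ioc M M', f n - ∑ n ∈ Ioc M M', f (n + (b + 1)) =
      (∑ n ∈ Ioc M M', f n - ∑ n ∈ Ioc M M', f (n + b)) - f (M' + 1 + b) + f (M + 1 + b) := by linear_combination -tel
    rw [this]
    have := norm_add_le ((∑ n ∈ Ioc M M', f n - ∑ n ∈ Ioc M M', f (n + b)) - f (M' + 1 + b)) (f (M + 1 + b))
    have := norm_sub_le (∑ n ∈ Ioc M M', f n - ∑ n ∈ Ioc M M', f (n + b)) (f (M' + 1 + b))
    have := hf (M' + 1 + b)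
    have := hf (M + 1 + b)
    push_cast
    linarith

/-- The phase `-t log (n + b)` is replaced by its Taylor polynomial in `b` of degree `k`. -/
lemma tay_approx {k : ℕ} {t : ℝ} (ht : 0 < t) {n b : ℕ} {x : ℝ} (hn : 1 ≤ n) (hx : (b : ℝ) / n ≤ x) (hx2 : x ≤ 1 / 2) :
    ‖ph (-t * Real.log ((n + b : ℕ) : ℝ)) - ph (-t * Real.log n) * ph (∑ r : Fin k, tay k t n r * (b : ℝ) ^ (r + 1 : ℕ))‖ ≤
      2 * t * x ^ (k + 1) := by
  have hn0 : (0 : ℝ) < n := by exact_mod_cast hn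
  set y : ℝ := (b : ℝ) / n with hy
  have hy0 : 0 ≤ y := by positivity
  have hx0 : 0 ≤ x := hy0.trans hx
  rw [← ph_add]
  refine (norm_ph_sub_le _ _).trans ?_
  have e1 : Real.log ((n + b : ℕ) : ℝ) = Real.log n + Real.log (1 + y) := by
    rw [← Real.log_mul (by positivity) (by positivity)]
    congr 1; push_cast; rw [hy]; field_simp
  have e2 : ∑ r : Fin k, tay k t n r * (b : ℝ) ^ (r + 1 : ℕ) = t * ∑ i ∈ range k, (-y) ^ (i + 1) / (i + 1) := by
    rw [← Fin.sum_univ_eq_sum_range (fun i => (-y) ^ (i + 1) / ((i : ℝ) + 1)), mul_sum]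
    apply sum_congr rfl; intro r _
    rw [tay, neg_pow y, hy, div_pow]; push_cast; field_simp
  have h := Real.abs_log_sub_add_sum_range_le (x := -y) (by rw [abs_neg, abs_of_nonneg hy0]; linarith) k
  rw [abs_neg, abs_of_nonneg hy0, sub_neg_eq_add] at h
  have e3 : -t * Real.log ((n + b : ℕ) : ℝ) - (-t * Real.log n + ∑ r : Fin k, tay k t n r * (b : ℝ) ^ (r + 1 : ℕ)) =
      -t * ((∑ i ∈ range k, (-y) ^ (i + 1) / (i + 1)) + Real.log (1 + y)) := by
    rw [e1, e2]; ring
  rw [e3, abs_mul, abs_neg, abs_of_pos ht]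
  have h2 : y ^ (k + 1) / (1 - y) ≤ 2 * x ^ (k + 1) := by
    rw [div_le_iff₀ (by linarith)]
    have : y ^ (k + 1) ≤ x ^ (k + 1) := by gcongr
    have h0 : 0 ≤ x ^ (k + 1) := by positivity
    nlinarith
  calc t * _ ≤ t * (2 * x ^ (k + 1)) := by gcongr; exact h.trans h2
    _ = _ := by ring
end Wright

namespace Wright
open Finset

/-- For `M ≥ exp (k ^ 8)` every constant and logarithm of the moment estimate is below `M^{1/10}`. -/
lemma numeric_E {J k : ℕ} (hk : k = 10 * J + 20) (hJ : 1 ≤ J) {M : ℝ} (hM : Real.exp ((k : ℝ) ^ 8) ≤ M) :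
    Real.exp ((k : ℝ) ^ 7) * (4 * (k : ℝ) ^ 3) ^ k * (16 * 4 ^ J * (1 + Real.log M)) ≤ M ^ (1 / 10 : ℝ) := by
  have hk30 : (30 : ℝ) ≤ k := by rw [hk]; push_cast; have : (1 : ℝ) ≤ J := by exact_mod_cast hJ
                                 linarith
  have hJk : (J : ℝ) ≤ k := by rw [hk]; push_cast; have : (0 : ℝ) ≤ J := by positivity
                               linarith
  have hM1 : 1 ≤ M := le_trans (Real.one_le_exp (by positivity)) hM
  have hM0 : 0 < M := by linarith
  have h1 : 1 + Real.log M ≤ 21 * M ^ (1 / 20 : ℝ) := by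
    have := Real.log_le_rpow_div hM0.le (show (0 : ℝ) < 1 / 20 by norm_num)
    have h1 : 1 ≤ M ^ (1 / 20 : ℝ) := Real.one_le_rpow hM1 (by norm_num)
    have e : M ^ (1 / 20 : ℝ) / (1 / 20) = 20 * M ^ (1 / 20 : ℝ) := by ring
    rw [e] at this
    linarith
  have h2 : (4 * (k : ℝ) ^ 3) ^ k ≤ Real.exp (4 * (k : ℝ) ^ 4) := by
    have : 4 * (k : ℝ) ^ 3 ≤ Real.exp (4 * (k : ℝ) ^ 3) := by
      have := Real.add_one_le_exp (4 * (k : ℝ) ^ 3); linarith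
    calc (4 * (k : ℝ) ^ 3) ^ k ≤ (Real.exp (4 * (k : ℝ) ^ 3)) ^ k := by gcongr
      _ = _ := by rw [← Real.exp_nat_mul]; congr 1; ring
  have h4 : (4 : ℝ) ^ J ≤ Real.exp (3 * k) := by
    calc (4 : ℝ) ^ J ≤ (Real.exp 3) ^ J := by
          gcongr; have := Real.add_one_le_exp (3 : ℝ); linarith
      _ = Real.exp (3 * J) := by rw [← Real.exp_nat_mul]; congr 1; ring
      _ ≤ _ := by apply Real.exp_le_exp.mpr; linarith
  have h5 : (336 : ℝ) ≤ Real.exp 335 := by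
    have := Real.add_one_le_exp (335 : ℝ); linarith
  have h6 : Real.exp ((k : ℝ) ^ 8 / 20) ≤ M ^ (1 / 20 : ℝ) := by
    calc Real.exp ((k : ℝ) ^ 8 / 20) = (Real.exp ((k : ℝ) ^ 8)) ^ (1 / 20 : ℝ) := by
          rw [← Real.exp_mul]; congr 1; ring
      _ ≤ _ := by gcongr
  have h7 : (k : ℝ) ^ 7 + 4 * (k : ℝ) ^ 4 + 3 * k + 335 ≤ (k : ℝ) ^ 8 / 20 := by
    have b1 : (30 : ℝ) * k ^ 7 ≤ k ^ 8 := by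
      have : (k : ℝ) ^ 8 = k * k ^ 7 := by ring
      rw [this]; gcongr
    have b2 : (30 : ℝ) ^ 3 * k ^ 4 ≤ k ^ 7 := by
      have : (k : ℝ) ^ 7 = k ^ 3 * k ^ 4 := by ring
      rw [this]; gcongr
    have b3 : (30 : ℝ) ^ 3 * k ≤ k ^ 4 := by
      have : (k : ℝ) ^ 4 = k ^ 3 * k := by ring
      rw [this]; gcongr
    linarith
  calc Real.exp ((k : ℝ) ^ 7) * (4 * (k : ℝ) ^ 3) ^ k * (16 * 4 ^ J * (1 + Real.log M))
      ≤ Real.exp ((k : ℝ) ^ 7) * Real.exp (4 * (k : ℝ) ^ 4) * (16 * Real.exp (3 * k) * (21 * M ^ (1 / 20 : ℝ))) := by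
        have : 0 ≤ Real.log M := Real.log_nonneg hM1
        gcongr
    _ = Real.exp ((k : ℝ) ^ 7) * Real.exp (4 * (k : ℝ) ^ 4) * Real.exp (3 * k) * 336 * M ^ (1 / 20 : ℝ) := by ring
    _ ≤ Real.exp ((k : ℝ) ^ 7) * Real.exp (4 * (k : ℝ) ^ 4) * Real.exp (3 * k) * Real.exp 335 * M ^ (1 / 20 : ℝ) := by gcongr
    _ = Real.exp ((k : ℝ) ^ 7 + 4 * (k : ℝ) ^ 4 + 3 * k + 335) * M ^ (1 / 20 : ℝ) := by simp only [Real.exp_add]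
    _ ≤ Real.exp ((k : ℝ) ^ 8 / 20) * M ^ (1 / 20 : ℝ) := by gcongr
    _ ≤ M ^ (1 / 20 : ℝ) * M ^ (1 / 20 : ℝ) := by gcongr
    _ = _ := by rw [← Real.rpow_add hM0]; norm_num

/-- Vinogradov's estimate for zeta sums over a dyadic block, by shifts of length `B = M^{9/10}`, Taylor
expansion of degree `k`, and the mean value `vmvt` with `2k³` variables. -/
lemma zeta_sum {J k : ℕ} (hk : k = 10 * J + 20) (hJ : 1 ≤ J) {M : ℕ} (hM : Real.exp ((k : ℝ) ^ 8) ≤ M)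
    {t : ℝ} (ht1 : (M : ℝ) ^ (4 / 10 + J / 10 : ℝ) ≤ t) (ht2 : t ≤ (M : ℝ) ^ J) {M' : ℕ} (hM' : M' ≤ 2 * M) :
    ‖∑ n ∈ Ioc M M', ph (-t * Real.log n)‖ ≤ 4 * (M : ℝ) ^ (1 - 1 / (20 * (k : ℝ) ^ 3)) := by
  have hk30 : 30 ≤ k := by omega
  have hk30' : (30 : ℝ) ≤ k := by exact_mod_cast hk30
  have hMbig : (1024 : ℝ) ≤ M := by
    refine le_trans ?_ hM
    have := Real.add_one_le_exp ((k : ℝ) ^ 8)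
    have : (30 : ℝ) ^ 8 ≤ (k : ℝ) ^ 8 := by gcongr
    linarith
  have hM1 : (1 : ℝ) ≤ M := by linarith
  have hM0 : (0 : ℝ) < M := by linarith
  have hMn : 1 ≤ M := by exact_mod_cast hM1
  have ht : 0 < t := lt_of_lt_of_le (by positivity) ht1
  by_cases hMM : M ≤ M'
  swap
  · rw [Finset.Ioc_eq_empty (by omega)]; simp; positivity
  set z : ℝ := (M : ℝ) ^ (9 / 10 : ℝ) with hz
  have hz1 : 1 ≤ z := Real.one_le_rpow hM1 (by norm_num)
  set B : ℕ := ⌊z⌋₊ with hB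
  have hB1 : 1 ≤ B := (Nat.one_le_floor_iff z).mpr hz1
  have hB1' : (1 : ℝ) ≤ B := by exact_mod_cast hB1
  have hBz : (B : ℝ) ≤ z := Nat.floor_le (by linarith)
  have hzB : z ≤ 2 * B := by have := Nat.lt_floor_add_one z; linarith
  have hzM : z = M * (M : ℝ) ^ (-(1 / 10) : ℝ) := by
    rw [hz, ← Real.rpow_one_add' hM0.le (by norm_num)]; norm_num
  have hM10 : (M : ℝ) ^ (-(1 / 10) : ℝ) ≤ 1 / 2 := by
    rw [Real.rpow_neg hM0.le, show (1 / 2 : ℝ) = 2⁻¹ by norm_num]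
    apply inv_anti₀ (by norm_num)
    calc (2 : ℝ) = (1024 : ℝ) ^ (1 / 10 : ℝ) := by
          rw [show (1024 : ℝ) = 2 ^ (10 : ℝ) by norm_num, ← Real.rpow_mul (by norm_num)]; norm_num
      _ ≤ (M : ℝ) ^ (1 / 10 : ℝ) := by gcongr
  set s : ℕ := 2 * k ^ 3 with hs
  have hs1 : 1 ≤ s := by rw [hs]; have := Nat.one_le_pow 3 k (by omega); omega
  set j : Fin k := ⟨J - 1, by omega⟩ with hj
  have hjJ : (j + 1 : ℕ) = J := by simp only [hj]; omega
  have hjJ2 : (j + 2 : ℕ) = J + 1 := by simp only [hj]; omega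
  set T : ℕ → ℂ := fun n => ∑ b ∈ range B, ph (∑ r : Fin k, tay k t n r * (b : ℝ) ^ (r + 1 : ℕ)) with hT
  have hlog0 : 0 ≤ Real.log M := Real.log_nonneg hM1
  -- the coordinate `J` carries the saving, because `t` lies between `M^{(J+4)/10}` and `M^J`
  have hmom : ∑ n ∈ Ioc M M', ‖T n‖ ^ (2 * s) ≤ (B : ℝ) ^ (2 * s) * (M : ℝ) ^ (8 / 10 : ℝ) := by
    have hQ : (M : ℝ) ^ (j + 2 : ℕ) / t ≤ (M : ℝ) ^ (6 / 10 : ℝ) * 2 ^ (j + 1 : ℕ) * (B : ℝ) ^ (j + 1 : ℕ) := by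
      rw [hjJ, hjJ2, mul_assoc, ← mul_pow]
      calc (M : ℝ) ^ (J + 1) / t ≤ (M : ℝ) ^ (J + 1) / (M : ℝ) ^ (4 / 10 + J / 10 : ℝ) := by gcongr
        _ = (M : ℝ) ^ (6 / 10 : ℝ) * z ^ J := by
          rw [hz, ← Real.rpow_natCast (M : ℝ) (J + 1), ← Real.rpow_natCast (_ ^ _) J, ← Real.rpow_mul hM0.le, ← Real.rpow_add hM0, ← Real.rpow_sub hM0]
          congr 1; push_cast; ring
        _ ≤ _ := by gcongr
    have hmom := moment_le (s := s) (B := B) (Ioc M M') (tay k t) _ (by positivity)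
      (row_sum_le hs1 hB1 hMn hM' j ht (by rw [hjJ]; exact ht2) _ hQ (Real.one_le_rpow hM1 (by norm_num)))
    refine hmom.trans ?_
    have hJJ := vmvt hk30 B hB1
    rw [← hs] at hJJ
    have hE := numeric_E hk hJ hM
    rw [hjJ]
    have e1 : (B : ℝ) ^ (4 * (k : ℝ) ^ 3 - k * (k + 1) / 2 + 1 / 10 : ℝ) * (B : ℝ) ^ ((k : ℝ) * (k + 1) / 2) =
        (B : ℝ) ^ (2 * s) * (B : ℝ) ^ (1 / 10 : ℝ) := by
      rw [← Real.rpow_add (by linarith), ← Real.rpow_natCast (B : ℝ) (2 * s), ← Real.rpow_add (by linarith)]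
      congr 1; rw [hs]; push_cast; ring
    have e2 : (B : ℝ) ^ (1 / 10 : ℝ) ≤ (M : ℝ) ^ (1 / 10 : ℝ) := by
      apply Real.rpow_le_rpow (by positivity) _ (by norm_num)
      refine hBz.trans ?_
      rw [hzM]
      nlinarith
    have e3 : (2 * (s : ℝ)) = 4 * (k : ℝ) ^ 3 := by rw [hs]; push_cast; ring
    rw [e3]
    have e4 : (M : ℝ) ^ (8 / 10 : ℝ) = (M : ℝ) ^ (1 / 10 : ℝ) * (M : ℝ) ^ (6 / 10 : ℝ) * (M : ℝ) ^ (1 / 10 : ℝ) := by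
      rw [← Real.rpow_add hM0, ← Real.rpow_add hM0]; norm_num
    calc (Jv k (Fin s) B : ℝ) * ((4 * (k : ℝ) ^ 3) ^ k * (B : ℝ) ^ ((k : ℝ) * (k + 1) / 2) * (16 * 4 ^ J * (M : ℝ) ^ (6 / 10 : ℝ) * (1 + Real.log M)))
        ≤ (Real.exp ((k : ℝ) ^ 7) * (B : ℝ) ^ (4 * (k : ℝ) ^ 3 - k * (k + 1) / 2 + 1 / 10 : ℝ)) * ((4 * (k : ℝ) ^ 3) ^ k * (B : ℝ) ^ ((k : ℝ) * (k + 1) / 2) * (16 * 4 ^ J * (M : ℝ) ^ (6 / 10 : ℝ) * (1 + Real.log M))) := by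
          apply mul_le_mul_of_nonneg_right hJJ; positivity
      _ = ((B : ℝ) ^ (4 * (k : ℝ) ^ 3 - k * (k + 1) / 2 + 1 / 10 : ℝ) * (B : ℝ) ^ ((k : ℝ) * (k + 1) / 2)) * (Real.exp ((k : ℝ) ^ 7) * (4 * (k : ℝ) ^ 3) ^ k * (16 * 4 ^ J * (1 + Real.log M))) * (M : ℝ) ^ (6 / 10 : ℝ) := by ring
      _ ≤ ((B : ℝ) ^ (2 * s) * (M : ℝ) ^ (1 / 10 : ℝ)) * (M : ℝ) ^ (1 / 10 : ℝ) * (M : ℝ) ^ (6 / 10 : ℝ) := by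
          rw [e1]
          apply mul_le_mul_of_nonneg_right _ (by positivity)
          apply mul_le_mul _ hE (by positivity) (by positivity)
          apply mul_le_mul_of_nonneg_left e2 (by positivity)
      _ = _ := by rw [e4]; ring
  -- Hölder's inequality passes from the moment of order `2s` to the first moment of `T`
  have hcard : ((Ioc M M').card : ℝ) ≤ M := by
    rw [Nat.card_Ioc]; exact_mod_cast (by omega)
  have hMs : (M : ℝ) ^ (1 - 1 / (20 * (k : ℝ) ^ 3)) = M * (M : ℝ) ^ (-(1 / (20 * (k : ℝ) ^ 3))) := by
    rw [sub_eq_add_neg, Real.rpow_add hM0, Real.rpow_one]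
  have hsumT : ∑ n ∈ Ioc M M', ‖T n‖ ≤ B * (M : ℝ) ^ (1 - 1 / (20 * (k : ℝ) ^ 3)) := by
    have hne : 2 * s ≠ 0 := by omega
    have h1 := pow_sum_div_card_le_sum_pow (s := Ioc M M') (f := fun n => ‖T n‖) (fun _ _ => norm_nonneg _) (2 * s - 1)
    rw [show 2 * s - 1 + 1 = 2 * s by omega] at h1
    rcases (Ioc M M').eq_empty_or_nonempty with he | he
    · rw [he]; simp; positivity
    have hc0 : (0 : ℝ) < (Ioc M M').card := by exact_mod_cast he.card_pos
    rw [div_le_iff₀ (by positivity)] at h1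
    have e5 : ((M : ℝ) ^ (-(1 / (20 * (k : ℝ) ^ 3)))) ^ (2 * s) = (M : ℝ) ^ (-(2 / 10) : ℝ) := by
      rw [← Real.rpow_natCast, ← Real.rpow_mul hM0.le]
      congr 1
      rw [hs]; push_cast; field_simp; norm_num
    have h2 : (∑ n ∈ Ioc M M', ‖T n‖) ^ (2 * s) ≤ (B * (M : ℝ) ^ (1 - 1 / (20 * (k : ℝ) ^ 3))) ^ (2 * s) := by
      calc _ ≤ _ := h1
        _ ≤ ((B : ℝ) ^ (2 * s) * (M : ℝ) ^ (8 / 10 : ℝ)) * (M : ℝ) ^ (2 * s - 1) := by gcongr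
        _ = (B : ℝ) ^ (2 * s) * ((M : ℝ) ^ (2 * s - 1) * M) * (M : ℝ) ^ (-(2 / 10) : ℝ) := by
          have : (M : ℝ) ^ (8 / 10 : ℝ) = M * (M : ℝ) ^ (-(2 / 10) : ℝ) := by
            rw [← Real.rpow_one_add' hM0.le (by norm_num)]; norm_num
          rw [this]; ring
        _ = _ := by
          rw [← pow_succ, show 2 * s - 1 + 1 = 2 * s by omega, hMs, mul_pow, mul_pow, e5]; ring
    exact le_of_pow_le_pow_left₀ hne (by positivity) h2
  -- with `b / n ≤ M^{-1/10}` and `k = 10 J + 20` the Taylor remainder is at most `2 t M^{-(k+1)/10} ≤ 1 / M`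
  have hpt : ∀ n ∈ Ioc M M', ‖∑ b ∈ range B, ph (-t * Real.log ((n + b : ℕ) : ℝ))‖ ≤ ‖T n‖ + B * (1 / M) := by
    intro n hn
    rw [mem_Ioc] at hn
    have hn0 : (M : ℝ) < n := by exact_mod_cast hn.1
    have e1 : ∑ b ∈ range B, ph (-t * Real.log ((n + b : ℕ) : ℝ)) = ph (-t * Real.log n) * T n +
        ∑ b ∈ range B, (ph (-t * Real.log ((n + b : ℕ) : ℝ)) - ph (-t * Real.log n) * ph (∑ r : Fin k, tay k t n r * (b : ℝ) ^ (r + 1 : ℕ))) := by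
      rw [sum_sub_distrib, ← mul_sum]; ring
    rw [e1]
    refine (norm_add_le _ _).trans ?_
    rw [norm_mul, norm_ph, one_mul]
    gcongr
    refine (norm_sum_le _ _).trans ?_
    have : ∀ b ∈ range B, ‖ph (-t * Real.log ((n + b : ℕ) : ℝ)) - ph (-t * Real.log n) * ph (∑ r : Fin k, tay k t n r * (b : ℝ) ^ (r + 1 : ℕ))‖ ≤ 1 / M := by
      intro b hb
      rw [mem_range] at hb
      have hb' : (b : ℝ) ≤ z := le_trans (by exact_mod_cast hb.le) hBz
      refine (tay_approx ht (by omega) (x := (M : ℝ) ^ (-(1 / 10) : ℝ)) ?_ hM10).trans ?_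
      · rw [div_le_iff₀ (by linarith)]
        have : (0 : ℝ) < (M : ℝ) ^ (-(1 / 10) : ℝ) := by positivity
        nlinarith
      · calc 2 * t * ((M : ℝ) ^ (-(1 / 10) : ℝ)) ^ (k + 1) ≤ M * (M : ℝ) ^ J * ((M : ℝ) ^ (-(1 / 10) : ℝ)) ^ (k + 1) := by
              gcongr; linarith
          _ = (M : ℝ) ^ (-(11 / 10) : ℝ) := by
              rw [← Real.rpow_natCast _ (k + 1), ← Real.rpow_mul hM0.le, ← Real.rpow_natCast (M : ℝ) J, ← Real.rpow_one_add' hM0.le (by positivity), ← Real.rpow_add hM0]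
              congr 1; rw [hk]; push_cast; ring
          _ ≤ (M : ℝ) ^ (-1 : ℝ) := Real.rpow_le_rpow_of_exponent_le hM1 (by norm_num)
          _ = 1 / M := by rw [Real.rpow_neg_one, one_div]
    refine (sum_le_sum this).trans ?_
    simp
  have hshift : B * ‖∑ n ∈ Ioc M M', ph (-t * Real.log n)‖ ≤
      ∑ n ∈ Ioc M M', ‖∑ b ∈ range B, ph (-t * Real.log ((n + b : ℕ) : ℝ))‖ + B * (2 * B) := by
    set S := ∑ n ∈ Ioc M M', ph (-t * Real.log n) with hS
    have e1 : (B : ℂ) * S = ∑ b ∈ range B, (S - ∑ n ∈ Ioc M M', ph (-t * Real.log ((n + b : ℕ) : ℝ))) +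
        ∑ n ∈ Ioc M M', ∑ b ∈ range B, ph (-t * Real.log ((n + b : ℕ) : ℝ)) := by
      rw [sum_sub_distrib, sum_comm (s := Ioc M M')]; simp
    have e2 : B * ‖S‖ = ‖(B : ℂ) * S‖ := by simp
    rw [e2, e1, add_comm]
    refine (norm_add_le _ _).trans (add_le_add (norm_sum_le _ _) ((norm_sum_le _ _).trans ?_))
    have : ∀ b ∈ range B, ‖S - ∑ n ∈ Ioc M M', ph (-t * Real.log ((n + b : ℕ) : ℝ))‖ ≤ 2 * B := by
      intro b hb
      refine (shift_sum (fun n => ph (-t * Real.log n)) (fun n => (norm_ph _).le) hMM b).trans ?_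
      have : (b : ℝ) ≤ B := by exact_mod_cast (mem_range.mp hb).le
      linarith
    refine (sum_le_sum this).trans ?_
    simp
  have hfin : B * ‖∑ n ∈ Ioc M M', ph (-t * Real.log n)‖ ≤ B * (4 * (M : ℝ) ^ (1 - 1 / (20 * (k : ℝ) ^ 3))) := by
    have h1 : ∑ n ∈ Ioc M M', ‖∑ b ∈ range B, ph (-t * Real.log ((n + b : ℕ) : ℝ))‖ ≤ ∑ n ∈ Ioc M M', ‖T n‖ + B := by
      refine (sum_le_sum hpt).trans ?_
      rw [sum_add_distrib, sum_const, nsmul_eq_mul]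
      gcongr
      calc ((Ioc M M').card : ℝ) * (B * (1 / M)) ≤ M * (B * (1 / M)) := by gcongr
        _ = B := by field_simp
    have hkk : 1 / (20 * (k : ℝ) ^ 3) ≤ 1 / 10 := by
      apply one_div_le_one_div_of_le (by norm_num)
      have : (1 : ℝ) ≤ (k : ℝ) ^ 3 := one_le_pow₀ (by linarith)
      linarith
    have h2 : (B : ℝ) ≤ (M : ℝ) ^ (1 - 1 / (20 * (k : ℝ) ^ 3)) := by
      refine hBz.trans (Real.rpow_le_rpow_of_exponent_le hM1 (by linarith))
    have h3 : (1 : ℝ) ≤ (M : ℝ) ^ (1 - 1 / (20 * (k : ℝ) ^ 3)) := Real.one_le_rpow hM1 (by linarith)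
    nlinarith
  exact le_of_mul_le_mul_left hfin (by linarith)
end Wright

/-! ### Bounds for the zeta function -/

namespace Wright
open Finset Filter Topology

/-- Difference between `(n+1)^{-s}` and `∫_n^{n+1} x^{-s} dx`. -/
noncomputable def zterm (n : ℕ) (s : ℂ) : ℂ :=
  ((n + 1 : ℕ) : ℂ) ^ (-s) - (((n + 1 : ℕ) : ℂ) ^ (1 - s) - (n : ℂ) ^ (1 - s)) / (1 - s)

lemma cpow_lip {s : ℂ} (hs : 1 / 2 ≤ s.re) {n : ℕ} (hn : 1 ≤ n) {x : ℝ} (hx : (n : ℝ) ≤ x) (hx2 : x ≤ n + 1) :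
    ‖((n + 1 : ℕ) : ℂ) ^ (-s) - (x : ℂ) ^ (-s)‖ ≤ ‖s‖ * (n : ℝ) ^ (-(3 / 2) : ℝ) := by
  have hn1 : (1 : ℝ) ≤ n := by exact_mod_cast hn
  have h := norm_image_sub_le_of_norm_deriv_le_segment' (a := x) (b := n + 1) (f := fun y : ℝ => (y : ℂ) ^ (-s))
    (f' := fun y : ℝ => -s * (y : ℂ) ^ (-s - 1)) (C := ‖s‖ * (n : ℝ) ^ (-(3 / 2) : ℝ)) ?_ ?_ (n + 1) (by simp [hx2])
  · have e : (((n : ℝ) + 1 : ℝ) : ℂ) = ((n + 1 : ℕ) : ℂ) := by push_cast; rfl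
    simp only [e] at h
    refine h.trans ?_
    have : 0 ≤ ‖s‖ * (n : ℝ) ^ (-(3 / 2) : ℝ) := by positivity
    nlinarith
  · intro y hy
    have hy0 : 0 < y := by linarith [hy.1]
    apply HasDerivAt.hasDerivWithinAt
    by_cases hs0 : s = 0
    · rw [hs0] at hs; norm_num at hs
    exact (hasDerivAt_ofReal_cpow_const hy0.ne' (neg_ne_zero.mpr hs0))
  · intro y hy
    have hy0 : 0 < y := by linarith [hy.1]
    rw [norm_mul, norm_neg, Complex.norm_cpow_eq_rpow_re_of_pos hy0]
    gcongr
    calc y ^ (-s - 1).re ≤ y ^ (-(3 / 2) : ℝ) := by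
          apply Real.rpow_le_rpow_of_exponent_le (by linarith [hy.1])
          simp; linarith
      _ ≤ (n : ℝ) ^ (-(3 / 2) : ℝ) := by
          apply Real.rpow_le_rpow_of_nonpos (by linarith) (by linarith [hy.1]) (by norm_num)

lemma zterm_bound {s : ℂ} (hs : 1 / 2 ≤ s.re) (hs1 : s ≠ 1) {n : ℕ} (hn : 1 ≤ n) :
    ‖zterm n s‖ ≤ ‖s‖ * (n : ℝ) ^ (-(3 / 2) : ℝ) := by
  have hn1 : (1 : ℝ) ≤ n := by exact_mod_cast hn
  have hs1' : 1 - s ≠ 0 := sub_ne_zero.mpr hs1.symm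
  have h := norm_image_sub_le_of_norm_deriv_le_segment' (a := n) (b := n + 1)
    (f := fun y : ℝ => ((n + 1 : ℕ) : ℂ) ^ (-s) * (y : ℂ) - (y : ℂ) ^ (1 - s) / (1 - s))
    (f' := fun y : ℝ => ((n + 1 : ℕ) : ℂ) ^ (-s) - (y : ℂ) ^ (-s)) (C := ‖s‖ * (n : ℝ) ^ (-(3 / 2) : ℝ)) ?_ ?_ (n + 1) (by simp)
  · have e : (((n : ℝ) + 1 : ℝ) : ℂ) = ((n + 1 : ℕ) : ℂ) := by push_cast; rfl
    simp only [e] at h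
    rw [show ((n : ℝ) + 1 - n) = 1 by ring, mul_one] at h
    refine le_trans (le_of_eq ?_) h
    congr 1
    rw [zterm]; push_cast; ring
  · intro y hy
    have hy0 : 0 < y := by linarith [hy.1]
    apply HasDerivAt.hasDerivWithinAt
    have h1 := (hasDerivAt_ofReal_cpow_const hy0.ne' hs1').div_const (1 - s)
    have h2 := (Complex.ofRealCLM.hasDerivAt (x := y)).const_mul (((n + 1 : ℕ) : ℂ) ^ (-s))
    refine (h2.sub h1).congr_deriv ?_
    rw [mul_div_cancel_left₀ _ hs1', show (1 - s - 1 : ℂ) = -s by ring]; simp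
  · intro y hy
    exact cpow_lip hs hn hy.1 hy.2.le

lemma pow_tele {n : ℕ} (hn : 1 ≤ n) : (n : ℝ) ^ (-(3 / 2) : ℝ) ≤ 4 * (1 / √n - 1 / √(n + 1 : ℕ)) := by
  have hn1 : (1 : ℝ) ≤ n := by exact_mod_cast hn
  set a := √(n : ℝ) with ha
  set b := √((n + 1 : ℕ) : ℝ) with hb
  have ha2 : a ^ 2 = n := Real.sq_sqrt (by linarith)
  have hb2 : b ^ 2 = n + 1 := by rw [hb, Real.sq_sqrt (by positivity)]; push_cast; ring
  have ha1 : 1 ≤ a := Real.one_le_sqrt.mpr hn1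
  have hab : a ≤ b := Real.sqrt_le_sqrt (by push_cast; linarith)
  have e : (n : ℝ) ^ (-(3 / 2) : ℝ) = 1 / a ^ 3 := by
    rw [Real.rpow_neg (by linarith), ha, Real.sqrt_eq_rpow, ← Real.rpow_natCast, ← Real.rpow_mul (by linarith), one_div]
    norm_num
  rw [e]
  have hba : (b - a) * (b + a) = 1 := by nlinarith
  have h2 : b ≤ 2 * a := by nlinarith
  have hb0 : 0 < b := by linarith
  have ha0 : 0 < a := by linarith
  have e2 : 1 / a - 1 / b = (b - a) / (a * b) := by
    rw [div_sub_div _ _ ha0.ne' hb0.ne']; ring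
  rw [e2, mul_div_assoc', div_le_div_iff₀ (by positivity) (by positivity)]
  have h3 : b ^ 2 ≤ 2 * a ^ 2 := by linarith
  have h4 : b ≤ 3 / 2 * a := by nlinarith
  have h5 : a * b * (b + a) ≤ 4 * a ^ 3 := by
    nlinarith [mul_le_mul_of_nonneg_left h3 ha0.le, mul_le_mul_of_nonneg_left h4 (sq_nonneg a), pow_pos ha0 3]
  have h6 : 0 < b - a := by nlinarith
  calc 1 * (a * b) = (a * b * (b + a)) * (b - a) := by linear_combination (-a * b) * hba
    _ ≤ 4 * a ^ 3 * (b - a) := by gcongr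
    _ = _ := by ring

lemma sum_range_eq_Icc (f : ℕ → ℂ) (N : ℕ) : ∑ n ∈ range N, f (n + 1) = ∑ n ∈ Icc 1 N, f n := by
  induction N with
  | zero => simp
  | succ N ih => rw [sum_range_succ, ih, Finset.sum_Icc_succ_top (by omega)]

lemma sum_pow_le {N : ℕ} (hN : 1 ≤ N) (m : ℕ) :
    ∑ i ∈ range m, ((N + i : ℕ) : ℝ) ^ (-(3 / 2) : ℝ) ≤ 4 / √N := by
  have : ∑ i ∈ range m, ((N + i : ℕ) : ℝ) ^ (-(3 / 2) : ℝ) ≤ 4 * (1 / √N - 1 / √((N + m : ℕ) : ℝ)) := by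
    induction m with
    | zero => simp
    | succ m ih =>
      rw [sum_range_succ]
      have := pow_tele (n := N + m) (by omega)
      have e : N + (m + 1) = N + m + 1 := by ring
      rw [e]
      linarith
  refine this.trans ?_
  have h0 : 0 ≤ 1 / √((N + m : ℕ) : ℝ) := by positivity
  have : 4 / √(N : ℝ) = 4 * (1 / √N) := by ring
  rw [this]; linarith

lemma summable_pow {N : ℕ} (hN : 1 ≤ N) : Summable fun i : ℕ => ((N + i : ℕ) : ℝ) ^ (-(3 / 2) : ℝ) :=
  summable_of_sum_range_le (fun _ => by positivity) (sum_pow_le hN)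

lemma tsum_zterm_bound {s : ℂ} (hs : 1 / 2 ≤ s.re) (hs1 : s ≠ 1) {N : ℕ} (hN : 1 ≤ N) :
    ‖∑' i : ℕ, zterm (N + i) s‖ ≤ ‖s‖ * (4 / √N) := by
  have hsum := (summable_pow hN).mul_left ‖s‖
  refine (tsum_of_norm_bounded hsum.hasSum fun i => zterm_bound hs hs1 (by omega)).trans ?_
  rw [tsum_mul_left]
  gcongr
  exact Real.tsum_le_of_sum_range_le (fun _ => by positivity) (sum_pow_le hN)

/-- Euler–Maclaurin in the region of absolute convergence. -/
lemma zeta_formula_gt {s : ℂ} (hs : 1 < s.re) {N : ℕ} (hN : 1 ≤ N) :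
    riemannZeta s = ∑ n ∈ Icc 1 N, (n : ℂ) ^ (-s) - (N : ℂ) ^ (1 - s) / (1 - s) + ∑' i : ℕ, zterm (N + i) s := by
  have hs1 : s ≠ 1 := by rintro rfl; simp at hs
  have hs0 : 1 - s ≠ 0 := sub_ne_zero.mpr hs1.symm
  have hsm : Summable fun i : ℕ => zterm (N + i) s :=
    Summable.of_norm_bounded ((summable_pow hN).mul_left ‖s‖) fun i => zterm_bound (by linarith) hs1 (by omega)
  have h1 := hsm.hasSum.tendsto_sum_nat
  have hpart : ∀ m, ∑ i ∈ range m, zterm (N + i) s = ∑ n ∈ range (N + m), 1 / ((n + 1 : ℂ)) ^ s - ∑ n ∈ Icc 1 N, (n : ℂ) ^ (-s)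
      - (((N + m : ℕ) : ℂ) ^ (1 - s) - (N : ℂ) ^ (1 - s)) / (1 - s) := by
    intro m
    induction m with
    | zero =>
      have : ∑ n ∈ range N, 1 / ((n + 1 : ℂ)) ^ s = ∑ n ∈ Icc 1 N, (n : ℂ) ^ (-s) := by
        rw [← sum_range_eq_Icc]
        refine sum_congr rfl fun n _ => ?_
        rw [Complex.cpow_neg, one_div]; push_cast; rfl
      rw [add_zero, this]; simp
    | succ m ih =>
      rw [sum_range_succ, ih, ← add_assoc, sum_range_succ, zterm, Complex.cpow_neg, one_div]
      push_cast
      ring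
  have h2 : Tendsto (fun m : ℕ => ∑ n ∈ range (N + m), 1 / ((n + 1 : ℂ)) ^ s) atTop (𝓝 (riemannZeta s)) := by
    rw [zeta_eq_tsum_one_div_nat_add_one_cpow hs]
    have hsum : Summable fun n : ℕ => 1 / ((n + 1 : ℂ)) ^ s := by
      have := (summable_nat_add_iff 1).mpr (Complex.summable_one_div_nat_cpow.mpr hs)
      simpa using this
    exact hsum.hasSum.tendsto_sum_nat.comp (tendsto_add_atTop_nat N |>.congr fun m => by ring)
  have h3 : Tendsto (fun m : ℕ => ((N + m : ℕ) : ℂ) ^ (1 - s)) atTop (𝓝 0) := by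
    rw [tendsto_zero_iff_norm_tendsto_zero]
    have : ∀ m : ℕ, ‖((N + m : ℕ) : ℂ) ^ (1 - s)‖ = ((N + m : ℕ) : ℝ) ^ (-(s.re - 1)) := by
      intro m
      rw [Complex.norm_natCast_cpow_of_pos (by omega)]; simp
    simp_rw [this]
    exact (tendsto_rpow_neg_atTop (by linarith)).comp (tendsto_natCast_atTop_atTop.comp
      (tendsto_add_atTop_nat N |>.congr fun m => by ring))
  have h4 := ((h2.sub_const (∑ n ∈ Icc 1 N, (n : ℂ) ^ (-s))).sub ((h3.sub_const ((N : ℂ) ^ (1 - s))).div_const (1 - s)))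
  have h5 := tendsto_nhds_unique h1 (h4.congr fun m => (hpart m).symm)
  rw [h5]; ring

/-- Euler–Maclaurin approximation of `ζ`, continued to `Re s > 1/2`, `Im s > 0`. -/
lemma zeta_formula {s : ℂ} (hs : 1 / 2 < s.re) (hs2 : 0 < s.im) {N : ℕ} (hN : 1 ≤ N) :
    riemannZeta s = ∑ n ∈ Icc 1 N, (n : ℂ) ^ (-s) - (N : ℂ) ^ (1 - s) / (1 - s) + ∑' i : ℕ, zterm (N + i) s := by
  set R : ℝ := ‖s‖ + 10 with hR
  set U : Set ℂ := {z | 1 / 2 < z.re} ∩ {z | 0 < z.im} ∩ Metric.ball 0 R with hU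
  have hUo : IsOpen U := ((isOpen_lt continuous_const Complex.continuous_re).inter
    (isOpen_lt continuous_const Complex.continuous_im)).inter Metric.isOpen_ball
  have hUc : Convex ℝ U := ((convex_halfSpace_re_gt _).inter (convex_halfSpace_im_gt _)).inter (convex_ball _ _)
  have hne : ∀ z ∈ U, z ≠ 1 := by
    rintro z hz rfl
    simpa using hz.1.2
  have hd1 : DifferentiableOn ℂ riemannZeta U := fun z hz =>
    (differentiableAt_riemannZeta (hne z hz)).differentiableWithinAt
  have hcp : ∀ n : ℕ, 1 ≤ n → ∀ f : ℂ → ℂ, Differentiable ℂ f → DifferentiableOn ℂ (fun z => (n : ℂ) ^ f z) U := by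
    intro n hn f hf z _
    exact ((hf z).const_cpow (Or.inl (by exact_mod_cast (by omega : n ≠ 0)))).differentiableWithinAt
  have hsub : ∀ z ∈ U, (1 - z : ℂ) ≠ 0 := fun z hz => sub_ne_zero.mpr (hne z hz).symm
  have hdt : ∀ i : ℕ, DifferentiableOn ℂ (zterm (N + i)) U := by
    intro i
    unfold zterm
    refine (hcp _ (by omega) _ (by fun_prop)).sub (DifferentiableOn.div ((hcp _ (by omega) _ (by fun_prop)).sub (hcp _ (by omega) _ (by fun_prop))) (by fun_prop) hsub)
  have hd2 : DifferentiableOn ℂ (fun z => ∑ n ∈ Icc 1 N, (n : ℂ) ^ (-z) - (N : ℂ) ^ (1 - z) / (1 - z) + ∑' i : ℕ, zterm (N + i) z) U := by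
    refine ((DifferentiableOn.fun_sum fun n hn => hcp _ (mem_Icc.mp hn).1 _ (by fun_prop)).sub
      (DifferentiableOn.div (hcp _ hN _ (by fun_prop)) (by fun_prop) hsub)).add ?_
    apply Complex.differentiableOn_tsum_of_summable_norm ((summable_pow hN).mul_left R) hdt hUo
    intro i w hw
    refine (zterm_bound hw.1.1.le (hne w hw) (by omega)).trans ?_
    gcongr
    have := hw.2
    rw [mem_ball_zero_iff] at this
    exact this.le
  have hz0 : (2 + Complex.I : ℂ) ∈ U := by
    refine ⟨⟨by simp; norm_num, by simp⟩, ?_⟩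
    rw [mem_ball_zero_iff]
    have := norm_add_le (2 : ℂ) Complex.I
    have h2 : ‖(2 : ℂ)‖ = 2 := by simp
    rw [h2, Complex.norm_I] at this
    have := norm_nonneg s
    linarith
  have hsU : s ∈ U := ⟨⟨hs, hs2⟩, by rw [mem_ball_zero_iff]; linarith⟩
  refine (hd1.analyticOnNhd hUo).eqOn_of_preconnected_of_eventuallyEq (hd2.analyticOnNhd hUo) hUc.isPreconnected hz0 ?_ hsU
  have : {z : ℂ | 1 < z.re} ∈ 𝓝 (2 + Complex.I : ℂ) :=
    (isOpen_lt continuous_const Complex.continuous_re).mem_nhds (by simp)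
  filter_upwards [this] with z hz
  exact zeta_formula_gt hz hN
end Wright

namespace Wright
open Finset

lemma abel_identity (w : ℕ → ℝ) (a : ℕ → ℂ) (M j : ℕ) :
    ∑ n ∈ Ioc M (M + j), (w n : ℂ) * a n = w (M + j + 1) * ∑ n ∈ Ioc M (M + j), a n
      + ∑ i ∈ range j, ((w (M + i + 1) - w (M + i + 2) : ℝ) : ℂ) * ∑ n ∈ Ioc M (M + i + 1), a n := by
  induction j with
  | zero => simp
  | succ j ih =>
    have e : ∀ f : ℕ → ℂ, ∑ n ∈ Ioc M (M + (j + 1)), f n = ∑ n ∈ Ioc M (M + j), f n + f (M + j + 1) := by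
      intro f
      rw [← add_assoc, Finset.sum_Ioc_succ_top (by omega)]
    rw [sum_range_succ, e, e, ih, show M + j + 1 = M + (j + 1) by ring, e]
    push_cast
    rw [show M + (j + 1) + 1 = M + j + 2 by ring, show M + (j + 1) = M + j + 1 by ring]
    ring

/-- Partial summation with a decreasing non-negative weight. -/
lemma abel_bound {w : ℕ → ℝ} (hw0 : ∀ n, 0 ≤ w n) {a : ℕ → ℂ} {M j : ℕ} (hw : ∀ n, M < n → w (n + 1) ≤ w n)
    {B : ℝ} (hB : ∀ i ≤ j, ‖∑ n ∈ Ioc M (M + i), a n‖ ≤ B) :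
    ‖∑ n ∈ Ioc M (M + j), (w n : ℂ) * a n‖ ≤ w (M + 1) * B := by
  rw [abel_identity]
  calc _ ≤ w (M + j + 1) * B + ∑ i ∈ range j, (w (M + i + 1) - w (M + i + 2)) * B := by
        refine (norm_add_le _ _).trans (add_le_add ?_ ((norm_sum_le _ _).trans (sum_le_sum fun i hi => ?_)))
        · rw [norm_mul, Complex.norm_real, Real.norm_of_nonneg (hw0 _)]
          exact mul_le_mul_of_nonneg_left (hB j le_rfl) (hw0 _)
        · have h0 : 0 ≤ w (M + i + 1) - w (M + i + 2) := sub_nonneg.mpr (hw (M + i + 1) (by omega))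
          rw [norm_mul, Complex.norm_real, Real.norm_of_nonneg h0]
          exact mul_le_mul_of_nonneg_left (hB (i + 1) (by have := mem_range.mp hi; omega)) h0
    _ = w (M + 1) * B := by
        rw [← sum_mul, ← add_mul]
        congr 1
        have := Finset.sum_range_sub' (fun i => w (M + i + 1)) j
        simp only [show ∀ i, M + (i + 1) + 1 = M + i + 2 from fun i => by ring] at this
        rw [this]; ring_nf

lemma cpow_eq_ph {n : ℕ} (hn : 1 ≤ n) (σ t : ℝ) :
    (n : ℂ) ^ (-(σ + t * Complex.I)) = ((n : ℝ) ^ (-σ) : ℝ) * ph (-t * Real.log n) := by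
  have hn0 : (n : ℂ) ≠ 0 := by exact_mod_cast (by omega : n ≠ 0)
  have hn1 : (0 : ℝ) < n := by exact_mod_cast (by omega : 0 < n)
  rw [Complex.cpow_def_of_ne_zero hn0, Real.rpow_def_of_pos hn1, ph]
  push_cast
  rw [← Complex.exp_add]
  congr 1
  ring

/-- Dyadic blocks of the Dirichlet series at height `t = exp (u ^ 10)`: with `J` such that
`M^{J-1} < t ≤ M^J`, the saving `M^{-1/(20k³)}` of `zeta_sum`, `k ≍ J ≤ u + 1`, outweighs `M^{1-σ}`. -/
lemma block_bound {u σ : ℝ} (hu : 11 ^ 9 ≤ u) (hσ : 1 - 1 / u ^ 9 ≤ σ) {M : ℕ}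
    (hM1 : Real.exp (u ^ 9) ≤ M) (hM2 : (M : ℝ) ≤ Real.exp (2 * u ^ 10)) :
    ‖∑ n ∈ Ioc M (M + M), (n : ℂ) ^ (-(σ + (Real.exp (u ^ 10) : ℝ) * Complex.I))‖ ≤ 4 := by
  set t := Real.exp (u ^ 10) with ht
  have hu1 : 1 ≤ u := le_trans (by norm_num) hu
  have hu0 : 0 < u := by linarith
  have hu9 : 1 ≤ u ^ 9 := one_le_pow₀ hu1
  have hMR1 : 1 ≤ (M : ℝ) := le_trans (Real.one_le_exp (by positivity)) hM1
  have hM0 : (0 : ℝ) < M := by linarith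
  set l := Real.log M with hl
  have hl1 : u ^ 9 ≤ l := by rw [hl, Real.le_log_iff_exp_le hM0]; exact hM1
  have hl2 : l ≤ 2 * u ^ 10 := by rw [hl, Real.log_le_iff_le_exp hM0]; exact hM2
  have hl0 : 0 < l := by linarith
  have hMe : ∀ y : ℝ, (M : ℝ) ^ y = Real.exp (l * y) := fun y => by rw [Real.rpow_def_of_pos hM0]
  set J := ⌈u ^ 10 / l⌉₊ with hJ
  have hJ1 : 1 ≤ J := Nat.one_le_ceil_iff.mpr (by positivity)
  have hJu : u ^ 10 ≤ J * l := by rw [← div_le_iff₀ hl0]; exact Nat.le_ceil _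
  have hJl : ((J : ℝ) - 1) * l < u ^ 10 := by
    rw [← lt_div_iff₀ hl0]
    have := Nat.ceil_lt_add_one (show 0 ≤ u ^ 10 / l by positivity)
    linarith
  have hJR : (1 : ℝ) ≤ J := by exact_mod_cast hJ1
  have hJu1 : (J : ℝ) - 1 ≤ u := by
    by_contra! h
    have : u * u ^ 9 < (J - 1) * l := by nlinarith
    have e : u * u ^ 9 = u ^ 10 := by ring
    linarith
  set k := 10 * J + 20 with hk
  have hkR : (k : ℝ) = 10 * J + 20 := by rw [hk]; push_cast; ring
  have hk11 : (k : ℝ) ≤ 11 * u := by rw [hkR]; nlinarith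
  have hk0 : (0 : ℝ) < k := by rw [hkR]; positivity
  have hk8 : (k : ℝ) ^ 8 ≤ u ^ 9 := by
    calc (k : ℝ) ^ 8 ≤ (11 * u) ^ 8 := by gcongr
      _ = 11 ^ 8 * u ^ 8 := by ring
      _ ≤ u * u ^ 8 := by gcongr; linarith
      _ = u ^ 9 := by ring
  have ht1 : (M : ℝ) ^ (4 / 10 + J / 10 : ℝ) ≤ t := by
    rw [hMe, ht, Real.exp_le_exp]
    rcases Nat.eq_or_lt_of_le hJ1 with h | h
    · rw [← h]; push_cast; linarith
    · have : (2 : ℝ) ≤ J := by exact_mod_cast h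
      nlinarith
  have ht2 : t ≤ (M : ℝ) ^ J := by
    rw [← Real.rpow_natCast, hMe, ht, Real.exp_le_exp]; linarith
  have hθ : 1 / u ^ 9 ≤ 1 / (20 * (k : ℝ) ^ 3) := by
    apply one_div_le_one_div_of_le (by positivity)
    calc 20 * (k : ℝ) ^ 3 ≤ k * (k : ℝ) ^ 3 := by gcongr; rw [hkR]; linarith
      _ = (k : ℝ) ^ 4 := by ring
      _ ≤ (k : ℝ) ^ 8 := by apply pow_le_pow_right₀ _ (by norm_num); rw [hkR]; linarith
      _ ≤ u ^ 9 := hk8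
  have hσ0 : 0 ≤ σ := by
    have : 1 / u ^ 9 ≤ 1 := by rw [div_le_one (by positivity)]; exact hu9
    linarith
  have hsum : ∑ n ∈ Ioc M (M + M), (n : ℂ) ^ (-(σ + t * Complex.I))
      = ∑ n ∈ Ioc M (M + M), (((n : ℝ) ^ (-σ) : ℝ) : ℂ) * ph (-t * Real.log n) := by
    refine sum_congr rfl fun n hn => cpow_eq_ph ?_ _ _
    have := (mem_Ioc.mp hn).1; omega
  rw [hsum]
  have hM0' : 0 < M := by exact_mod_cast hM0
  refine (abel_bound (w := fun n : ℕ => (n : ℝ) ^ (-σ)) (fun n => by positivity) (fun n hn => ?_)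
    (B := 4 * (M : ℝ) ^ (1 - 1 / (20 * (k : ℝ) ^ 3))) (fun i hi => ?_)).trans ?_
  · have : (0 : ℝ) < n := by exact_mod_cast (by omega : 0 < n)
    exact Real.rpow_le_rpow_of_nonpos this (by push_cast; linarith) (by linarith)
  · refine zeta_sum hk hJ1 (le_trans (Real.exp_le_exp.mpr hk8) hM1) ht1 ht2 (by omega)
  · calc ((M + 1 : ℕ) : ℝ) ^ (-σ) * (4 * (M : ℝ) ^ (1 - 1 / (20 * (k : ℝ) ^ 3)))
        ≤ (M : ℝ) ^ (-σ) * (4 * (M : ℝ) ^ (1 - 1 / (20 * (k : ℝ) ^ 3))) := by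
          gcongr ?_ * _
          exact Real.rpow_le_rpow_of_nonpos hM0 (by push_cast; linarith) (by linarith)
      _ = 4 * (M : ℝ) ^ (-σ + (1 - 1 / (20 * (k : ℝ) ^ 3))) := by rw [Real.rpow_add hM0]; ring
      _ ≤ 4 * (M : ℝ) ^ (0 : ℝ) := by
          gcongr
          linarith
      _ = 4 := by simp

lemma dyadic_sum_bound {f : ℕ → ℂ} {N0 r : ℕ} {B : ℝ} (hB : ∀ i < r, ‖∑ n ∈ Ioc (N0 * 2 ^ i) (N0 * 2 ^ i + N0 * 2 ^ i), f n‖ ≤ B) :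
    ‖∑ n ∈ Icc 1 (N0 * 2 ^ r), f n‖ ≤ ‖∑ n ∈ Icc 1 N0, f n‖ + r * B := by
  induction r with
  | zero => simp
  | succ r ih =>
    have e : N0 * 2 ^ (r + 1) = N0 * 2 ^ r + N0 * 2 ^ r := by ring
    have e2 : ∑ n ∈ Icc 1 (N0 * 2 ^ (r + 1)), f n = ∑ n ∈ Icc 1 (N0 * 2 ^ r), f n
        + ∑ n ∈ Ioc (N0 * 2 ^ r) (N0 * 2 ^ r + N0 * 2 ^ r), f n := by
      rw [e, ← sum_union]
      · congr 1; ext n; simp only [mem_union, mem_Icc, mem_Ioc]; omega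
      · rw [disjoint_left]; intro n; simp only [mem_Icc, mem_Ioc]; omega
    rw [e2]
    refine (norm_add_le _ _).trans ?_
    have := hB r (by omega)
    have := ih fun i hi => hB i (by omega)
    push_cast
    linarith

lemma sum_trivial {N0 : ℕ} (hN0 : 1 ≤ N0) {σ θ t : ℝ} (hθ : 0 ≤ θ) (hσ : 1 - θ ≤ σ) :
    ‖∑ n ∈ Icc 1 N0, (n : ℂ) ^ (-(σ + t * Complex.I))‖ ≤ (N0 : ℝ) ^ θ * (1 + Real.log N0) := by
  have h := harmonic_le_one_add_log N0
  rw [harmonic_eq_sum_Icc] at h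
  push_cast at h
  refine (norm_sum_le _ _).trans (le_trans ?_ (mul_le_mul_of_nonneg_left h (by positivity)))
  rw [mul_sum]
  refine sum_le_sum fun n hn => ?_
  obtain ⟨h1, h2⟩ := mem_Icc.mp hn
  have hn0 : (1 : ℝ) ≤ n := by exact_mod_cast h1
  rw [Complex.norm_natCast_cpow_of_pos (by omega)]
  calc (n : ℝ) ^ (-(σ + t * Complex.I)).re ≤ (n : ℝ) ^ (θ + (-1)) := by
        apply Real.rpow_le_rpow_of_exponent_le hn0; simp; linarith
    _ = (n : ℝ) ^ θ * (n : ℝ)⁻¹ := by rw [Real.rpow_add (by linarith), Real.rpow_neg_one]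
    _ ≤ _ := by gcongr

/-- Vinogradov–Korobov type bound (with a weak exponent): at height `t = exp (u ^ 10)`, `ζ` is at
most `(log t)²` for `σ ≥ 1 - (log t)^{-9/10}`. -/
lemma zeta_bound {u σ : ℝ} (hu : 11 ^ 9 ≤ u) (hσ : 1 - 1 / u ^ 9 ≤ σ) (hσ3 : σ ≤ 3) :
    ‖riemannZeta (σ + (Real.exp (u ^ 10) : ℝ) * Complex.I)‖ ≤ u ^ 20 := by
  set t := Real.exp (u ^ 10) with ht
  set s : ℂ := σ + t * Complex.I with hs
  have hre : s.re = σ := by simp [hs]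
  have him : s.im = t := by simp [hs]
  have hu1 : 1 ≤ u := le_trans (by norm_num) hu
  have hu0 : 0 < u := by linarith
  have hu9 : 1 ≤ u ^ 9 := one_le_pow₀ hu1
  have hu9' : 100 ≤ u ^ 9 := by
    calc (100 : ℝ) ≤ u := le_trans (by norm_num) hu
      _ ≤ u ^ 9 := le_self_pow₀ hu1 (by norm_num)
  have hu10 : 100 * u ^ 9 ≤ u ^ 10 := by
    have : (100 : ℝ) ≤ u := le_trans (by norm_num) hu
    calc 100 * u ^ 9 ≤ u * u ^ 9 := by gcongr
      _ = u ^ 10 := by ring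
  have ht0 : 0 < t := Real.exp_pos _
  have ht100 : 100 ≤ t := by
    have := Real.add_one_le_exp (u ^ 10); linarith
  have hθ1 : 1 / u ^ 9 ≤ 1 / 100 := one_div_le_one_div_of_le (by norm_num) hu9'
  have hσ2 : 1 / 2 < σ := by linarith
  set N0 := ⌈Real.exp (u ^ 9)⌉₊ with hN0
  have hN0l : Real.exp (u ^ 9) ≤ N0 := Nat.le_ceil _
  have hN0u : (N0 : ℝ) ≤ Real.exp (u ^ 9 + 1) := by
    have h1 := (Nat.ceil_lt_add_one (Real.exp_pos (u ^ 9)).le).le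
    have h2 := Real.one_le_exp (show 0 ≤ u ^ 9 by positivity)
    have h3 := Real.add_one_le_exp (1 : ℝ)
    rw [Real.exp_add]
    nlinarith
  have hN0R : (1 : ℝ) ≤ N0 := le_trans (Real.one_le_exp (by positivity)) hN0l
  have hN01 : 1 ≤ N0 := by exact_mod_cast hN0R
  -- the largest `r` with `N0 * 2 ^ r ≤ t ^ 2`
  have hex : ∃ r : ℕ, Real.exp (2 * u ^ 10) < (N0 : ℝ) * 2 ^ r := by
    obtain ⟨r, hr⟩ := pow_unbounded_of_one_lt (Real.exp (2 * u ^ 10)) (one_lt_two (α := ℝ))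
    exact ⟨r, hr.trans_le (le_mul_of_one_le_left (by positivity) hN0R)⟩
  classical
  set r1 := Nat.find hex with hr1
  have hr1s := Nat.find_spec hex
  have hr1m : ∀ r < r1, (N0 : ℝ) * 2 ^ r ≤ Real.exp (2 * u ^ 10) := fun r hr => not_lt.mp (Nat.find_min hex hr)
  have hr1p : 1 ≤ r1 := by
    by_contra! h
    have h0 : r1 = 0 := by omega
    rw [← hr1, h0, pow_zero, mul_one] at hr1s
    have := hr1s.trans_le hN0u
    rw [Real.exp_lt_exp] at this
    linarith
  obtain ⟨r, hr⟩ : ∃ r, r1 = r + 1 := ⟨r1 - 1, by omega⟩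
  have hNle := hr1m r (by omega)
  rw [← hr1, hr] at hr1s
  have hrL : (r : ℝ) ≤ 3 * u ^ 10 := by
    have h1 : (2 : ℝ) ^ r ≤ Real.exp (2 * u ^ 10) := le_trans (le_mul_of_one_le_left (by positivity) hN0R) hNle
    have h2 := Real.log_le_log (by positivity) h1
    rw [Real.log_pow, Real.log_exp] at h2
    have := Real.log_two_gt_d9
    have : (0 : ℝ) ≤ r := by positivity
    nlinarith
  set N := N0 * 2 ^ r with hN
  have hNR : (N : ℝ) = N0 * 2 ^ r := by rw [hN]; push_cast; ring
  have hN1 : 1 ≤ N := by rw [hN]; exact Nat.mul_pos hN01 (by positivity)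
  have ht2 : Real.exp (2 * u ^ 10) = t ^ 2 := by rw [ht, ← Real.exp_nat_mul]; norm_num
  have hNt : t ^ 2 ≤ 2 * N := by
    rw [hNR, ← ht2]; rw [pow_succ (2:ℝ) r] at hr1s; linarith
  have hNt2 : (N : ℝ) ≤ t ^ 2 := by rw [hNR, ← ht2]; exact hNle
  have hNpos : (0 : ℝ) < N := by exact_mod_cast hN1
  rw [zeta_formula (by rw [hre]; exact hσ2) (by rw [him]; exact ht0) hN1]
  -- terms up to `N0` are bounded trivially, each of the `r` dyadic blocks by `4`
  have hA : ‖∑ n ∈ Icc 1 N, (n : ℂ) ^ (-s)‖ ≤ 9 * (u ^ 9 + 2) + 12 * u ^ 10 := by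
    refine (dyadic_sum_bound (B := 4) fun i hi => ?_).trans ?_
    · refine block_bound hu hσ ?_ ?_
      · push_cast
        exact hN0l.trans (le_mul_of_one_le_right (by positivity) (one_le_pow₀ (by norm_num)))
      · push_cast; exact hr1m i (by omega)
    · have h1 := sum_trivial (t := t) hN01 (θ := 1 / u ^ 9) (by positivity) hσ
      have h2 : Real.log N0 ≤ u ^ 9 + 1 := by
        rw [Real.log_le_iff_le_exp (by linarith)]; exact hN0u
      have h3 : (N0 : ℝ) ^ (1 / u ^ 9) ≤ 9 := by
        calc (N0 : ℝ) ^ (1 / u ^ 9) ≤ (Real.exp (u ^ 9 + 1)) ^ (1 / u ^ 9) := by gcongr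
          _ = Real.exp ((u ^ 9 + 1) * (1 / u ^ 9)) := by rw [← Real.exp_mul]
          _ ≤ Real.exp 2 := by
              rw [Real.exp_le_exp, mul_one_div, div_le_iff₀ (by positivity)]; linarith
          _ = Real.exp 1 ^ 2 := by rw [← Real.exp_nat_mul]; norm_num
          _ ≤ 9 := by
              have := Real.exp_one_lt_d9
              have := Real.exp_pos 1
              nlinarith
      have h4 : 0 ≤ Real.log N0 := Real.log_nonneg hN0R
      have h5 : (N0 : ℝ) ^ (1 / u ^ 9) * (1 + Real.log N0) ≤ 9 * (1 + (u ^ 9 + 1)) := by gcongr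
      linarith
  have hs1 : t ≤ ‖1 - s‖ := by
    have := Complex.abs_im_le_norm (1 - s)
    simp only [Complex.sub_im, Complex.one_im, him, zero_sub, abs_neg, abs_of_pos ht0] at this
    exact this
  have hB : ‖(N : ℂ) ^ (1 - s) / (1 - s)‖ ≤ 1 := by
    rw [norm_div, div_le_one (by linarith), Complex.norm_natCast_cpow_of_pos hN1]
    refine le_trans ?_ hs1
    calc (N : ℝ) ^ (1 - s).re ≤ (N : ℝ) ^ (1 / 2 : ℝ) := by
          apply Real.rpow_le_rpow_of_exponent_le (by exact_mod_cast hN1)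
          rw [Complex.sub_re, hre]; simp; linarith
      _ = √N := by rw [Real.sqrt_eq_rpow]
      _ ≤ t := Real.sqrt_le_iff.mpr ⟨ht0.le, hNt2⟩
  have hs2 : ‖s‖ ≤ 3 + t := by
    refine (norm_add_le _ _).trans ?_
    rw [norm_mul, Complex.norm_real, Complex.norm_real, Complex.norm_I, Real.norm_of_nonneg ht0.le,
      Real.norm_of_nonneg (by linarith)]
    linarith
  have hC : ‖∑' i : ℕ, zterm (N + i) s‖ ≤ 16 := by
    refine (tsum_zterm_bound (by rw [hre]; exact hσ2.le) ?_ hN1).trans ?_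
    · intro h
      rw [h] at him; simp at him; linarith
    · have h1 : t / 2 ≤ √N := Real.le_sqrt_of_sq_le (by nlinarith)
      calc ‖s‖ * (4 / √N) ≤ (3 + t) * (4 / (t / 2)) := by gcongr
        _ ≤ 16 := by
            rw [mul_div_assoc', div_le_iff₀ (by positivity)]; linarith
  refine (norm_add_le _ _).trans ((add_le_add ((norm_sub_le _ _)) le_rfl).trans ?_)
  have h10 : 100 ≤ u ^ 10 := by linarith
  have : u ^ 20 = u ^ 10 * u ^ 10 := by ring
  nlinarith
end Wright

/-! ### Landau's lemma -/

namespace Wright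
open Metric

/-- A zero-free holomorphic function on a disc has a holomorphic logarithm. -/
lemma exists_hol_log {f : ℂ → ℂ} {r : ℝ} (hr : 0 < r) (hf : DifferentiableOn ℂ f (ball 0 r))
    (h0 : ∀ z ∈ ball (0 : ℂ) r, f z ≠ 0) :
    ∃ h : ℂ → ℂ, (∀ z ∈ ball (0 : ℂ) r, HasDerivAt h (deriv f z / f z) z) ∧
      ∀ z ∈ ball (0 : ℂ) r, f z = Complex.exp (h z) := by
  have hd : DifferentiableOn ℂ (fun z => deriv f z / f z) (ball 0 r) :=
    (hf.deriv isOpen_ball).div hf h0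
  obtain ⟨h, hh0, hh⟩ := hd.isExactOn_ball.with_val_at 0 (Complex.log (f 0))
  refine ⟨h, hh, fun z hz => ?_⟩
  have hfd : ∀ z ∈ ball (0 : ℂ) r, HasDerivAt f (deriv f z) z := fun z hz =>
    (hf.differentiableAt (isOpen_ball.mem_nhds hz)).hasDerivAt
  have hg : ∀ z ∈ ball (0 : ℂ) r, HasDerivAt (fun z => f z * Complex.exp (-h z)) 0 z := by
    intro z hz
    refine ((hfd z hz).mul (hh z hz).neg.cexp).congr_deriv ?_
    have := h0 z hz
    field_simp
    ring
  have hc0 : (0 : ℂ) ∈ ball (0 : ℂ) r := mem_ball_self hr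
  have hconst := (convex_ball (0 : ℂ) r).is_const_of_fderivWithin_eq_zero (𝕜 := ℂ)
    (f := fun z => f z * Complex.exp (-h z))
    (fun z hz => (hg z hz).differentiableAt.differentiableWithinAt) (fun z hz => by
      rw [fderivWithin_of_isOpen isOpen_ball hz]
      ext
      simp [(hg z hz).deriv]) hz hc0
  simp only [hh0] at hconst
  rw [Complex.exp_neg, Complex.exp_neg, Complex.exp_log (h0 0 hc0), mul_inv_cancel₀ (h0 0 hc0)] at hconst
  field_simp at hconst
  exact hconst

/-- Borel–Carathéodory for the logarithm of a zero-free function. -/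
lemma log_bc {f : ℂ → ℂ} {r M : ℝ} (hr : 0 < r) (hM : 1 < M) (hf : DifferentiableOn ℂ f (ball 0 r))
    (h0 : ∀ z ∈ ball (0 : ℂ) r, f z ≠ 0) (hb : ∀ z ∈ ball (0 : ℂ) r, ‖f z‖ ≤ M * ‖f 0‖) :
    ‖deriv f 0 / f 0‖ ≤ 4 * Real.log M / r ∧
    ∀ z ∈ ball (0 : ℂ) r, ‖f 0‖ * Real.exp (-(2 * Real.log M * ‖z‖ / (r - ‖z‖))) ≤ ‖f z‖ := by
  obtain ⟨h, hh, hfh⟩ := exists_hol_log hr hf h0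
  have hc0 : (0 : ℂ) ∈ ball (0 : ℂ) r := mem_ball_self hr
  have hnorm : ∀ z ∈ ball (0 : ℂ) r, ‖f z‖ = Real.exp (h z).re := fun z hz => by
    rw [hfh z hz, Complex.norm_exp]
  have hd : DifferentiableOn ℂ (fun z => h z - h 0) (ball 0 r) := fun z hz =>
    ((hh z hz).differentiableAt.sub_const _).differentiableWithinAt
  have hbc : ∀ z ∈ ball (0 : ℂ) r, ‖h z - h 0‖ ≤ 2 * Real.log M * ‖z‖ / (r - ‖z‖) := by
    intro z hz
    refine Complex.borelCaratheodory_zero (Real.log_pos hM) hd ?_ hr hz (by simp)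
    intro w hw
    have := hb w hw
    rw [hnorm w hw, hnorm 0 hc0] at this
    have h2 := Real.log_le_log (Real.exp_pos _) this
    rw [Real.log_mul (by linarith) (Real.exp_pos _).ne', Real.log_exp, Real.log_exp] at h2
    simp only [Set.mem_ofPred_eq, Complex.sub_re]
    linarith
  constructor
  · have hd1 : HasDerivAt (fun z => h z - h 0) (deriv f 0 / f 0) 0 := (hh 0 hc0).sub_const _
    rw [← hd1.deriv]
    have hr2 : 0 < r / 2 := by linarith
    have := Complex.norm_deriv_le_of_forall_mem_sphere_norm_le (f := fun z => h z - h 0) (c := 0) (R := r / 2)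
      (C := 2 * Real.log M) hr2 ?_ ?_
    · refine this.trans (le_of_eq ?_); field_simp; ring
    · apply DifferentiableOn.diffContOnCl
      refine hd.mono ?_
      rw [closure_ball _ hr2.ne']
      exact closedBall_subset_ball (by linarith)
    · intro z hz
      have hz' : ‖z‖ = r / 2 := by simpa using hz
      refine (hbc z (by simp [hz']; linarith)).trans (le_of_eq ?_)
      rw [hz']; field_simp; ring
  · intro z hz
    have h1 := hbc z hz
    have h2 := (Complex.abs_re_le_norm (h z - h 0)).trans h1
    rw [hnorm z hz, hnorm 0 hc0, ← Real.exp_add, Real.exp_le_exp]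
    have h3 := (abs_le.mp h2).1
    rw [Complex.sub_re] at h3
    linarith

/-- Dividing out one zero by its Blaschke factor at least doubles the value at `0`. -/
lemma blaschke_div {f : ℂ → ℂ} (hf : DifferentiableOn ℂ f (ball 0 2)) (hb : ∀ z ∈ closedBall (0 : ℂ) 1, ‖f z‖ ≤ 1)
    {ρ : ℂ} (hρ : ‖ρ‖ < 1 / 2) (hfρ : f ρ = 0) (hf0 : f 0 ≠ 0) :
    ∃ g : ℂ → ℂ, DifferentiableOn ℂ g (ball 0 2) ∧ (∀ z ∈ closedBall (0 : ℂ) 1, ‖g z‖ ≤ 1) ∧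
      (∀ z ∈ ball (0 : ℂ) (1 / 2), g z = 0 → f z = 0) ∧ 2 * ‖f 0‖ ≤ ‖g 0‖ ∧
      -(deriv f 0 / f 0).re = -(deriv g 0 / g 0).re + ρ.re * (1 / ‖ρ‖ ^ 2 - 1) := by
  have hρ0 : ρ ≠ 0 := by rintro rfl; exact hf0 hfρ
  have hρ2 : ρ ∈ ball (0 : ℂ) 2 := by simp; linarith
  set g : ℂ → ℂ := fun z => dslope f ρ z * (1 - (starRingEnd ℂ) ρ * z) with hg
  have hfg : ∀ z, f z * (1 - (starRingEnd ℂ) ρ * z) = (z - ρ) * g z := by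
    intro z
    have := sub_smul_dslope f ρ z
    rw [smul_eq_mul, hfρ, sub_zero] at this
    rw [hg, ← this]; ring
  have hgd : DifferentiableOn ℂ g (ball 0 2) := by
    refine DifferentiableOn.mul ?_ (by fun_prop)
    exact (Complex.differentiableOn_dslope (isOpen_ball.mem_nhds hρ2)).mpr hf
  have hbl : ∀ z : ℂ, ‖z‖ = 1 → ‖1 - (starRingEnd ℂ) ρ * z‖ = ‖z - ρ‖ := by
    intro z hz
    have e : 1 - (starRingEnd ℂ) ρ * z = z * (starRingEnd ℂ) (z - ρ) := by
      have : z * (starRingEnd ℂ) z = 1 := by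
        rw [Complex.mul_conj, Complex.normSq_eq_norm_sq, hz]; simp
      rw [map_sub, mul_sub, this]; ring
    rw [e, norm_mul, hz, one_mul, RCLike.norm_conj]
  have hgb : ∀ z ∈ closedBall (0 : ℂ) 1, ‖g z‖ ≤ 1 := by
    intro z hz
    refine Complex.norm_le_of_forall_mem_frontier_norm_le (U := ball 0 1) isBounded_ball ?_ ?_ (by
      rwa [closure_ball _ one_ne_zero])
    · apply DifferentiableOn.diffContOnCl
      rw [closure_ball _ one_ne_zero]
      exact hgd.mono (closedBall_subset_ball (by norm_num))
    · intro w hw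
      rw [frontier_ball _ one_ne_zero] at hw
      have hw1 : ‖w‖ = 1 := by simpa using hw
      have h1 := congrArg norm (hfg w)
      rw [norm_mul, norm_mul, hbl w hw1, mul_comm] at h1
      have h2 : 0 < ‖w - ρ‖ := by
        have := norm_sub_norm_le w ρ
        linarith
      rw [← mul_left_cancel₀ h2.ne' h1]
      exact hb w (sphere_subset_closedBall hw)
  have h00 := hfg 0
  simp only [mul_zero, sub_zero, mul_one, zero_sub] at h00
  have hg0 : g 0 ≠ 0 := by intro h; rw [h, mul_zero] at h00; exact hf0 h00
  refine ⟨g, hgd, hgb, ?_, ?_, ?_⟩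
  · intro z hz h
    have h1 := hfg z
    rw [h, mul_zero, mul_eq_zero] at h1
    refine h1.resolve_right fun h2 => ?_
    have h3 : (starRingEnd ℂ) ρ * z = 1 := (sub_eq_zero.mp h2).symm
    have h4 := congrArg norm h3
    rw [norm_mul, RCLike.norm_conj, norm_one] at h4
    have hz' : ‖z‖ < 1 / 2 := by simpa using hz
    nlinarith [norm_nonneg z, norm_nonneg ρ]
  · rw [h00, norm_mul, norm_neg]
    nlinarith [norm_nonneg (g 0)]
  · have hnb : ball (0 : ℂ) 2 ∈ nhds (0 : ℂ) := ball_mem_nhds _ (by norm_num)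
    have hfd := (hf.differentiableAt hnb).hasDerivAt
    have hgd' := (hgd.differentiableAt hnb).hasDerivAt
    have h1 : HasDerivAt (fun z => f z * (1 - (starRingEnd ℂ) ρ * z)) _ 0 :=
      hfd.mul (((hasDerivAt_id (0 : ℂ)).const_mul ((starRingEnd ℂ) ρ)).const_sub 1)
    have h2 : HasDerivAt (fun z => (z - ρ) * g z) _ 0 := ((hasDerivAt_id (0 : ℂ)).sub_const ρ).mul hgd'
    have h3 : (fun z => f z * (1 - (starRingEnd ℂ) ρ * z)) = fun z => (z - ρ) * g z := funext hfg
    rw [h3] at h1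
    have h4 := h1.unique h2
    simp only [mul_zero, sub_zero, mul_one, id, zero_sub, one_mul] at h4
    have h5 : deriv f 0 / f 0 = deriv g 0 / g 0 - ρ⁻¹ + (starRingEnd ℂ) ρ := by
      have : deriv f 0 = g 0 - ρ * deriv g 0 + f 0 * (starRingEnd ℂ) ρ := by linear_combination h4
      rw [this, h00]; field_simp; ring
    rw [h5]
    simp only [Complex.add_re, Complex.sub_re, Complex.inv_re, Complex.conj_re, Complex.normSq_eq_norm_sq]
    ring

/-- Landau's lemma: zeros in the left half plane only help. The induction removes one zero at a time,
each removal doubling `|f 0|`, until Borel–Carathéodory applies to a zero-free function. -/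
lemma landau (n : ℕ) : ∀ f : ℂ → ℂ, DifferentiableOn ℂ f (ball 0 2) → (∀ z ∈ closedBall (0 : ℂ) 1, ‖f z‖ ≤ 1) →
    (∀ z ∈ ball (0 : ℂ) (1 / 2), f z = 0 → z.re ≤ 0) → (1 / 2 : ℝ) ^ n < ‖f 0‖ →
    -(deriv f 0 / f 0).re ≤ 8 * n := by
  induction n with
  | zero =>
    intro f _ hb _ h
    have := hb 0 (by simp)
    simp at h; linarith
  | succ n ih =>
    intro f hf hb hz hn
    have hf0 : f 0 ≠ 0 := norm_pos_iff.mp (lt_trans (by positivity) hn)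
    by_cases h : ∃ ρ ∈ ball (0 : ℂ) (1 / 2), f ρ = 0
    · obtain ⟨ρ, hρ, hfρ⟩ := h
      have hρn : ‖ρ‖ < 1 / 2 := by simpa using hρ
      obtain ⟨g, hg1, hg2, hg3, hg4, hg5⟩ := blaschke_div hf hb hρn hfρ hf0
      have := ih g hg1 hg2 (fun z hz' h' => hz z hz' (hg3 z hz' h')) (by rw [pow_succ] at hn; linarith)
      have hρ0 : 0 < ‖ρ‖ := norm_pos_iff.mpr (by rintro rfl; exact hf0 hfρ)
      have h1 : 1 ≤ 1 / ‖ρ‖ ^ 2 := by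
        rw [le_div_iff₀ (by positivity)]; nlinarith
      have h2 := hz ρ hρ hfρ
      rw [hg5]
      push_cast
      nlinarith
    · push Not at h
      have hM : (1 : ℝ) < 2 ^ (n + 1) := one_lt_pow₀ (by norm_num) (by omega)
      have := (log_bc (f := f) (r := 1 / 2) (M := 2 ^ (n + 1)) (by norm_num) hM
        (hf.mono (ball_subset_ball (by norm_num))) h ?_).1
      · rw [Real.log_pow] at this
        have h1 := Complex.abs_re_le_norm (deriv f 0 / f 0)
        have h2 := (abs_le.mp h1).1
        have h3 := Real.log_two_lt_d9
        have h4 : (0 : ℝ) < (n + 1 : ℕ) := by positivity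
        have h5 : 4 * (((n + 1 : ℕ) : ℝ) * Real.log 2) / (1 / 2) ≤ 8 * (n + 1 : ℕ) := by
          rw [div_le_iff₀ (by norm_num)]; nlinarith
        linarith
      · intro z hz'
        have h1 := hb z (ball_subset_closedBall (ball_subset_ball (by norm_num) hz'))
        have h2 : (1 : ℝ) = 2 ^ (n + 1) * (1 / 2) ^ (n + 1) := by rw [← mul_pow]; norm_num
        have h3 : (2 : ℝ) ^ (n + 1) * (1 / 2) ^ (n + 1) ≤ 2 ^ (n + 1) * ‖f 0‖ := by gcongr
        linarith

/-- Landau's lemma keeping the contribution of one real zero `-d`. -/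
lemma landau_zero {n : ℕ} {f : ℂ → ℂ} (hf : DifferentiableOn ℂ f (ball 0 2)) (hb : ∀ z ∈ closedBall (0 : ℂ) 1, ‖f z‖ ≤ 1)
    (hz : ∀ z ∈ ball (0 : ℂ) (1 / 2), f z = 0 → z.re ≤ 0) (hn : (1 / 2 : ℝ) ^ n < ‖f 0‖) {d : ℝ} (hd : 0 < d) (hd2 : d < 1 / 2)
    (hfd : f (-d) = 0) : -(deriv f 0 / f 0).re ≤ 8 * n - 1 / d + d := by
  have hf0 : f 0 ≠ 0 := norm_pos_iff.mp (lt_trans (by positivity) hn)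
  have hnd : ‖(-d : ℂ)‖ = d := by rw [norm_neg, Complex.norm_real, Real.norm_of_nonneg hd.le]
  obtain ⟨g, hg1, hg2, hg3, hg4, hg5⟩ := blaschke_div hf hb (ρ := -d) (by rw [hnd]; exact hd2) hfd hf0
  have := landau n g hg1 hg2 (fun z hz' h' => hz z hz' (hg3 z hz' h'))
    (by have := norm_pos_iff.mpr hf0; linarith)
  rw [hg5, hnd]
  have e : (-d : ℂ).re * (1 / d ^ 2 - 1) = - 1 / d + d := by
    simp; field_simp; ring
  rw [e]
  have e2 : -1 / d = - (1 / d) := by ring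
  linarith
end Wright

/-! ### The zero-free region and bounds for 1/ζ -/

namespace Wright
open Metric Filter Topology

/-- The form of `zeta_bound` uniform in the height: for `1 ≤ |Im s| ≤ exp (v ^ 20)`. Bounded heights are
covered by compactness, the others by `zeta_bound` with `u ≤ v²`. -/
lemma zeta_uniform : ∃ V0 : ℝ, 2 ≤ V0 ∧ ∀ v ≥ V0, ∀ s : ℂ, 1 ≤ |s.im| → |s.im| ≤ Real.exp (v ^ 20) →
    1 - 1 / v ^ 18 ≤ s.re → s.re ≤ 3 → ‖riemannZeta s‖ ≤ v ^ 40 := by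
  set u0 : ℝ := 11 ^ 9 with hu0
  set T0 : ℝ := Real.exp (u0 ^ 10) with hT0
  have hK : IsCompact ((Set.Icc (0 : ℝ) 3) ×ℂ (Set.Icc (-T0) T0 ∩ {y | 1 ≤ |y|})) :=
    isCompact_Icc.reProdIm (isCompact_Icc.inter_right (isClosed_le continuous_const continuous_abs))
  have hcont : ContinuousOn riemannZeta ((Set.Icc (0 : ℝ) 3) ×ℂ (Set.Icc (-T0) T0 ∩ {y | 1 ≤ |y|})) := by
    intro z hz
    refine (differentiableAt_riemannZeta ?_).continuousAt.continuousWithinAt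
    rintro rfl
    have := hz.2.2
    simp at this
    linarith
  obtain ⟨B, hB⟩ := hK.exists_bound_of_continuousOn hcont
  refine ⟨max 2 B, le_max_left _ _, fun v hv s h1 h2 h3 h4 => ?_⟩
  have hv2 : 2 ≤ v := (le_max_left _ _).trans hv
  have hvB : B ≤ v := (le_max_right _ _).trans hv
  have hv1 : 1 ≤ v := by linarith
  rcases le_total |s.im| T0 with h | h
  · have h0 : 0 ≤ s.re := by
      have : 1 / v ^ 18 ≤ 1 := by rw [div_le_one (by positivity)]; exact one_le_pow₀ hv1
      linarith
    exact (hB s ⟨⟨h0, h4⟩, abs_le.mp h, h1⟩).trans (hvB.trans (le_self_pow₀ hv1 (by norm_num)))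
  · set L := Real.log |s.im| with hL
    have him : 0 < |s.im| := by linarith
    have hL1 : u0 ^ 10 ≤ L := by rw [hL, Real.le_log_iff_exp_le him]; exact h
    have hL2 : L ≤ v ^ 20 := by rw [hL, Real.log_le_iff_le_exp him]; exact h2
    have hL0 : 0 ≤ L := le_trans (by positivity) hL1
    set u := L ^ (1 / 10 : ℝ) with hu
    have hu10 : u ^ 10 = L := by
      rw [hu, ← Real.rpow_natCast, ← Real.rpow_mul hL0]; norm_num
    have hun : 0 ≤ u := by positivity
    have huu : u0 ≤ u := by
      refine le_of_pow_le_pow_left₀ (n := 10) (by norm_num) hun ?_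
      rw [hu10]; exact hL1
    have huv : u ≤ v ^ 2 := by
      refine le_of_pow_le_pow_left₀ (n := 10) (by norm_num) (by positivity) ?_
      rw [hu10, ← pow_mul]; exact hL2
    have hup : 0 < u := lt_of_lt_of_le (by positivity) huu
    have hσ : 1 - 1 / u ^ 9 ≤ s.re := by
      have : 1 / v ^ 18 ≤ 1 / u ^ 9 := by
        apply one_div_le_one_div_of_le (by positivity)
        calc u ^ 9 ≤ (v ^ 2) ^ 9 := by gcongr
          _ = v ^ 18 := by ring
      linarith
    have hz := zeta_bound (u := u) huu hσ h4
    rw [hu10, hL, Real.exp_log him] at hz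
    have hfin : u ^ 20 ≤ v ^ 40 := by
      calc u ^ 20 ≤ (v ^ 2) ^ 20 := by gcongr
        _ = v ^ 40 := by ring
    refine le_trans (le_of_eq ?_) (hz.trans hfin)
    rcases le_total 0 s.im with hs | hs
    · rw [abs_of_nonneg hs, Complex.re_add_im]
    · have e : (s.re : ℂ) + (|s.im| : ℝ) * Complex.I = (starRingEnd ℂ) s := by
        apply Complex.ext <;> simp [abs_of_nonpos hs]
      rw [e, riemannZeta_conj, RCLike.norm_conj]

lemma re_term_comb (n : ℕ) (σ t : ℝ) (a : ℝ) (ha : 0 ≤ a) :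
    0 ≤ 3 * (LSeries.term (fun _ => (a : ℂ)) (σ : ℂ) n).re + 4 * (LSeries.term (fun _ => (a : ℂ)) (σ + t * Complex.I) n).re
      + (LSeries.term (fun _ => (a : ℂ)) (σ + 2 * t * Complex.I) n).re := by
  rcases Nat.eq_zero_or_pos n with rfl | hn
  · simp
  have key : ∀ y : ℝ, (LSeries.term (fun _ => (a : ℂ)) (σ + y * Complex.I) n).re
      = a * ((n : ℝ) ^ (-σ) * Real.cos (y * Real.log n)) := by
    intro y
    rw [LSeries.term_of_ne_zero (by omega), div_eq_mul_inv, ← Complex.cpow_neg, cpow_eq_ph hn, ph]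
    rw [Complex.re_ofReal_mul, Complex.re_ofReal_mul, Complex.exp_ofReal_mul_I_re, neg_mul, Real.cos_neg]
  have k0 := key 0
  have k1 := key t
  have k2 := key (2 * t)
  simp only [Complex.ofReal_zero, zero_mul, add_zero, Real.cos_zero, mul_one] at k0
  push_cast at k2
  rw [k0, k1, k2, show 2 * t * Real.log n = 2 * (t * Real.log n) by ring, Real.cos_two_mul]
  have h1 : 0 ≤ a * (n : ℝ) ^ (-σ) := by positivity
  nlinarith [mul_nonneg h1 (sq_nonneg (1 + Real.cos (t * Real.log n)))]

/-- The classical consequence of `3 + 4 cos θ + cos 2θ ≥ 0`. -/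
lemma three_four_one {σ : ℝ} (hσ : 1 < σ) (t : ℝ) :
    0 ≤ 3 * (-deriv riemannZeta σ / riemannZeta σ).re
      + 4 * (-deriv riemannZeta (σ + t * Complex.I) / riemannZeta (σ + t * Complex.I)).re
      + (-deriv riemannZeta (σ + 2 * t * Complex.I) / riemannZeta (σ + 2 * t * Complex.I)).re := by
  have h0 : 1 < (σ : ℂ).re := by simpa using hσ
  have h1 : 1 < ((σ : ℂ) + t * Complex.I).re := by simpa using hσ
  have h2 : 1 < ((σ : ℂ) + 2 * t * Complex.I).re := by simpa using hσ
  have key : ∀ s : ℂ, 1 < s.re → HasSum (fun n => (LSeries.term (fun n => (ArithmeticFunction.vonMangoldt n : ℂ)) s n).re)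
      (-deriv riemannZeta s / riemannZeta s).re := by
    intro s hs
    rw [← ArithmeticFunction.LSeries_vonMangoldt_eq_deriv_riemannZeta_div hs]
    exact Complex.hasSum_re (ArithmeticFunction.LSeriesSummable_vonMangoldt hs).hasSum
  have hs := ((((key _ h0).mul_left 3).add ((key _ h1).mul_left 4)).add (key _ h2))
  refine hs.nonneg fun n => ?_
  have := re_term_comb n σ t (ArithmeticFunction.vonMangoldt n) ArithmeticFunction.vonMangoldt_nonneg
  simpa [LSeries.term] using this

lemma mu_norm_le {σ : ℝ} (hσ : 1 < σ) {s : ℂ} (hs : σ ≤ s.re) :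
    ‖LSeries (fun n => (ArithmeticFunction.moebius n : ℂ)) s‖ ≤ ‖riemannZeta σ‖ := by
  have hσ' : 1 < (σ : ℂ).re := by simpa using hσ
  have hsum : Summable fun n : ℕ => ‖LSeries.term (1 : ℕ → ℂ) (σ : ℂ) n‖ :=
    (LSeriesSummable_one_iff.mpr hσ').norm
  have hreal : ∀ n : ℕ, LSeries.term (1 : ℕ → ℂ) (σ : ℂ) n = ((‖LSeries.term (1 : ℕ → ℂ) (σ : ℂ) n‖ : ℝ) : ℂ) := by
    intro n
    rcases Nat.eq_zero_or_pos n with rfl | hn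
    · simp
    rw [LSeries.term_of_ne_zero (by omega)]
    have : ((n : ℂ) ^ (σ : ℂ)) = ((n : ℝ) ^ σ : ℝ) := by
      rw [Complex.ofReal_cpow (by positivity)]; simp
    rw [this]
    simp only [Pi.one_apply]
    rw [norm_div, norm_one, Complex.norm_real, Real.norm_of_nonneg (by positivity)]; push_cast; rfl
  have hz : ‖riemannZeta σ‖ = ∑' n : ℕ, ‖LSeries.term (1 : ℕ → ℂ) (σ : ℂ) n‖ := by
    rw [← LSeries_one_eq_riemannZeta hσ', LSeries]
    conv_lhs => rw [tsum_congr hreal]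
    rw [← Complex.ofReal_tsum, Complex.norm_real, Real.norm_of_nonneg (tsum_nonneg fun _ => norm_nonneg _)]
  rw [hz, LSeries]
  refine tsum_of_norm_bounded hsum.hasSum fun n => ?_
  rcases Nat.eq_zero_or_pos n with rfl | hn
  · simp
  rw [LSeries.norm_term_eq, LSeries.norm_term_eq]
  simp only [hn.ne', if_false, Pi.one_apply, norm_one, Complex.ofReal_re]
  have hn1 : (1 : ℝ) ≤ n := by exact_mod_cast hn
  gcongr
  rw [Complex.norm_intCast]
  exact_mod_cast ArithmeticFunction.abs_moebius_le_one

lemma mu_eq_inv {s : ℂ} (hs : 1 < s.re) :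
    LSeries (fun n => (ArithmeticFunction.moebius n : ℂ)) s = (riemannZeta s)⁻¹ := by
  have := ArithmeticFunction.LSeries_zeta_mul_Lseries_moebius hs
  rw [ArithmeticFunction.LSeries_zeta_eq_riemannZeta hs] at this
  exact eq_inv_of_mul_eq_one_right this

/-- Behaviour of `ζ` and `ζ'/ζ` at the pole. The factor `11/10` only has to be below `40/33`. -/
lemma near_one : ∃ δ : ℝ, 0 < δ ∧ ∀ σ : ℝ, 1 < σ → σ < 1 + δ →
    (-deriv riemannZeta σ / riemannZeta σ).re ≤ 11 / 10 / (σ - 1) ∧ ‖riemannZeta σ‖ ≤ 2 / (σ - 1) := by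
  have hc1 : ContinuousAt (fun s => ‖riemannZeta₁ s‖) 1 := differentiable_riemannZeta₁.continuous.norm.continuousAt
  have hc2 : ContinuousAt (fun s => ‖deriv riemannZeta₁ s / riemannZeta₁ s‖) 1 := by
    apply ContinuousAt.norm
    exact (differentiable_riemannZeta₁.deriv.continuous.continuousAt).div
      differentiable_riemannZeta₁.continuous.continuousAt (by simp)
  set B := ‖deriv riemannZeta₁ 1 / riemannZeta₁ 1‖ + 1 with hB
  have e1 : ∀ᶠ s in 𝓝 (1 : ℂ), ‖riemannZeta₁ s‖ < 2 := hc1.eventually_lt_const (by simp)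
  have e2 : ∀ᶠ s in 𝓝 (1 : ℂ), ‖deriv riemannZeta₁ s / riemannZeta₁ s‖ < B := hc2.eventually_lt_const (by simp [hB])
  obtain ⟨δ, hδ, hball⟩ := Metric.eventually_nhds_iff.mp ((e1.and e2).and riemannZeta₁_ne_zero_of_near_one)
  have hB0 : 0 < B := by positivity
  refine ⟨min δ (1 / (10 * B)), by positivity, fun σ h1 h2 => ?_⟩
  have hσ : dist (σ : ℂ) 1 < δ := by
    rw [dist_eq_norm, ← Complex.ofReal_one, ← Complex.ofReal_sub, Complex.norm_real, Real.norm_of_nonneg (by linarith)]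
    linarith [min_le_left δ (1 / (10 * B))]
  obtain ⟨⟨k1, k2⟩, k3⟩ := hball hσ
  have hs1 : (σ : ℂ) ≠ 1 := by exact_mod_cast h1.ne'
  have hs0 : (σ : ℂ) - 1 ≠ 0 := sub_ne_zero.mpr hs1
  have hp : 0 < σ - 1 := by linarith
  constructor
  · have e : -deriv riemannZeta σ / riemannZeta σ = ((σ : ℂ) - 1)⁻¹ - deriv riemannZeta₁ σ / riemannZeta₁ σ := by
      rw [deriv_riemannZeta_eq_neg_inv_sub_sq_mul_add hs1, riemannZeta_eq_inv_sub_mul hs1]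
      field_simp
      ring
    rw [e, Complex.sub_re]
    have h3 := (Complex.abs_re_le_norm (deriv riemannZeta₁ σ / riemannZeta₁ σ)).trans k2.le
    have h4 := (abs_le.mp h3).1
    have h5 : (((σ : ℂ) - 1)⁻¹).re = 1 / (σ - 1) := by
      rw [← Complex.ofReal_one, ← Complex.ofReal_sub, ← Complex.ofReal_inv, Complex.ofReal_re, one_div]
    have h6 : B ≤ 1 / 10 / (σ - 1) := by
      rw [le_div_iff₀ hp]
      have : σ - 1 ≤ 1 / (10 * B) := by linarith [min_le_right δ (1 / (10 * B))]
      calc B * (σ - 1) ≤ B * (1 / (10 * B)) := by gcongr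
        _ = 1 / 10 := by field_simp
    have h7 : 11 / 10 / (σ - 1) = 1 / (σ - 1) + 1 / 10 / (σ - 1) := by ring
    rw [h5, h7]; linarith
  · rw [riemannZeta_eq_inv_sub_mul hs1, norm_mul, norm_inv, ← Complex.ofReal_one, ← Complex.ofReal_sub, Complex.norm_real,
      Real.norm_of_nonneg hp.le, inv_mul_eq_div]
    gcongr
end Wright

namespace Wright
open Metric Filter Topology

/-- `|1/ζ(s)| ≤ ζ(1 + κ) ≤ 2/κ` for `Re s ≥ 1 + κ`. -/
lemma zeta_lower {δ : ℝ} (hδ : ∀ σ : ℝ, 1 < σ → σ < 1 + δ →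
    (-deriv riemannZeta σ / riemannZeta σ).re ≤ 11 / 10 / (σ - 1) ∧ ‖riemannZeta σ‖ ≤ 2 / (σ - 1))
    {κ : ℝ} (hκ : 0 < κ) (hκδ : κ < δ) {s : ℂ} (hs : 1 + κ ≤ s.re) :
    κ / 2 ≤ ‖riemannZeta s‖ := by
  have h1 : 1 < s.re := by linarith
  have h2 := mu_norm_le (σ := 1 + κ) (by linarith) hs
  have h3 := (hδ (1 + κ) (by linarith) (by linarith)).2
  rw [mu_eq_inv h1, norm_inv] at h2
  have h4 : 0 < ‖riemannZeta s‖ := norm_pos_iff.mpr (riemannZeta_ne_zero_of_one_le_re h1.le)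
  rw [show 1 + κ - 1 = κ by ring] at h3
  have h5 := h2.trans h3
  rw [inv_le_comm₀ h4 (by positivity), inv_div] at h5
  exact h5

/-- `ζ` rescaled to the unit disc around `s0`, as fed to Landau's lemma. -/
lemma scaled_facts {v : ℝ} (hv : 2 ≤ v)
    (hz : ∀ s : ℂ, 1 ≤ |s.im| → |s.im| ≤ Real.exp (v ^ 20) → 1 - 1 / v ^ 18 ≤ s.re → s.re ≤ 3 → ‖riemannZeta s‖ ≤ v ^ 40)
    {s0 : ℂ} (h1 : 2 ≤ |s0.im|) (h2 : |s0.im| + 1 ≤ Real.exp (v ^ 20)) (h3 : s0.re = 1 + 1 / v ^ 19) :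
    let R : ℝ := 1 / (2 * v ^ 18)
    let f : ℂ → ℂ := fun z => riemannZeta (s0 + R * z) / (v ^ 40 : ℝ)
    DifferentiableOn ℂ f (ball 0 2) ∧ (∀ z ∈ closedBall (0 : ℂ) 1, ‖f z‖ ≤ 1) ∧
      (∀ z ∈ ball (0 : ℂ) (1 / 2), f z = 0 → z.re ≤ 0) ∧
      deriv f 0 / f 0 = R * (deriv riemannZeta s0 / riemannZeta s0) := by
  intro R f
  have hv18 : 1 ≤ v ^ 18 := one_le_pow₀ (by linarith)
  have hv19 : 1 ≤ v ^ 19 := one_le_pow₀ (by linarith)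
  have hR0 : 0 < R := by positivity
  have hR1 : R ≤ 1 / 2 := by
    apply one_div_le_one_div_of_le <;> linarith
  have hκ : 0 < 1 / v ^ 19 := by positivity
  have hκ1 : 1 / v ^ 19 ≤ 1 := by rw [div_le_one (by positivity)]; exact hv19
  have him : ∀ z : ℂ, |(s0 + R * z).im - s0.im| ≤ R * ‖z‖ := by
    intro z
    rw [Complex.add_im, Complex.im_ofReal_mul, add_sub_cancel_left, abs_mul, abs_of_pos hR0]
    gcongr
    exact Complex.abs_im_le_norm z
  have hre : ∀ z : ℂ, |(s0 + R * z).re - s0.re| ≤ R * ‖z‖ := by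
    intro z
    rw [Complex.add_re, Complex.re_ofReal_mul, add_sub_cancel_left, abs_mul, abs_of_pos hR0]
    gcongr
    exact Complex.abs_re_le_norm z
  have hne : ∀ z ∈ ball (0 : ℂ) 2, s0 + R * z ≠ 1 := by
    intro z hz' h
    have hz2 : ‖z‖ < 2 := by simpa using hz'
    have := him z
    rw [h, Complex.one_im, zero_sub, abs_neg] at this
    nlinarith
  have hv40 : (((v ^ 40 : ℝ) : ℝ) : ℂ) ≠ 0 := by
    rw [Complex.ofReal_ne_zero]; positivity
  have hd : ∀ z ∈ ball (0 : ℂ) 2, HasDerivAt f (deriv riemannZeta (s0 + R * z) * R / (v ^ 40 : ℝ)) z := by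
    intro z hz'
    have hA := (differentiableAt_riemannZeta (hne z hz')).hasDerivAt
    have hB : HasDerivAt (fun z : ℂ => s0 + R * z) R z := by
      simpa using ((hasDerivAt_id z).const_mul (R : ℂ)).const_add s0
    exact (hA.comp z hB).div_const _
  refine ⟨fun z hz' => (hd z hz').differentiableAt.differentiableWithinAt, ?_, ?_, ?_⟩
  · intro z hz'
    have hz1 : ‖z‖ ≤ 1 := by simpa using hz'
    have e1 := him z
    have e2 := hre z
    have hRz : R * ‖z‖ ≤ R := by nlinarith
    have e3 := abs_sub_abs_le_abs_sub ((s0 + R * z).im) s0.im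
    have e4 := abs_sub_abs_le_abs_sub s0.im ((s0 + R * z).im)
    rw [abs_sub_comm] at e4
    have e5 := abs_le.mp e2
    have hb := hz (s0 + R * z) (by linarith) (by linarith) (by
      have : R ≤ 1 / v ^ 18 := one_div_le_one_div_of_le (by positivity) (by linarith)
      linarith [e5.1]) (by linarith [e5.2])
    simp only [f, norm_div, Complex.norm_real]
    rw [Real.norm_of_nonneg (by positivity), div_le_one (by positivity)]
    exact hb
  · intro z hz' h0
    simp only [f, div_eq_zero_iff, hv40, or_false] at h0
    have : (s0 + R * z).re < 1 := by
      by_contra! h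
      exact riemannZeta_ne_zero_of_one_le_re h h0
    rw [Complex.add_re, Complex.re_ofReal_mul] at this
    by_contra! h
    nlinarith [mul_pos hR0 h]
  · rw [(hd 0 (by simp)).deriv]
    simp only [f, mul_zero, add_zero]
    field_simp

lemma pow_lt_two_pow : ∀ᶠ v : ℝ in atTop, 2 * v ^ 59 < 2 ^ ⌊v / 1000⌋₊ := by
  have h := isLittleO_pow_exp_pos_mul_atTop (k := 59) (b := Real.log 2 / 1000) (by positivity)
  have h2 := h.bound (c := 1 / 8) (by norm_num)
  filter_upwards [h2, eventually_ge_atTop 1] with v hv hv1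
  rw [Real.norm_of_nonneg (by positivity), Real.norm_of_nonneg (by positivity)] at hv
  have h3 : Real.exp (Real.log 2 / 1000 * v) = 2 ^ (v / 1000) := by
    rw [Real.rpow_def_of_pos (by norm_num)]; congr 1; ring
  rw [h3] at hv
  have h4 : (2 : ℝ) ^ (v / 1000) ≤ 2 ^ ((⌊v / 1000⌋₊ : ℝ) + 1) := by
    apply Real.rpow_le_rpow_of_exponent_le (by norm_num) (Nat.lt_floor_add_one _).le
  rw [Real.rpow_add (by norm_num), Real.rpow_one, Real.rpow_natCast] at h4
  have : (0 : ℝ) < 2 ^ ⌊v / 1000⌋₊ := by positivity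
  linarith

/-- The zero-free region: a zero at `σ + iγ` with `σ ≥ 1 - κ/10`, `κ = v^{-19}`, would contradict the
`3-4-1` inequality at `1 + κ`, where Landau's lemma bounds `-ζ'/ζ` at heights `γ` and `2γ` on discs of
radius `≍ v^{-18}`. -/
lemma zero_free : ∃ V1 : ℝ, 2 ≤ V1 ∧ ∀ v ≥ V1, ∀ s : ℂ, 2 ≤ |s.im| → 2 * |s.im| + 1 ≤ Real.exp (v ^ 20) →
    1 - 1 / (10 * v ^ 19) ≤ s.re → riemannZeta s ≠ 0 := by
  obtain ⟨V0, hV0, hz⟩ := zeta_uniform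
  obtain ⟨δ, hδ0, hδ⟩ := near_one
  obtain ⟨V', hV'⟩ := eventually_atTop.mp pow_lt_two_pow
  refine ⟨max (max V0 V') (max 1000 (1 / δ + 1)), ?_, ?_⟩
  · exact le_max_of_le_right (le_max_of_le_left (by norm_num))
  intro v hv s h1 h2 h3 h0
  simp only [ge_iff_le, max_le_iff] at hv
  obtain ⟨⟨hv1, hv2⟩, hv3, hv4⟩ := hv
  have hv0 : 0 < v := by linarith
  have hre1 : s.re < 1 := by
    by_contra! h
    exact riemannZeta_ne_zero_of_one_le_re h h0
  set κ := 1 / v ^ 19 with hκ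
  have hκ0 : 0 < κ := by positivity
  have hκδ : κ < δ := by
    have h5 : v ≤ v ^ 19 := le_self_pow₀ (by linarith) (by norm_num)
    have h6 : 1 / δ < v ^ 19 := by linarith
    rw [hκ]
    exact (one_div_lt hδ0 (by positivity)).mp h6
  have hκ' : 1 / (10 * v ^ 19) = κ / 10 := by rw [hκ]; field_simp
  rw [hκ'] at h3
  set n := ⌊v / 1000⌋₊ with hn
  have hnv : (n : ℝ) ≤ v / 1000 := Nat.floor_le (by positivity)
  have h2n := hV' v hv2
  set R : ℝ := 1 / (2 * v ^ 18) with hR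
  have hR0 : 0 < R := by positivity
  have hκR : κ = 2 / v * R := by rw [hκ, hR]; field_simp
  -- the hypothesis of Landau's lemma at the two centres: `v ^ 59 < 2 ^ n` with `n ≈ v / 1000`
  have hlow : ∀ s0 : ℂ, s0.re = 1 + κ → (1 / 2 : ℝ) ^ n < ‖riemannZeta s0 / (v ^ 40 : ℝ)‖ := by
    intro s0 hs0
    have := zeta_lower hδ hκ0 hκδ hs0.ge
    rw [norm_div, Complex.norm_real, Real.norm_of_nonneg (by positivity), lt_div_iff₀ (by positivity)]
    refine lt_of_lt_of_le ?_ this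
    rw [hκ, one_div_pow, div_mul_eq_mul_div, one_mul, div_lt_iff₀ (by positivity), div_div, div_mul_eq_mul_div, one_mul, lt_div_iff₀ (by positivity)]
    calc v ^ 40 * (v ^ 19 * 2) = 2 * v ^ 59 := by ring
      _ < 2 ^ n := h2n
  set γ := s.im with hγ
  set s1 : ℂ := (1 + κ : ℝ) + γ * Complex.I with hs1
  set s2 : ℂ := (1 + κ : ℝ) + 2 * γ * Complex.I with hs2
  have hs1re : s1.re = 1 + κ := by simp [hs1]
  have hs1im : s1.im = γ := by simp [hs1]
  have hs2re : s2.re = 1 + κ := by simp [hs2]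
  have hs2im : s2.im = 2 * γ := by simp [hs2]
  obtain ⟨f1, f2, f3, f4⟩ := scaled_facts (by linarith) (hz v hv1) (s0 := s1) (by rw [hs1im]; exact h1)
    (by rw [hs1im]; linarith) hs1re
  obtain ⟨g1, g2, g3, g4⟩ := scaled_facts (by linarith) (hz v hv1) (s0 := s2)
    (by rw [hs2im, abs_mul]; norm_num; linarith) (by rw [hs2im, abs_mul]; norm_num; linarith) hs2re
  rw [← hR] at f1 f2 f3 f4 g1 g2 g3 g4
  set lam := 1 - s.re with hlam
  have hlam0 : 0 < lam := by rw [hlam]; linarith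
  have hlam1 : lam ≤ κ / 10 := by rw [hlam]; linarith
  set d := (κ + lam) / R with hd
  have hd0 : 0 < d := by positivity
  have hd2 : d < 1 / 2 := by
    rw [hd, div_lt_iff₀ hR0]
    have : 2 / v ≤ 1 / 5 := by rw [div_le_iff₀ hv0]; linarith
    nlinarith
  have l1 := landau_zero f1 f2 f3 (n := n) (by simpa using hlow s1 hs1re) hd0 hd2 (by
    have e : s1 + (R : ℂ) * (-(d : ℂ)) = s := by
      have : (R : ℂ) * d = κ + lam := by
        have hRc : (R : ℂ) ≠ 0 := by exact_mod_cast hR0.ne'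
        rw [hd]; push_cast; exact mul_div_cancel₀ _ hRc
      rw [mul_neg, this, hs1, hlam]
      apply Complex.ext
      · simp; ring
      · simp [hγ]
    rw [e, h0, zero_div])
  have l2 := landau n _ g1 g2 g3 (by simpa using hlow s2 hs2re)
  rw [f4, Complex.re_ofReal_mul] at l1
  rw [g4, Complex.re_ofReal_mul] at l2
  have l3 := three_four_one (σ := 1 + κ) (by linarith) γ
  have l4 := (hδ (1 + κ) (by linarith) (by linarith)).1
  rw [← hs1, ← hs2, neg_div _ (deriv riemannZeta s1), neg_div _ (deriv riemannZeta s2), Complex.neg_re, Complex.neg_re] at l3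
  rw [show 1 + κ - 1 = κ by ring] at l4
  set X1 := (deriv riemannZeta s1 / riemannZeta s1).re
  set X2 := (deriv riemannZeta s2 / riemannZeta s2).re
  have hdi : 1 / d = R / (κ + lam) := by rw [hd, one_div_div]
  have hdi2 : R / (κ + lam) ≥ R / (11 / 10 * κ) := by
    apply div_le_div_of_nonneg_left hR0.le (by positivity); linarith
  have hdi3 : R / (11 / 10 * κ) = 10 / 11 * (R / κ) := by field_simp
  have hq : R / κ = v / 2 := by rw [hκR]; field_simp
  have l3' : 0 ≤ R * (3 * (11 / 10 / κ) - 4 * X1 - X2) := by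
    apply mul_nonneg hR0.le; linarith
  have e5 : R * (3 * (11 / 10 / κ) - 4 * X1 - X2) = 33 / 10 * (R / κ) + 4 * (-(R * X1)) + -(R * X2) := by
    field_simp
    ring
  rw [e5, hq] at l3'
  rw [hdi3, hq] at hdi2
  rw [hdi] at l1
  linarith

/-- Uniform zero-free rectangle and polynomial bound for `1/ζ = (s-1)/ζ₁` in it. -/
lemma inv_zeta_bound : ∃ V : ℝ, 2 ≤ V ∧ ∀ v ≥ V, ∀ s : ℂ, |s.im| ≤ Real.exp (v ^ 20) / 4 →
    1 - 1 / (20 * v ^ 19) ≤ s.re → s.re ≤ 2 → riemannZeta₁ s ≠ 0 ∧ ‖(s - 1) / riemannZeta₁ s‖ ≤ v ^ 2600 := by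
  obtain ⟨V0, hV0, hz⟩ := zeta_uniform
  obtain ⟨V1, hV1, hzf⟩ := zero_free
  obtain ⟨δ, hδ0, hδ⟩ := near_one
  -- below height `3` a neighbourhood of the line `Re s = 1` is zero-free by compactness
  obtain ⟨ε, hε, B, hB⟩ : ∃ ε > 0, ∃ B : ℝ, ∀ s : ℂ, |s.im| ≤ 3 → 1 - ε ≤ s.re → s.re ≤ 2 →
      riemannZeta₁ s ≠ 0 ∧ ‖(s - 1) / riemannZeta₁ s‖ ≤ B := by
    have hK : IsCompact ((Set.Icc (1 : ℝ) 2) ×ℂ (Set.Icc (-3 : ℝ) 3)) := isCompact_Icc.reProdIm isCompact_Icc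
    have hU : IsOpen {s : ℂ | riemannZeta₁ s ≠ 0} := isOpen_ne_fun differentiable_riemannZeta₁.continuous continuous_const
    have hKU : ((Set.Icc (1 : ℝ) 2) ×ℂ (Set.Icc (-3 : ℝ) 3)) ⊆ {s : ℂ | riemannZeta₁ s ≠ 0} := by
      intro s hs
      rw [Set.mem_ofPred_eq]
      by_cases h1 : s = 1
      · rw [h1]; simp
      · intro h
        apply riemannZeta_ne_zero_of_one_le_re hs.1.1
        rw [riemannZeta_eq_inv_sub_mul h1, h, mul_zero]
    obtain ⟨ε, hε, hsub⟩ := hK.exists_cthickening_subset_open hU hKU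
    have hK2 : IsCompact (cthickening ε ((Set.Icc (1 : ℝ) 2) ×ℂ (Set.Icc (-3 : ℝ) 3))) := hK.cthickening
    have hcont : ContinuousOn (fun s => (s - 1) / riemannZeta₁ s) (cthickening ε ((Set.Icc (1 : ℝ) 2) ×ℂ (Set.Icc (-3 : ℝ) 3))) :=
      ContinuousOn.div (by fun_prop) differentiable_riemannZeta₁.continuous.continuousOn (fun s hs => hsub hs)
    obtain ⟨B, hB⟩ := hK2.exists_bound_of_continuousOn hcont
    refine ⟨ε, hε, B, fun s h1 h2 h3 => ?_⟩
    have hmem : s ∈ cthickening ε ((Set.Icc (1 : ℝ) 2) ×ℂ (Set.Icc (-3 : ℝ) 3)) := by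
      refine mem_cthickening_of_dist_le s ((max s.re 1 : ℝ) + s.im * Complex.I) ε _ ?_ ?_
      · constructor
        · simp; linarith
        · simpa using abs_le.mp h1
      · have e : s - ((max s.re 1 : ℝ) + s.im * Complex.I) = ((s.re - max s.re 1 : ℝ) : ℂ) := by
          apply Complex.ext <;> simp
        rw [dist_eq_norm, e, Complex.norm_real, Real.norm_eq_abs, abs_le]
        rcases max_cases s.re 1 with ⟨h, _⟩ | ⟨h, _⟩ <;> rw [h] <;> constructor <;> linarith
    exact ⟨hsub hmem, hB s hmem⟩
  refine ⟨max (max V0 V1) (max (max 1000 (1 / δ + 1)) (max (1 / ε) B)), ?_, ?_⟩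
  · exact le_max_of_le_left (le_max_of_le_left hV0)
  intro v hv s h1 h2 h3
  simp only [ge_iff_le, max_le_iff] at hv
  obtain ⟨⟨hv1, hv2⟩, ⟨hv3, hv4⟩, hv5, hv6⟩ := hv
  have hv0 : 0 < v := by linarith
  have hvv : ∀ k : ℕ, k ≠ 0 → v ≤ v ^ k := fun k hk => le_self_pow₀ (by linarith) hk
  have hlv : 1 / (20 * v ^ 19) ≤ 1 / v := by
    apply one_div_le_one_div_of_le hv0; linarith [hvv 19 (by norm_num)]
  rcases le_total |s.im| 3 with h | h
  · have : 1 / v ≤ ε := by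
      rw [div_le_iff₀ hv0]; rw [div_le_iff₀ hε] at hv5; linarith
    obtain ⟨k1, k2⟩ := hB s h (by linarith) h3
    exact ⟨k1, k2.trans (hv6.trans (hvv _ (by norm_num)))⟩
  have hs1 : s ≠ 1 := by rintro rfl; norm_num at h
  have hsm : s - 1 ≠ 0 := sub_ne_zero.mpr hs1
  have heq : riemannZeta₁ s = (s - 1) * riemannZeta s := by
    rw [riemannZeta_eq_inv_sub_mul hs1]; field_simp
  suffices hkey : 1 / v ^ 2600 ≤ ‖riemannZeta s‖ by
    have hpos : 0 < ‖riemannZeta s‖ := lt_of_lt_of_le (by positivity) hkey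
    have hne := norm_pos_iff.mp hpos
    refine ⟨by rw [heq]; exact mul_ne_zero hsm hne, ?_⟩
    rw [heq, div_mul_cancel_left₀ hsm, norm_inv, inv_le_comm₀ hpos (by positivity), ← one_div]
    exact hkey
  set κ := 1 / v ^ 19 with hκ
  have hκ0 : 0 < κ := by positivity
  have hκδ : κ < δ := by
    have h6 : 1 / δ < v ^ 19 := by linarith [hvv 19 (by norm_num)]
    rw [hκ]
    exact (one_div_lt hδ0 (by positivity)).mp h6
  have hκ20 : 1 / (20 * v ^ 19) = κ / 20 := by rw [hκ]; field_simp
  have hκ10 : 1 / (10 * v ^ 19) = κ / 10 := by rw [hκ]; field_simp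
  have hκ18 : κ ≤ 1 / v ^ 18 / 100 := by
    rw [hκ, div_div]
    apply one_div_le_one_div_of_le (by positivity)
    calc v ^ 18 * 100 ≤ v ^ 18 * v := by gcongr; linarith
      _ = v ^ 19 := by ring
  have hκs : κ ≤ 1 / 100 := by
    have : 1 / v ^ 18 ≤ 1 := by rw [div_le_one (by positivity)]; exact one_le_pow₀ (by linarith)
    linarith
  have h20 : v ^ 20 * κ = v := by rw [hκ]; field_simp
  have hκ2 : 1 / v ^ 20 ≤ κ / 2 := by
    rw [div_le_iff₀ (by positivity)]
    nlinarith
  rcases le_total (1 + κ) s.re with h' | h'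
  · refine le_trans ?_ (zeta_lower hδ hκ0 hκδ h')
    refine le_trans ?_ hκ2
    exact one_div_le_one_div_of_le (by positivity) (pow_le_pow_right₀ (by linarith) (by norm_num))
  set s0 : ℂ := (1 + κ : ℝ) + s.im * Complex.I with hs0
  have hs0re : s0.re = 1 + κ := by simp [hs0]
  have hs0im : s0.im = s.im := by simp [hs0]
  have hlow := zeta_lower hδ hκ0 hκδ hs0re.ge
  have hlow' := hκ2.trans hlow
  have hexp : 100 ≤ Real.exp (v ^ 20) := by
    have := Real.add_one_le_exp (v ^ 20)
    linarith [hvv 20 (by norm_num)]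
  set r := 11 / 10 * κ with hr
  have hr0 : 0 < r := by positivity
  set f : ℂ → ℂ := fun z => riemannZeta (s0 + z) with hf
  have hgeo : ∀ z ∈ ball (0 : ℂ) r, 2 ≤ |(s0 + z).im| ∧ |(s0 + z).im| ≤ |s.im| + 1 ∧ 1 - κ / 10 ≤ (s0 + z).re ∧ (s0 + z).re ≤ 3 := by
    intro z hz'
    have hz2 : ‖z‖ < r := by simpa using hz'
    have e1 := (Complex.abs_im_le_norm z)
    have e2 := abs_le.mp (Complex.abs_re_le_norm z)
    rw [Complex.add_im, Complex.add_re, hs0im, hs0re]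
    have e3 := abs_add_le s.im z.im
    have e4 := abs_sub_abs_le_abs_sub s.im (-z.im)
    rw [abs_neg, sub_neg_eq_add] at e4
    refine ⟨?_, ?_, ?_, ?_⟩ <;> linarith [e2.1, e2.2]
  have hbc := (log_bc (f := f) (r := r) (M := v ^ 60) hr0 (one_lt_pow₀ (by linarith) (by norm_num)) ?_ ?_ ?_).2
    (s - s0) ?_
  · have e0 : f (s - s0) = riemannZeta s := by rw [hf]; simp
    have e00 : f 0 = riemannZeta s0 := by rw [hf]; simp
    rw [e0, e00] at hbc
    refine le_trans ?_ hbc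
    have hn : ‖s - s0‖ ≤ 21 / 20 * κ := by
      have : s - s0 = ((s.re - (1 + κ) : ℝ) : ℂ) := by
        rw [hs0]; apply Complex.ext <;> simp
      rw [this, Complex.norm_real, Real.norm_eq_abs, abs_le]
      constructor <;> linarith
    have hfr : 2 * Real.log (v ^ 60) * ‖s - s0‖ / (r - ‖s - s0‖) ≤ 2520 * Real.log v := by
      rw [Real.log_pow, div_le_iff₀ (by linarith)]
      have hl : 0 ≤ Real.log v := Real.log_nonneg (by linarith)
      have : 120 * ‖s - s0‖ ≤ 2520 * (r - ‖s - s0‖) := by rw [hr]; linarith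
      push_cast
      nlinarith
    calc 1 / v ^ 2600 ≤ 1 / v ^ 2540 :=
          one_div_le_one_div_of_le (by positivity) (pow_le_pow_right₀ (by linarith) (by norm_num))
      _ = 1 / v ^ 20 * Real.exp (-(2520 * Real.log v)) := by
          rw [Real.exp_neg, mul_comm (2520 : ℝ), Real.exp_mul, Real.exp_log hv0, ← one_div, one_div_mul_one_div]
          congr 1
          have : v ^ (2520 : ℝ) = v ^ 2520 := by exact_mod_cast Real.rpow_natCast v 2520
          rw [this, ← pow_add]
      _ ≤ _ := by gcongr
  · intro z hz'
    have hg := hgeo z hz'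
    have : s0 + z ≠ 1 := by
      intro h; rw [h] at hg; norm_num at hg
    exact ((differentiableAt_riemannZeta this).comp z (by fun_prop)).differentiableWithinAt
  · intro z hz'
    have hg := hgeo z hz'
    exact hzf v hv2 _ hg.1 (by linarith) (by linarith)
  · intro z hz'
    have hg := hgeo z hz'
    have hb := hz v hv1 (s0 + z) (by linarith) (by linarith) (by linarith) hg.2.2.2
    refine hb.trans ?_
    have e00 : f 0 = riemannZeta s0 := by rw [hf]; simp
    rw [e00]
    calc v ^ 40 = v ^ 60 * (1 / v ^ 20) := by field_simp
      _ ≤ _ := by gcongr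
  · have : s - s0 = ((s.re - (1 + κ) : ℝ) : ℂ) := by
      rw [hs0]; apply Complex.ext <;> simp
    rw [mem_ball_zero_iff, this, Complex.norm_real, Real.norm_eq_abs, abs_lt]
    constructor <;> linarith
end Wright

/-! ### Trapezoid weights and smoothed Möbius sums -/

namespace Wright
open MeasureTheory Complex

/-- `(e^z - 1) / z`, as an entire function. -/
noncomputable def E1 (z : ℂ) : ℂ := dslope Complex.exp 0 z

lemma E1_of_ne {z : ℂ} (hz : z ≠ 0) : E1 z = (Complex.exp z - 1) / z := by
  rw [E1, dslope_of_ne _ hz, slope_def_field]; simp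

lemma differentiable_E1 : Differentiable ℂ E1 := by
  rw [← differentiableOn_univ]
  exact (Complex.differentiableOn_dslope Filter.univ_mem).mpr Complex.differentiable_exp.differentiableOn

lemma norm_exp_sub_one_le (z : ℂ) : ‖Complex.exp z - 1‖ ≤ max 1 (Real.exp z.re) * ‖z‖ := by
  have h := (convex_segment (0 : ℂ) z).norm_image_sub_le_of_norm_hasDerivWithin_le (f := Complex.exp) (f' := Complex.exp)
    (C := max 1 (Real.exp z.re)) (fun w _ => (Complex.hasDerivAt_exp w).hasDerivWithinAt) (fun w hw => ?_)
    (left_mem_segment ℝ 0 z) (right_mem_segment ℝ 0 z)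
  · simpa using h
  · obtain ⟨a, b, ha, hb, hab, rfl⟩ := hw
    rw [Complex.norm_exp]
    simp only [smul_zero, zero_add, Complex.real_smul, Complex.re_ofReal_mul]
    rcases le_total 0 z.re with h | h
    · exact le_max_of_le_right (Real.exp_le_exp.mpr (by nlinarith))
    · refine le_max_of_le_left (Real.exp_le_one_iff.mpr (by nlinarith))

lemma norm_E1_le (z : ℂ) : ‖E1 z‖ ≤ max 1 (Real.exp z.re) := by
  by_cases hz : z = 0
  · subst hz
    rw [E1, dslope_same]; simp
  · rw [E1_of_ne hz, norm_div, div_le_iff₀ (norm_pos_iff.mpr hz)]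
    exact norm_exp_sub_one_le z

lemma norm_E1_le' {z : ℂ} (hz : z ≠ 0) : ‖E1 z‖ ≤ 2 * max 1 (Real.exp z.re) / ‖z‖ := by
  rw [E1_of_ne hz, norm_div]
  gcongr
  refine (norm_sub_le _ _).trans ?_
  rw [Complex.norm_exp, norm_one]
  have := le_max_left 1 (Real.exp z.re)
  have := le_max_right 1 (Real.exp z.re)
  linarith

/-- Trapezoid: `0` up to `p`, rising to `1` on `[p, p + h]`, falling to `0` on `[q, q + h]`. -/
noncomputable def trap (h p q v : ℝ) : ℝ :=
  (max (v - p) 0 - max (v - (p + h)) 0 - max (v - q) 0 + max (v - (q + h)) 0) / h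

variable {h p q : ℝ}

lemma trap_continuous : Continuous (trap h p q) := by
  unfold trap; fun_prop

lemma trap_nonneg (hh : 0 < h) (hq : p + h ≤ q) (v : ℝ) : 0 ≤ trap h p q v := by
  unfold trap
  apply div_nonneg _ hh.le
  rcases max_cases (v - p) 0 with ⟨e1, _⟩ | ⟨e1, _⟩ <;> rcases max_cases (v - (p + h)) 0 with ⟨e2, _⟩ | ⟨e2, _⟩ <;>
  rcases max_cases (v - q) 0 with ⟨e3, _⟩ | ⟨e3, _⟩ <;> rcases max_cases (v - (q + h)) 0 with ⟨e4, _⟩ | ⟨e4, _⟩ <;>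
  rw [e1, e2, e3, e4] <;> linarith

lemma trap_le_one (hh : 0 < h) (hq : p + h ≤ q) (v : ℝ) : trap h p q v ≤ 1 := by
  unfold trap
  rw [div_le_one hh]
  rcases max_cases (v - p) 0 with ⟨e1, _⟩ | ⟨e1, _⟩ <;> rcases max_cases (v - (p + h)) 0 with ⟨e2, _⟩ | ⟨e2, _⟩ <;>
  rcases max_cases (v - q) 0 with ⟨e3, _⟩ | ⟨e3, _⟩ <;> rcases max_cases (v - (q + h)) 0 with ⟨e4, _⟩ | ⟨e4, _⟩ <;>
  rw [e1, e2, e3, e4] <;> linarith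

lemma trap_eq_zero_of_le (hh : 0 < h) (hq : p + h ≤ q) {v : ℝ} (hv : v ≤ p) : trap h p q v = 0 := by
  unfold trap
  rw [max_eq_right (by linarith), max_eq_right (by linarith), max_eq_right (by linarith), max_eq_right (by linarith)]
  simp

lemma trap_eq_zero_of_ge (hh : 0 < h) (hq : p + h ≤ q) {v : ℝ} (hv : q + h ≤ v) : trap h p q v = 0 := by
  unfold trap
  rw [max_eq_left (by linarith), max_eq_left (by linarith), max_eq_left (by linarith), max_eq_left (by linarith)]
  ring

lemma trap_eq_one (hh : 0 < h) {v : ℝ} (hv : p + h ≤ v) (hv2 : v ≤ q) : trap h p q v = 1 := by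
  unfold trap
  rw [max_eq_left (by linarith), max_eq_left (by linarith), max_eq_right (by linarith), max_eq_right (by linarith)]
  field_simp; ring

/-- Two-sided Laplace transform of the trapezoid. -/
noncomputable def Kt (h p q : ℝ) (z : ℂ) : ℂ :=
  Complex.exp (z * p) * (q - p : ℝ) * E1 ((q - p : ℝ) * z) * E1 (h * z)

lemma Kt_differentiable : Differentiable ℂ (Kt h p q) := by
  unfold Kt
  have := differentiable_E1
  fun_prop

lemma Kt_of_ne (hh : 0 < h) (hq : p + h ≤ q) {z : ℂ} (hz : z ≠ 0) :
    Kt h p q z = (Complex.exp (z * p) - Complex.exp (z * (p + h)) - Complex.exp (z * q) + Complex.exp (z * (q + h))) / (h * z ^ 2) := by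
  have h1 : ((q - p : ℝ) : ℂ) ≠ 0 := by rw [Complex.ofReal_ne_zero]; linarith
  have h2 : (h : ℂ) ≠ 0 := by rw [Complex.ofReal_ne_zero]; linarith
  rw [Kt, E1_of_ne (mul_ne_zero h1 hz), E1_of_ne (mul_ne_zero h2 hz)]
  have e1 : Complex.exp (z * q) = Complex.exp (z * p) * Complex.exp ((q - p : ℝ) * z) := by
    rw [← Complex.exp_add]; congr 1; push_cast; ring
  have e2 : Complex.exp (z * (q + h)) = Complex.exp (z * p) * Complex.exp ((q - p : ℝ) * z) * Complex.exp (h * z) := by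
    rw [← Complex.exp_add, ← Complex.exp_add]; congr 1; push_cast; ring
  have e3 : Complex.exp (z * (p + h)) = Complex.exp (z * p) * Complex.exp (h * z) := by
    rw [← Complex.exp_add]; congr 1; ring
  rw [e1, e2, e3]
  field_simp
  ring

lemma int_ramp {B c p : ℝ} (hpc : p ≤ c) (hcB : c ≤ B) {z : ℂ} (hz : z ≠ 0) :
    ∫ v in p..B, ((max (v - c) 0 : ℝ) : ℂ) * Complex.exp (z * v)
      = (B - c : ℝ) * Complex.exp (z * B) / z - Complex.exp (z * B) / z ^ 2 + Complex.exp (z * c) / z ^ 2 := by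
  have hcont : Continuous fun v : ℝ => ((max (v - c) 0 : ℝ) : ℂ) * Complex.exp (z * v) := by fun_prop
  rw [← intervalIntegral.integral_add_adjacent_intervals (hcont.intervalIntegrable p c) (hcont.intervalIntegrable c B)]
  have h1 : ∫ v in p..c, ((max (v - c) 0 : ℝ) : ℂ) * Complex.exp (z * v) = 0 := by
    rw [intervalIntegral.integral_congr (g := fun _ => 0)]
    · simp
    · intro v hv
      rw [Set.uIcc_of_le hpc] at hv
      simp [max_eq_right (sub_nonpos.mpr hv.2)]
  have h2 : ∫ v in c..B, ((max (v - c) 0 : ℝ) : ℂ) * Complex.exp (z * v)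
      = ∫ v in c..B, ((v : ℂ) - c) * Complex.exp (z * v) := by
    apply intervalIntegral.integral_congr
    intro v hv
    rw [Set.uIcc_of_le hcB] at hv
    simp only [max_eq_left (sub_nonneg.mpr hv.1)]
    push_cast; rfl
  have h3 : ∀ v ∈ Set.uIcc c B, HasDerivAt (fun v : ℝ => ((v : ℂ) - c) * Complex.exp (z * v) / z - Complex.exp (z * v) / z ^ 2)
      (((v : ℂ) - c) * Complex.exp (z * v)) v := by
    intro v _
    have k1 : HasDerivAt (fun v : ℝ => (v : ℂ)) 1 v := Complex.ofRealCLM.hasDerivAt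
    have k2 : HasDerivAt (fun v : ℝ => Complex.exp (z * v)) (Complex.exp (z * v) * (z * 1)) v := (k1.const_mul z).cexp
    refine ((((k1.sub_const (c : ℂ)).mul k2).div_const z).sub (k2.div_const (z ^ 2))).congr_deriv ?_
    field_simp; ring
  rw [h1, h2, intervalIntegral.integral_eq_sub_of_hasDerivAt h3 ((by fun_prop : Continuous fun v : ℝ => ((v : ℂ) - c) * Complex.exp (z * v)).intervalIntegrable _ _)]
  push_cast; ring

lemma trap_laplace (hh : 0 < h) (hq : p + h ≤ q) {z : ℂ} (hz : z ≠ 0) :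
    ∫ v : ℝ, (trap h p q v : ℂ) * Complex.exp (z * v) = Kt h p q z := by
  have hsupp : Function.support (fun v : ℝ => (trap h p q v : ℂ) * Complex.exp (z * v)) ⊆ Set.Ioc p (q + h) := by
    intro v hv
    rw [Function.mem_support] at hv
    constructor
    · by_contra! hc
      rw [trap_eq_zero_of_le hh hq hc] at hv; simp at hv
    · by_contra! hc
      rw [trap_eq_zero_of_ge hh hq hc.le] at hv; simp at hv
  rw [← intervalIntegral.integral_eq_integral_of_support_subset hsupp]
  have hc : ∀ c : ℝ, IntervalIntegrable (fun v : ℝ => ((max (v - c) 0 : ℝ) : ℂ) * Complex.exp (z * v)) volume p (q + h) := fun c =>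
    (by fun_prop : Continuous fun v : ℝ => ((max (v - c) 0 : ℝ) : ℂ) * Complex.exp (z * v)).intervalIntegrable _ _
  have e : ∀ v : ℝ, (trap h p q v : ℂ) * Complex.exp (z * v) = (((((max (v - p) 0 : ℝ) : ℂ) * Complex.exp (z * v)
      - ((max (v - (p + h)) 0 : ℝ) : ℂ) * Complex.exp (z * v)) - ((max (v - q) 0 : ℝ) : ℂ) * Complex.exp (z * v))
      + ((max (v - (q + h)) 0 : ℝ) : ℂ) * Complex.exp (z * v)) * (h : ℂ)⁻¹ := by
    intro v; rw [trap]; push_cast; ring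
  simp_rw [e]
  rw [intervalIntegral.integral_mul_const, intervalIntegral.integral_add (((hc p).sub (hc (p + h))).sub (hc q)) (hc (q + h)),
    intervalIntegral.integral_sub ((hc p).sub (hc (p + h))) (hc q), intervalIntegral.integral_sub (hc p) (hc (p + h)),
    int_ramp le_rfl (by linarith) hz, int_ramp (by linarith) (by linarith) hz, int_ramp (by linarith) (by linarith) hz,
    int_ramp (by linarith) le_rfl hz, Kt_of_ne hh hq hz]
  have h2 : (h : ℂ) ≠ 0 := by rw [Complex.ofReal_ne_zero]; linarith
  push_cast
  field_simp
  ring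

lemma norm_Kt_le (hh : 0 < h) (hq : p + h ≤ q) (z : ℂ) :
    ‖Kt h p q z‖ ≤ (q - p) * max (Real.exp (z.re * p)) (Real.exp (z.re * (q + h))) := by
  have h1 := norm_E1_le ((q - p : ℝ) * z)
  have h2 := norm_E1_le (h * z)
  rw [Complex.re_ofReal_mul] at h1 h2
  rw [Kt, norm_mul, norm_mul, norm_mul, Complex.norm_exp, Complex.re_mul_ofReal, Complex.norm_real, Real.norm_of_nonneg (by linarith)]
  calc _ ≤ Real.exp (z.re * p) * (q - p) * max 1 (Real.exp ((q - p) * z.re)) * max 1 (Real.exp (h * z.re)) := by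
        have h0 : 0 ≤ Real.exp (z.re * p) * (q - p) := mul_nonneg (Real.exp_pos _).le (by linarith)
        have h3 := mul_nonneg h0 (le_trans zero_le_one (le_max_left 1 (Real.exp ((q - p) * z.re))))
        gcongr
    _ ≤ _ := by
        rcases le_total 0 z.re with hr | hr
        · rw [max_eq_right (Real.one_le_exp (mul_nonneg (by linarith) hr)), max_eq_right (Real.one_le_exp (mul_nonneg (by linarith) hr)),
            max_eq_right (Real.exp_le_exp.mpr (mul_le_mul_of_nonneg_left (by linarith) hr))]
          refine le_of_eq ?_
          have : Real.exp (z.re * (q + h)) = Real.exp (z.re * p) * Real.exp ((q - p) * z.re) * Real.exp (h * z.re) := by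
            rw [← Real.exp_add, ← Real.exp_add]; congr 1; ring
          rw [this]; ring
        · rw [max_eq_left (Real.exp_le_one_iff.mpr (mul_nonpos_of_nonneg_of_nonpos (by linarith) hr)),
            max_eq_left (Real.exp_le_one_iff.mpr (mul_nonpos_of_nonneg_of_nonpos (by linarith) hr)),
            max_eq_left (Real.exp_le_exp.mpr (mul_le_mul_of_nonpos_left (by linarith) hr))]
          linarith

lemma norm_Kt_le' (hh : 0 < h) (hq : p + h ≤ q) {z : ℂ} (hz : z ≠ 0) :
    ‖Kt h p q z‖ ≤ 4 * max (Real.exp (z.re * p)) (Real.exp (z.re * (q + h))) / (h * ‖z‖ ^ 2) := by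
  have hz0 := norm_pos_iff.mpr hz
  rw [Kt_of_ne hh hq hz, norm_div, norm_mul, norm_pow, Complex.norm_real, Real.norm_of_nonneg hh.le]
  gcongr
  have key : ∀ c : ℝ, p ≤ c → c ≤ q + h → ‖Complex.exp (z * c)‖ ≤ max (Real.exp (z.re * p)) (Real.exp (z.re * (q + h))) := by
    intro c h1 h2
    rw [Complex.norm_exp, Complex.re_mul_ofReal]
    rcases le_total 0 z.re with hr | hr
    · exact le_max_of_le_right (Real.exp_le_exp.mpr (mul_le_mul_of_nonneg_left h2 hr))
    · exact le_max_of_le_left (Real.exp_le_exp.mpr (mul_le_mul_of_nonpos_left h1 hr))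
  have k1 := key p le_rfl (by linarith)
  have k2 := key (p + h) (by linarith) (by linarith)
  have k3 := key q (by linarith) (by linarith)
  have k4 := key (q + h) (by linarith) (by linarith)
  push_cast at k2 k4
  refine (norm_add_le _ _).trans ?_
  have := norm_sub_le (Complex.exp (z * p) - Complex.exp (z * (p + h))) (Complex.exp (z * q))
  have := norm_sub_le (Complex.exp (z * p)) (Complex.exp (z * (p + h)))
  linarith

lemma norm_Kt_decay (hh : 1 ≤ h) (hq : p + h ≤ q) (x y : ℝ) :
    ‖Kt h p q (x + y * I)‖ ≤ 5 * (q - p) * max (Real.exp (x * p)) (Real.exp (x * (q + h))) * (1 + y ^ 2)⁻¹ := by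
  set z : ℂ := x + y * I
  have hre : z.re = x := by simp [z]
  have him : z.im = y := by simp [z]
  set E := max (Real.exp (x * p)) (Real.exp (x * (q + h))) with hE
  have hE0 : 0 < E := lt_max_of_lt_left (Real.exp_pos _)
  have h1 := norm_Kt_le (by linarith) hq z
  rw [hre, ← hE] at h1
  rw [← div_eq_mul_inv, le_div_iff₀ (by positivity)]
  by_cases hy : y = 0
  · rw [hy]; nlinarith
  have hz : z ≠ 0 := by intro h0; rw [h0] at him; exact hy him.symm
  have h2 := norm_Kt_le' (by linarith) hq hz
  rw [hre, ← hE] at h2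
  have hzn : y ^ 2 ≤ ‖z‖ ^ 2 := by
    rw [← him, ← sq_abs]; gcongr; exact Complex.abs_im_le_norm z
  have hy2 : 0 < y ^ 2 := by positivity
  have h3 : ‖Kt h p q z‖ * y ^ 2 ≤ 4 * E := by
    rw [le_div_iff₀ (by positivity)] at h2
    refine le_trans ?_ h2
    have : y ^ 2 ≤ h * ‖z‖ ^ 2 := by nlinarith
    gcongr
  nlinarith
end Wright

namespace Wright
open MeasureTheory Complex

/-- Mellin inversion for the trapezoid weight. -/
lemma trap_inversion {h p q κ : ℝ} (hh : 1 ≤ h) (hq : p + h ≤ q) (hκ : 0 < κ) (v : ℝ) :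
    (trap h p q v : ℂ) = (1 / (2 * Real.pi) : ℝ) * ∫ y : ℝ, Kt h p q (κ + y * I) * Complex.exp (-(κ + y * I) * v) := by
  have hh0 : 0 < h := by linarith
  set f : ℝ → ℂ := fun v => (trap h p q v : ℂ) * Complex.exp (κ * v) with hf
  have hfc : Continuous f := by
    have := @trap_continuous h p q
    fun_prop
  have hfs : HasCompactSupport f := by
    apply HasCompactSupport.intro (isCompact_Icc (a := p) (b := q + h))
    intro x hx
    rw [Set.mem_Icc, not_and_or, not_le, not_le] at hx
    rcases hx with hx | hx
    · simp [hf, trap_eq_zero_of_le hh0 hq hx.le]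
    · simp [hf, trap_eq_zero_of_ge hh0 hq hx.le]
  have hF : ∀ ξ : ℝ, FourierTransform.fourier f ξ = Kt h p q (κ + ((-2 * Real.pi) * ξ : ℝ) * I) := by
    intro ξ
    rw [Real.fourier_eq', ← trap_laplace hh0 hq]
    · apply integral_congr_ae
      filter_upwards with w
      simp only [hf, smul_eq_mul, RCLike.inner_apply, conj_trivial]
      rw [mul_left_comm, ← Complex.exp_add]
      congr 2
      push_cast; ring
    · intro h0
      have := congrArg Complex.re h0
      simp at this; linarith
  have hint : Integrable (fun y : ℝ => Kt h p q (κ + y * I)) := by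
    have k := @Kt_differentiable h p q
    refine Integrable.mono' (integrable_inv_one_add_sq.const_mul (5 * (q - p) * max (Real.exp (κ * p)) (Real.exp (κ * (q + h))))) ?_ ?_
    · exact (k.continuous.comp (by fun_prop)).aestronglyMeasurable
    · filter_upwards with y using norm_Kt_decay hh hq κ y
  have hpi : (-2 * Real.pi) ≠ 0 := by have := Real.pi_pos; simp [Real.pi_ne_zero]
  have hFi : Integrable (FourierTransform.fourier f) := by
    have : FourierTransform.fourier f = fun ξ : ℝ => Kt h p q (κ + ((-2 * Real.pi) * ξ : ℝ) * I) := funext hF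
    rw [this]
    exact hint.comp_mul_left' hpi
  have hinv := congrFun (hfc.fourierInv_fourier_eq (hfc.integrable_of_hasCompactSupport hfs) hFi) v
  rw [Real.fourierInv_eq'] at hinv
  have e : ∀ ξ : ℝ, Complex.exp (((2 * Real.pi * inner ℝ ξ v : ℝ) : ℂ) * I) • FourierTransform.fourier f ξ
      = (fun y : ℝ => Complex.exp (-(y * I) * v) * Kt h p q (κ + y * I)) ((-2 * Real.pi) * ξ) := by
    intro ξ
    rw [hF, smul_eq_mul]
    simp only [RCLike.inner_apply, conj_trivial]
    congr 2
    push_cast; ring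
  simp_rw [e] at hinv
  rw [Measure.integral_comp_mul_left (fun y : ℝ => Complex.exp (-(y * I) * v) * Kt h p q (κ + y * I))] at hinv
  have e2 : |(-2 * Real.pi)⁻¹| = 1 / (2 * Real.pi) := by
    rw [abs_inv, neg_mul, abs_neg, abs_of_pos (by positivity), one_div]
  rw [e2, hf, Complex.real_smul] at hinv
  have e3 : ∀ y : ℝ, Kt h p q (κ + y * I) * Complex.exp (-(κ + y * I) * v)
      = Complex.exp (-(κ * v)) * (Complex.exp (-(y * I) * v) * Kt h p q (κ + y * I)) := by
    intro y
    rw [← mul_assoc, ← Complex.exp_add, mul_comm]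
    congr 2; ring
  simp_rw [e3]
  rw [integral_const_mul, mul_left_comm, hinv, mul_left_comm, ← Complex.exp_add]
  simp

lemma norm_Kt_integrable {h p q : ℝ} (hh : 1 ≤ h) (hq : p + h ≤ q) (κ : ℝ) : Integrable (fun y : ℝ => Kt h p q (κ + y * I)) := by
  have k := @Kt_differentiable h p q
  refine Integrable.mono' (integrable_inv_one_add_sq.const_mul (5 * (q - p) * max (Real.exp (κ * p)) (Real.exp (κ * (q + h))))) ?_ ?_
  · exact (k.continuous.comp (by fun_prop)).aestronglyMeasurable
  · filter_upwards with y using norm_Kt_decay hh hq κ y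

lemma term_shift (f : ℕ → ℂ) (s z : ℂ) (n : ℕ) :
    LSeries.term f s n * Complex.exp (-z * Real.log n) = LSeries.term f (s + z) n := by
  rcases eq_or_ne n 0 with rfl | hn
  · simp
  · rw [LSeries.term_of_ne_zero hn, LSeries.term_of_ne_zero hn, Complex.cpow_add _ _ (by exact_mod_cast hn)]
    have : ((n : ℂ)) ^ z = Complex.exp (z * Real.log n) := by
      rw [Complex.cpow_def_of_ne_zero (by exact_mod_cast hn), ← Complex.ofReal_natCast, ← Complex.ofReal_log (by positivity), mul_comm]
    rw [this, neg_mul, Complex.exp_neg]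
    field_simp

/-- Perron-type formula for the smoothed sum of the Möbius function. -/
lemma mu_perron {h p q κ : ℝ} (hh : 1 ≤ h) (hq : p + h ≤ q) (hκ : 0 < κ) {s : ℂ} (hs : s.re = 1) :
    ∑' n : ℕ, LSeries.term (fun n => (ArithmeticFunction.moebius n : ℂ)) s n * (trap h p q (Real.log n) : ℂ)
      = (1 / (2 * Real.pi) : ℝ) * ∫ y : ℝ, Kt h p q (κ + y * I) *
        LSeries (fun n => (ArithmeticFunction.moebius n : ℂ)) (s + (κ + y * I)) := by
  set μ : ℕ → ℂ := fun n => (ArithmeticFunction.moebius n : ℂ)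
  have hK := norm_Kt_integrable hh hq κ
  set F : ℕ → ℝ → ℂ := fun n y => Kt h p q (κ + y * I) * LSeries.term μ (s + (κ + y * I)) n with hF
  have hF' : ∀ n y, F n y = LSeries.term μ (s + κ) n * (Kt h p q (κ + y * I) * Complex.exp (-(y * I) * Real.log n)) := by
    intro n y
    rw [hF]; dsimp only
    rw [← add_assoc, ← term_shift μ (s + κ)]
    ring
  have hFn : ∀ n y, ‖F n y‖ = ‖LSeries.term μ (s + κ) n‖ * ‖Kt h p q (κ + y * I)‖ := by
    intro n y
    rw [hF', norm_mul, norm_mul, Complex.norm_exp, Complex.re_mul_ofReal]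
    simp
  have hFm : ∀ n, Integrable (F n) := by
    intro n
    have k := @Kt_differentiable h p q
    refine Integrable.mono' (hK.norm.const_mul ‖LSeries.term μ (s + κ) n‖) ?_ ?_
    · have : F n = fun y : ℝ => LSeries.term μ (s + κ) n * (Kt h p q (κ + y * I) * Complex.exp (-(y * I) * Real.log n)) := funext (hF' n)
      rw [this]
      exact (((k.continuous.comp (by fun_prop)).mul (by fun_prop)).const_mul _).aestronglyMeasurable
    · filter_upwards with y using (hFn n y).le
  have hsum : Summable fun n => ‖LSeries.term μ (s + κ) n‖ := by
    have : LSeriesSummable μ (s + κ) := ArithmeticFunction.LSeriesSummable_moebius_iff.mpr (by simp [hs, hκ])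
    exact this.norm
  have key := hasSum_integral_of_summable_integral_norm hFm (by
    simp_rw [hFn, integral_const_mul]
    exact hsum.mul_right _)
  have e1 : ∀ n, LSeries.term μ s n * (trap h p q (Real.log n) : ℂ) = (1 / (2 * Real.pi) : ℝ) * ∫ y, F n y := by
    intro n
    rw [trap_inversion hh hq hκ, mul_left_comm, ← integral_const_mul]
    congr 2
    ext y
    rw [hF]; dsimp only
    rw [← term_shift]; ring
  simp_rw [e1]
  rw [tsum_mul_left, key.tsum_eq]
  congr 2
  ext y
  rw [hF]; dsimp only
  rw [tsum_mul_left]; rfl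
end Wright

namespace Wright
open MeasureTheory Complex

lemma integral_compl_inv_one_add_sq {T : ℝ} (hT : 0 < T) : ∫ y in (Set.Ioc (-T) T)ᶜ, (1 + y ^ 2)⁻¹ ≤ 2 / T := by
  have h1 := integral_add_compl (measurableSet_Ioc (a := -T) (b := T)) integrable_inv_one_add_sq
  rw [integral_univ_inv_one_add_sq, ← intervalIntegral.integral_of_le (by linarith), integral_inv_one_add_sq, Real.arctan_neg] at h1
  have h2 := Real.arctan_inv_of_pos hT
  have h3 : Real.arctan T⁻¹ ≤ T⁻¹ := by
    have h4 := Real.le_tan (Real.arctan_nonneg.mpr (by positivity : 0 ≤ T⁻¹)) (Real.arctan_lt_pi_div_two _)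
    rwa [Real.tan_arctan] at h4
  have : 2 / T = 2 * T⁻¹ := rfl
  linarith

/-- Shifting the line of integration from `Re z = κ` to `Re z = -η`, truncating at height `T`. -/
lemma contour_shift {h p q κ η T M B : ℝ} (hh : 1 ≤ h) (hq : p + h ≤ q) (hp : 0 ≤ p) (hκ : 0 < κ) (hη : 0 < η) (hT : 0 < T)
    (hM : 0 ≤ M) (hB : 0 ≤ B) (G : ℝ → ℂ) (hG : Continuous G) (Z : ℂ → ℂ)
    (hZ : DifferentiableOn ℂ Z (Set.Icc (-η) κ ×ℂ Set.Icc (-T) T))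
    (hZM : ∀ z ∈ (Set.Icc (-η) κ ×ℂ Set.Icc (-T) T), ‖Z z‖ ≤ M)
    (hGZ : ∀ y ∈ Set.Icc (-T) T, G y = Z (κ + y * I)) (hGB : ∀ y, ‖G y‖ ≤ B) :
    ‖∫ y : ℝ, Kt h p q (κ + y * I) * G y‖ ≤ 5 * (q - p) * (Real.exp (-η * p) * M * Real.pi
      + 2 * (κ + η) * M * Real.exp (κ * (q + h)) * (1 + T ^ 2)⁻¹ + Real.exp (κ * (q + h)) * B * (2 / T)) := by
  have k := @Kt_differentiable h p q
  have hqp : 0 ≤ q - p := by linarith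
  set E := Real.exp (κ * (q + h)) with hE
  have hmaxκ : max (Real.exp (κ * p)) (Real.exp (κ * (q + h))) = E :=
    max_eq_right (Real.exp_le_exp.mpr (mul_le_mul_of_nonneg_left (by linarith) hκ.le))
  have hmaxη : max (Real.exp (-η * p)) (Real.exp (-η * (q + h))) = Real.exp (-η * p) :=
    max_eq_left (Real.exp_le_exp.mpr (mul_le_mul_of_nonpos_left (by linarith) (by linarith)))
  have hKκ : ∀ y : ℝ, ‖Kt h p q (κ + y * I)‖ ≤ 5 * (q - p) * E * (1 + y ^ 2)⁻¹ := fun y => by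
    rw [← hmaxκ]; exact norm_Kt_decay hh hq κ y
  have hKη : ∀ y : ℝ, ‖Kt h p q ((-η : ℝ) + y * I)‖ ≤ 5 * (q - p) * Real.exp (-η * p) * (1 + y ^ 2)⁻¹ := fun y => by
    rw [← hmaxη]; exact norm_Kt_decay hh hq (-η) y
  have hKx : ∀ x ∈ Set.Icc (-η) κ, ∀ y : ℝ, ‖Kt h p q (x + y * I)‖ ≤ 5 * (q - p) * E * (1 + y ^ 2)⁻¹ := by
    intro x hx y
    refine (norm_Kt_decay hh hq x y).trans ?_
    gcongr
    have hqh : 0 ≤ q + h := by linarith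
    refine max_le (Real.exp_le_exp.mpr ?_) (Real.exp_le_exp.mpr (by nlinarith [hx.2]))
    calc x * p ≤ κ * p := by nlinarith [hx.2]
      _ ≤ _ := by nlinarith
  have hint : Integrable (fun y : ℝ => Kt h p q (κ + y * I) * G y) := by
    refine Integrable.mono' (integrable_inv_one_add_sq.const_mul (5 * (q - p) * E * B)) ?_ ?_
    · exact ((k.continuous.comp (by fun_prop)).mul hG).aestronglyMeasurable
    · filter_upwards with y
      rw [norm_mul]
      calc _ ≤ (5 * (q - p) * E * (1 + y ^ 2)⁻¹) * B := by gcongr <;> [exact hKκ y; exact hGB y]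
        _ = _ := by ring
  rw [← integral_add_compl (measurableSet_Ioc (a := -T) (b := T)) hint]
  refine (norm_add_le _ _).trans ?_
  have htail : ‖∫ y in (Set.Ioc (-T) T)ᶜ, Kt h p q (κ + y * I) * G y‖ ≤ 5 * (q - p) * (E * B * (2 / T)) := by
    calc _ ≤ ∫ y in (Set.Ioc (-T) T)ᶜ, (5 * (q - p) * E * B) * (1 + y ^ 2)⁻¹ := by
          refine norm_integral_le_of_norm_le (integrable_inv_one_add_sq.const_mul _).integrableOn ?_
          filter_upwards with y
          rw [norm_mul]
          calc _ ≤ (5 * (q - p) * E * (1 + y ^ 2)⁻¹) * B := by gcongr <;> [exact hKκ y; exact hGB y]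
            _ = _ := by ring
      _ = (5 * (q - p) * E * B) * ∫ y in (Set.Ioc (-T) T)ᶜ, (1 + y ^ 2)⁻¹ := integral_const_mul _ _
      _ ≤ (5 * (q - p) * E * B) * (2 / T) := by
          gcongr; exact integral_compl_inv_one_add_sq hT
      _ = _ := by ring
  have hTT : -T ≤ T := by linarith
  have hηκ : -η ≤ κ := by linarith
  have hmain : ‖∫ y in Set.Ioc (-T) T, Kt h p q (κ + y * I) * G y‖ ≤ 5 * (q - p) * (Real.exp (-η * p) * M * Real.pi)
      + 5 * (q - p) * (2 * (κ + η) * M * E * (1 + T ^ 2)⁻¹) := by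
    rw [← intervalIntegral.integral_of_le hTT]
    have e1 : ∫ y in (-T)..T, Kt h p q (κ + y * I) * G y = ∫ y in (-T)..T, Kt h p q (κ + y * I) * Z (κ + y * I) := by
      apply intervalIntegral.integral_congr
      intro y hy
      rw [Set.uIcc_of_le hTT] at hy
      simp only [hGZ y hy]
    rw [e1]
    have rect := Complex.integral_boundary_rect_eq_zero_of_differentiableOn (fun z => Kt h p q z * Z z)
      (⟨-η, -T⟩ : ℂ) (⟨κ, T⟩ : ℂ) (by
        dsimp only
        rw [Set.uIcc_of_le hηκ, Set.uIcc_of_le hTT]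
        exact k.differentiableOn.mul hZ)
    dsimp only at rect
    have hhor : ∀ y ∈ Set.Icc (-T) T, y ^ 2 = T ^ 2 → ‖∫ x in (-η)..κ, Kt h p q (x + y * I) * Z (x + y * I)‖
        ≤ 5 * (q - p) * ((κ + η) * M * E * (1 + T ^ 2)⁻¹) := by
      intro y hy hyT
      refine (intervalIntegral.norm_integral_le_of_norm_le_const (C := 5 * (q - p) * E * (1 + T ^ 2)⁻¹ * M) ?_).trans ?_
      · intro x hx
        rw [Set.uIoc_of_le hηκ] at hx
        have hx' : x ∈ Set.Icc (-η) κ := ⟨hx.1.le, hx.2⟩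
        rw [norm_mul]
        have := hKx x hx' y
        rw [hyT] at this
        gcongr
        exact hZM _ (by rw [Complex.mem_reProdIm]; simpa using ⟨hx', hy⟩)
      · rw [abs_of_pos (by linarith)]
        apply le_of_eq; ring
    have h1 := hhor (-T) ⟨le_rfl, hTT⟩ (by ring)
    have h2 := hhor T ⟨hTT, le_rfl⟩ rfl
    have h3 : ‖∫ y in (-T)..T, Kt h p q ((-η : ℝ) + y * I) * Z ((-η : ℝ) + y * I)‖ ≤ 5 * (q - p) * (Real.exp (-η * p) * M * Real.pi) := by
      rw [intervalIntegral.integral_of_le hTT]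
      calc _ ≤ ∫ y in (Set.Ioc (-T) T), (5 * (q - p) * Real.exp (-η * p) * M) * (1 + y ^ 2)⁻¹ := by
            refine norm_integral_le_of_norm_le (integrable_inv_one_add_sq.const_mul _).integrableOn ?_
            rw [ae_restrict_iff' measurableSet_Ioc]
            filter_upwards with y hy
            rw [norm_mul]
            calc _ ≤ (5 * (q - p) * Real.exp (-η * p) * (1 + y ^ 2)⁻¹) * M := by
                  gcongr
                  · exact hKη y
                  · exact hZM _ (by rw [Complex.mem_reProdIm]; simpa using ⟨hηκ, hy.1.le, hy.2⟩)
              _ = _ := by ring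
        _ ≤ ∫ y, (5 * (q - p) * Real.exp (-η * p) * M) * (1 + y ^ 2)⁻¹ := by
            apply setIntegral_le_integral (integrable_inv_one_add_sq.const_mul _)
            filter_upwards with y
            positivity
        _ = _ := by rw [integral_const_mul, integral_univ_inv_one_add_sq]; ring
    set A := ∫ y in (-T)..T, Kt h p q (κ + y * I) * Z (κ + y * I)
    set L := ∫ y in (-T)..T, Kt h p q ((-η : ℝ) + y * I) * Z ((-η : ℝ) + y * I)
    set U := ∫ x in (-η)..κ, Kt h p q (x + T * I) * Z (x + T * I)
    set D := ∫ x in (-η)..κ, Kt h p q (x + (-T : ℝ) * I) * Z (x + (-T : ℝ) * I)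
    have e : I • A = U - D + I • L := by linear_combination rect
    calc ‖A‖ = ‖I • A‖ := by rw [norm_smul]; simp
      _ ≤ ‖U‖ + ‖D‖ + ‖I • L‖ := by rw [e]; exact (norm_add_le _ _).trans (add_le_add_left (norm_sub_le _ _) _)
      _ = ‖U‖ + ‖D‖ + ‖L‖ := by rw [norm_smul]; simp
      _ ≤ _ := by linarith
  linarith
end Wright

namespace Wright
open MeasureTheory Complex

lemma poly_exp_small (C : ℝ) (k : ℕ) {β : ℝ} (hβ : 0 < β) : ∃ V : ℝ, 2 ≤ V ∧ ∀ v ≥ V, C * v ^ k * Real.exp (-(2 * β * v)) ≤ Real.exp (-(β * v)) := by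
  have h := (isLittleO_pow_exp_pos_mul_atTop k hβ).def (c := (|C| + 1)⁻¹) (by positivity)
  obtain ⟨V, hV⟩ := Filter.eventually_atTop.mp h
  refine ⟨max V 2, le_max_right _ _, fun v hv => ?_⟩
  have h1 := hV v (le_trans (le_max_left _ _) hv)
  have hv2 : 2 ≤ v := le_trans (le_max_right _ _) hv
  rw [Real.norm_of_nonneg (by positivity), Real.norm_of_nonneg (by positivity)] at h1
  have e : Real.exp (-(β * v)) = Real.exp (β * v) * Real.exp (-(2 * β * v)) := by rw [← Real.exp_add]; congr 1; ring
  rw [e]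
  gcongr
  have h2 : (|C| + 1) * v ^ k ≤ Real.exp (β * v) := by
    have := mul_le_mul_of_nonneg_left h1 (by positivity : 0 ≤ |C| + 1)
    rwa [← mul_assoc, mul_inv_cancel₀ (by positivity), one_mul] at this
  have h3 : 0 ≤ v ^ k := by positivity
  nlinarith [le_abs_self C]

/-- Smoothed sums of `μ(n) n^{-1-it}` are small, uniformly for `|t| ≤ exp(v^20)/8`. -/
lemma mu_smooth_bound : ∃ V : ℝ, 2 ≤ V ∧ ∀ v ≥ V, ∀ t : ℝ, |t| ≤ Real.exp (v ^ 20) / 8 →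
    ‖∑' n : ℕ, LSeries.term (fun n => (ArithmeticFunction.moebius n : ℂ)) (1 + t * I) n *
      (trap (v ^ 20 / 100) (v ^ 20 / 100) (v ^ 20) (Real.log n) : ℂ)‖ ≤ Real.exp (-(v / 4000)) := by
  obtain ⟨V1, hV12, hV1⟩ := inv_zeta_bound
  obtain ⟨δ, hδ, hnear⟩ := near_one
  obtain ⟨V2, hV22, hV2⟩ := poly_exp_small 100000 2700 (β := 1 / 4000) (by norm_num)
  refine ⟨max (max V1 V2) (2 + 1 / δ), by have : 0 < 1 / δ := by positivity
                                          exact le_max_of_le_right (by linarith), fun v hv t ht => ?_⟩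
  have hv1 : V1 ≤ v := le_trans (le_trans (le_max_left _ _) (le_max_left _ _)) hv
  have hv2 : V2 ≤ v := le_trans (le_trans (le_max_right _ _) (le_max_left _ _)) hv
  have hvδ : 2 + 1 / δ ≤ v := le_trans (le_max_right _ _) hv
  have hv0 : 2 ≤ v := hV12.trans hv1
  have hfin := hV2 v hv2
  set H := v ^ 20 with hH
  have hHv : v ≤ H := by
    calc v = v ^ 1 := (pow_one v).symm
      _ ≤ v ^ 20 := pow_le_pow_right₀ (by linarith) (by norm_num)
  have hH2 : (2 : ℝ) ^ 20 ≤ H := pow_le_pow_left₀ (by norm_num) hv0 20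
  norm_num at hH2
  have hH0 : 0 < H := by linarith
  set κ := 1 / H with hκ
  set η := 1 / (20 * v ^ 19) with hη
  set T := Real.exp H / 8 with hT
  have hκ0 : 0 < κ := by positivity
  have hη0 : 0 < η := by positivity
  have hT0 : 0 < T := by positivity
  have hκ1 : κ ≤ 1 := by rw [hκ, div_le_one hH0]; linarith
  have hη1 : η ≤ 1 := by
    rw [hη, div_le_one (by positivity)]
    have : (1 : ℝ) ≤ v ^ 19 := one_le_pow₀ (by linarith)
    linarith
  have hκδ : κ < δ := by
    have h0 : 0 < 1 / δ := by positivity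
    rw [hκ, div_lt_iff₀ hH0]
    have : 1 / δ < H := by linarith
    rw [div_lt_iff₀ hδ] at this
    linarith
  have hs : (1 + t * I : ℂ).re = 1 := by simp
  have hsim : (1 + t * I : ℂ).im = t := by simp
  rw [mu_perron (by linarith) (by linarith) hκ0 hs]
  have hrect : ∀ z ∈ (Set.Icc (-η) κ ×ℂ Set.Icc (-T) T), riemannZeta₁ (1 + t * I + z) ≠ 0 ∧
      ‖((1 + t * I + z) - 1) / riemannZeta₁ (1 + t * I + z)‖ ≤ v ^ 2600 := by
    intro z hz
    rw [Complex.mem_reProdIm] at hz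
    apply hV1 v hv1
    · rw [Complex.add_im, hsim]
      have : |z.im| ≤ T := abs_le.mpr ⟨hz.2.1, hz.2.2⟩
      calc |t + z.im| ≤ |t| + |z.im| := abs_add_le _ _
        _ ≤ _ := by linarith
    · rw [Complex.add_re, hs]; linarith [hz.1.1]
    · rw [Complex.add_re, hs]; linarith [hz.1.2]
  have hre : ∀ y : ℝ, (1 + t * I + (κ + y * I) : ℂ).re = 1 + κ := by intro y; simp
  have key := contour_shift (h := H / 100) (p := H / 100) (q := H) (κ := κ) (η := η) (T := T) (M := v ^ 2600) (B := 2 / κ)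
    (by linarith) (by linarith) (by linarith) hκ0 hη0 hT0 (by positivity) (by positivity)
    (fun y => LSeries (fun n => (ArithmeticFunction.moebius n : ℂ)) (1 + t * I + (κ + y * I)))
    (by
      have : (fun y : ℝ => LSeries (fun n => (ArithmeticFunction.moebius n : ℂ)) (1 + t * I + (κ + y * I))) =
          fun y : ℝ => (riemannZeta (1 + t * I + (κ + y * I)))⁻¹ := by
        ext y; exact mu_eq_inv (by rw [hre]; linarith)
      rw [this]
      have hne : ∀ y : ℝ, (1 + t * I + (κ + y * I) : ℂ) ≠ 1 := by
        intro y h0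
        have := congrArg Complex.re h0
        rw [hre] at this
        simp at this; linarith
      refine Continuous.inv₀ ?_ ?_
      · rw [continuous_iff_continuousAt]
        intro y
        exact ContinuousAt.comp (f := fun y : ℝ => (1 + t * I + (κ + y * I) : ℂ)) (differentiableAt_riemannZeta (hne y)).continuousAt (by fun_prop)
      · intro y
        exact riemannZeta_ne_zero_of_one_le_re (by rw [hre]; linarith))
    (fun z => ((1 + t * I + z) - 1) / riemannZeta₁ (1 + t * I + z))
    (by
      have := differentiable_riemannZeta₁
      refine DifferentiableOn.div (by fun_prop) (by fun_prop) (fun z hz => (hrect z hz).1))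
    (fun z hz => (hrect z hz).2)
    (by
      intro y _
      rw [mu_eq_inv (by rw [hre]; linarith), riemannZeta_eq_inv_sub_mul]
      · rw [mul_inv, inv_inv]; rfl
      · intro h0
        have := congrArg Complex.re h0
        rw [hre] at this
        simp at this; linarith)
    (by
      intro y
      refine (mu_norm_le (σ := 1 + κ) (by linarith) (by rw [hre])).trans ?_
      have := (hnear (1 + κ) (by linarith) (by linarith)).2
      rwa [add_sub_cancel_left] at this)
  rw [norm_mul, Complex.norm_real, Real.norm_of_nonneg (by positivity)]
  have hpi : 1 / (2 * Real.pi) ≤ 1 := by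
    rw [div_le_one (by positivity)]; linarith [Real.pi_gt_three]
  refine (mul_le_of_le_one_left (norm_nonneg _) hpi).trans (key.trans ?_)
  -- `κ = 1 / H` keeps `e^{κ q}` bounded, while the shift to `-η` gains `e^{-η p} = e^{-v / 2000}`
  have hE : Real.exp (κ * (H + H / 100)) ≤ 8 := by
    have : κ * (H + H / 100) = 101 / 100 := by rw [hκ]; field_simp; norm_num
    rw [this]
    have h1 := Real.exp_one_lt_d9
    have : Real.exp (101 / 100) ≤ Real.exp 1 * Real.exp 1 := by rw [← Real.exp_add]; apply Real.exp_le_exp.mpr; norm_num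
    nlinarith [Real.exp_pos 1]
  have hexp : Real.exp (-η * (H / 100)) = Real.exp (-(2 * (1 / 4000) * v)) := by
    congr 1
    rw [hη, hH]
    field_simp
    norm_num
  set e := Real.exp (-(2 * (1 / 4000) * v)) with he
  have he0 : 0 < e := Real.exp_pos _
  have hTe : 1 / T ≤ 8 * e := by
    have : 1 / T = 8 * Real.exp (-H) := by rw [hT, Real.exp_neg]; field_simp
    rw [this, he]
    gcongr
    linarith
  have hT1 : 1 ≤ T := by
    rw [hT, le_div_iff₀ (by norm_num)]; linarith [Real.add_one_le_exp H]
  have hT2 : (1 + T ^ 2)⁻¹ ≤ 8 * e := by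
    refine le_trans ?_ hTe
    rw [one_div]
    apply inv_anti₀ hT0
    nlinarith
  have hP1 : (1 : ℝ) ≤ v ^ 2600 := one_le_pow₀ (by linarith)
  have hκB : 2 / κ = 2 * H := by rw [hκ]; field_simp
  rw [hexp, hκB]
  have hgoal : Real.exp (-(1 / 4000 * v)) = Real.exp (-(v / 4000)) := by congr 1; ring
  rw [hgoal] at hfin
  refine le_trans ?_ hfin
  set P := v ^ 2600 with hP
  have h27 : v ^ 2700 = P * v ^ 100 := by rw [hP, ← pow_add]
  have h100 : H * H ≤ v ^ 100 := by
    rw [hH, ← pow_add]; exact pow_le_pow_right₀ (by linarith) (by norm_num)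
  have c1 : e * P * Real.pi ≤ 4 * P * H * e := by
    have : Real.pi ≤ 4 * H := by linarith [Real.pi_le_four]
    calc e * P * Real.pi ≤ e * P * (4 * H) := by gcongr
      _ = _ := by ring
  have c2 : 2 * (κ + η) * P * Real.exp (κ * (H + H / 100)) * (1 + T ^ 2)⁻¹ ≤ 256 * P * H * e := by
    calc _ ≤ 2 * (1 + 1) * P * 8 * (8 * e) := by gcongr
      _ = 256 * P * 1 * e := by ring
      _ ≤ _ := by gcongr; linarith
  have c3 : Real.exp (κ * (H + H / 100)) * (2 * H) * (2 / T) ≤ 256 * P * H * e := by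
    have : 2 / T = 2 * (1 / T) := by ring
    rw [this]
    calc _ ≤ 8 * (2 * H) * (2 * (8 * e)) := by gcongr
      _ = 256 * 1 * H * e := by ring
      _ ≤ _ := by gcongr
  calc 5 * (H - H / 100) * (e * P * Real.pi + 2 * (κ + η) * P * Real.exp (κ * (H + H / 100)) * (1 + T ^ 2)⁻¹ + Real.exp (κ * (H + H / 100)) * (2 * H) * (2 / T))
      ≤ 5 * H * (4 * P * H * e + 256 * P * H * e + 256 * P * H * e) := by
        gcongr
        linarith
    _ = 2580 * (P * (H * H) * e) := by ring
    _ ≤ 100000 * (P * v ^ 100 * e) := by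
        have : P * (H * H) * e ≤ P * v ^ 100 * e := by gcongr
        have : 0 ≤ P * v ^ 100 * e := by positivity
        linarith
    _ = _ := by rw [h27]; ring
end Wright

/-! ### The triangular window and Plancherel -/

namespace Wright
open MeasureTheory Complex FourierTransform

lemma plancherel {f : ℝ → ℂ} (hf : Continuous f) (hfi : Integrable f) (hFi : Integrable (𝓕 f)) :
    ∫ u, ‖f u‖ ^ 2 = ∫ ξ, ‖𝓕 f ξ‖ ^ 2 := by
  have h := VectorFourier.integral_sesq_fourierIntegral_eq_neg_flip (innerSL ℂ (E := ℂ)) (L := innerₗ ℝ)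
    (e := Real.fourierChar) (μ := volume) (ν := volume) Real.continuous_fourierChar continuous_inner hfi hFi
  have h2 : ∀ x, VectorFourier.fourierIntegral Real.fourierChar volume (-(innerₗ ℝ).flip) (𝓕 f) x = f x := by
    intro x
    have := congrFun (hf.fourierInv_fourier_eq hfi hFi) x
    rw [← this]
    rw [Real.fourierInv_eq, VectorFourier.fourierIntegral]
    simp
  simp_rw [h2] at h
  have h3 : ∀ z : ℂ, (innerSL ℂ z) z = ((‖z‖ ^ 2 : ℝ) : ℂ) := by
    intro z
    rw [innerSL_apply_apply, inner_self_eq_norm_sq_to_K]; push_cast; rfl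
  have h5 : ∫ ξ, (innerSL ℂ (𝓕 f ξ)) (𝓕 f ξ) = ∫ x, (innerSL ℂ (f x)) (f x) := h
  simp_rw [h3] at h5
  rw [integral_complex_ofReal, integral_complex_ofReal] at h5
  exact_mod_cast h5.symm

/-- The triangular window of mass `1` supported on `[0, 2δ]`. -/
noncomputable def tri (δ u : ℝ) : ℝ := trap δ 0 δ u / δ

section
variable {δ : ℝ}

lemma tri_continuous : Continuous (tri δ) := trap_continuous.div_const δ

lemma tri_nonneg (hδ : 0 < δ) (u : ℝ) : 0 ≤ tri δ u := div_nonneg (trap_nonneg hδ (by simp) u) hδ.le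

lemma tri_le (hδ : 0 < δ) (u : ℝ) : tri δ u ≤ 1 / δ := by
  unfold tri; gcongr; exact trap_le_one hδ (by simp) u

lemma tri_eq_zero_of_le (hδ : 0 < δ) {u : ℝ} (hu : u ≤ 0) : tri δ u = 0 := by
  rw [tri, trap_eq_zero_of_le hδ (by simp) hu, zero_div]

lemma tri_eq_zero_of_ge (hδ : 0 < δ) {u : ℝ} (hu : 2 * δ ≤ u) : tri δ u = 0 := by
  rw [tri, trap_eq_zero_of_ge hδ (by simp) (by linarith), zero_div]

lemma tri_hcs (hδ : 0 < δ) : HasCompactSupport (tri δ) := by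
  apply HasCompactSupport.intro (isCompact_Icc (a := 0) (b := 2 * δ))
  intro x hx
  rw [Set.mem_Icc, not_and_or, not_le, not_le] at hx
  rcases hx with hx | hx
  · exact tri_eq_zero_of_le hδ hx.le
  · exact tri_eq_zero_of_ge hδ hx.le

lemma tri_integrable (hδ : 0 < δ) : Integrable (tri δ) := tri_continuous.integrable_of_hasCompactSupport (tri_hcs hδ)

lemma E1_zero : E1 0 = 1 := by rw [E1, dslope_same]; simp

lemma tri_fourier (hδ : 0 < δ) (ξ : ℝ) : 𝓕 (fun u => (tri δ u : ℂ)) ξ = E1 (δ * ((-2 * Real.pi * ξ : ℝ) * I)) ^ 2 := by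
  have hi : Integrable (fun u => (tri δ u : ℂ)) := (tri_integrable hδ).ofReal
  have hδ0 : (δ : ℂ) ≠ 0 := by rw [Complex.ofReal_ne_zero]; exact hδ.ne'
  have hoff : ∀ ξ : ℝ, ξ ≠ 0 → 𝓕 (fun u => (tri δ u : ℂ)) ξ = E1 (δ * ((-2 * Real.pi * ξ : ℝ) * I)) ^ 2 := by
    intro ξ hξ
    have hz : ((-2 * Real.pi * ξ : ℝ) * I : ℂ) ≠ 0 := by
      refine mul_ne_zero ?_ I_ne_zero
      rw [Complex.ofReal_ne_zero]
      have := Real.pi_ne_zero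
      positivity
    have h1 := trap_laplace (h := δ) (p := 0) (q := δ) hδ (by simp) hz
    rw [Real.fourier_eq']
    have e : ∀ u : ℝ, Complex.exp (((-2 * Real.pi * inner ℝ u ξ : ℝ) : ℂ) * I) • (tri δ u : ℂ)
        = (trap δ 0 δ u : ℂ) * Complex.exp ((-2 * Real.pi * ξ : ℝ) * I * u) * (δ : ℂ)⁻¹ := by
      intro u
      simp only [RCLike.inner_apply, conj_trivial, smul_eq_mul, tri]
      push_cast
      rw [mul_comm, div_eq_mul_inv]
      have : -2 * (Real.pi : ℂ) * (ξ * u) * I = -2 * Real.pi * ξ * I * u := by ring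
      rw [this]; ring
    simp_rw [e]
    rw [integral_mul_const, h1, Kt]
    simp only [sub_zero, Complex.ofReal_zero, mul_zero, Complex.exp_zero]
    field_simp
  have hc1 : Continuous (𝓕 (fun u => (tri δ u : ℂ))) := VectorFourier.fourierIntegral_continuous Real.continuous_fourierChar continuous_inner hi
  have hc2 : Continuous (fun ξ : ℝ => E1 (δ * ((-2 * Real.pi * ξ : ℝ) * I)) ^ 2) := by
    have := differentiable_E1.continuous
    fun_prop
  have : 𝓕 (fun u => (tri δ u : ℂ)) = fun ξ : ℝ => E1 (δ * ((-2 * Real.pi * ξ : ℝ) * I)) ^ 2 := by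
    apply Continuous.ext_on (dense_compl_singleton (0 : ℝ)) hc1 hc2
    intro ξ hξ
    exact hoff ξ hξ
  rw [this]

lemma tri_integral (hδ : 0 < δ) : ∫ u, tri δ u = 1 := by
  have h := tri_fourier hδ 0
  rw [Real.fourier_eq'] at h
  simp [E1_zero] at h
  rw [integral_complex_ofReal] at h
  exact_mod_cast h

lemma tri_fourier_le_one (hδ : 0 < δ) (ξ : ℝ) : ‖𝓕 (fun u => (tri δ u : ℂ)) ξ‖ ≤ 1 := by
  rw [tri_fourier hδ, norm_pow]
  apply pow_le_one₀ (norm_nonneg _)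
  have := norm_E1_le (δ * ((-2 * Real.pi * ξ : ℝ) * I))
  simpa using this

lemma tri_fourier_le (hδ : 0 < δ) {ξ : ℝ} (hξ : ξ ≠ 0) : ‖𝓕 (fun u => (tri δ u : ℂ)) ξ‖ ≤ 1 / (δ * ξ) ^ 2 := by
  have hz : (δ * ((-2 * Real.pi * ξ : ℝ) * I) : ℂ) ≠ 0 := by
    have := Real.pi_ne_zero
    refine mul_ne_zero (by rw [Complex.ofReal_ne_zero]; exact hδ.ne') (mul_ne_zero ?_ I_ne_zero)
    rw [Complex.ofReal_ne_zero]
    positivity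
  have h1 := norm_E1_le' hz
  have h2 : ‖(δ * ((-2 * Real.pi * ξ : ℝ) * I) : ℂ)‖ = 2 * Real.pi * |δ * ξ| := by
    rw [norm_mul, norm_mul, Complex.norm_real, Complex.norm_real, norm_I, mul_one, Real.norm_eq_abs, Real.norm_eq_abs, abs_mul, abs_mul, abs_mul,
      abs_neg, abs_of_pos Real.pi_pos]
    norm_num; ring
  rw [h2] at h1
  have h3 : (δ * ((-2 * Real.pi * ξ : ℝ) * I) : ℂ).re = 0 := by simp
  rw [h3, Real.exp_zero, max_self] at h1
  have h0 : 0 < |δ * ξ| := abs_pos.mpr (mul_ne_zero hδ.ne' hξ)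
  have h4 : ‖E1 (δ * ((-2 * Real.pi * ξ : ℝ) * I))‖ ≤ 1 / |δ * ξ| := by
    refine h1.trans ?_
    rw [div_le_div_iff₀ (by positivity) h0]
    nlinarith [Real.pi_gt_three]
  rw [tri_fourier hδ, norm_pow]
  calc _ ≤ (1 / |δ * ξ|) ^ 2 := by gcongr
    _ = _ := by rw [div_pow, one_pow, sq_abs]

lemma tri_fourier_integrable (hδ : 0 < δ) : Integrable (𝓕 (fun u => (tri δ u : ℂ))) := by
  have hi : Integrable (fun u => (tri δ u : ℂ)) := (tri_integrable hδ).ofReal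
  have hc1 : Continuous (𝓕 (fun u => (tri δ u : ℂ))) := VectorFourier.fourierIntegral_continuous Real.continuous_fourierChar continuous_inner hi
  refine Integrable.mono' (integrable_inv_one_add_sq.const_mul (1 + 1 / δ ^ 2)) hc1.aestronglyMeasurable ?_
  filter_upwards with ξ
  by_cases hξ : ξ = 0
  · subst hξ
    refine (tri_fourier_le_one hδ 0).trans ?_
    have : 0 ≤ 1 / δ ^ 2 := by positivity
    norm_num; positivity
  · have h1 := tri_fourier_le_one hδ ξ
    have h2 := tri_fourier_le hδ hξ
    rw [← div_eq_mul_inv, le_div_iff₀ (by positivity)]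
    have : 1 / (δ * ξ) ^ 2 * ξ ^ 2 = 1 / δ ^ 2 := by field_simp
    nlinarith [sq_nonneg ξ, mul_le_mul_of_nonneg_right h2 (sq_nonneg ξ)]

/-- Fourier transform of a finite superposition of shifted windows. -/
lemma sum_tri_fourier {ι : Type*} (s : Finset ι) (w x : ι → ℝ) (hδ : 0 < δ) (ξ : ℝ) :
    𝓕 (fun u : ℝ => ((∑ i ∈ s, w i * tri δ (u - x i) : ℝ) : ℂ)) ξ =
      (∑ i ∈ s, (w i : ℂ) * Complex.exp ((-2 * Real.pi * ξ : ℝ) * x i * I)) * 𝓕 (fun u => (tri δ u : ℂ)) ξ := by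
  rw [Real.fourier_eq', Real.fourier_eq', Finset.sum_mul]
  have hi : ∀ y : ℝ, Integrable (fun u : ℝ => Complex.exp (((-2 * Real.pi * inner ℝ u ξ : ℝ) : ℂ) * I) • (tri δ (u - y) : ℂ)) := by
    intro y
    have h1 : Integrable (fun u : ℝ => (tri δ (u - y) : ℂ)) := ((tri_integrable hδ).comp_sub_right y).ofReal
    have h2 := (Real.fourierIntegral_convergent_iff (f := fun u : ℝ => (tri δ (u - y) : ℂ)) ξ).mpr h1
    refine h2.congr ?_
    filter_upwards with u
    rw [Circle.smul_def, Real.fourierChar_apply]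
    congr 2; push_cast; ring
  have e : ∀ u : ℝ, Complex.exp (((-2 * Real.pi * inner ℝ u ξ : ℝ) : ℂ) * I) • ((∑ i ∈ s, w i * tri δ (u - x i) : ℝ) : ℂ)
      = ∑ i ∈ s, (w i : ℂ) * (Complex.exp (((-2 * Real.pi * inner ℝ u ξ : ℝ) : ℂ) * I) • (tri δ (u - x i) : ℂ)) := by
    intro u
    push_cast
    rw [smul_eq_mul, Finset.mul_sum]
    apply Finset.sum_congr rfl
    intro i _
    rw [smul_eq_mul]; ring
  simp_rw [e]
  rw [integral_finsetSum s (fun i _ => (hi (x i)).const_mul _)]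
  apply Finset.sum_congr rfl
  intro i _
  rw [integral_const_mul, mul_assoc]
  congr 1
  rw [← integral_add_right_eq_self _ (x i), ← integral_const_mul]
  congr 1
  ext u
  rw [add_sub_cancel_right, smul_eq_mul, smul_eq_mul, ← mul_assoc, ← Complex.exp_add]
  congr 2
  simp only [RCLike.inner_apply, conj_trivial]
  push_cast; ring
end
end Wright

namespace Wright
open MeasureTheory Complex FourierTransform
section
variable {δ : ℝ}

lemma sum_tri_continuous {ι : Type*} (s : Finset ι) (w x : ι → ℝ) : Continuous (fun u : ℝ => ∑ i ∈ s, w i * tri δ (u - x i)) := by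
  have := @tri_continuous δ
  fun_prop

lemma sum_tri_integrable {ι : Type*} (s : Finset ι) (w x : ι → ℝ) (hδ : 0 < δ) : Integrable (fun u : ℝ => ∑ i ∈ s, w i * tri δ (u - x i)) :=
  integrable_finsetSum s fun i _ => ((tri_integrable hδ).comp_sub_right (x i)).const_mul (w i)

lemma sum_tri_integral {ι : Type*} (s : Finset ι) (w x : ι → ℝ) (hδ : 0 < δ) : ∫ u : ℝ, ∑ i ∈ s, w i * tri δ (u - x i) = ∑ i ∈ s, w i := by
  rw [integral_finsetSum s fun i _ => ((tri_integrable hδ).comp_sub_right (x i)).const_mul (w i)]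
  apply Finset.sum_congr rfl
  intro i _
  rw [integral_const_mul, integral_sub_right_eq_self (tri δ), tri_integral hδ, mul_one]

lemma sum_tri_bdd {ι : Type*} (s : Finset ι) (w x : ι → ℝ) (hδ : 0 < δ) (u : ℝ) :
    |∑ i ∈ s, w i * tri δ (u - x i)| ≤ (∑ i ∈ s, |w i|) * (1 / δ) := by
  rw [Finset.sum_mul]
  refine (Finset.abs_sum_le_sum_abs _ _).trans (Finset.sum_le_sum fun i _ => ?_)
  rw [abs_mul, abs_of_nonneg (tri_nonneg hδ _)]
  gcongr
  exact tri_le hδ _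

lemma sum_tri_sq_integrable {ι : Type*} (s : Finset ι) (w x : ι → ℝ) (hδ : 0 < δ) : Integrable (fun u : ℝ => (∑ i ∈ s, w i * tri δ (u - x i)) ^ 2) := by
  have h := (sum_tri_integrable s w x hδ).bdd_mul (sum_tri_continuous s w x (δ := δ)).aestronglyMeasurable
    (c := (∑ i ∈ s, |w i|) * (1 / δ)) (by filter_upwards with u using sum_tri_bdd s w x hδ u)
  refine h.congr ?_
  filter_upwards with u
  ring

lemma norm_exp_sum_le {ι : Type*} (s : Finset ι) (w x : ι → ℝ) (ξ : ℝ) :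
    ‖∑ i ∈ s, (w i : ℂ) * Complex.exp ((-2 * Real.pi * ξ : ℝ) * x i * I)‖ ≤ ∑ i ∈ s, |w i| := by
  refine (norm_sum_le _ _).trans (Finset.sum_le_sum fun i _ => ?_)
  rw [norm_mul, Complex.norm_real, Real.norm_eq_abs, ← Complex.ofReal_mul, Complex.norm_exp_ofReal_mul_I, mul_one]

lemma sum_tri_fourier_integrable {ι : Type*} (s : Finset ι) (w x : ι → ℝ) (hδ : 0 < δ) :
    Integrable (𝓕 (fun u : ℝ => ((∑ i ∈ s, w i * tri δ (u - x i) : ℝ) : ℂ))) := by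
  have : 𝓕 (fun u : ℝ => ((∑ i ∈ s, w i * tri δ (u - x i) : ℝ) : ℂ)) = fun ξ =>
      (∑ i ∈ s, (w i : ℂ) * Complex.exp ((-2 * Real.pi * ξ : ℝ) * x i * I)) * 𝓕 (fun u => (tri δ u : ℂ)) ξ :=
    funext (sum_tri_fourier s w x hδ)
  rw [this]
  refine (tri_fourier_integrable hδ).bdd_mul (c := ∑ i ∈ s, |w i|) ?_ (by filter_upwards with ξ using norm_exp_sum_le s w x ξ)
  exact Continuous.aestronglyMeasurable (by fun_prop)

lemma sum_tri_plancherel {ι : Type*} (s : Finset ι) (w x : ι → ℝ) (hδ : 0 < δ) :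
    ∫ u : ℝ, (∑ i ∈ s, w i * tri δ (u - x i)) ^ 2 = ∫ ξ : ℝ, ‖∑ i ∈ s, (w i : ℂ) * Complex.exp ((-2 * Real.pi * ξ : ℝ) * x i * I)‖ ^ 2
      * ‖𝓕 (fun u => (tri δ u : ℂ)) ξ‖ ^ 2 := by
  have h := plancherel (f := fun u : ℝ => ((∑ i ∈ s, w i * tri δ (u - x i) : ℝ) : ℂ))
    (Complex.continuous_ofReal.comp (sum_tri_continuous s w x)) (sum_tri_integrable s w x hδ).ofReal (sum_tri_fourier_integrable s w x hδ)
  simp_rw [sum_tri_fourier s w x hδ, norm_mul, mul_pow, Complex.norm_real, Real.norm_eq_abs, sq_abs] at h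
  exact h

lemma sum_tri_spec_integrable {ι : Type*} (s : Finset ι) (w x : ι → ℝ) (hδ : 0 < δ) :
    Integrable fun ξ : ℝ => ‖∑ i ∈ s, (w i : ℂ) * Complex.exp ((-2 * Real.pi * ξ : ℝ) * x i * I)‖ ^ 2
      * ‖𝓕 (fun u => (tri δ u : ℂ)) ξ‖ ^ 2 := by
  have hc1 : Continuous (𝓕 (fun u => (tri δ u : ℂ))) := VectorFourier.fourierIntegral_continuous Real.continuous_fourierChar continuous_inner (tri_integrable hδ).ofReal
  refine Integrable.mono' ((tri_fourier_integrable hδ).norm.const_mul ((∑ i ∈ s, |w i|) ^ 2)) ?_ ?_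
  · exact Continuous.aestronglyMeasurable (by fun_prop)
  · filter_upwards with ξ
    have h1 := norm_exp_sum_le s w x ξ
    have h2 := tri_fourier_le_one hδ ξ
    rw [Real.norm_of_nonneg (by positivity)]
    gcongr
    nlinarith [norm_nonneg (𝓕 (fun u => (tri δ u : ℂ)) ξ)]

/-- Mean square of a Type II sum: a saving `η` on the spectrum up to height `T` is inherited. -/
lemma l2_bound {ι κ : Type*} (s : Finset ι) (t : Finset κ) (α x : ι → ℝ) (β y : κ → ℝ) (hβ : ∀ j ∈ t, 0 ≤ β j)
    (hδ : 0 < δ) {T η S A0 B0 : ℝ} (hT : 1 ≤ T)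
    (hA : ∀ ξ : ℝ, |ξ| ≤ T → ‖∑ i ∈ s, (α i : ℂ) * Complex.exp ((-2 * Real.pi * ξ : ℝ) * x i * I)‖ ≤ η)
    (hA0 : ∑ i ∈ s, |α i| ≤ A0) (hB0 : ∑ j ∈ t, β j ≤ B0)
    (hS : ∀ u, ∑ j ∈ t, β j * tri δ (u - y j) ≤ S) :
    ∫ u : ℝ, (∑ p ∈ s ×ˢ t, (α p.1 * β p.2) * tri δ (u - (x p.1 + y p.2))) ^ 2
      ≤ η ^ 2 * (S * B0) + (A0 * B0) ^ 2 * (4 / (δ ^ 4 * T ^ 3)) := by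
  have hβabs : ∑ j ∈ t, |β j| = ∑ j ∈ t, β j := Finset.sum_congr rfl fun j hj => abs_of_nonneg (hβ j hj)
  have hB00 : 0 ≤ ∑ j ∈ t, β j := Finset.sum_nonneg hβ
  have hA00 : 0 ≤ ∑ i ∈ s, |α i| := Finset.sum_nonneg fun i _ => abs_nonneg _
  have hS0 : 0 ≤ S := le_trans (Finset.sum_nonneg fun j hj => mul_nonneg (hβ j hj) (tri_nonneg hδ _)) (hS 0)
  have hη : 0 ≤ η := le_trans (norm_nonneg _) (hA 0 (by simp; linarith))
  have hfac : ∀ ξ : ℝ, ∑ p ∈ s ×ˢ t, ((α p.1 * β p.2 : ℝ) : ℂ) * Complex.exp ((-2 * Real.pi * ξ : ℝ) * ((x p.1 + y p.2 : ℝ) : ℂ) * I)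
      = (∑ i ∈ s, (α i : ℂ) * Complex.exp ((-2 * Real.pi * ξ : ℝ) * x i * I)) * ∑ j ∈ t, (β j : ℂ) * Complex.exp ((-2 * Real.pi * ξ : ℝ) * y j * I) := by
    intro ξ
    rw [Finset.sum_mul_sum, Finset.sum_product]
    refine Finset.sum_congr rfl fun i _ => Finset.sum_congr rfl fun j _ => ?_
    rw [mul_mul_mul_comm, ← Complex.exp_add]
    push_cast
    congr 2; ring
  rw [sum_tri_plancherel (s ×ˢ t) (fun p => α p.1 * β p.2) (fun p => x p.1 + y p.2) hδ]
  have hspecF := sum_tri_spec_integrable (s ×ˢ t) (fun p => α p.1 * β p.2) (fun p => x p.1 + y p.2) hδ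
  have hspecG := sum_tri_spec_integrable t β y hδ
  have hplG := sum_tri_plancherel t β y hδ
  simp_rw [hfac] at hspecF ⊢
  set A : ℝ → ℂ := fun ξ => ∑ i ∈ s, (α i : ℂ) * Complex.exp ((-2 * Real.pi * ξ : ℝ) * x i * I) with hAdef
  set B : ℝ → ℂ := fun ξ => ∑ j ∈ t, (β j : ℂ) * Complex.exp ((-2 * Real.pi * ξ : ℝ) * y j * I) with hBdef
  set g : ℝ → ℂ := 𝓕 (fun u => (tri δ u : ℂ)) with hg
  rw [← integral_add_compl (measurableSet_Ioc (a := -T) (b := T)) hspecF]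
  have hG2 : ∫ ξ : ℝ, ‖B ξ‖ ^ 2 * ‖g ξ‖ ^ 2 ≤ S * B0 := by
    rw [← hplG]
    calc ∫ u : ℝ, (∑ j ∈ t, β j * tri δ (u - y j)) ^ 2 ≤ ∫ u : ℝ, S * (∑ j ∈ t, β j * tri δ (u - y j)) := by
          apply integral_mono (sum_tri_sq_integrable t β y hδ) ((sum_tri_integrable t β y hδ).const_mul S)
          intro u
          dsimp only
          rw [sq]
          exact mul_le_mul_of_nonneg_right (hS u) (Finset.sum_nonneg fun j hj => mul_nonneg (hβ j hj) (tri_nonneg hδ _))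
      _ = S * ∑ j ∈ t, β j := by rw [integral_const_mul, sum_tri_integral t β y hδ]
      _ ≤ _ := by gcongr
  apply add_le_add
  · calc _ ≤ ∫ ξ in Set.Ioc (-T) T, η ^ 2 * (‖B ξ‖ ^ 2 * ‖g ξ‖ ^ 2) := by
          apply setIntegral_mono_on hspecF.integrableOn (hspecG.const_mul _).integrableOn measurableSet_Ioc
          intro ξ hξ
          have h1 : ‖A ξ‖ ≤ η := hA ξ (abs_le.mpr ⟨hξ.1.le, hξ.2⟩)
          change ‖A ξ * B ξ‖ ^ 2 * ‖g ξ‖ ^ 2 ≤ _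
          rw [norm_mul, mul_pow, mul_assoc]
          gcongr
      _ ≤ ∫ ξ, η ^ 2 * (‖B ξ‖ ^ 2 * ‖g ξ‖ ^ 2) := by
          apply setIntegral_le_integral (hspecG.const_mul _)
          filter_upwards with ξ
          simp only [Pi.zero_apply]; positivity
      _ = η ^ 2 * ∫ ξ, (‖B ξ‖ ^ 2 * ‖g ξ‖ ^ 2) := integral_const_mul _ _
      _ ≤ _ := by gcongr
  · have hT0 : 0 < T := by linarith
    calc _ ≤ ∫ ξ in (Set.Ioc (-T) T)ᶜ, (A0 * B0) ^ 2 * (2 / (δ ^ 4 * T ^ 2)) * (1 + ξ ^ 2)⁻¹ := by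
          apply setIntegral_mono_on hspecF.integrableOn (integrable_inv_one_add_sq.const_mul _).integrableOn measurableSet_Ioc.compl
          intro ξ hξ
          have hξT : T ≤ |ξ| := by
            by_contra! hc
            rw [abs_lt] at hc
            exact hξ ⟨hc.1, hc.2.le⟩
          have hξ2 : T ^ 2 ≤ ξ ^ 2 := by rw [← sq_abs ξ]; gcongr
          have hξ0 : ξ ≠ 0 := by rintro rfl; simp at hξT; linarith
          have h1 : ‖A ξ‖ ≤ A0 := (norm_exp_sum_le s α x ξ).trans hA0
          have h2 : ‖B ξ‖ ≤ B0 := by refine (norm_exp_sum_le t β y ξ).trans ?_; rw [hβabs]; exact hB0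
          have h3 := tri_fourier_le hδ hξ0
          change ‖A ξ * B ξ‖ ^ 2 * ‖g ξ‖ ^ 2 ≤ _
          rw [norm_mul, mul_assoc]
          have h4 : ‖g ξ‖ ^ 2 ≤ 2 / (δ ^ 4 * T ^ 2) * (1 + ξ ^ 2)⁻¹ := by
            calc ‖g ξ‖ ^ 2 ≤ (1 / (δ * ξ) ^ 2) ^ 2 := by gcongr
              _ = 1 / (δ ^ 4 * ξ ^ 2 * ξ ^ 2) := by
                  field_simp
              _ ≤ 2 / (δ ^ 4 * T ^ 2 * (1 + ξ ^ 2)) := by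
                  have : 0 < ξ ^ 2 := by positivity
                  rw [div_le_div_iff₀ (by positivity) (by positivity)]
                  have h5 : 1 + ξ ^ 2 ≤ 2 * ξ ^ 2 := by nlinarith
                  calc 1 * (δ ^ 4 * T ^ 2 * (1 + ξ ^ 2)) ≤ 1 * (δ ^ 4 * ξ ^ 2 * (2 * ξ ^ 2)) := by gcongr
                    _ = _ := by ring
              _ = _ := by rw [← div_eq_mul_inv, div_div]
          gcongr
          exact le_trans hA00 hA0
      _ = (A0 * B0) ^ 2 * (2 / (δ ^ 4 * T ^ 2)) * ∫ ξ in (Set.Ioc (-T) T)ᶜ, (1 + ξ ^ 2)⁻¹ := integral_const_mul _ _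
      _ ≤ (A0 * B0) ^ 2 * (2 / (δ ^ 4 * T ^ 2)) * (2 / T) := by gcongr; exact integral_compl_inv_one_add_sq hT0
      _ = _ := by field_simp; ring
end
end Wright

/-! ### Riemann sums on the logarithmic grid -/

namespace Wright
open MeasureTheory

lemma tri_lip {δ : ℝ} (hδ : 0 < δ) (u v : ℝ) : |tri δ u - tri δ v| ≤ 4 / δ ^ 2 * |u - v| := by
  have key : ∀ c : ℝ, |max (u - c) 0 - max (v - c) 0| ≤ |u - v| := by
    intro c
    refine (abs_max_sub_max_le_abs _ _ _).trans (le_of_eq ?_)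
    congr 1; ring
  have e : tri δ u - tri δ v = ((max (u - 0) 0 - max (v - 0) 0) - (max (u - (0 + δ)) 0 - max (v - (0 + δ)) 0)
      - (max (u - δ) 0 - max (v - δ) 0) + (max (u - (δ + δ)) 0 - max (v - (δ + δ)) 0)) / δ ^ 2 := by
    unfold tri trap; field_simp; ring
  rw [e, abs_div, abs_of_pos (by positivity : 0 < δ ^ 2), div_mul_eq_mul_div]
  gcongr
  have k1 := abs_le.mp (key 0)
  have k2 := abs_le.mp (key (0 + δ))
  have k3 := abs_le.mp (key δ)
  have k4 := abs_le.mp (key (δ + δ))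
  rw [abs_le]
  constructor <;> linarith

/-- Riemann sum on the multiplicative grid `log 1, log 2, …` for a Lipschitz bump on `[w - 2δ, w]`. -/
lemma riemann_log {h : ℝ → ℝ} {w δ K0 K1 : ℝ} (hδ : 0 < δ) (hδ1 : δ ≤ 1) (hw : 100 ≤ Real.exp w) (hδw : 1 ≤ δ * Real.exp w)
    (hc : Continuous h) (hsupp : ∀ s, s ≤ w - 2 * δ ∨ w ≤ s → h s = 0) (hK0 : ∀ s, |h s| ≤ K0)
    (hK1 : ∀ s s', |h s - h s'| ≤ K1 * |s - s'|) {N : ℕ} (hN : Real.exp w ≤ N) :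
    |∑ l ∈ Finset.Icc 1 N, h (Real.log l) / l - ∫ s, h s| ≤ (K0 + K1) * (1024 * δ * Real.exp (-w)) := by
  have hK00 : 0 ≤ K0 := (abs_nonneg _).trans (hK0 0)
  have hK10 : 0 ≤ K1 := by
    have := (abs_nonneg _).trans (hK1 1 0); simpa using this
  have hew := Real.exp_pos w
  -- the integral splits over the grid cells
  have hint : ∫ s, h s = ∑ l ∈ Finset.Icc 1 N, ∫ s in (Real.log l)..(Real.log (l + 1 : ℕ)), h s := by
    have h1 : Function.support h ⊆ Set.Ioc (Real.log (1 : ℕ)) (Real.log (N + 1 : ℕ)) := by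
      intro s hs
      rw [Function.mem_support] at hs
      have h2 : ¬ (s ≤ w - 2 * δ ∨ w ≤ s) := fun hh => hs (hsupp s hh)
      push Not at h2
      constructor
      · simp
        have : 2 ≤ w := by
          by_contra! hc
          have h3 : Real.exp w ≤ Real.exp 1 * Real.exp 1 := by rw [← Real.exp_add]; exact Real.exp_le_exp.mpr (by linarith)
          nlinarith [Real.exp_one_lt_d9, Real.exp_pos 1]
        linarith [h2.1]
      · refine h2.2.le.trans ?_
        rw [Real.le_log_iff_exp_le (by positivity)]
        push_cast; linarith
    rw [← intervalIntegral.integral_eq_integral_of_support_subset h1]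
    have h2 := intervalIntegral.sum_integral_adjacent_intervals_Ico (f := h) (μ := volume) (a := fun l : ℕ => Real.log l) (m := 1) (n := N + 1) (by omega)
      (fun k _ => hc.intervalIntegrable _ _)
    rw [← h2]
    rfl
  have hcell : ∀ l ∈ Finset.Icc 1 N, |h (Real.log l) / l - ∫ s in (Real.log l)..(Real.log (l + 1 : ℕ)), h s|
      ≤ if (Real.exp (w - 2 * δ) < l + 1 ∧ (l : ℝ) < Real.exp w) then (K0 + K1) * (256 * Real.exp (-w) ^ 2) else 0 := by
    intro l hl
    rw [Finset.mem_Icc] at hl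
    have hl0 : (0 : ℝ) < l := by exact_mod_cast hl.1
    have hlog : Real.log l ≤ Real.log (l + 1 : ℕ) := Real.log_le_log hl0 (by push_cast; linarith)
    split_ifs with hcond
    · have hd : Real.log (l + 1 : ℕ) - Real.log l = Real.log (1 + 1 / l) := by
        rw [← Real.log_div (by positivity) (by positivity)]; congr 1; push_cast; field_simp
      have hd1 : Real.log (1 + 1 / l) ≤ 1 / l := by
        have := Real.log_le_sub_one_of_pos (by positivity : (0 : ℝ) < 1 + 1 / l); linarith
      have hd2 : 1 / l - 1 / (l : ℝ) ^ 2 ≤ Real.log (1 + 1 / l) := by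
        have := Real.one_sub_inv_le_log_of_pos (by positivity : (0 : ℝ) < 1 + 1 / l)
        refine le_trans ?_ this
        have e : 1 - (1 + 1 / (l : ℝ))⁻¹ = 1 / (l + 1) := by field_simp; ring
        rw [e, div_sub_div _ _ (by positivity) (by positivity), div_le_div_iff₀ (by positivity) (by positivity)]
        nlinarith [sq_nonneg (l : ℝ), pow_pos hl0 3]
      have e1 : h (Real.log l) / l - ∫ s in (Real.log l)..(Real.log (l + 1 : ℕ)), h s
          = h (Real.log l) * (1 / l - Real.log (1 + 1 / l)) - ∫ s in (Real.log l)..(Real.log (l + 1 : ℕ)), (h s - h (Real.log l)) := by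
        rw [intervalIntegral.integral_sub (hc.intervalIntegrable _ _) (by simp), intervalIntegral.integral_const, hd, smul_eq_mul]
        ring
      have e2 : |∫ s in (Real.log l)..(Real.log (l + 1 : ℕ)), (h s - h (Real.log l))| ≤ K1 * (1 / l) * (1 / l) := by
        have := intervalIntegral.norm_integral_le_of_norm_le_const (a := Real.log l) (b := Real.log (l + 1 : ℕ)) (f := fun s => h s - h (Real.log l)) (C := K1 * (1 / l)) (by
          intro s hs
          rw [Set.uIoc_of_le hlog] at hs
          refine (hK1 _ _).trans ?_
          gcongr
          rw [abs_of_nonneg (by linarith [hs.1])]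
          linarith [hs.2])
        rw [Real.norm_eq_abs, abs_of_nonneg (by linarith : 0 ≤ Real.log (l + 1 : ℕ) - Real.log l), hd] at this
        refine this.trans ?_
        gcongr
      have e3 : |h (Real.log l) * (1 / l - Real.log (1 + 1 / l))| ≤ K0 * (1 / (l : ℝ) ^ 2) := by
        rw [abs_mul]
        gcongr
        · exact hK0 _
        · rw [abs_of_nonneg (by linarith)]; linarith
      have hlw : Real.exp w / 16 ≤ l := by
        have h3 : Real.exp w / 8 ≤ Real.exp (w - 2 * δ) := by
          rw [Real.exp_sub]
          gcongr
          calc Real.exp (2 * δ) ≤ Real.exp (1 + 1) := Real.exp_le_exp.mpr (by linarith)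
            _ = Real.exp 1 * Real.exp 1 := Real.exp_add _ _
            _ ≤ 8 := by nlinarith [Real.exp_one_lt_d9, Real.exp_pos 1]
        linarith [hcond.1]
      have e4 : 1 / (l : ℝ) ^ 2 ≤ 256 * Real.exp (-w) ^ 2 := by
        rw [Real.exp_neg, inv_pow, ← div_eq_mul_inv, div_le_div_iff₀ (by positivity) (by positivity)]
        nlinarith
      rw [e1]
      refine (abs_sub _ _).trans ?_
      calc _ ≤ K0 * (1 / (l : ℝ) ^ 2) + K1 * (1 / l) * (1 / l) := add_le_add e3 e2
        _ = (K0 + K1) * (1 / (l : ℝ) ^ 2) := by ring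
        _ ≤ _ := by gcongr
    · rw [not_and_or, not_lt, not_lt] at hcond
      have hz : ∀ s ∈ Set.Icc (Real.log l) (Real.log (l + 1 : ℕ)), h s = 0 := by
        intro s hs
        apply hsupp
        rcases hcond with hcond | hcond
        · left
          refine hs.2.trans ?_
          rw [Real.log_le_iff_le_exp (by positivity)]
          push_cast; exact hcond
        · right
          refine le_trans ?_ hs.1
          rwa [Real.le_log_iff_exp_le hl0]
      rw [hz _ ⟨le_rfl, hlog⟩, intervalIntegral.integral_congr (g := fun _ => 0)]
      · simp
      · intro s hs
        rw [Set.uIcc_of_le hlog] at hs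
        exact hz s hs
  rw [hint, ← Finset.sum_sub_distrib]
  refine (Finset.abs_sum_le_sum_abs _ _).trans ((Finset.sum_le_sum hcell).trans ?_)
  rw [← Finset.sum_filter, Finset.sum_const, nsmul_eq_mul]
  have hcard : ((Finset.filter (fun l : ℕ => Real.exp (w - 2 * δ) < l + 1 ∧ (l : ℝ) < Real.exp w) (Finset.Icc 1 N)).card : ℝ) ≤ 4 * δ * Real.exp w := by
    have hsub : Finset.filter (fun l : ℕ => Real.exp (w - 2 * δ) < l + 1 ∧ (l : ℝ) < Real.exp w) (Finset.Icc 1 N)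
        ⊆ Finset.Ico ⌊Real.exp (w - 2 * δ)⌋₊ ⌈Real.exp w⌉₊ := by
      intro l hl
      rw [Finset.mem_filter] at hl
      rw [Finset.mem_Ico]
      constructor
      · have := (Nat.floor_lt (Real.exp_pos _).le).mpr (show Real.exp (w - 2 * δ) < ((l + 1 : ℕ) : ℝ) by push_cast; exact hl.2.1)
        omega
      · exact Nat.lt_ceil.mpr hl.2.2
    have h1 := Finset.card_le_card hsub
    rw [Nat.card_Ico] at h1
    have h2 : ((Finset.filter (fun l : ℕ => Real.exp (w - 2 * δ) < l + 1 ∧ (l : ℝ) < Real.exp w) (Finset.Icc 1 N)).card : ℝ) + ⌊Real.exp (w - 2 * δ)⌋₊ ≤ ⌈Real.exp w⌉₊ := by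
      have h5 : ⌊Real.exp (w - 2 * δ)⌋₊ ≤ ⌈Real.exp w⌉₊ := by
        have h6 : ((⌊Real.exp (w - 2 * δ)⌋₊ : ℕ) : ℝ) ≤ ⌈Real.exp w⌉₊ := (Nat.floor_le (Real.exp_pos _).le).trans ((Real.exp_le_exp.mpr (by linarith)).trans (Nat.le_ceil _))
        exact_mod_cast h6
      have h7 := (Nat.le_sub_iff_add_le h5).mp h1
      exact_mod_cast h7
    have h3 := Nat.ceil_lt_add_one hew.le
    have h4 := Nat.lt_floor_add_one (Real.exp (w - 2 * δ))
    have h6 : Real.exp w * (1 - 2 * δ) ≤ Real.exp (w - 2 * δ) := by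
      rw [sub_eq_add_neg w, Real.exp_add]
      gcongr
      linarith [Real.add_one_le_exp (-(2 * δ))]
    nlinarith
  calc _ ≤ (4 * δ * Real.exp w) * ((K0 + K1) * (256 * Real.exp (-w) ^ 2)) := by gcongr
    _ = (K0 + K1) * (1024 * δ * (Real.exp w * Real.exp (-w)) * Real.exp (-w)) := by ring
    _ = _ := by rw [← Real.exp_add, add_neg_cancel, Real.exp_zero, mul_one]

/-- `∑ tri (w - log l) / l` is the integral of `tri`, that is `1`, up to a tiny error. -/
lemma tri_sum0 {w δ : ℝ} (hδ : 0 < δ) (hδ1 : δ ≤ 1) (hw : 100 ≤ Real.exp w) (hδw : 1 ≤ δ * Real.exp w) {N : ℕ} (hN : Real.exp w ≤ N) :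
    |∑ l ∈ Finset.Icc 1 N, tri δ (w - Real.log l) / l - 1| ≤ 6000 * Real.exp (-w) / δ := by
  have hc := @tri_continuous δ
  have h := riemann_log (h := fun s => tri δ (w - s)) (K0 := 1 / δ) (K1 := 4 / δ ^ 2) hδ hδ1 hw hδw (by fun_prop)
    (by
      intro s hs
      rcases hs with hs | hs
      · exact tri_eq_zero_of_ge hδ (by linarith)
      · exact tri_eq_zero_of_le hδ (by linarith))
    (fun s => by rw [abs_of_nonneg (tri_nonneg hδ _)]; exact tri_le hδ _)
    (fun s s' => (tri_lip hδ _ _).trans (le_of_eq (by congr 1; rw [abs_sub_comm]; congr 1; ring))) hN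
  rw [integral_sub_left_eq_self (tri δ), tri_integral hδ] at h
  refine h.trans ?_
  have e := Real.exp_pos (-w)
  rw [le_div_iff₀ hδ]
  have : (1 / δ + 4 / δ ^ 2) * (1024 * δ * Real.exp (-w)) * δ = (δ + 4) * (1024 * Real.exp (-w)) := by field_simp
  rw [this]
  nlinarith

/-- The same with the weight `log l`. -/
lemma tri_sum1 {w δ : ℝ} (hδ : 0 < δ) (hδ1 : δ ≤ 1) (hw : 100 ≤ Real.exp w) (hw1 : 2 ≤ w) (hδw : 1 ≤ δ * Real.exp w) {N : ℕ} (hN : Real.exp w ≤ N) :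
    |∑ l ∈ Finset.Icc 1 N, Real.log l * tri δ (w - Real.log l) / l - (w - ∫ u, u * tri δ u)| ≤ 6200 * w * Real.exp (-w) / δ := by
  have hc := @tri_continuous δ
  have hz : ∀ s, s ≤ w - 2 * δ ∨ w ≤ s → s * tri δ (w - s) = 0 := by
    intro s hs
    rcases hs with hs | hs
    · rw [tri_eq_zero_of_ge hδ (by linarith), mul_zero]
    · rw [tri_eq_zero_of_le hδ (by linarith), mul_zero]
  have hlip : ∀ s s', s' ∈ Set.Icc 0 w → |s * tri δ (w - s) - s' * tri δ (w - s')| ≤ (1 / δ + 4 * w / δ ^ 2) * |s - s'| := by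
    intro s s' hs'
    have e : s * tri δ (w - s) - s' * tri δ (w - s') = (s - s') * tri δ (w - s) + s' * (tri δ (w - s) - tri δ (w - s')) := by ring
    rw [e]
    refine (abs_add_le _ _).trans ?_
    rw [abs_mul, abs_mul, abs_of_nonneg (tri_nonneg hδ _), abs_of_nonneg hs'.1]
    have h1 := tri_le hδ (w - s)
    have h2 := tri_lip hδ (w - s) (w - s')
    have h3 : |w - s - (w - s')| = |s - s'| := by rw [abs_sub_comm]; congr 1; ring
    rw [h3] at h2
    calc _ ≤ |s - s'| * (1 / δ) + w * (4 / δ ^ 2 * |s - s'|) := by gcongr; exact hs'.2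
      _ = _ := by ring
  have h := riemann_log (h := fun s => s * tri δ (w - s)) (K0 := w / δ) (K1 := 1 / δ + 4 * w / δ ^ 2) hδ hδ1 hw hδw (by fun_prop) hz
    (fun s => by
      by_cases hs : s ≤ w - 2 * δ ∨ w ≤ s
      · rw [hz s hs, abs_zero]; positivity
      · push Not at hs
        rw [abs_of_nonneg (mul_nonneg (by linarith) (tri_nonneg hδ _)), div_eq_mul_one_div]
        have := tri_le hδ (w - s)
        have := tri_nonneg hδ (w - s)
        gcongr
        exact hs.2.le)
    (fun s s' => by
      by_cases hs' : s' ≤ w - 2 * δ ∨ w ≤ s'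
      · by_cases hs : s ≤ w - 2 * δ ∨ w ≤ s
        · rw [hz s hs, hz s' hs', sub_zero, abs_zero]; positivity
        · push Not at hs
          rw [abs_sub_comm, abs_sub_comm s]
          exact hlip s' s ⟨by linarith, hs.2.le⟩
      · push Not at hs'
        exact hlip s s' ⟨by linarith, hs'.2.le⟩) hN
  have hcs : Integrable (fun u => u * tri δ u) := by
    refine Continuous.integrable_of_hasCompactSupport (by fun_prop) ((tri_hcs hδ).mul_left)
  have hI : ∫ s, s * tri δ (w - s) = w - ∫ u, u * tri δ u := by
    rw [← integral_sub_left_eq_self (fun s => s * tri δ (w - s)) volume w]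
    have : ∀ x, (w - x) * tri δ (w - (w - x)) = w * tri δ x - x * tri δ x := by intro x; rw [sub_sub_cancel]; ring
    simp_rw [this]
    rw [integral_sub ((tri_integrable hδ).const_mul w) hcs, integral_const_mul, tri_integral hδ, mul_one]
  rw [hI] at h
  refine h.trans ?_
  have e := Real.exp_pos (-w)
  rw [le_div_iff₀ hδ]
  have : (w / δ + (1 / δ + 4 * w / δ ^ 2)) * (1024 * δ * Real.exp (-w)) * δ = (w * δ + δ + 4 * w) * (1024 * Real.exp (-w)) := by field_simp; ring
  rw [this]
  have : w * δ + δ + 4 * w ≤ 6 * w := by nlinarith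
  nlinarith
end Wright

/-! ### Vaughan-type decomposition -/

namespace Wright
open MeasureTheory ArithmeticFunction

/-- Von Mangoldt function restricted to `n > V`. -/
noncomputable def lamV (V : ℝ) (n : ℕ) : ℝ := if V < n then vonMangoldt n else 0

/-- Von Mangoldt function restricted to `n ≤ V`. -/
noncomputable def lamS (V : ℝ) (n : ℕ) : ℝ := if V < n then 0 else vonMangoldt n

/-- The convolution `1 * Λ_{>V}`. -/
noncomputable def bV (V : ℝ) (l : ℕ) : ℝ := ∑ d ∈ l.divisors, lamV V d

lemma lamV_nonneg (V : ℝ) (n : ℕ) : 0 ≤ lamV V n := by unfold lamV; split_ifs <;> simp [vonMangoldt_nonneg]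
lemma lamS_nonneg (V : ℝ) (n : ℕ) : 0 ≤ lamS V n := by unfold lamS; split_ifs <;> simp [vonMangoldt_nonneg]
lemma lamV_add_lamS (V : ℝ) (n : ℕ) : lamV V n + lamS V n = vonMangoldt n := by unfold lamV lamS; split_ifs <;> simp

lemma bV_nonneg (V : ℝ) (l : ℕ) : 0 ≤ bV V l := Finset.sum_nonneg fun d _ => lamV_nonneg V d

lemma bV_eq (V : ℝ) (l : ℕ) : bV V l = Real.log l - ∑ d ∈ l.divisors, lamS V d := by
  rw [← vonMangoldt_sum, bV, eq_sub_iff_add_eq, ← Finset.sum_add_distrib]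
  exact Finset.sum_congr rfl fun d _ => lamV_add_lamS V d

lemma bV_le (V : ℝ) (l : ℕ) : bV V l ≤ Real.log l := by
  rw [bV_eq]
  have : 0 ≤ ∑ d ∈ l.divisors, lamS V d := Finset.sum_nonneg fun d _ => lamS_nonneg V d
  linarith

lemma bV_eq_zero {V : ℝ} {l : ℕ} (hl : (l : ℝ) ≤ V) : bV V l = 0 := by
  apply Finset.sum_eq_zero
  intro d hd
  rw [lamV, if_neg]
  rw [not_lt]
  refine le_trans ?_ hl
  exact_mod_cast Nat.divisor_le hd

/-- Möbius inversion: `μ * (1 * Λ_{>V}) = Λ_{>V}`. -/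
lemma mu_bV (V : ℝ) {n : ℕ} (hn : 0 < n) : ∑ x ∈ n.divisorsAntidiagonal, (moebius x.1 : ℝ) * bV V x.2 = lamV V n := by
  have := (sum_eq_iff_sum_mul_moebius_eq (R := ℝ) (f := lamV V) (g := bV V)).mp (fun n _ => rfl) n hn
  exact this

/-- Summation of a Dirichlet convolution against a weight supported on `n ≤ N`. -/
lemma dsum (f g φ : ℕ → ℝ) (N : ℕ) (hφ : ∀ n, N < n → φ n = 0) :
    ∑ n ∈ Finset.Icc 1 N, (∑ x ∈ n.divisorsAntidiagonal, f x.1 * g x.2) * φ n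
      = ∑ k ∈ Finset.Icc 1 N, ∑ l ∈ Finset.Icc 1 N, f k * g l * φ (k * l) := by
  rw [← Finset.sum_product']
  have h1 : ∑ p ∈ Finset.Icc 1 N ×ˢ Finset.Icc 1 N, f p.1 * g p.2 * φ (p.1 * p.2)
      = ∑ p ∈ (Finset.Icc 1 N ×ˢ Finset.Icc 1 N).filter (fun p => p.1 * p.2 ≤ N), f p.1 * g p.2 * φ (p.1 * p.2) := by
    rw [Finset.sum_filter]
    refine Finset.sum_congr rfl fun p _ => ?_
    split_ifs with h
    · rfl
    · rw [hφ _ (not_le.mp h), mul_zero]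
  rw [h1, ← Finset.sum_fiberwise_of_maps_to (g := fun p : ℕ × ℕ => p.1 * p.2) (t := Finset.Icc 1 N)]
  · refine Finset.sum_congr rfl fun n hn => ?_
    rw [Finset.mem_Icc] at hn
    rw [Finset.sum_mul]
    refine Finset.sum_congr ?_ ?_
    · ext ⟨k, l⟩
      simp only [Nat.mem_divisorsAntidiagonal, Finset.mem_filter, Finset.mem_product, Finset.mem_Icc]
      constructor
      · rintro ⟨rfl, h0⟩
        have hk : 0 < k := Nat.pos_of_ne_zero (left_ne_zero_of_mul h0)
        have hl : 0 < l := Nat.pos_of_ne_zero (right_ne_zero_of_mul h0)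
        have := Nat.le_mul_of_pos_right k hl
        have := Nat.le_mul_of_pos_left l hk
        refine ⟨⟨⟨⟨hk, by omega⟩, hl, by omega⟩, by omega⟩, rfl⟩
      · rintro ⟨⟨⟨⟨h1, _⟩, h2, _⟩, _⟩, rfl⟩
        exact ⟨rfl, by positivity⟩
    · intro p hp
      rw [Finset.mem_filter] at hp
      rw [hp.2]
  · intro p hp
    simp only [Finset.mem_filter, Finset.mem_product, Finset.mem_Icc] at hp
    simp only [Finset.mem_Icc]
    exact ⟨Nat.mul_pos hp.1.1.1 hp.1.2.1, hp.2⟩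

lemma tri_log_zero {δ u : ℝ} (hδ : 0 < δ) {N : ℕ} (hN : Real.exp u ≤ N) {n : ℕ} (hn : N < n) : tri δ (u - Real.log n) = 0 := by
  apply tri_eq_zero_of_le hδ
  have h1 : (N : ℝ) < n := by exact_mod_cast hn
  have h2 : u ≤ Real.log n := by
    rw [Real.le_log_iff_exp_le (by linarith [Real.exp_pos u])]; linarith
  linarith

/-- Inner sum of the Type I part. -/
lemma typeI_inner {δ w V : ℝ} (hδ : 0 < δ) (hδ1 : δ ≤ 1) (hV : 1 ≤ V) (hw : 100 * V ≤ Real.exp w) (hδw : V ≤ δ * Real.exp w)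
    (hw2 : 2 ≤ w) {N : ℕ} (hN : Real.exp w ≤ N) :
    |∑ l ∈ Finset.Icc 1 N, bV V l / l * tri δ (w - Real.log l) - (w - (∫ u, u * tri δ u) - ∑ d ∈ Finset.Icc 1 N, lamS V d / d)|
      ≤ 6200 * (w + ∑ d ∈ Finset.Icc 1 N, lamS V d) * Real.exp (-w) / δ := by
  have hew := Real.exp_pos w
  have h1 := tri_sum1 hδ hδ1 (by linarith) hw2 (by linarith) hN
  have e2 : ∑ l ∈ Finset.Icc 1 N, bV V l / l * tri δ (w - Real.log l) = ∑ l ∈ Finset.Icc 1 N, Real.log l * tri δ (w - Real.log l) / l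
      - ∑ l ∈ Finset.Icc 1 N, (∑ d ∈ l.divisors, lamS V d) * (tri δ (w - Real.log l) / l) := by
    rw [← Finset.sum_sub_distrib]
    refine Finset.sum_congr rfl fun l _ => ?_
    rw [bV_eq]; ring
  have e3 : ∑ l ∈ Finset.Icc 1 N, (∑ d ∈ l.divisors, lamS V d) * (tri δ (w - Real.log l) / l)
      = ∑ d ∈ Finset.Icc 1 N, lamS V d / d * ∑ m ∈ Finset.Icc 1 N, tri δ (w - Real.log d - Real.log m) / m := by
    have := dsum (lamS V) (fun _ => 1) (fun l => tri δ (w - Real.log l) / l) N (fun n hn => by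
      rw [tri_log_zero hδ hN hn, zero_div])
    have e4 : ∀ n : ℕ, ∑ x ∈ n.divisorsAntidiagonal, lamS V x.1 * (fun _ => (1 : ℝ)) x.2 = ∑ d ∈ n.divisors, lamS V d := by
      intro n
      simp only [mul_one]
      exact Nat.sum_divisorsAntidiagonal (fun d _ => lamS V d)
    simp_rw [e4] at this
    rw [this]
    refine Finset.sum_congr rfl fun d hd => ?_
    rw [Finset.mul_sum]
    refine Finset.sum_congr rfl fun m hm => ?_
    rw [Finset.mem_Icc] at hd hm
    have hd0 : (d : ℝ) ≠ 0 := by exact_mod_cast (by omega : d ≠ 0)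
    have hm0 : (m : ℝ) ≠ 0 := by exact_mod_cast (by omega : m ≠ 0)
    push_cast
    rw [Real.log_mul hd0 hm0, ← sub_sub]
    field_simp
  have h5 : ∀ d ∈ Finset.Icc 1 N, |lamS V d / d * (∑ m ∈ Finset.Icc 1 N, tri δ (w - Real.log d - Real.log m) / m - 1)| ≤ lamS V d * (6000 * Real.exp (-w) / δ) := by
    intro d hd
    rw [Finset.mem_Icc] at hd
    have hd0 : (0 : ℝ) < d := by exact_mod_cast hd.1
    by_cases hdV : V < d
    · rw [lamS, if_pos hdV]; simp
    · rw [not_lt] at hdV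
      have he : Real.exp (w - Real.log d) = Real.exp w / d := by rw [Real.exp_sub, Real.exp_log hd0]
      have h6 := tri_sum0 (w := w - Real.log d) (N := N) hδ hδ1 (by rw [he, le_div_iff₀ hd0]; nlinarith)
        (by rw [he, mul_div_assoc', le_div_iff₀ hd0]; linarith) (by
          refine le_trans ?_ hN
          have := Real.log_nonneg (by exact_mod_cast hd.1 : (1 : ℝ) ≤ d)
          exact Real.exp_le_exp.mpr (by linarith))
      have he2 : Real.exp (-(w - Real.log d)) = Real.exp (-w) * d := by rw [neg_sub, sub_eq_add_neg, Real.exp_add, Real.exp_log hd0, mul_comm]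
      rw [he2] at h6
      have hl := lamS_nonneg V d
      rw [abs_mul, abs_of_nonneg (by positivity)]
      calc _ ≤ lamS V d / d * (6000 * (Real.exp (-w) * d) / δ) := by gcongr
        _ = _ := by field_simp
  have e6 : ∑ l ∈ Finset.Icc 1 N, bV V l / l * tri δ (w - Real.log l) - (w - (∫ u, u * tri δ u) - ∑ d ∈ Finset.Icc 1 N, lamS V d / d)
      = (∑ l ∈ Finset.Icc 1 N, Real.log l * tri δ (w - Real.log l) / l - (w - ∫ u, u * tri δ u))
        - ∑ d ∈ Finset.Icc 1 N, lamS V d / d * (∑ m ∈ Finset.Icc 1 N, tri δ (w - Real.log d - Real.log m) / m - 1) := by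
    rw [e2, e3]
    simp_rw [mul_sub, Finset.sum_sub_distrib, mul_one]
    ring
  rw [e6]
  refine (abs_sub _ _).trans ?_
  have h7 := (Finset.abs_sum_le_sum_abs (fun d => lamS V d / d * (∑ m ∈ Finset.Icc 1 N, tri δ (w - Real.log d - Real.log m) / m - 1)) (Finset.Icc 1 N)).trans (Finset.sum_le_sum h5)
  rw [← Finset.sum_mul] at h7
  have h8 : 0 ≤ ∑ d ∈ Finset.Icc 1 N, lamS V d := Finset.sum_nonneg fun d _ => lamS_nonneg V d
  have h9 : (∑ d ∈ Finset.Icc 1 N, lamS V d) * (6000 * Real.exp (-w) / δ) ≤ (∑ d ∈ Finset.Icc 1 N, lamS V d) * (6200 * Real.exp (-w) / δ) := by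
    gcongr; norm_num
  calc _ ≤ 6200 * w * Real.exp (-w) / δ + (∑ d ∈ Finset.Icc 1 N, lamS V d) * (6200 * Real.exp (-w) / δ) := by linarith
    _ = _ := by ring
end Wright

namespace Wright
open MeasureTheory ArithmeticFunction

lemma lamS_sum_le {V : ℝ} (hV : 0 ≤ V) (N : ℕ) : ∑ d ∈ Finset.Icc 1 N, lamS V d ≤ 6 * V := by
  have h1 : ∑ d ∈ Finset.Icc 1 N, lamS V d ≤ Chebyshev.psi V := by
    unfold Chebyshev.psi
    have : ∀ d ∈ Finset.Icc 1 N, lamS V d = if d ∈ Finset.Ioc 0 ⌊V⌋₊ then vonMangoldt d else 0 := by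
      intro d hd
      rw [Finset.mem_Icc] at hd
      have : d ∈ Finset.Ioc 0 ⌊V⌋₊ ↔ ¬ V < d := by
        rw [Finset.mem_Ioc, Nat.le_floor_iff hV, not_lt]; exact ⟨fun h => h.2, fun h => ⟨hd.1, h⟩⟩
      rw [lamS]; simp only [this]
      split_ifs <;> rfl
    rw [Finset.sum_congr rfl this, ← Finset.sum_filter]
    refine Finset.sum_le_sum_of_subset_of_nonneg ?_ (fun _ _ _ => vonMangoldt_nonneg)
    intro d hd
    exact (Finset.mem_filter.mp hd).2
  have h2 := Chebyshev.psi_le_const_mul_self hV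
  have h3 : Real.log 4 ≤ 2 := by
    have : Real.log 4 = 2 * Real.log 2 := by
      rw [show (4 : ℝ) = 2 ^ 2 by norm_num, Real.log_pow]; norm_num
    linarith [Real.log_two_lt_d9]
  nlinarith

/-- The smoothed density of `Λ(n)/n`, `n > V`, near `log n = u`. -/
noncomputable def Dsum (V δ : ℝ) (N : ℕ) (u : ℝ) : ℝ := ∑ n ∈ Finset.Icc 1 N, lamV V n / n * tri δ (u - Real.log n)

/-- Coefficients `μ(k) W(log k) / k` of the bilinear part. -/
noncomputable def alp (a q : ℝ) (k : ℕ) : ℝ := (moebius k : ℝ) / k * trap a a q (Real.log k)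

/-- Bilinear part of `Dsum`, a convolution of `alp` with `(1 * Λ_{>V})(l) / l`. -/
noncomputable def Fsum (V δ a q : ℝ) (N : ℕ) (u : ℝ) : ℝ := ∑ p ∈ Finset.Icc 1 N ×ˢ Finset.Icc 1 N,
  (alp a q p.1 * (bV V p.2 / p.2)) * tri δ (u - (Real.log p.1 + Real.log p.2))

lemma Dsum_eq {V δ u : ℝ} {N : ℕ} (hδ : 0 < δ) (hN : Real.exp u ≤ N) :
    Dsum V δ N u = ∑ k ∈ Finset.Icc 1 N, (moebius k : ℝ) / k * ∑ l ∈ Finset.Icc 1 N, bV V l / l * tri δ (u - Real.log k - Real.log l) := by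
  have := dsum (fun k => (moebius k : ℝ)) (bV V) (fun n => tri δ (u - Real.log n) / n) N (fun n hn => by
      rw [tri_log_zero hδ hN hn, zero_div])
  have e : Dsum V δ N u = ∑ n ∈ Finset.Icc 1 N, (∑ x ∈ n.divisorsAntidiagonal, (moebius x.1 : ℝ) * bV V x.2) * (tri δ (u - Real.log n) / n) := by
    unfold Dsum
    refine Finset.sum_congr rfl fun n hn => ?_
    rw [mu_bV V (Finset.mem_Icc.mp hn).1]; ring
  rw [e, this]
  refine Finset.sum_congr rfl fun k hk => ?_
  rw [Finset.mul_sum]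
  refine Finset.sum_congr rfl fun m hm => ?_
  rw [Finset.mem_Icc] at hk hm
  have hd0 : (k : ℝ) ≠ 0 := by exact_mod_cast (by omega : k ≠ 0)
  have hm0 : (m : ℝ) ≠ 0 := by exact_mod_cast (by omega : m ≠ 0)
  push_cast
  rw [Real.log_mul hd0 hm0, ← sub_sub]
  field_simp

lemma Fsum_eq {V δ a q u : ℝ} {N : ℕ} :
    Fsum V δ a q N u = ∑ k ∈ Finset.Icc 1 N, alp a q k * ∑ l ∈ Finset.Icc 1 N, bV V l / l * tri δ (u - Real.log k - Real.log l) := by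
  unfold Fsum
  rw [Finset.sum_product]
  refine Finset.sum_congr rfl fun k hk => ?_
  rw [Finset.mul_sum]
  refine Finset.sum_congr rfl fun m hm => ?_
  rw [sub_sub]; ring

/-- In `Λ_{>V} = μ * (1 * Λ_{>V})` the factors `k ≤ e^{2a}` of `μ`, weighted by one minus the trapezoid,
give a Type I sum, which is linear in `u` up to a small error; the weighted rest is `Fsum`. Factors
`k > e^q` do not occur because `u ≤ q`. -/
lemma decomp {V δ a q : ℝ} (N : ℕ) (hδ : 0 < δ) (hδ1 : δ ≤ 1) (hV : 1 ≤ V) (ha : 0 < a) (haq : 2 * a ≤ q) :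
    ∃ c0 c1 : ℝ, ∀ u, u ≤ q → Real.exp u ≤ N → 100 * V ≤ Real.exp (u - 2 * a) → V ≤ δ * Real.exp (u - 2 * a) → 2 ≤ u - 2 * a →
      |Dsum V δ N u - (c0 + c1 * u) - Fsum V δ a q N u| ≤ Real.exp (2 * a) * (6200 * (u + 6 * V) * Real.exp (-u) / δ) := by
  set g : ℕ → ℝ := fun k => (moebius k : ℝ) / k * (1 - trap a a q (Real.log k)) with hg
  set R := (Finset.Icc 1 N).filter (fun k : ℕ => Real.log k < 2 * a) with hR
  set m1 := ∫ u, u * tri δ u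
  set L := ∑ d ∈ Finset.Icc 1 N, lamS V d / d
  refine ⟨∑ k ∈ R, g k * (- Real.log k - m1 - L), ∑ k ∈ R, g k, fun u huq huN h100 hVd hu2 => ?_⟩
  set inn : ℕ → ℝ := fun k => ∑ l ∈ Finset.Icc 1 N, bV V l / l * tri δ (u - Real.log k - Real.log l) with hinn
  have e1 : Dsum V δ N u - Fsum V δ a q N u = ∑ k ∈ R, g k * inn k := by
    rw [Dsum_eq hδ huN, Fsum_eq, ← Finset.sum_sub_distrib, hR, Finset.sum_filter]
    refine Finset.sum_congr rfl fun k hk => ?_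
    rw [Finset.mem_Icc] at hk
    split_ifs with h
    · simp only [hg, hinn, alp]; ring
    · rw [not_lt] at h
      by_cases hkq : Real.log k ≤ q
      · rw [alp, trap_eq_one ha (by linarith) hkq]; ring
      · rw [not_le] at hkq
        have : inn k = 0 := by
          apply Finset.sum_eq_zero
          intro l hl
          rw [Finset.mem_Icc] at hl
          have := Real.log_nonneg (by exact_mod_cast hl.1 : (1 : ℝ) ≤ l)
          rw [tri_eq_zero_of_le hδ (by linarith), mul_zero]
        simp only [hinn] at this
        rw [this]; ring
  have e2 : Dsum V δ N u - (∑ k ∈ R, g k * (- Real.log k - m1 - L) + (∑ k ∈ R, g k) * u) - Fsum V δ a q N u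
      = ∑ k ∈ R, g k * (inn k - (u - Real.log k - m1 - L)) := by
    have : ∑ k ∈ R, g k * (inn k - (u - Real.log k - m1 - L)) = ∑ k ∈ R, g k * inn k - ∑ k ∈ R, g k * (- Real.log k - m1 - L) - (∑ k ∈ R, g k) * u := by
      rw [Finset.sum_mul, ← Finset.sum_sub_distrib, ← Finset.sum_sub_distrib]
      refine Finset.sum_congr rfl fun k hk => ?_
      ring
    rw [this, ← e1]; ring
  rw [e2]
  refine (Finset.abs_sum_le_sum_abs _ _).trans ?_
  have h3 : ∀ k ∈ R, |g k * (inn k - (u - Real.log k - m1 - L))| ≤ 6200 * (u + 6 * V) * Real.exp (-u) / δ := by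
    intro k hk
    rw [hR, Finset.mem_filter, Finset.mem_Icc] at hk
    have hk0 : (0 : ℝ) < k := by exact_mod_cast hk.1.1
    have hk1 : (1 : ℝ) ≤ k := by exact_mod_cast hk.1.1
    have hlk := Real.log_nonneg hk1
    have hle : Real.exp (u - 2 * a) ≤ Real.exp (u - Real.log k) := Real.exp_le_exp.mpr (by linarith)
    have h4 := typeI_inner (w := u - Real.log k) (N := N) hδ hδ1 hV (by linarith) (hVd.trans (by gcongr)) (by linarith)
      (le_trans (Real.exp_le_exp.mpr (by linarith)) huN)
    have h5 := lamS_sum_le (V := V) (by linarith) N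
    have he2 : Real.exp (-(u - Real.log k)) = Real.exp (-u) * k := by rw [neg_sub, sub_eq_add_neg, Real.exp_add, Real.exp_log hk0, mul_comm]
    rw [he2] at h4
    have h8 : 0 ≤ ∑ d ∈ Finset.Icc 1 N, lamS V d := Finset.sum_nonneg fun d _ => lamS_nonneg V d
    have h6 : |g k| ≤ 1 / k := by
      have t1 := trap_nonneg (p := a) ha (by linarith : a + a ≤ q) (Real.log k)
      have t2 := trap_le_one (p := a) (q := q) ha (by linarith) (Real.log k)
      have t3 : |(moebius k : ℝ)| ≤ 1 := by exact_mod_cast abs_moebius_le_one (n := k)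
      simp only [hg]
      rw [abs_mul, abs_div, abs_of_pos hk0, abs_of_nonneg (by linarith : 0 ≤ 1 - trap a a q (Real.log k))]
      calc _ ≤ 1 / (k : ℝ) * 1 := by gcongr; linarith
        _ = _ := mul_one _
    rw [abs_mul]
    calc _ ≤ 1 / (k : ℝ) * (6200 * (u + 6 * V) * (Real.exp (-u) * k) / δ) := by
          refine mul_le_mul h6 (h4.trans ?_) (abs_nonneg _) (by positivity)
          gcongr; linarith
      _ = _ := by field_simp
  refine (Finset.sum_le_card_nsmul _ _ _ h3).trans ?_
  rw [nsmul_eq_mul]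
  have h7 : (R.card : ℝ) ≤ Real.exp (2 * a) := by
    have : R ⊆ Finset.Icc 1 ⌊Real.exp (2 * a)⌋₊ := by
      intro k hk
      rw [hR, Finset.mem_filter, Finset.mem_Icc] at hk
      rw [Finset.mem_Icc]
      refine ⟨hk.1.1, Nat.le_floor ?_⟩
      have hk0 : (0 : ℝ) < k := by exact_mod_cast hk.1.1
      rw [← Real.log_le_iff_le_exp hk0]; exact hk.2.le
    have := Finset.card_le_card this
    rw [Nat.card_Icc] at this
    have h9 := Nat.floor_le (Real.exp_pos (2 * a)).le
    have : (R.card : ℝ) ≤ ⌊Real.exp (2 * a)⌋₊ := by exact_mod_cast (by omega)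
    linarith
  have : 0 ≤ u := by linarith
  gcongr
end Wright

namespace Wright
open MeasureTheory ArithmeticFunction Complex

/-- The exponential sum of the coefficients `alp` is the smoothed Möbius sum of `mu_smooth_bound`. -/
lemma alp_fourier {a q : ℝ} (ha : 0 < a) (haq : a + a ≤ q) {N : ℕ} (hN : Real.exp (q + a) ≤ N) (ξ : ℝ) :
    ∑ k ∈ Finset.Icc 1 N, (alp a q k : ℂ) * cexp ((-2 * Real.pi * ξ : ℝ) * Real.log k * I)
      = ∑' n : ℕ, LSeries.term (fun n => (moebius n : ℂ)) (1 + (2 * Real.pi * ξ : ℝ) * I) n * (trap a a q (Real.log n) : ℂ) := by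
  symm
  rw [tsum_eq_sum (s := Finset.Icc 1 N)]
  · refine Finset.sum_congr rfl fun k hk => ?_
    rw [Finset.mem_Icc] at hk
    have hk0 : (k : ℂ) ≠ 0 := by exact_mod_cast (by omega : k ≠ 0)
    rw [LSeries.term_of_ne_zero (by omega), alp, Complex.cpow_add _ _ hk0, Complex.cpow_one, Complex.cpow_def_of_ne_zero hk0,
      ← Complex.natCast_log]
    have : cexp ((-2 * Real.pi * ξ : ℝ) * Real.log k * I) = (cexp (Real.log k * ((2 * Real.pi * ξ : ℝ) * I)))⁻¹ := by
      rw [← Complex.exp_neg]; congr 1; push_cast; ring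
    rw [this]
    push_cast
    field_simp
  · intro n hn
    rcases Nat.eq_zero_or_pos n with rfl | h0
    · simp
    · have : N < n := by
        rw [Finset.mem_Icc] at hn; omega
      have h1 : (N : ℝ) < n := by exact_mod_cast this
      rw [trap_eq_zero_of_ge ha haq, Complex.ofReal_zero, mul_zero]
      rw [Real.le_log_iff_exp_le (by linarith [Real.exp_pos (q + a)])]; linarith

lemma alp_abs_le {a q : ℝ} (ha : 0 < a) (haq : a + a ≤ q) (k : ℕ) : |alp a q k| ≤ (k : ℝ)⁻¹ := by
  have t1 := trap_nonneg ha haq (Real.log k)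
  have t2 := trap_le_one ha haq (Real.log k)
  have t3 : |(moebius k : ℝ)| ≤ 1 := by exact_mod_cast abs_moebius_le_one (n := k)
  rw [alp, abs_mul, abs_div, abs_of_nonneg t1, Nat.abs_cast, div_eq_mul_inv]
  calc _ ≤ 1 * (k : ℝ)⁻¹ * 1 := by gcongr
    _ = _ := by ring

lemma sum_inv_le (N : ℕ) : ∑ k ∈ Finset.Icc 1 N, (k : ℝ)⁻¹ ≤ 1 + Real.log N := by
  have := harmonic_le_one_add_log N
  rw [harmonic_eq_sum_Icc] at this
  push_cast at this
  exact this

lemma bV_div_le {V : ℝ} {N l : ℕ} (hl : l ∈ Finset.Icc 1 N) : bV V l / l ≤ Real.log N * (l : ℝ)⁻¹ := by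
  rw [Finset.mem_Icc] at hl
  rw [div_eq_mul_inv]
  have : Real.log l ≤ Real.log N := Real.log_le_log (by exact_mod_cast hl.1) (by exact_mod_cast hl.2)
  have := bV_le V l
  gcongr
  linarith

/-- The pointwise bound `S` required by `l2_bound`, from `bV ≤ log`. -/
lemma bV_tri_le {V δ : ℝ} (N : ℕ) (hN1 : 1 ≤ N) (hδ : 0 < δ) (hδ1 : δ ≤ 1) (hV : 100 ≤ V) (hVδ : 1 ≤ δ * V) (u : ℝ) :
    ∑ l ∈ Finset.Icc 1 N, bV V l / l * tri δ (u - Real.log l) ≤ 6001 * Real.log N := by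
  have hlN : 0 ≤ Real.log N := Real.log_natCast_nonneg N
  by_cases hu : u ≤ Real.log V
  · rw [Finset.sum_eq_zero]
    · positivity
    · intro l hl
      rw [Finset.mem_Icc] at hl
      by_cases hlV : (l : ℝ) ≤ V
      · rw [bV_eq_zero hlV]; simp
      · rw [not_le] at hlV
        have := Real.log_lt_log (by linarith) hlV
        rw [tri_eq_zero_of_le hδ (by linarith), mul_zero]
  · rw [not_le] at hu
    have heu : V ≤ Real.exp u := by
      rw [← Real.log_le_iff_le_exp (by linarith)]; exact hu.le
    set N' := max N ⌈Real.exp u⌉₊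
    have hN' : Real.exp u ≤ N' := (Nat.le_ceil _).trans (by exact_mod_cast le_max_right _ _)
    have hde : 1 ≤ δ * Real.exp u := hVδ.trans (by gcongr)
    have h1 := tri_sum0 hδ hδ1 (by linarith) hde hN'
    have h2 : 6000 * Real.exp (-u) / δ ≤ 6000 := by
      rw [Real.exp_neg, div_le_iff₀ hδ, ← div_eq_mul_inv, div_le_iff₀ (Real.exp_pos u)]; nlinarith
    have h3 := (abs_le.mp h1).2
    calc _ ≤ ∑ l ∈ Finset.Icc 1 N, Real.log N * (tri δ (u - Real.log l) / l) := by
          refine Finset.sum_le_sum fun l hl => ?_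
          have := bV_div_le (V := V) hl
          have t := tri_nonneg hδ (u - Real.log l)
          calc _ ≤ Real.log N * (l : ℝ)⁻¹ * tri δ (u - Real.log l) := by gcongr
            _ = _ := by ring
      _ ≤ ∑ l ∈ Finset.Icc 1 N', Real.log N * (tri δ (u - Real.log l) / l) := by
          refine Finset.sum_le_sum_of_subset_of_nonneg (Finset.Icc_subset_Icc le_rfl (le_max_left _ _)) fun l _ _ => ?_
          have t := tri_nonneg hδ (u - Real.log l)
          positivity
      _ ≤ Real.log N * 6001 := by
          rw [← Finset.mul_sum]; gcongr; linarith
      _ = _ := mul_comm _ _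

/-- The bilinear part is small in mean square: `mu_smooth_bound` gives the saving up to height
`≍ exp (v ^ 20)`, beyond which the Fourier transform of `tri δ` is negligible. -/
lemma Fsum_l2 : ∃ v0 : ℝ, 2 ≤ v0 ∧ ∀ v ≥ v0, ∀ δ, Real.exp (-(v ^ 20 / 3)) ≤ δ → δ ≤ 1 →
    ∫ u, Fsum (Real.exp (35 / 100 * v ^ 20)) δ (v ^ 20 / 100) (v ^ 20) ⌈Real.exp (2 * v ^ 20)⌉₊ u ^ 2 ≤ Real.exp (-(v / 4000)) := by
  obtain ⟨V1, hV1, hmu⟩ := mu_smooth_bound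
  obtain ⟨V2, hV2, hpe⟩ := poly_exp_small (10 ^ 12) 120 (β := 1 / 4000) (by norm_num)
  refine ⟨max V1 V2, by simp [hV1], fun v hv δ hδ0 hδ1 => ?_⟩
  have hv1 : V1 ≤ v := (le_max_left _ _).trans hv
  have hv2 : V2 ≤ v := (le_max_right _ _).trans hv
  have hvtwo : 2 ≤ v := hV1.trans hv1
  have hH20 : (2 : ℝ) ^ 20 ≤ v ^ 20 := by gcongr
  set H := v ^ 20 with hH
  have hH1 : 1000000 ≤ H := by norm_num at hH20; linarith
  have hvH : v ≤ H := by
    rw [hH]; exact le_self_pow₀ (by linarith) (by norm_num)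
  set V := Real.exp (35 / 100 * H) with hV
  set N := ⌈Real.exp (2 * H)⌉₊ with hN
  have hδ : 0 < δ := (Real.exp_pos _).trans_le hδ0
  have hNe : Real.exp (2 * H) ≤ N := Nat.le_ceil _
  have hN1 : 1 ≤ N := Nat.one_le_cast.mp ((Real.one_le_exp (by linarith)).trans hNe)
  have hNu : Real.log N ≤ 3 * H := by
    rw [Real.log_le_iff_le_exp (by exact_mod_cast hN1)]
    have h1 := (Nat.ceil_lt_add_one (Real.exp_pos (2 * H)).le).le
    have h2 : Real.exp (3 * H) = Real.exp (2 * H) * Real.exp H := by rw [← Real.exp_add]; ring_nf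
    have h3 := Real.add_one_le_exp H
    have h4 := Real.one_le_exp (show 0 ≤ 2 * H by linarith)
    rw [← hN] at h1
    nlinarith
  have hln : 0 ≤ Real.log N := Real.log_natCast_nonneg N
  have ha : 0 < H / 100 := by linarith
  have key := l2_bound (Finset.Icc 1 N) (Finset.Icc 1 N) (alp (H / 100) H) (fun k => Real.log k) (fun l => bV V l / l) (fun k => Real.log k)
    (δ := δ) (T := Real.exp H / 64) (η := Real.exp (-(v / 4000))) (S := 6001 * Real.log N) (A0 := 1 + Real.log N) (B0 := Real.log N * (1 + Real.log N))
    (fun j _ => div_nonneg (bV_nonneg V j) (Nat.cast_nonneg j)) hδ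
    (by have := Real.add_one_le_exp H; linarith)
    (by
      intro ξ hξ
      have h1 := alp_fourier (q := H) ha (by linarith) (N := N) (le_trans (Real.exp_le_exp.mpr (by linarith)) hNe) ξ
      rw [h1]
      refine hmu v hv1 (2 * Real.pi * ξ) ?_
      rw [abs_mul, abs_of_pos (by positivity)]
      have := Real.pi_lt_d2
      have := Real.pi_pos
      have := abs_nonneg ξ
      nlinarith)
    ((Finset.sum_le_sum fun k _ => alp_abs_le ha (by linarith) k).trans (sum_inv_le N))
    ((Finset.sum_le_sum fun k hk => bV_div_le hk).trans (by rw [← Finset.mul_sum]; have := sum_inv_le N; gcongr))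
    (fun u => bV_tri_le N hN1 hδ hδ1 (by
        have := Real.add_one_le_exp (35 / 100 * H); rw [← hV] at this; linarith) (by
        calc (1 : ℝ) = Real.exp (-(H / 3)) * Real.exp (H / 3) := by rw [← Real.exp_add]; simp
          _ ≤ δ * V := by rw [hV]; gcongr; linarith) u)
  refine (show _ ≤ _ from key).trans ?_
  have hη2 : Real.exp (-(v / 4000)) ^ 2 = Real.exp (-(2 * (1 / 4000) * v)) := by
    rw [← Real.exp_nat_mul]; congr 1; push_cast; ring
  have hp := hpe v hv2
  have hb : (1 / 4000 : ℝ) * v = v / 4000 := by ring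
  rw [hb] at hp
  have hv120 : v ^ 120 = H ^ 6 := by rw [hH]; ring
  rw [hv120] at hp
  rw [hη2]
  refine le_trans ?_ hp
  have hL4 : 1 + Real.log N ≤ 4 * H := by linarith
  have t1 : 6001 * Real.log N * (Real.log N * (1 + Real.log N)) ≤ 300000 * H ^ 6 := by
    calc _ ≤ 6001 * (3 * H) * (3 * H * (4 * H)) := by gcongr
      _ = 216036 * (H ^ 3 * 1) := by ring
      _ ≤ 300000 * (H ^ 3 * H ^ 3) := by
          gcongr
          · norm_num
          · exact one_le_pow₀ (by linarith)
      _ = _ := by ring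
  have t2 : ((1 + Real.log N) * (Real.log N * (1 + Real.log N))) ^ 2 ≤ 2304 * H ^ 6 := by
    calc _ ≤ (4 * H * (3 * H * (4 * H))) ^ 2 := by gcongr
      _ = _ := by ring
  have t3 : 4 / (δ ^ 4 * (Real.exp H / 64) ^ 3) ≤ 1048576 * Real.exp (-(2 * (1 / 4000) * v)) := by
    have h1 : Real.exp (-(H / 3)) ^ 4 ≤ δ ^ 4 := by gcongr
    have h2 : Real.exp (-(H / 3)) ^ 4 * (Real.exp H / 64) ^ 3 = Real.exp (5 / 3 * H) / 262144 := by
      rw [div_pow, ← Real.exp_nat_mul, ← Real.exp_nat_mul, mul_div_assoc', ← Real.exp_add]; norm_num; ring_nf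
    calc _ ≤ 4 / (Real.exp (-(H / 3)) ^ 4 * (Real.exp H / 64) ^ 3) := by gcongr
      _ = 1048576 * Real.exp (-(5 / 3 * H)) := by rw [h2, Real.exp_neg]; field_simp; norm_num
      _ ≤ _ := by gcongr; linarith
  calc _ ≤ Real.exp (-(2 * (1 / 4000) * v)) * (300000 * H ^ 6) + (2304 * H ^ 6) * (1048576 * Real.exp (-(2 * (1 / 4000) * v))) := by gcongr
    _ ≤ _ := by
      have : 0 ≤ H ^ 6 * Real.exp (-(2 * (1 / 4000) * v)) := by positivity
      nlinarith
end Wright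

/-! ### Lower bound for the main term -/

namespace Wright
open MeasureTheory ArithmeticFunction

/-- Chebyshev's lower bound for `θ`. -/
lemma theta_lower {U : ℝ} (hU : 4000 ≤ U) : 3 / 5 * Real.exp U ≤ Chebyshev.theta (Real.exp U) := by
  have hx1 : 1 ≤ Real.exp U := Real.one_le_exp (by linarith)
  have h1 := Chebyshev.psi_ge' (Real.exp_pos U).le
  have h2 := Chebyshev.psi_sub_theta_le hx1
  rw [Real.log_exp, ← Real.exp_half] at h2
  set y := Real.exp (U / 4) with hy
  have hy1 : U / 4 + 1 ≤ y := Real.add_one_le_exp _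
  have ey2 : Real.exp (U / 2) = y ^ 2 := by rw [hy, ← Real.exp_nat_mul]; congr 1; push_cast; ring
  have ey4 : Real.exp U = y ^ 4 := by rw [hy, ← Real.exp_nat_mul]; congr 1; push_cast; ring
  have h3 : Real.log (Real.exp U + 2) ≤ U + 2 := by
    rw [Real.log_le_iff_le_exp (by positivity), Real.exp_add]
    have := Real.add_one_le_exp (2 : ℝ)
    nlinarith
  have h4 := Real.log_two_gt_d9
  rw [ey2] at h2
  rw [ey4] at h1 h2 h3 ⊢
  have hy3 : 1000 ≤ y := by linarith
  have h5 : (y ^ 4 - 1) * 0.69 ≤ (y ^ 4 - 1) * Real.log 2 := by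
    have : 1 ≤ y ^ 4 := one_le_pow₀ (by linarith)
    nlinarith
  have h6 : 2 * y ^ 2 * U ≤ 8 * y ^ 3 := by
    calc 2 * y ^ 2 * U ≤ 2 * y ^ 2 * (4 * y) := by gcongr; linarith
      _ = _ := by ring
  have h7 : y ^ 3 * 1000 ≤ y ^ 4 := by
    calc y ^ 3 * 1000 ≤ y ^ 3 * y := by gcongr
      _ = _ := by ring
  have h8 : y * 1000 ^ 2 ≤ y ^ 3 := by
    calc y * 1000 ^ 2 ≤ y * y ^ 2 := by gcongr
      _ = _ := by ring
  linarith

lemma exp_two_ge : 7.38 ≤ Real.exp 2 := by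
  have : Real.exp 2 = Real.exp 1 ^ 2 := by rw [← Real.exp_nat_mul]; norm_num
  rw [this]
  have := Real.exp_one_gt_d9
  nlinarith

lemma exp_two_le : Real.exp 2 ≤ 7.4 := by
  have : Real.exp 2 = Real.exp 1 ^ 2 := by rw [← Real.exp_nat_mul]; norm_num
  rw [this]
  have := Real.exp_one_lt_d9
  have := Real.exp_pos 1
  nlinarith

/-- Chebyshev's bounds make `∑ log p / p` over the primes of `(e^U, e^{U+2}]` bounded below. -/
lemma cheb_window {U : ℝ} (hU : 4000 ≤ U) :
    2 / 5 ≤ ∑ p ∈ (Finset.Ioc ⌊Real.exp U⌋₊ ⌊Real.exp (U + 2)⌋₊).filter Nat.Prime, Real.log p / p := by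
  have h1 := theta_lower (U := U + 2) (by linarith)
  have h2 := Chebyshev.theta_le_log4_mul_x (Real.exp_pos U).le
  have h4 : Real.log 4 ≤ 1.3864 := by
    have : Real.log 4 = 2 * Real.log 2 := by
      rw [show (4 : ℝ) = 2 ^ 2 by norm_num, Real.log_pow]; norm_num
    linarith [Real.log_two_lt_d9]
  have hle : ⌊Real.exp U⌋₊ ≤ ⌊Real.exp (U + 2)⌋₊ := Nat.floor_mono (Real.exp_le_exp.mpr (by linarith))
  have h3 : Chebyshev.theta (Real.exp (U + 2)) - Chebyshev.theta (Real.exp U)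
      = ∑ p ∈ (Finset.Ioc ⌊Real.exp U⌋₊ ⌊Real.exp (U + 2)⌋₊).filter Nat.Prime, Real.log p := by
    unfold Chebyshev.theta
    rw [Finset.sum_filter, Finset.sum_filter, Finset.sum_filter, sub_eq_iff_eq_add', Finset.sum_Ioc_consecutive _ (Nat.zero_le _) hle]
  have h5 : (Chebyshev.theta (Real.exp (U + 2)) - Chebyshev.theta (Real.exp U)) / Real.exp (U + 2)
      ≤ ∑ p ∈ (Finset.Ioc ⌊Real.exp U⌋₊ ⌊Real.exp (U + 2)⌋₊).filter Nat.Prime, Real.log p / p := by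
    rw [h3, Finset.sum_div]
    refine Finset.sum_le_sum fun p hp => ?_
    rw [Finset.mem_filter, Finset.mem_Ioc] at hp
    have : (p : ℝ) ≤ Real.exp (U + 2) := (Nat.le_floor_iff (Real.exp_pos _).le).mp hp.1.2
    have hp0 : (0 : ℝ) < p := by exact_mod_cast hp.2.pos
    have := Real.log_natCast_nonneg p
    gcongr
  refine le_trans ?_ h5
  rw [le_div_iff₀ (Real.exp_pos _)]
  rw [Real.exp_add] at *
  have := exp_two_ge
  have := Real.exp_pos U
  nlinarith

/-- Smoothed density of `log p / p` near `log p = u`. -/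
noncomputable def Psum (δ : ℝ) (N : ℕ) (u : ℝ) : ℝ := ∑ p ∈ (Finset.Icc 1 N).filter Nat.Prime, Real.log p / p * tri δ (u - Real.log p)

/-- Proper prime powers contribute a negligible amount. -/
lemma Dsum_le_Psum {V δ u : ℝ} {N : ℕ} (hδ : 0 < δ) (hδ1 : δ ≤ 1) (hu : 0 ≤ u) :
    Dsum V δ N u ≤ Psum δ N u + 2 * u * Real.exp (2 - u / 2) / δ := by
  have h1 := Chebyshev.psi_sub_theta_le (Real.one_le_exp hu)
  rw [Real.log_exp, ← Real.exp_half, Chebyshev.psi_sub_theta_eq_sum_not_prime] at h1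
  have h2 : ∀ n ∈ Finset.Icc 1 N, lamV V n / n * tri δ (u - Real.log n) ≤ (if n.Prime then Real.log n / n * tri δ (u - Real.log n) else 0)
      + (if n ∈ (Finset.Ioc 0 ⌊Real.exp u⌋₊).filter (fun n => ¬ n.Prime) then vonMangoldt n * (Real.exp (2 - u) / δ) else 0) := by
    intro n hn
    rw [Finset.mem_Icc] at hn
    have hn0 : (0 : ℝ) < n := by exact_mod_cast hn.1
    have ht := tri_nonneg hδ (u - Real.log n)
    have hl : lamV V n ≤ vonMangoldt n := by have := lamV_add_lamS V n; have := lamS_nonneg V n; linarith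
    have hv := vonMangoldt_nonneg (n := n)
    have h2 : 0 ≤ (if n ∈ (Finset.Ioc 0 ⌊Real.exp u⌋₊).filter (fun n => ¬ n.Prime) then vonMangoldt n * (Real.exp (2 - u) / δ) else 0) := by
      split_ifs <;> positivity
    by_cases hp : n.Prime
    · rw [if_pos hp]
      rw [vonMangoldt_apply_prime hp] at hl
      have : lamV V n / n * tri δ (u - Real.log n) ≤ Real.log n / n * tri δ (u - Real.log n) := by gcongr
      linarith
    · rw [if_neg hp, zero_add]
      by_cases ha : u ≤ Real.log n
      · rw [tri_eq_zero_of_le hδ (by linarith), mul_zero]; exact h2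
      by_cases hb : Real.log n ≤ u - 2
      · rw [tri_eq_zero_of_ge hδ (by linarith), mul_zero]; exact h2
      push Not at ha hb
      have hnu : (n : ℝ) ≤ Real.exp u := by rw [← Real.log_le_iff_le_exp hn0]; exact ha.le
      have hnl : Real.exp (u - 2) ≤ n := by rw [← Real.le_log_iff_exp_le hn0]; exact hb.le
      rw [if_pos (by rw [Finset.mem_filter, Finset.mem_Ioc]; exact ⟨⟨hn.1, Nat.le_floor hnu⟩, hp⟩)]
      have ht2 := tri_le hδ (u - Real.log n)
      have : Real.exp (2 - u) = (Real.exp (u - 2))⁻¹ := by rw [← Real.exp_neg]; congr 1; ring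
      rw [this]
      calc _ ≤ vonMangoldt n / Real.exp (u - 2) * (1 / δ) := by gcongr
        _ = _ := by ring
  unfold Dsum
  refine (Finset.sum_le_sum h2).trans ?_
  rw [Finset.sum_add_distrib, Psum, Finset.sum_filter]
  gcongr
  rw [← Finset.sum_filter, ← Finset.sum_mul]
  calc _ ≤ (∑ n ∈ (Finset.Ioc 0 ⌊Real.exp u⌋₊).filter (fun n => ¬ n.Prime), vonMangoldt n) * (Real.exp (2 - u) / δ) := by
        gcongr
        intro n hn
        exact (Finset.mem_filter.mp hn).2
    _ ≤ 2 * Real.exp (u / 2) * u * (Real.exp (2 - u) / δ) := by gcongr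
    _ = 2 * u * (Real.exp (u / 2) * Real.exp (2 - u)) / δ := by ring
    _ = _ := by rw [← Real.exp_add]; ring_nf

/-- Each window has mass `1`, so the average of `Dsum` over an interval of length `4` dominates the
Chebyshev sum over the primes it contains. -/
lemma Dsum_integral_ge {V δ x : ℝ} {N : ℕ} (hδ : 0 < δ) (hδ1 : δ ≤ 1) (hx : 4002 ≤ x) (hV : V ≤ Real.exp (x - 2)) (hN : Real.exp x ≤ N) :
    2 / 5 ≤ ∫ u in Set.Icc (x - 2) (x + 2), Dsum V δ N u := by
  have h1 := cheb_window (U := x - 2) (by linarith)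
  rw [sub_add_cancel] at h1
  refine h1.trans ?_
  unfold Dsum
  have hint : ∀ n : ℕ, Integrable (fun u => lamV V n / n * tri δ (u - Real.log n)) := fun n =>
    ((tri_integrable hδ).comp_sub_right (Real.log n)).const_mul _
  rw [integral_finsetSum _ fun n _ => (hint n).integrableOn]
  have hsub : (Finset.Ioc ⌊Real.exp (x - 2)⌋₊ ⌊Real.exp x⌋₊).filter Nat.Prime ⊆ Finset.Icc 1 N := by
    intro p hp
    rw [Finset.mem_filter, Finset.mem_Ioc] at hp
    rw [Finset.mem_Icc]
    refine ⟨hp.2.one_lt.le, hp.1.2.trans ?_⟩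
    have := Nat.floor_le (Real.exp_pos x).le
    exact_mod_cast this.trans hN
  refine le_trans ?_ (Finset.sum_le_sum_of_subset_of_nonneg hsub fun n _ _ => ?_)
  · refine Finset.sum_le_sum fun p hp => ?_
    rw [Finset.mem_filter, Finset.mem_Ioc] at hp
    have hp0 : (0 : ℝ) < p := by exact_mod_cast hp.2.pos
    have hpl : Real.exp (x - 2) < p := (Nat.floor_lt (Real.exp_pos _).le).mp hp.1.1
    have hpu : (p : ℝ) ≤ Real.exp x := (Nat.le_floor_iff (Real.exp_pos _).le).mp hp.1.2
    have l1 : x - 2 < Real.log p := (Real.lt_log_iff_exp_lt hp0).mpr hpl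
    have l2 : Real.log p ≤ x := (Real.log_le_iff_le_exp hp0).mpr hpu
    rw [setIntegral_eq_integral_of_forall_compl_eq_zero, integral_const_mul, integral_sub_right_eq_self (tri δ), tri_integral hδ, mul_one]
    · rw [lamV, if_pos (by linarith), vonMangoldt_apply_prime hp.2]
    · intro u hu
      rw [Set.mem_Icc, not_and_or, not_le, not_le] at hu
      rcases hu with hu | hu
      · rw [tri_eq_zero_of_le hδ (by linarith), mul_zero]
      · rw [tri_eq_zero_of_ge hδ (by linarith), mul_zero]
  · refine integral_nonneg fun u => ?_
    have := tri_nonneg hδ (u - Real.log n)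
    have := lamV_nonneg V n
    positivity
end Wright

namespace Wright
open MeasureTheory ArithmeticFunction

lemma lin_avg (c0 c1 x : ℝ) : ∫ u in Set.Icc (x - 2) (x + 2), (c0 + c1 * u) = 4 * (c0 + c1 * x) := by
  rw [integral_Icc_eq_integral_Ioc, ← intervalIntegral.integral_of_le (by linarith), intervalIntegral.integral_add (by simp) (by
    apply Continuous.intervalIntegrable; fun_prop), intervalIntegral.integral_const_mul, integral_id, intervalIntegral.integral_const]
  simp only [smul_eq_mul]; ring

lemma Fsum_cont {V δ a q : ℝ} {N : ℕ} : Continuous (Fsum V δ a q N) := by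
  unfold Fsum
  exact sum_tri_continuous _ _ (fun p : ℕ × ℕ => Real.log p.1 + Real.log p.2)

lemma Fsum_sq_int {V δ a q : ℝ} {N : ℕ} (hδ : 0 < δ) : Integrable (fun u => Fsum V δ a q N u ^ 2) := by
  unfold Fsum
  exact sum_tri_sq_integrable _ _ (fun p : ℕ × ℕ => Real.log p.1 + Real.log p.2) hδ

lemma Dsum_cont {V δ : ℝ} {N : ℕ} : Continuous (Dsum V δ N) := by
  unfold Dsum
  exact sum_tri_continuous _ _ (fun p : ℕ => Real.log p)

/-- Lower bound for the linear main term at a point, from a Chebyshev window around it. -/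
lemma lin_lower {V δ a q c0 c1 x η : ℝ} {N : ℕ} (hδ : 0 < δ) (hδ1 : δ ≤ 1) (hx : 4002 ≤ x) (hV : V ≤ Real.exp (x - 2)) (hN : Real.exp x ≤ N)
    (hF : ∫ u, Fsum V δ a q N u ^ 2 ≤ η)
    (h : ∀ u ∈ Set.Icc (x - 2) (x + 2), |Dsum V δ N u - (c0 + c1 * u) - Fsum V δ a q N u| ≤ 1 / 1000) :
    2 / 5 - 24 / 1000 - 50 * η ≤ 4 * (c0 + c1 * x) := by
  rw [← lin_avg c0 c1 x]
  have h1 := Dsum_integral_ge hδ hδ1 hx hV hN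
  have hF2 := Fsum_sq_int (V := V) (a := a) (q := q) (N := N) hδ
  have h3 : ∫ u in Set.Icc (x - 2) (x + 2), Fsum V δ a q N u ^ 2 ≤ η :=
    (setIntegral_le_integral hF2 (Filter.Eventually.of_forall fun u => sq_nonneg _)).trans hF
  have hDi : IntegrableOn (Dsum V δ N) (Set.Icc (x - 2) (x + 2)) := Dsum_cont.continuousOn.integrableOn_compact isCompact_Icc
  have h4 : ∫ u in Set.Icc (x - 2) (x + 2), (Dsum V δ N u - (6 / 1000 + 50 * Fsum V δ a q N u ^ 2)) ≤ ∫ u in Set.Icc (x - 2) (x + 2), (c0 + c1 * u) := by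
    refine setIntegral_mono_on ?_ ?_ measurableSet_Icc ?_
    · exact hDi.sub ((integrableOn_const (by simp)).add (hF2.integrableOn.const_mul 50))
    · apply Continuous.integrableOn_Icc; fun_prop
    · intro u hu
      have := (abs_le.mp (h u hu)).2
      nlinarith [sq_nonneg (Fsum V δ a q N u - 1 / 100)]
  have hci : IntegrableOn (fun _ : ℝ => (6 / 1000 : ℝ)) (Set.Icc (x - 2) (x + 2)) := integrableOn_const (by simp)
  have hfi : IntegrableOn (fun u => 50 * Fsum V δ a q N u ^ 2) (Set.Icc (x - 2) (x + 2)) := hF2.integrableOn.const_mul 50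
  have hsi : IntegrableOn (fun u => 6 / 1000 + 50 * Fsum V δ a q N u ^ 2) (Set.Icc (x - 2) (x + 2)) := hci.add hfi
  rw [integral_sub hDi hsi, integral_add hci hfi, integral_const_mul] at h4
  simp only [integral_const, MeasurableSet.univ, measureReal_restrict_apply, Set.univ_inter, Real.volume_real_Icc, smul_eq_mul] at h4
  rw [show x + 2 - (x - 2) = 4 by ring, max_eq_left (by norm_num)] at h4
  linarith

/-- Size of the error terms of `decomp` and `Dsum_le_Psum` on the block. -/
lemma block_aux {H : ℝ} (hH : 1000000 ≤ H) {δ u : ℝ} (hδ0 : Real.exp (-(H / 3)) ≤ δ) (hu1 : 5 * H / 6 - 2 ≤ u) (hu2 : u ≤ 5 * H / 6 + 3) :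
    Real.exp (2 * (H / 100)) * (6200 * (u + 6 * Real.exp (35 / 100 * H)) * Real.exp (-u) / δ) ≤ 1 / 1000 ∧
    2 * u * Real.exp (2 - u / 2) / δ ≤ 1 / 1000 := by
  have hδ : 0 < δ := (Real.exp_pos _).trans_le hδ0
  have hd : 1 / δ ≤ Real.exp (H / 3) := by
    have : Real.exp (-(H / 3)) = (Real.exp (H / 3))⁻¹ := Real.exp_neg _
    rw [div_le_iff₀ hδ]
    calc (1 : ℝ) = Real.exp (H / 3) * Real.exp (-(H / 3)) := by rw [← Real.exp_add]; simp
      _ ≤ _ := by gcongr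
  have e2 := exp_two_le
  constructor
  · have h1 : u ≤ Real.exp (35 / 100 * H) := by
      have a1 := Real.add_one_le_exp (175 / 1000 * H)
      have : Real.exp (35 / 100 * H) = Real.exp (175 / 1000 * H) ^ 2 := by rw [← Real.exp_nat_mul]; congr 1; push_cast; ring
      rw [this]; nlinarith
    have h2 : (65000 : ℝ) ^ 2 ≤ Real.exp (13 / 100 * H) := by
      have a1 := Real.add_one_le_exp (65 / 1000 * H)
      have : Real.exp (13 / 100 * H) = Real.exp (65 / 1000 * H) ^ 2 := by rw [← Real.exp_nat_mul]; congr 1; push_cast; ring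
      rw [this]; gcongr; linarith
    have h0 : 0 ≤ u := by linarith
    calc _ = Real.exp (2 * (H / 100)) * (6200 * (u + 6 * Real.exp (35 / 100 * H)) * Real.exp (-u) * (1 / δ)) := by ring
      _ ≤ Real.exp (2 * (H / 100)) * (6200 * (Real.exp (35 / 100 * H) + 6 * Real.exp (35 / 100 * H)) * Real.exp (2 - 5 * H / 6) * Real.exp (H / 3)) := by
          gcongr; linarith
      _ = 43400 * (Real.exp (2 * (H / 100)) * Real.exp (35 / 100 * H) * Real.exp (2 - 5 * H / 6) * Real.exp (H / 3)) := by ring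
      _ = 43400 * (Real.exp 2 / Real.exp (13 / 100 * H)) := by
          rw [← Real.exp_add, ← Real.exp_add, ← Real.exp_add, ← Real.exp_sub]; ring_nf
      _ ≤ 1 / 1000 := by
          rw [mul_div_assoc', div_le_iff₀ (Real.exp_pos _)]; linarith
  · have h2 : 20000000 * H ≤ Real.exp (H / 12) := by
      have a1 := Real.add_one_le_exp (H / 36)
      have : Real.exp (H / 12) = Real.exp (H / 36) ^ 3 := by rw [← Real.exp_nat_mul]; congr 1; push_cast; ring
      rw [this]
      calc 20000000 * H ≤ (H / 36) ^ 3 := by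
            have : (1000000 : ℝ) ^ 2 ≤ H ^ 2 := by gcongr
            nlinarith
        _ ≤ _ := by gcongr; linarith
    have h0 : 0 ≤ u := by linarith
    have e3 : Real.exp 3 ≤ 1000 := by
      have : Real.exp 3 = Real.exp 1 ^ 3 := by rw [← Real.exp_nat_mul]; norm_num
      rw [this]
      calc _ ≤ (10 : ℝ) ^ 3 := by gcongr; linarith [Real.exp_one_lt_d9]
        _ = _ := by norm_num
    calc _ = 2 * u * Real.exp (2 - u / 2) * (1 / δ) := by ring
      _ ≤ 2 * H * Real.exp (3 - 5 * H / 12) * Real.exp (H / 3) := by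
          have hm : u ≤ H := by linarith
          gcongr ?_ * ?_ * ?_
          · linarith
          · exact Real.exp_le_exp.mpr (by linarith)
      _ = 2 * H * (Real.exp (3 - 5 * H / 12) * Real.exp (H / 3)) := by ring
      _ = 2 * H * (Real.exp 3 / Real.exp (H / 12)) := by
          rw [← Real.exp_add, ← Real.exp_sub]; ring_nf
      _ ≤ 1 / 1000 := by
          rw [mul_div_assoc', div_le_iff₀ (Real.exp_pos _)]; nlinarith

/-- In a unit interval of `u = log n`, the smoothed prime density is at least `1/20` outside a set of
small measure: the linear main term is at least `8/100` and Chebyshev's inequality applies to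
the mean square of `Fsum`. The block is at `u ≈ 5H/6`, `H = v ^ 20`, and windows as short as
`δ = e^{-H/3} = e^{-2u/5}` are allowed. -/
lemma block : ∃ v0 : ℝ, 2 ≤ v0 ∧ ∀ v ≥ v0, ∀ δ, Real.exp (-(v ^ 20 / 3)) ≤ δ → δ ≤ 1 →
    volume {u ∈ Set.Icc (5 * v ^ 20 / 6) (5 * v ^ 20 / 6 + 1) | Psum δ ⌈Real.exp (2 * v ^ 20)⌉₊ u < 1 / 20} ≤ ENNReal.ofReal (Real.exp (-(v / 8000))) := by
  obtain ⟨V1, hV1, hF⟩ := Fsum_l2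
  obtain ⟨V2, hV2, hpe⟩ := poly_exp_small 2000 0 (β := 1 / 8000) (by norm_num)
  refine ⟨max (max V1 V2) 4000000, by norm_num, fun v hv δ hδ0 hδ1 => ?_⟩
  have hv1 : V1 ≤ v := (le_max_left _ _).trans ((le_max_left _ _).trans hv)
  have hv2 : V2 ≤ v := (le_max_right _ _).trans ((le_max_left _ _).trans hv)
  have hv3 : 4000000 ≤ v := (le_max_right _ _).trans hv
  replace hF := hF v hv1 δ hδ0 hδ1
  replace hpe := hpe v hv2
  have hvH : v ≤ v ^ 20 := le_self_pow₀ (by linarith) (by norm_num)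
  set H := v ^ 20 with hH
  have hH1 : 1000000 ≤ H := by linarith
  set V := Real.exp (35 / 100 * H) with hV
  set N := ⌈Real.exp (2 * H)⌉₊ with hN
  have hδ : 0 < δ := (Real.exp_pos _).trans_le hδ0
  have hNe : Real.exp (2 * H) ≤ N := Nat.le_ceil _
  obtain ⟨c0, c1, hdec⟩ := decomp (V := V) (δ := δ) (a := H / 100) (q := H) N hδ hδ1 (Real.one_le_exp (by linarith)) (by linarith) (by linarith)
  have hdec2 : ∀ u ∈ Set.Icc (5 * H / 6 - 2) (5 * H / 6 + 3), |Dsum V δ N u - (c0 + c1 * u) - Fsum V δ (H / 100) H N u| ≤ 1 / 1000 := by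
    intro u hu
    refine (hdec u (by linarith [hu.2]) ((Real.exp_le_exp.mpr (by linarith [hu.2])).trans hNe) ?_ ?_ ?_).trans (block_aux hH1 hδ0 hu.1 hu.2).1
    · calc 100 * V ≤ Real.exp 100 * V := by
            have := Real.add_one_le_exp (100 : ℝ)
            have := Real.exp_pos (35 / 100 * H)
            gcongr; linarith
        _ ≤ _ := by rw [hV, ← Real.exp_add]; exact Real.exp_le_exp.mpr (by linarith [hu.1])
    · calc V ≤ Real.exp (-(H / 3)) * Real.exp (u - 2 * (H / 100)) := by
            rw [hV, ← Real.exp_add]; exact Real.exp_le_exp.mpr (by linarith [hu.1])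
        _ ≤ _ := by gcongr
    · linarith [hu.1]
  have hη : Real.exp (-(v / 4000)) ≤ 1 / 1000 := by
    rw [Real.exp_neg, inv_le_comm₀ (Real.exp_pos _) (by norm_num)]
    have := Real.add_one_le_exp (v / 4000)
    linarith
  have hlow : ∀ x, 5 * H / 6 ≤ x → x ≤ 5 * H / 6 + 1 → 8 / 100 ≤ c0 + c1 * x := by
    intro x hx1 hx2
    have := lin_lower (c0 := c0) (c1 := c1) (x := x) (V := V) (N := N) hδ hδ1 (by linarith) (Real.exp_le_exp.mpr (by linarith)) ((Real.exp_le_exp.mpr (by linarith)).trans hNe)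
      hF (fun u hu => hdec2 u ⟨by linarith [hu.1], by linarith [hu.2]⟩)
    linarith
  have hsub : {u ∈ Set.Icc (5 * H / 6) (5 * H / 6 + 1) | Psum δ N u < 1 / 20} ⊆ {u | 1 / 2000 ≤ Fsum V δ (H / 100) H N u ^ 2} := by
    rintro u ⟨hu, hP⟩
    have h1 := hlow u hu.1 hu.2
    have h2 := (abs_le.mp (hdec2 u ⟨by linarith [hu.1], by linarith [hu.2]⟩)).1
    have h3 := (block_aux hH1 hδ0 (u := u) (by linarith [hu.1]) (by linarith [hu.2])).2
    have h4 := Dsum_le_Psum (V := V) (δ := δ) (N := N) (u := u) hδ hδ1 (by linarith [hu.1])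
    rw [Set.mem_setOf]
    nlinarith
  refine (measure_mono hsub).trans ?_
  have hm := mul_meas_ge_le_integral_of_nonneg (μ := volume) (Filter.Eventually.of_forall fun u => sq_nonneg (Fsum V δ (H / 100) H N u))
    (Fsum_sq_int hδ) (1 / 2000)
  have hfin : volume {u | 1 / 2000 ≤ Fsum V δ (H / 100) H N u ^ 2} < ⊤ :=
    (Fsum_sq_int (V := V) (a := H / 100) (q := H) (N := N) hδ).measure_ge_lt_top (by norm_num)
  rw [← ENNReal.ofReal_toReal hfin.ne]
  apply ENNReal.ofReal_le_ofReal
  have e1 : 2 * (1 / 8000 : ℝ) * v = v / 4000 := by ring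
  have e2 : (1 / 8000 : ℝ) * v = v / 8000 := by ring
  rw [e1, e2, pow_zero] at hpe
  have : volume.real {u | 1 / 2000 ≤ Fsum V δ (H / 100) H N u ^ 2} = (volume {u | 1 / 2000 ≤ Fsum V δ (H / 100) H N u ^ 2}).toReal := rfl
  rw [this] at hm
  linarith
end Wright

/-! ### Primes in almost all intervals [m^c, (m+1)^c) -/

namespace Wright
open MeasureTheory

/-- Primes `p` with `[p, p+1] ⊆ [m^c, (m+1)^c)`. -/
noncomputable def chil (c : ℝ) (m : ℕ) : Finset ℕ :=
  (Finset.range ⌈((m : ℝ) + 1) ^ c⌉₊).filter (fun p => p.Prime ∧ (m : ℝ) ^ c ≤ p ∧ (p : ℝ) + 1 < ((m : ℝ) + 1) ^ c)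

lemma mem_chil {c : ℝ} {m p : ℕ} : p ∈ chil c m ↔ p.Prime ∧ (m : ℝ) ^ c ≤ p ∧ (p : ℝ) + 1 < ((m : ℝ) + 1) ^ c := by
  rw [chil, Finset.mem_filter, Finset.mem_range, and_iff_right_iff_imp]
  rintro ⟨_, _, h⟩
  exact Nat.lt_ceil.mpr (by linarith)

/-- `m` is bad for the exponent `c` when `[m^c, (m+1)^c)` has too few primes. -/
def bad (c : ℝ) (m : ℕ) : Prop := ∑ p ∈ chil c m, Real.log p / p < 1 / 640 * c / m

lemma mem_chil_of_log {c : ℝ} {m p : ℕ} (hm : 1 ≤ m) (hp : p.Prime) (h1 : c * Real.log m ≤ Real.log p)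
    (h2 : Real.log p + (m : ℝ) ^ (-c) < c * Real.log (m + 1)) : p ∈ chil c m := by
  have hm0 : (0 : ℝ) < m := by exact_mod_cast hm
  have hp0 : (0 : ℝ) < p := by exact_mod_cast hp.pos
  have h3 : (m : ℝ) ^ c ≤ p := by
    rw [Real.rpow_def_of_pos hm0, ← Real.le_log_iff_exp_le hp0]; linarith
  refine mem_chil.mpr ⟨hp, h3, ?_⟩
  rw [Real.rpow_def_of_pos (by linarith), ← Real.log_lt_iff_lt_exp (by linarith)]
  have h4 : Real.log ((p : ℝ) + 1) ≤ Real.log p + 1 / p := by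
    have : (p : ℝ) + 1 = p * (1 + 1 / p) := by field_simp
    rw [this, Real.log_mul hp0.ne' (by positivity)]
    have := Real.log_le_sub_one_of_pos (show (0 : ℝ) < 1 + 1 / p by positivity)
    linarith
  have h5 : 1 / (p : ℝ) ≤ (m : ℝ) ^ (-c) := by
    rw [Real.rpow_neg hm0.le, one_div]
    gcongr
  linarith

lemma log_succ_sub {m : ℕ} (hm : 1 ≤ m) : 1 / ((m : ℝ) + 1) ≤ Real.log (m + 1) - Real.log m := by
  have hm0 : (0 : ℝ) < m := by exact_mod_cast hm
  rw [← Real.log_div (by positivity) hm0.ne']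
  have := Real.one_sub_inv_le_log_of_pos (show 0 < ((m : ℝ) + 1) / m by positivity)
  refine le_trans (le_of_eq ?_) this
  field_simp
  ring

lemma cheb_windows {U : ℝ} (hU : 4000 ≤ U) (n : ℕ) :
    2 / 5 * n ≤ ∑ p ∈ (Finset.Ioc ⌊Real.exp U⌋₊ ⌊Real.exp (U + 2 * n)⌋₊).filter Nat.Prime, Real.log p / p := by
  induction n with
  | zero => simp
  | succ n ih =>
    have h1 := cheb_window (U := U + 2 * n) (by have : (0 : ℝ) ≤ n := Nat.cast_nonneg n; linarith)
    have e : U + 2 * ((n + 1 : ℕ) : ℝ) = U + 2 * n + 2 := by push_cast; ring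
    rw [e]
    rw [Finset.sum_filter] at *
    rw [← Finset.sum_Ioc_consecutive _ (Nat.floor_mono (Real.exp_le_exp.mpr (by have : (0 : ℝ) ≤ n := Nat.cast_nonneg n; linarith : U ≤ U + 2 * n)))
      (Nat.floor_mono (Real.exp_le_exp.mpr (by linarith)))]
    push_cast
    linarith

/-- For enormous exponents Chebyshev's bound suffices and no integer is bad. -/
lemma not_bad_of_large {c : ℝ} {Y m : ℕ} (hY : 4000 ≤ Y) (hc : 32 * Y < c) (hm1 : Y ≤ m) (hm2 : m < 2 * Y) : ¬ bad c m := by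
  have hYr : (4000 : ℝ) ≤ Y := by exact_mod_cast hY
  have hm1r : (Y : ℝ) ≤ m := by exact_mod_cast hm1
  have hm2r : (m : ℝ) + 1 ≤ 2 * Y := by exact_mod_cast hm2
  have hm0 : (0 : ℝ) < m := by linarith
  have hlen := log_succ_sub (show 1 ≤ m by omega)
  have hc0 : 0 < c := by linarith
  set len := c * Real.log (m + 1) - c * Real.log m with hl
  have hlen2 : c / (2 * Y) ≤ len := by
    calc c / (2 * Y) ≤ c / (m + 1) := by gcongr
      _ = c * (1 / (m + 1)) := by ring
      _ ≤ c * (Real.log (m + 1) - Real.log m) := by gcongr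
      _ = len := by rw [hl]; ring
  have hlen16 : 16 ≤ len := by
    refine le_trans ?_ hlen2
    rw [le_div_iff₀ (by linarith)]; linarith
  set U := c * Real.log m with hU
  have hlogm : 1 ≤ Real.log m := by
    rw [Real.le_log_iff_exp_le hm0]; linarith [Real.exp_one_lt_d9]
  have hU4 : 4000 ≤ U := by rw [hU]; nlinarith
  set n := ⌊(len - 2) / 2⌋₊ with hn
  have hn1 : (n : ℝ) ≤ (len - 2) / 2 := Nat.floor_le (by linarith)
  have hn2 : (len - 2) / 2 < n + 1 := Nat.lt_floor_add_one _
  have hw := cheb_windows hU4 n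
  rw [bad, not_lt]
  have hsub : (Finset.Ioc ⌊Real.exp U⌋₊ ⌊Real.exp (U + 2 * n)⌋₊).filter Nat.Prime ⊆ chil c m := by
    intro p hp
    rw [Finset.mem_filter, Finset.mem_Ioc] at hp
    have hp0 : (0 : ℝ) < p := by exact_mod_cast hp.2.pos
    have hpl := (Nat.floor_lt (Real.exp_pos _).le).mp hp.1.1
    have hpu := (Nat.le_floor_iff (Real.exp_pos _).le).mp hp.1.2
    rw [← Real.lt_log_iff_exp_lt hp0] at hpl
    rw [← Real.log_le_iff_le_exp hp0] at hpu
    refine mem_chil_of_log (by omega) hp.2 hpl.le ?_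
    have : (m : ℝ) ^ (-c) ≤ 1 := Real.rpow_le_one_of_one_le_of_nonpos (by linarith) (by linarith)
    linarith
  have h3 := hw.trans (Finset.sum_le_sum_of_subset_of_nonneg hsub fun p _ _ => div_nonneg (Real.log_natCast_nonneg p) (Nat.cast_nonneg p))
  refine le_trans ?_ h3
  calc 1 / 640 * c / m ≤ 1 / 640 * c / Y := by gcongr
    _ = 1 / 320 * (c / (2 * Y)) := by field_simp; norm_num
    _ ≤ _ := by linarith

/-- If `m` is bad, the smoothed density is small on an interval of length `δ` inside
`[c log m, c log (m+1)]`; `δ = c/(32Y)` keeps the whole window inside. -/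
lemma Psum_bad {c δ u : ℝ} {Y m N : ℕ} (hY : 100 ≤ Y) (hc : 13 / 5 ≤ c) (hm1 : Y ≤ m) (hm2 : m < 2 * Y) (hδ : δ = c / (32 * Y))
    (hu1 : c * Real.log m + 2 * δ ≤ u) (hu2 : u ≤ c * Real.log m + 3 * δ) (hb : bad c m) : Psum δ N u < 1 / 20 := by
  have hYr : (100 : ℝ) ≤ Y := by exact_mod_cast hY
  have hm1r : (Y : ℝ) ≤ m := by exact_mod_cast hm1
  have hm2r : (m : ℝ) + 1 ≤ 2 * Y := by exact_mod_cast hm2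
  have hm0 : (0 : ℝ) < m := by linarith
  have hlen := log_succ_sub (show 1 ≤ m by omega)
  have hc0 : 0 < c := by linarith
  have hδ0 : 0 < δ := by rw [hδ]; positivity
  have hlen2 : 16 * δ ≤ c * Real.log (m + 1) - c * Real.log m := by
    calc 16 * δ = c / (2 * Y) := by rw [hδ]; field_simp; norm_num
      _ ≤ c / (m + 1) := by gcongr
      _ = c * (1 / (m + 1)) := by ring
      _ ≤ c * (Real.log (m + 1) - Real.log m) := by gcongr
      _ = _ := by ring
  have hmc : (m : ℝ) ^ (-c) ≤ δ := by
    have h1 : (m : ℝ) ^ (-c) ≤ (m : ℝ) ^ (-2 : ℝ) := Real.rpow_le_rpow_of_exponent_le (by linarith) (by linarith)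
    have h2 : (m : ℝ) ^ (-2 : ℝ) = 1 / (m : ℝ) ^ 2 := by
      rw [Real.rpow_neg hm0.le, one_div]; norm_cast
    rw [h2] at h1
    refine h1.trans ?_
    rw [hδ, div_le_div_iff₀ (by positivity) (by positivity)]
    nlinarith
  have h1 : Psum δ N u ≤ ∑ p ∈ chil c m, Real.log p / p * (1 / δ) := by
    unfold Psum
    calc _ ≤ ∑ p ∈ (Finset.Icc 1 N).filter Nat.Prime, (if p ∈ chil c m then Real.log p / p * (1 / δ) else 0) := by
          refine Finset.sum_le_sum fun p hp => ?_
          rw [Finset.mem_filter] at hp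
          have hlp := Real.log_natCast_nonneg p
          by_cases hpc : p ∈ chil c m
          · rw [if_pos hpc]
            have := tri_le hδ0 (u - Real.log p)
            gcongr
          · rw [if_neg hpc]
            by_cases h2 : u - Real.log p ≤ 0
            · rw [tri_eq_zero_of_le hδ0 h2, mul_zero]
            by_cases h3 : 2 * δ ≤ u - Real.log p
            · rw [tri_eq_zero_of_ge hδ0 h3, mul_zero]
            exact absurd (mem_chil_of_log (by omega) hp.2 (by linarith) (by linarith)) hpc
      _ ≤ _ := by
          rw [← Finset.sum_filter]
          refine Finset.sum_le_sum_of_subset_of_nonneg (fun p hp => (Finset.mem_filter.mp hp).2) fun p _ _ => ?_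
          have hlp := Real.log_natCast_nonneg p
          positivity
  refine h1.trans_lt ?_
  rw [← Finset.sum_mul]
  have h2 : 1 / 640 * c / m ≤ 1 / 20 * δ := by
    calc 1 / 640 * c / m ≤ 1 / 640 * c / Y := by gcongr
      _ = _ := by rw [hδ]; field_simp; norm_num
  rw [bad] at hb
  rw [mul_one_div, div_lt_iff₀ hδ0]
  linarith

open Classical in
/-- Almost all integers `m` have the expected order of magnitude of primes in `[m^c, (m+1)^c)`. The
bound `13 / 5` on the exponent leaves room below `925 / 348 = 2.658…`. -/
lemma almost_all : ∃ Y0 : ℕ, 4000 ≤ Y0 ∧ ∀ c : ℝ, 13 / 5 ≤ c → ∀ Y : ℕ, Y0 ≤ Y →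
    (((Finset.Ico Y (2 * Y)).filter (bad c)).card : ℝ) ≤ 64 * Y * Real.exp (-((Real.log Y) ^ (1 / 20 : ℝ) / 8000)) := by
  obtain ⟨v0, hv0, hblock⟩ := block
  obtain ⟨Y1, hY1⟩ := Filter.eventually_atTop.mp ((tendsto_rpow_atTop (show (0 : ℝ) < 1 / 25 by norm_num)).comp tendsto_natCast_atTop_atTop |>.eventually_ge_atTop (32 : ℝ))
  refine ⟨max (max 4000 Y1) ⌈Real.exp (v0 ^ 20)⌉₊, (le_max_left _ _).trans (le_max_left _ _), fun c hc Y hY => ?_⟩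
  have hY4 : 4000 ≤ Y := ((le_max_left _ _).trans (le_max_left _ _)).trans hY
  have hYv : Real.exp (v0 ^ 20) ≤ Y := Nat.ceil_le.mp ((le_max_right _ _).trans hY)
  have hY25 : (32 : ℝ) ≤ (Y : ℝ) ^ (1 / 25 : ℝ) := hY1 Y (((le_max_right _ _).trans (le_max_left _ _)).trans hY)
  have hYr : (4000 : ℝ) ≤ Y := by exact_mod_cast hY4
  have hY0 : (0 : ℝ) < Y := by linarith
  by_cases hcY : 32 * Y < c
  · rw [Finset.filter_false_of_mem]
    · simp; positivity
    · intro m hm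
      rw [Finset.mem_Ico] at hm
      exact not_bad_of_large hY4 hcY hm.1 hm.2
  rw [not_lt] at hcY
  set δ := c / (32 * Y) with hδ
  have hδ0 : 0 < δ := by rw [hδ]; positivity
  have hδ1 : δ ≤ 1 := by rw [hδ, div_le_one (by positivity)]; exact hcY
  have hlY : v0 ^ 20 ≤ Real.log Y := by rw [Real.le_log_iff_exp_le hY0]; exact hYv
  have hv020 : 1 ≤ v0 ^ 20 := one_le_pow₀ (by linarith)
  set L := Real.log Y with hL
  set e := Real.exp (-(L ^ (1 / 20 : ℝ) / 8000)) with he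
  -- unit blocks starting at `c log Y + i`; `v i` is chosen so that `5 (v i) ^ 20 / 6` is that point
  set ℓ : ℕ → ℝ := fun i => c * L + i with hℓ
  set v : ℕ → ℝ := fun i => (6 / 5 * ℓ i) ^ (1 / 20 : ℝ) with hv
  have hℓL : ∀ i, c * L ≤ ℓ i := fun i => by simp [hℓ]
  have hℓL2 : ∀ i, L ≤ 6 / 5 * ℓ i := fun i => by have := hℓL i; nlinarith
  have hv20 : ∀ i, v i ^ 20 = 6 / 5 * ℓ i := by
    intro i
    have := hℓL2 i
    simp only [hv]
    rw [← Real.rpow_natCast _ 20, ← Real.rpow_mul (by linarith)]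
    norm_num
  have hLv : ∀ i, L ^ (1 / 20 : ℝ) ≤ v i := fun i => by
    simp only [hv]; exact Real.rpow_le_rpow (by linarith) (hℓL2 i) (by norm_num)
  have hv0L : v0 ≤ L ^ (1 / 20 : ℝ) := by
    have : (v0 ^ 20) ^ (1 / 20 : ℝ) = v0 := by
      rw [← Real.rpow_natCast v0 20, ← Real.rpow_mul (by linarith)]; norm_num
    rw [← this]; exact Real.rpow_le_rpow (by linarith) hlY (by norm_num)
  have hδe : ∀ i, Real.exp (-(v i ^ 20 / 3)) ≤ δ := by
    intro i
    rw [hv20]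
    have h1 : Real.exp (-(6 / 5 * ℓ i / 3)) ≤ Real.exp (-(26 / 25 * L)) := Real.exp_le_exp.mpr (by have := hℓL i; nlinarith)
    refine h1.trans ?_
    have h2 : Real.exp (26 / 25 * L) = Y * (Y : ℝ) ^ (1 / 25 : ℝ) := by
      rw [Real.rpow_def_of_pos hY0, ← hL]
      nth_rewrite 1 [← Real.exp_log hY0]
      rw [← Real.exp_add, ← hL]; congr 1; ring
    rw [Real.exp_neg, h2, hδ, inv_eq_one_div, div_le_div_iff₀ (by positivity) (by positivity)]
    have : Y * 32 ≤ Y * (Y : ℝ) ^ (1 / 25 : ℝ) := by gcongr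
    nlinarith
  set S : ℕ → Set ℝ := fun i => {u ∈ Set.Icc (5 * v i ^ 20 / 6) (5 * v i ^ 20 / 6 + 1) | Psum δ ⌈Real.exp (2 * v i ^ 20)⌉₊ u < 1 / 20} with hS
  have hSm : ∀ i, volume (S i) ≤ ENNReal.ofReal e := by
    intro i
    refine (hblock (v i) (hv0L.trans (hLv i)) δ (hδe i) hδ1).trans (ENNReal.ofReal_le_ofReal ?_)
    rw [he]; exact Real.exp_le_exp.mpr (by have := hLv i; linarith)
  set n := ⌊c⌋₊ + 1 with hn
  have hn2 : (n : ℝ) ≤ 2 * c := by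
    rw [hn]; push_cast
    have := Nat.floor_le (show 0 ≤ c by linarith)
    linarith
  set J : ℕ → Set ℝ := fun m => Set.Icc (c * Real.log m + 2 * δ) (c * Real.log m + 3 * δ) with hJ
  set B := (Finset.Ico Y (2 * Y)).filter (bad c) with hB
  have hgap : ∀ m ∈ Finset.Ico Y (2 * Y), c * Real.log m + 16 * δ ≤ c * Real.log ((m + 1 : ℕ) : ℝ) := by
    intro m hm
    rw [Finset.mem_Ico] at hm
    have hm2r : (m : ℝ) + 1 ≤ 2 * Y := by exact_mod_cast hm.2
    have hlen := log_succ_sub (show 1 ≤ m by omega)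
    have : 16 * δ ≤ c * Real.log (m + 1) - c * Real.log m := by
      calc 16 * δ = c / (2 * Y) := by rw [hδ]; field_simp; norm_num
        _ ≤ c / (m + 1) := by gcongr
        _ = c * (1 / (m + 1)) := by ring
        _ ≤ c * (Real.log (m + 1) - Real.log m) := by gcongr
        _ = _ := by ring
    push_cast
    linarith
  have hsub : (⋃ m ∈ B, J m) ⊆ ⋃ i ∈ Finset.range n, S i := by
    intro u hu
    simp only [Set.mem_iUnion] at hu ⊢
    obtain ⟨m, hmB, hu⟩ := hu
    rw [hB, Finset.mem_filter] at hmB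
    have hg := hgap m hmB.1
    have hm := Finset.mem_Ico.mp hmB.1
    have hbd := hmB.2
    rw [hJ, Set.mem_Icc] at hu
    have hmY : L ≤ Real.log m := Real.log_le_log hY0 (by exact_mod_cast hm.1)
    have hmY2 : Real.log ((m + 1 : ℕ) : ℝ) ≤ Real.log 2 + L := by
      rw [hL, ← Real.log_mul (by norm_num) hY0.ne']
      exact Real.log_le_log (by exact_mod_cast Nat.succ_pos m) (by exact_mod_cast hm.2)
    have h1 : c * L ≤ u := by nlinarith
    have h2 : u ≤ c * L + c := by
      have := Real.log_two_lt_d9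
      nlinarith
    refine ⟨⌊u - c * L⌋₊, ?_, ?_⟩
    · rw [Finset.mem_range, hn]
      exact Nat.lt_succ_of_le (Nat.floor_mono (by linarith))
    · simp only [hS]
      have h3 := Nat.floor_le (show 0 ≤ u - c * L by linarith)
      have h4 := Nat.lt_floor_add_one (u - c * L)
      refine ⟨?_, Psum_bad (by omega) hc hm.1 hm.2 hδ hu.1 hu.2 hbd⟩
      rw [hv20]
      simp only [hℓ]
      constructor <;> linarith
  have hdis : (B : Set ℕ).PairwiseDisjoint J := by
    have key : ∀ m ∈ B, ∀ m' ∈ B, m < m' → Disjoint (J m) (J m') := by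
      intro m hm m' hm' hlt
      rw [Set.disjoint_left]
      intro u hu hu'
      rw [hJ, Set.mem_Icc] at hu hu'
      have hg := hgap m (Finset.mem_filter.mp hm).1
      have : Real.log ((m + 1 : ℕ) : ℝ) ≤ Real.log m' := Real.log_le_log (by exact_mod_cast Nat.succ_pos m) (by exact_mod_cast hlt)
      nlinarith [hu.2, hu'.1]
    intro m hm m' hm' hne
    rcases lt_or_gt_of_ne hne with h | h
    · exact key m hm m' hm' h
    · exact (key m' hm' m hm h).symm
  have hm := measure_mono (μ := volume) hsub
  rw [measure_biUnion_finset hdis (fun m _ => measurableSet_Icc)] at hm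
  have hJv : ∀ m, volume (J m) = ENNReal.ofReal δ := fun m => by simp only [hJ]; rw [Real.volume_Icc]; congr 1; ring
  have h5 : (B.card : ENNReal) * ENNReal.ofReal δ ≤ n * ENNReal.ofReal e := by
    calc _ = ∑ m ∈ B, volume (J m) := by simp [hJv]
      _ ≤ _ := hm
      _ ≤ ∑ i ∈ Finset.range n, volume (S i) := measure_biUnion_finset_le _ _
      _ ≤ ∑ i ∈ Finset.range n, ENNReal.ofReal e := Finset.sum_le_sum fun i _ => hSm i
      _ = _ := by simp
  rw [← ENNReal.ofReal_natCast, ← ENNReal.ofReal_natCast, ← ENNReal.ofReal_mul (Nat.cast_nonneg _), ← ENNReal.ofReal_mul (Nat.cast_nonneg _),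
    ENNReal.ofReal_le_ofReal_iff (by positivity)] at h5
  have h6 : (B.card : ℝ) * δ ≤ 64 * Y * e * δ := by
    calc _ ≤ n * e := h5
      _ ≤ 2 * c * e := by gcongr
      _ = _ := by rw [hδ]; field_simp; ring
  exact le_of_mul_le_mul_right h6 hδ0
end Wright

/-! ### Nodes of the tree -/

namespace Wright
open MeasureTheory

/-- The set of `θ` with `⌊exp (C θ)⌋ = m`, for `m ≥ 1` and `C > 0`. -/
def nodeI (C : ℝ) (m : ℕ) : Set ℝ := Set.Ico (Real.log m / C) (Real.log (m + 1) / C)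

/-- Length of `nodeI C m`. -/
noncomputable def nodeL (C : ℝ) (m : ℕ) : ℝ := (Real.log (m + 1) - Real.log m) / C

lemma nodeI_vol (C : ℝ) (m : ℕ) : volume (nodeI C m) = ENNReal.ofReal (nodeL C m) := by
  rw [nodeI, Real.volume_Ico, nodeL, sub_div]

lemma log_lt_log_succ {m : ℕ} (hm : 1 ≤ m) : Real.log m < Real.log (m + 1) :=
  Real.log_lt_log (by exact_mod_cast hm) (by linarith)

lemma nodeL_pos {C : ℝ} (hC : 0 < C) {m : ℕ} (hm : 1 ≤ m) : 0 < nodeL C m :=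
  div_pos (sub_pos.mpr (log_lt_log_succ hm)) hC

lemma nodeL_le {C : ℝ} (hC : 0 < C) {m : ℕ} (hm : 1 ≤ m) : nodeL C m ≤ 1 / (m * C) := by
  have hm0 : (0 : ℝ) < m := by exact_mod_cast hm
  rw [nodeL, ← div_div]
  gcongr
  have : (m : ℝ) + 1 = m * (1 + 1 / m) := by field_simp
  rw [this, Real.log_mul hm0.ne' (by positivity)]
  have := Real.log_le_sub_one_of_pos (show (0 : ℝ) < 1 + 1 / m by positivity)
  linarith

lemma nodeI_disjoint {C : ℝ} (hC : 0 < C) {m m' : ℕ} (hm : 1 ≤ m) (hm' : 1 ≤ m') (hne : m ≠ m') : Disjoint (nodeI C m) (nodeI C m') := by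
  have key : ∀ m m' : ℕ, 1 ≤ m → m < m' → Disjoint (nodeI C m) (nodeI C m') := by
    intro m m' hm hlt
    rw [Set.disjoint_left]
    intro u hu hu'
    rw [nodeI, Set.mem_Ico] at hu hu'
    have h1 : Real.log ((m : ℝ) + 1) ≤ Real.log m' := Real.log_le_log (by positivity) (by exact_mod_cast hlt)
    have h2 : Real.log ((m : ℝ) + 1) / C ≤ Real.log m' / C := by gcongr
    linarith [hu.2, hu'.1]
  rcases lt_or_gt_of_ne hne with h | h
  · exact key m m' hm h
  · exact (key m' m hm' h).symm

lemma chil_log {d : ℝ} {m q : ℕ} (hm : 1 ≤ m) (hq : q ∈ chil d m) :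
    d * Real.log m ≤ Real.log q ∧ Real.log (q + 1) < d * Real.log (m + 1) := by
  obtain ⟨hp, h1, h2⟩ := mem_chil.mp hq
  have hm0 : (0 : ℝ) < m := by exact_mod_cast hm
  constructor
  · rw [← Real.log_rpow hm0]
    exact Real.log_le_log (by positivity) h1
  · rw [← Real.log_rpow (by positivity)]
    exact Real.log_lt_log (by positivity) h2

lemma child_lo {C d : ℝ} (hC : 0 < C) (hd : 0 < d) {m q : ℕ} (hm : 1 ≤ m) (hq : q ∈ chil d m) : Real.log m / C ≤ Real.log q / (C * d) := by
  rw [div_le_div_iff₀ hC (by positivity)]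
  have := (chil_log hm hq).1
  nlinarith

lemma child_hi {C d : ℝ} (hC : 0 < C) (hd : 0 < d) {m q : ℕ} (hm : 1 ≤ m) (hq : q ∈ chil d m) : Real.log (q + 1) / (C * d) < Real.log (m + 1) / C := by
  rw [div_lt_div_iff₀ (by positivity) hC]
  have := (chil_log hm hq).2
  nlinarith

lemma child_sub {C d : ℝ} (hC : 0 < C) (hd : 0 < d) {m q : ℕ} (hm : 1 ≤ m) (hq : q ∈ chil d m) : nodeI (C * d) q ⊆ nodeI C m :=
  Set.Ico_subset_Ico (child_lo hC hd hm hq) (child_hi hC hd hm hq).le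

/-- The children of a node that is not bad fill a proportion `≫ 1/(C d Λ)` of it: by definition of `bad`
the sum of `log q / q` is large, and a child `q` has length about `1/(q C d)`. -/
lemma child_vol {C d Λ : ℝ} (hC : 0 < C) (hd : 0 < d) {m : ℕ} (hm : 1 ≤ m) (hΛ : Real.log (m + 1) / C ≤ Λ) (hb : ¬ bad d m) :
    nodeL C m ≤ 1280 * (C * d) * Λ * ∑ q ∈ chil d m, nodeL (C * d) q := by
  have hm0 : (0 : ℝ) < m := by exact_mod_cast hm
  have hm1 : (1 : ℝ) ≤ m := by exact_mod_cast hm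
  rw [bad, not_lt] at hb
  have hCd : 0 < C * d := by positivity
  have h1 : ∀ q ∈ chil d m, Real.log q / q ≤ 2 * (C * d) ^ 2 * Λ * nodeL (C * d) q := by
    intro q hq
    have hq1 : 1 ≤ q := (mem_chil.mp hq).1.one_lt.le
    have hq0 : (1 : ℝ) ≤ q := by exact_mod_cast hq1
    have h2 := (chil_log hm hq).2
    have h3 : Real.log q ≤ C * d * Λ := by
      have h5 : Real.log ((m : ℝ) + 1) ≤ Λ * C := by rwa [div_le_iff₀ hC] at hΛ
      have h4 := log_lt_log_succ hq1
      nlinarith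
    have h6 : 1 / (2 * (q : ℝ)) ≤ C * d * nodeL (C * d) q := by
      have := log_succ_sub hq1
      have e : C * d * nodeL (C * d) q = Real.log (q + 1) - Real.log q := by rw [nodeL]; field_simp
      rw [e]
      refine le_trans ?_ this
      gcongr; linarith
    calc Real.log q / q = 2 * Real.log q * (1 / (2 * q)) := by field_simp
      _ ≤ 2 * (C * d * Λ) * (C * d * nodeL (C * d) q) := by
          have := Real.log_natCast_nonneg q
          gcongr
          nlinarith
      _ = _ := by ring
  have h2 := hb.trans (Finset.sum_le_sum h1)
  rw [← Finset.mul_sum] at h2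
  have h3 := nodeL_le hC hm
  calc nodeL C m ≤ 1 / (m * C) := h3
    _ = 640 / (C * d) * (1 / 640 * d / m) := by field_simp
    _ ≤ 640 / (C * d) * (2 * (C * d) ^ 2 * Λ * ∑ q ∈ chil d m, nodeL (C * d) q) := by gcongr
    _ = _ := by field_simp; ring
end Wright

namespace Wright
open MeasureTheory

/-- Candidate values at a level with exponent `C`: integers `m` with `[m, m+1] ⊆ [Y^C, (2Y)^C]`. -/
noncomputable def cand (Y : ℕ) (C : ℝ) : Finset ℕ :=
  (Finset.range ⌈(2 * (Y : ℝ)) ^ C⌉₊).filter (fun m => (Y : ℝ) ^ C ≤ m ∧ (m : ℝ) + 1 ≤ (2 * (Y : ℝ)) ^ C)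

lemma mem_cand {Y : ℕ} {C : ℝ} {m : ℕ} : m ∈ cand Y C ↔ (Y : ℝ) ^ C ≤ m ∧ (m : ℝ) + 1 ≤ (2 * (Y : ℝ)) ^ C := by
  rw [cand, Finset.mem_filter, Finset.mem_range, and_iff_right_iff_imp]
  rintro ⟨_, h⟩
  exact Nat.lt_ceil.mpr (by linarith)

lemma sum_biUnion_le' (s : Finset ℕ) (T : ℕ → Finset ℕ) (f : ℕ → ℝ) (hf : ∀ m, 0 ≤ f m) :
    ∑ m ∈ s.biUnion T, f m ≤ ∑ i ∈ s, ∑ m ∈ T i, f m := by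
  induction s using Finset.induction with
  | empty => simp
  | insert a s ha ih =>
    rw [Finset.biUnion_insert, Finset.sum_insert ha]
    have h3 := Finset.sum_union_inter (s₁ := T a) (s₂ := s.biUnion T) (f := f)
    have h4 := Finset.sum_nonneg (s := T a ∩ s.biUnion T) (f := f) (fun m _ => hf m)
    linarith

open Classical in
/-- Total length of the bad nodes of a level. -/
lemma bad_sum : ∃ Y0 : ℕ, 4000 ≤ Y0 ∧ ∀ Y : ℕ, Y0 ≤ Y → ∀ C : ℝ, 1 ≤ C → ∀ d : ℝ, 13 / 5 ≤ d →
    ∑ m ∈ (cand Y C).filter (bad d), nodeL C m ≤ 128 * Real.exp (-((C * Real.log Y) ^ (1 / 20 : ℝ) / 8000)) := by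
  obtain ⟨Y0, hY0, haa⟩ := almost_all
  refine ⟨Y0, hY0, fun Y hY C hC d hd => ?_⟩
  have hYr : (4000 : ℝ) ≤ Y := by exact_mod_cast hY0.trans hY
  have hYp : (0 : ℝ) < Y := by linarith
  set X := ⌈(Y : ℝ) ^ C⌉₊ with hX
  have hXle : (Y : ℝ) ^ C ≤ X := Nat.le_ceil _
  have hYC : (Y : ℝ) ≤ (Y : ℝ) ^ C := by
    calc (Y : ℝ) = (Y : ℝ) ^ (1 : ℝ) := (Real.rpow_one _).symm
      _ ≤ _ := Real.rpow_le_rpow_of_exponent_le (by linarith) hC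
  have hXY : Y ≤ X := by exact_mod_cast hYC.trans hXle
  have hXp : (0 : ℝ) < X := by linarith
  have hXlog : C * Real.log Y ≤ Real.log X := by
    rw [← Real.log_rpow hYp]; exact Real.log_le_log (by positivity) hXle
  have hlY : 0 ≤ Real.log Y := Real.log_natCast_nonneg Y
  set e := Real.exp (-((C * Real.log Y) ^ (1 / 20 : ℝ) / 8000)) with he
  set n := ⌊C⌋₊ + 1 with hn
  have hn2 : (n : ℝ) ≤ 2 * C := by
    rw [hn]; push_cast
    have := Nat.floor_le (show 0 ≤ C by linarith)
    linarith
  have hsub : (cand Y C).filter (bad d) ⊆ (Finset.range n).biUnion (fun i => (Finset.Ico (2 ^ i * X) (2 * (2 ^ i * X))).filter (bad d)) := by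
    intro m hm
    rw [Finset.mem_filter, mem_cand] at hm
    obtain ⟨⟨h1, h2⟩, h3⟩ := hm
    have hmX : X ≤ m := Nat.ceil_le.mpr h1
    have hX0 : 0 < X := by exact_mod_cast hXp
    have hq : m / X ≠ 0 := (Nat.div_pos hmX hX0).ne'
    rw [Finset.mem_biUnion]
    have k1 := Nat.pow_log_le_self 2 hq
    have k2 := Nat.lt_pow_succ_log_self (b := 2) (by norm_num) (m / X)
    set i := Nat.log 2 (m / X)
    have k3 : 2 ^ i * X ≤ m := (Nat.le_div_iff_mul_le hX0).mp k1
    have k4 : m < 2 ^ (i + 1) * X := (Nat.div_lt_iff_lt_mul hX0).mp k2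
    refine ⟨i, ?_, ?_⟩
    · rw [Finset.mem_range, hn, Nat.lt_succ_iff]
      apply Nat.le_floor
      have k5 : (2 : ℝ) ^ i * X ≤ m := by exact_mod_cast k3
      have k6 : (2 : ℝ) ^ (i : ℝ) * X ≤ 2 ^ C * X := by
        rw [Real.rpow_natCast]
        calc (2 : ℝ) ^ i * X ≤ (2 * (Y : ℝ)) ^ C := by linarith
          _ = 2 ^ C * (Y : ℝ) ^ C := Real.mul_rpow (by norm_num) hYp.le
          _ ≤ _ := by gcongr
      have k7 := le_of_mul_le_mul_right k6 hXp
      exact (Real.rpow_le_rpow_left_iff (by norm_num)).mp k7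
    · rw [Finset.mem_filter, Finset.mem_Ico]
      refine ⟨⟨k3, ?_⟩, h3⟩
      rw [← mul_assoc, ← pow_succ']; exact k4
  have hC0 : 0 < C := by linarith
  have hnl : ∀ m : ℕ, 0 ≤ nodeL C m := by
    intro m
    rcases Nat.eq_zero_or_pos m with rfl | h
    · simp [nodeL]
    · exact (nodeL_pos hC0 h).le
  refine (Finset.sum_le_sum_of_subset_of_nonneg hsub fun m _ _ => hnl m).trans ?_
  refine (sum_biUnion_le' _ _ _ hnl).trans ?_
  have hblk : ∀ i ∈ Finset.range n, ∑ m ∈ (Finset.Ico (2 ^ i * X) (2 * (2 ^ i * X))).filter (bad d), nodeL C m ≤ 64 * e / C := by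
    intro i _
    have hp2 : 1 ≤ 2 ^ i := Nat.one_le_two_pow
    have hZX : X ≤ 2 ^ i * X := Nat.le_mul_of_pos_left X (by positivity)
    have h1 := haa d hd (2 ^ i * X) (hY.trans (hXY.trans hZX))
    set Z := 2 ^ i * X with hZ
    have hZr : (X : ℝ) ≤ Z := by exact_mod_cast hZX
    have hZ0 : (0 : ℝ) < Z := by linarith
    have h2 : Real.exp (-((Real.log Z) ^ (1 / 20 : ℝ) / 8000)) ≤ e := by
      rw [he]
      apply Real.exp_le_exp.mpr
      have : (C * Real.log Y) ^ (1 / 20 : ℝ) ≤ (Real.log Z) ^ (1 / 20 : ℝ) :=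
        Real.rpow_le_rpow (by positivity) (hXlog.trans (Real.log_le_log hXp hZr)) (by norm_num)
      linarith
    have h3 : ∀ m ∈ (Finset.Ico Z (2 * Z)).filter (bad d), nodeL C m ≤ 1 / (Z * C) := by
      intro m hm
      have hm1 := (Finset.mem_Ico.mp (Finset.mem_filter.mp hm).1).1
      have hZ1 : 1 ≤ Z := by exact_mod_cast hZ0
      refine (nodeL_le hC0 (hZ1.trans hm1)).trans ?_
      have : (Z : ℝ) ≤ m := by exact_mod_cast hm1
      gcongr
    refine (Finset.sum_le_card_nsmul _ _ _ h3).trans ?_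
    rw [nsmul_eq_mul]
    calc _ ≤ 64 * Z * e * (1 / (Z * C)) := by
          gcongr
          exact h1.trans (by gcongr)
      _ = _ := by field_simp
  refine (Finset.sum_le_card_nsmul _ _ _ hblk).trans ?_
  rw [nsmul_eq_mul, Finset.card_range]
  calc (n : ℝ) * (64 * e / C) ≤ 2 * C * (64 * e / C) := by gcongr
    _ = _ := by field_simp; ring

open Classical in
/-- As `bad_sum`, but also discarding the node that contains a prescribed point `t`. -/
lemma bad_sum' : ∃ Y0 : ℕ, 4000 ≤ Y0 ∧ ∀ Y : ℕ, Y0 ≤ Y → ∀ C : ℝ, 1 ≤ C → ∀ d : ℝ, 13 / 5 ≤ d → ∀ t : ℝ,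
    ∑ m ∈ (cand Y C).filter (fun m => bad d m ∨ t ∈ nodeI C m), nodeL C m ≤ 129 * Real.exp (-((C * Real.log Y) ^ (1 / 20 : ℝ) / 8000)) := by
  obtain ⟨Y0, hY0, hbs⟩ := bad_sum
  refine ⟨Y0, hY0, fun Y hY C hC d hd t => ?_⟩
  have hYr : (4000 : ℝ) ≤ Y := by exact_mod_cast hY0.trans hY
  have hYp : (0 : ℝ) < Y := by linarith
  have hC0 : 0 < C := by linarith
  have hnl : ∀ m : ℕ, 0 ≤ nodeL C m := by
    intro m
    rcases Nat.eq_zero_or_pos m with rfl | h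
    · simp [nodeL]
    · exact (nodeL_pos hC0 h).le
  have hYC : (Y : ℝ) ≤ (Y : ℝ) ^ C := by
    calc (Y : ℝ) = (Y : ℝ) ^ (1 : ℝ) := (Real.rpow_one _).symm
      _ ≤ _ := Real.rpow_le_rpow_of_exponent_le (by linarith) hC
  have h1 := hbs Y hY C hC d hd
  set e := Real.exp (-((C * Real.log Y) ^ (1 / 20 : ℝ) / 8000)) with he
  rw [Finset.filter_or]
  have hm1 : ∀ m ∈ cand Y C, (Y : ℝ) ^ C ≤ m ∧ 1 ≤ m := by
    intro m hm
    have := (mem_cand.mp hm).1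
    refine ⟨this, ?_⟩
    have : (1 : ℝ) ≤ m := by linarith
    exact_mod_cast this
  have h2 : ∑ m ∈ (cand Y C).filter (fun m => t ∈ nodeI C m), nodeL C m ≤ e := by
    have h3 : ∀ m ∈ (cand Y C).filter (fun m => t ∈ nodeI C m), nodeL C m ≤ e := by
      intro m hm
      obtain ⟨h4, h5⟩ := hm1 m (Finset.mem_filter.mp hm).1
      refine (nodeL_le hC0 h5).trans ?_
      have hlY : 1 ≤ Real.log Y := by
        rw [Real.le_log_iff_exp_le hYp]; linarith [Real.exp_one_lt_d9]
      have hZ : 1 ≤ C * Real.log Y := by nlinarith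
      have hr : (C * Real.log Y) ^ (1 / 20 : ℝ) ≤ C * Real.log Y := by
        calc _ ≤ (C * Real.log Y) ^ (1 : ℝ) := Real.rpow_le_rpow_of_exponent_le hZ (by norm_num)
          _ = _ := Real.rpow_one _
      calc 1 / ((m : ℝ) * C) ≤ 1 / ((Y : ℝ) ^ C * 1) := by gcongr
        _ = Real.exp (-(C * Real.log Y)) := by
            rw [mul_one, Real.rpow_def_of_pos hYp, Real.exp_neg, one_div, mul_comm]
        _ ≤ e := by rw [he]; exact Real.exp_le_exp.mpr (by linarith)
    refine (Finset.sum_le_card_nsmul _ _ _ h3).trans ?_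
    have hcard : ((cand Y C).filter (fun m => t ∈ nodeI C m)).card ≤ 1 := by
      rw [Finset.card_le_one]
      intro a ha b hb
      rw [Finset.mem_filter] at ha hb
      by_contra hne
      exact Set.disjoint_left.mp (nodeI_disjoint hC0 (hm1 a ha.1).2 (hm1 b hb.1).2 hne) ha.2 hb.2
    rw [nsmul_eq_mul]
    have : (((cand Y C).filter (fun m => t ∈ nodeI C m)).card : ℝ) ≤ 1 := by exact_mod_cast hcard
    have he0 : 0 < e := Real.exp_pos _
    nlinarith
  have h3 := Finset.sum_union_inter (s₁ := (cand Y C).filter (bad d)) (s₂ := (cand Y C).filter (fun m => t ∈ nodeI C m)) (f := nodeL C)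
  have h4 := Finset.sum_nonneg (s := (cand Y C).filter (bad d) ∩ (cand Y C).filter (fun m => t ∈ nodeI C m)) (f := nodeL C) (fun m _ => hnl m)
  linarith
end Wright

/-! ### Descending the tree -/

namespace Wright
open MeasureTheory

/-- The product of the weights up to level `j` is beaten by the decay of the measure of the bad sets,
since `C_j ≥ 2 ^ j` makes `exp (-Z^{1/20}/8000)` doubly exponentially small. -/
lemma growth : ∃ Z0 : ℝ, 1 ≤ Z0 ∧ ∀ Z : ℝ, Z0 ≤ Z → ∀ j : ℕ, (2 : ℝ) ^ j ≤ Z →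
    (2560 * Z) ^ j * (129 * Real.exp (-(Z ^ (1 / 20 : ℝ) / 8000))) ≤ 1 / Z := by
  have h := (isLittleO_pow_exp_pos_mul_atTop 2 (show (0 : ℝ) < 1 / 20 by norm_num)).bound
    (show (0 : ℝ) < 1 / 40000 by norm_num)
  obtain ⟨x0, hx0⟩ := Filter.eventually_atTop.mp h
  refine ⟨Real.exp (max x0 10), Real.one_le_exp (by positivity), fun Z hZ j hj => ?_⟩
  have hZ0 : 0 < Z := (Real.exp_pos _).trans_le hZ
  set x := Real.log Z with hx
  have hxm : max x0 10 ≤ x := (Real.le_log_iff_exp_le hZ0).mpr hZ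
  have h10 : 10 ≤ x := (le_max_right _ _).trans hxm
  have hb := hx0 x ((le_max_left _ _).trans hxm)
  rw [Real.norm_of_nonneg (by positivity), Real.norm_of_nonneg (by positivity)] at hb
  have hjx : (j : ℝ) ≤ 2 * x := by
    have h1 := Real.log_le_log (by positivity) hj
    rw [Real.log_pow] at h1
    have := Real.log_two_gt_d9
    have : (j : ℝ) * (1 / 2) ≤ j * Real.log 2 := by gcongr; linarith
    linarith
  have h2560 : (2560 : ℝ) ≤ Real.exp 8 := by
    have := Real.exp_one_gt_d9
    have h2 : Real.exp 8 = Real.exp 1 ^ 8 := by rw [← Real.exp_nat_mul]; norm_num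
    rw [h2]
    calc (2560 : ℝ) ≤ 2.7 ^ 8 := by norm_num
      _ ≤ _ := by gcongr; linarith
  have h129 : (129 : ℝ) ≤ Real.exp 5 := by
    have := Real.exp_one_gt_d9
    have h2 : Real.exp 5 = Real.exp 1 ^ 5 := by rw [← Real.exp_nat_mul]; norm_num
    rw [h2]
    calc (129 : ℝ) ≤ 2.7 ^ 5 := by norm_num
      _ ≤ _ := by gcongr; linarith
  have hZe : Z = Real.exp x := (Real.exp_log hZ0).symm
  have hZr : Z ^ (1 / 20 : ℝ) = Real.exp (1 / 20 * x) := by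
    rw [Real.rpow_def_of_pos hZ0, mul_comm]
  rw [hZr]
  calc (2560 * Z) ^ j * (129 * Real.exp (-(Real.exp (1 / 20 * x) / 8000)))
      ≤ (Real.exp 8 * Real.exp x) ^ j * (Real.exp 5 * Real.exp (-(Real.exp (1 / 20 * x) / 8000))) := by
        rw [← hZe]; gcongr
    _ = Real.exp (j * (8 + x) + (5 - Real.exp (1 / 20 * x) / 8000)) := by
        rw [← Real.exp_add, ← Real.exp_nat_mul, ← Real.exp_add, ← Real.exp_add]; ring_nf
    _ ≤ Real.exp (-x) := by
        apply Real.exp_le_exp.mpr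
        have : (j : ℝ) * (8 + x) ≤ 2 * x * (8 + x) := by gcongr
        nlinarith
    _ = 1 / Z := by rw [Real.exp_neg, ← hZe, one_div]

lemma child_cand {Y m q : ℕ} {C d : ℝ} (hd : 0 < d) (hm : m ∈ cand Y C) (hq : q ∈ chil d m) :
    q ∈ cand Y (C * d) := by
  obtain ⟨h1, h2⟩ := mem_cand.mp hm
  obtain ⟨-, h3, h4⟩ := mem_chil.mp hq
  rw [mem_cand, Real.rpow_mul (by positivity), Real.rpow_mul (by positivity)]
  exact ⟨(Real.rpow_le_rpow (by positivity) h1 hd.le).trans h3,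
    h4.le.trans (Real.rpow_le_rpow (by positivity) h2 hd.le)⟩

lemma cand_pos {Y m : ℕ} {C : ℝ} (hY : 1 ≤ Y) (hm : m ∈ cand Y C) : 1 ≤ m := by
  obtain ⟨h1, h2⟩ := mem_cand.mp hm
  have : (0 : ℝ) < m := lt_of_lt_of_le (Real.rpow_pos_of_pos (by exact_mod_cast hY) _) h1
  exact_mod_cast this

lemma cand_log {Y m : ℕ} {C : ℝ} (hC : 0 < C) (hY : 1 ≤ Y) (hm : m ∈ cand Y C) :
    Real.log (m + 1) / C ≤ Real.log (2 * Y) := by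
  obtain ⟨h1, h2⟩ := mem_cand.mp hm
  have hY0 : (0 : ℝ) < Y := by exact_mod_cast hY
  rw [div_le_iff₀ hC, mul_comm, ← Real.log_rpow (by positivity)]
  exact Real.log_le_log (by positivity) h2

/-- Pigeonhole over the children of a node: if the node is light for `ν` at weight `w` and not bad,
some child is light at weight `w * 1280 * (C * d) * Λ`. -/
lemma step (ν : Measure ℝ) {Y m : ℕ} {C d w : ℝ} (hC : 0 < C) (hd : 0 < d) (hw : 0 ≤ w) (hY : 1 ≤ Y)
    (hm : m ∈ cand Y C) (hb : ¬ bad d m)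
    (hν : ν (nodeI C m) < ENNReal.ofReal (w * nodeL C m)) :
    ∃ q ∈ chil d m, ν (nodeI (C * d) q) <
      ENNReal.ofReal (w * (1280 * (C * d) * Real.log (2 * Y)) * nodeL (C * d) q) := by
  by_contra! hcon
  have hm1 := cand_pos hY hm
  have hCd : 0 < C * d := by positivity
  have hq1 : ∀ q ∈ chil d m, 1 ≤ q := fun q hq => cand_pos hY (child_cand hd hm hq)
  have hΛ : 0 ≤ Real.log (2 * Y) := Real.log_nonneg (by
    have : (1 : ℝ) ≤ Y := by exact_mod_cast hY
    linarith)
  set K := 1280 * (C * d) * Real.log (2 * Y) with hK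
  have hK0 : 0 ≤ K := by positivity
  have hv := child_vol hC hd hm1 (cand_log hC hY hm) hb
  have h1 : ENNReal.ofReal (∑ q ∈ chil d m, w * K * nodeL (C * d) q) ≤ ν (nodeI C m) := by
    rw [ENNReal.ofReal_sum_of_nonneg (fun q hq => mul_nonneg (mul_nonneg hw hK0) (nodeL_pos hCd (hq1 q hq)).le)]
    refine (Finset.sum_le_sum hcon).trans ?_
    rw [← measure_biUnion_finset]
    · exact measure_mono (Set.iUnion₂_subset fun q hq => child_sub hC hd hm1 hq)
    · intro a ha b hb hab
      exact nodeI_disjoint hCd (hq1 a ha) (hq1 b hb) hab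
    · intro q hq
      exact measurableSet_Ico
  have h2 : w * nodeL C m ≤ ∑ q ∈ chil d m, w * K * nodeL (C * d) q := by
    rw [← Finset.mul_sum, mul_assoc]
    gcongr
  exact absurd hν (not_lt.mpr ((ENNReal.ofReal_le_ofReal h2).trans h1))
end Wright

namespace Wright
open MeasureTheory

open Classical in
/-- The union of the discarded nodes at a level with accumulated exponent `C`: those with too few
children for the next exponent `d`, and the one containing `t`. -/
def badSet (Y : ℕ) (C d t : ℝ) : Set ℝ :=
  ⋃ m ∈ (cand Y C).filter (fun m => bad d m ∨ t ∈ nodeI C m), nodeI C m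

lemma nodeL_nonneg {C : ℝ} (hC : 0 < C) (m : ℕ) : 0 ≤ nodeL C m := by
  rcases Nat.eq_zero_or_pos m with rfl | h
  · simp [nodeL]
  · exact (nodeL_pos hC h).le

lemma badSet_vol : ∃ Y0 : ℕ, 4000 ≤ Y0 ∧ ∀ Y : ℕ, Y0 ≤ Y → ∀ C : ℝ, 1 ≤ C → ∀ d : ℝ, 13 / 5 ≤ d → ∀ t : ℝ,
    volume (badSet Y C d t) ≤ ENNReal.ofReal (129 * Real.exp (-((C * Real.log Y) ^ (1 / 20 : ℝ) / 8000))) := by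
  obtain ⟨Y0, hY0, h⟩ := bad_sum'
  refine ⟨Y0, hY0, fun Y hY C hC d hd t => ?_⟩
  refine (measure_biUnion_finset_le _ _).trans ?_
  simp_rw [nodeI_vol]
  rw [← ENNReal.ofReal_sum_of_nonneg (fun m _ => nodeL_nonneg (by linarith) m)]
  exact ENNReal.ofReal_le_ofReal (h Y hY C hC d hd t)

/-- Total exponent after `j` steps. -/
noncomputable def Cp (d : ℕ → ℝ) (j : ℕ) : ℝ := ∏ i ∈ Finset.range j, d i

lemma Cp_succ (d : ℕ → ℝ) (j : ℕ) : Cp d (j + 1) = Cp d j * d j := Finset.prod_range_succ _ _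

lemma Cp_ge {d : ℕ → ℝ} (hd : ∀ j, 13 / 5 ≤ d j) (j : ℕ) : (2 : ℝ) ^ j ≤ Cp d j := by
  induction j with
  | zero => simp [Cp]
  | succ j ih =>
    rw [Cp_succ, pow_succ]
    have := hd j
    have h2 : (0 : ℝ) ≤ Cp d j := le_trans (by positivity) ih
    exact mul_le_mul ih (by linarith) (by norm_num) h2

/-- Weights: a bad node at level `j` is charged `wt j` times its length. -/
noncomputable def wt (d : ℕ → ℝ) (Y : ℕ) : ℕ → ℝ
  | 0 => 1
  | j + 1 => wt d Y j * (1280 * (Cp d j * d j) * Real.log (2 * Y))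

/-- The measure charging bad nodes at every level. -/
noncomputable def charge (d t : ℕ → ℝ) (Y : ℕ) : Measure ℝ :=
  Measure.sum fun j => ENNReal.ofReal (wt d Y j) • volume.restrict (badSet Y (Cp d j) (d j) (t j))

lemma wt_bound {d : ℕ → ℝ} (hd : ∀ j, 13 / 5 ≤ d j) {Y : ℕ} (hY : 2 ≤ Y) (j : ℕ) :
    0 ≤ wt d Y j ∧ wt d Y j ≤ (2560 * (Cp d j * Real.log Y)) ^ j := by
  have hYr : (2 : ℝ) ≤ Y := by exact_mod_cast hY
  have hl : 0 ≤ Real.log Y := Real.log_nonneg (by linarith)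
  have hl2 : 0 ≤ Real.log (2 * Y) := Real.log_nonneg (by linarith)
  have hL : Real.log (2 * Y) ≤ 2 * Real.log Y := by
    rw [Real.log_mul (by norm_num) (by positivity)]
    have := Real.log_le_log (by norm_num) hYr
    linarith
  induction j with
  | zero => simp [wt]
  | succ j ih =>
    have hC := Cp_ge hd j
    have hCp : 0 < Cp d j := lt_of_lt_of_le (by positivity) hC
    have hdj := hd j
    have hd0 : 0 < d j := by linarith
    rw [wt, Cp_succ]
    refine ⟨mul_nonneg ih.1 (by positivity), ?_⟩
    calc wt d Y j * (1280 * (Cp d j * d j) * Real.log (2 * Y))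
        ≤ (2560 * (Cp d j * Real.log Y)) ^ j * (1280 * (Cp d j * d j) * (2 * Real.log Y)) := by
          gcongr
          exact ih.2
      _ ≤ (2560 * (Cp d j * d j * Real.log Y)) ^ j * (1280 * (Cp d j * d j) * (2 * Real.log Y)) := by
          gcongr
          nlinarith
      _ = _ := by rw [pow_succ]; ring

/-- For a large starting point `Y0`, independent of the exponents and of the points `t j`, the total
charge is smaller than the length `log 2` of the root interval. -/
lemma charge_univ : ∃ Y0 : ℕ, 4000 ≤ Y0 ∧ ∀ d t : ℕ → ℝ, (∀ j, 13 / 5 ≤ d j) →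
    charge d t Y0 Set.univ < ENNReal.ofReal (Real.log 2) := by
  obtain ⟨Y1, hY1, hvol⟩ := badSet_vol
  obtain ⟨Z0, hZ0, hgr⟩ := growth
  have hev := (Real.tendsto_log_atTop.comp tendsto_natCast_atTop_atTop).eventually_ge_atTop (max Z0 4)
  obtain ⟨Y, hYl, hY⟩ := (hev.and (Filter.eventually_ge_atTop Y1)).exists
  rw [Function.comp_apply] at hYl
  refine ⟨Y, hY1.trans hY, fun d t hd => ?_⟩
  have hl4 : 4 ≤ Real.log Y := (le_max_right _ _).trans hYl
  have hlZ : Z0 ≤ Real.log Y := (le_max_left _ _).trans hYl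
  rw [charge, Measure.sum_apply _ MeasurableSet.univ]
  have hterm : ∀ j, (ENNReal.ofReal (wt d Y j) • volume.restrict (badSet Y (Cp d j) (d j) (t j))) Set.univ
      ≤ ENNReal.ofReal (1 / Real.log Y * (1 / 2) ^ j) := by
    intro j
    rw [Measure.smul_apply, Measure.restrict_apply_univ, smul_eq_mul]
    obtain ⟨hw0, hw⟩ := wt_bound hd (show 2 ≤ Y by omega) j
    have hC := Cp_ge hd j
    have h2j : (1 : ℝ) ≤ 2 ^ j := one_le_pow₀ (by norm_num)
    have hC1 : 1 ≤ Cp d j := h2j.trans hC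
    refine (mul_le_mul_right (hvol Y hY _ hC1 _ (hd j) (t j)) _).trans ?_
    rw [← ENNReal.ofReal_mul hw0]
    apply ENNReal.ofReal_le_ofReal
    have hZ : (2 : ℝ) ^ j * Real.log Y ≤ Cp d j * Real.log Y := by gcongr
    refine le_trans (mul_le_mul_of_nonneg_right hw (by positivity)) ?_
    refine (hgr (Cp d j * Real.log Y) (by nlinarith) j (by nlinarith)).trans ?_
    calc 1 / (Cp d j * Real.log Y) ≤ 1 / (2 ^ j * Real.log Y) := by gcongr
      _ = _ := by rw [one_div_pow]; field_simp
  refine (ENNReal.tsum_le_tsum hterm).trans_lt ?_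
  have hs : Summable fun j : ℕ => 1 / Real.log Y * (1 / 2 : ℝ) ^ j := summable_geometric_two.mul_left _
  rw [← ENNReal.ofReal_tsum_of_nonneg (fun j => by positivity) hs, tsum_mul_left, tsum_geometric_two]
  rw [ENNReal.ofReal_lt_ofReal_iff (Real.log_pos (by norm_num))]
  have := Real.log_two_gt_d9
  have : 1 / Real.log Y ≤ 1 / 4 := by gcongr
  linarith

/-- A node lighter than its weight is not discarded. -/
lemma not_bad_of_light {d t : ℕ → ℝ} {Y j m : ℕ} (hC : 0 < Cp d j) (hw : 0 ≤ wt d Y j) (hm : m ∈ cand Y (Cp d j))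
    (hν : charge d t Y (nodeI (Cp d j) m) < ENNReal.ofReal (wt d Y j * nodeL (Cp d j) m)) :
    ¬ bad (d j) m ∧ t j ∉ nodeI (Cp d j) m := by
  classical
  rw [← not_or]
  intro hb
  refine absurd hν (not_lt.mpr ?_)
  have hsub : nodeI (Cp d j) m ⊆ badSet Y (Cp d j) (d j) (t j) := by
    refine Set.subset_iUnion₂_of_subset m ?_ subset_rfl
    rw [Finset.mem_filter]
    exact ⟨hm, hb⟩
  have hI : MeasurableSet (nodeI (Cp d j) m) := measurableSet_Ico
  rw [charge, Measure.sum_apply _ hI]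
  refine le_trans ?_ (ENNReal.le_tsum j)
  rw [Measure.smul_apply, Measure.restrict_apply hI, Set.inter_eq_left.mpr hsub, nodeI_vol, smul_eq_mul,
    ENNReal.ofReal_mul hw]

/-- The level-zero nodes fill an interval of length `log 2`, so one of them is light. -/
lemma root_exists (ν : Measure ℝ) {Y : ℕ} (hY : 1 ≤ Y) (hν : ν Set.univ < ENNReal.ofReal (Real.log 2)) :
    ∃ m ∈ cand Y 1, ν (nodeI 1 m) < ENNReal.ofReal (nodeL 1 m) := by
  by_contra! hcon
  have hY0 : (0 : ℝ) < Y := by exact_mod_cast hY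
  have hsum : ∑ i ∈ Finset.range Y, nodeL 1 (Y + i) = Real.log 2 := by
    have := Finset.sum_range_sub (fun i : ℕ => Real.log ((Y + i : ℕ) : ℝ)) Y
    calc _ = ∑ i ∈ Finset.range Y, (Real.log ((Y + (i + 1) : ℕ) : ℝ) - Real.log ((Y + i : ℕ) : ℝ)) := by
          refine Finset.sum_congr rfl fun i _ => ?_
          rw [nodeL, div_one]; push_cast; ring_nf
      _ = _ := by
          rw [this]; push_cast
          rw [add_zero, ← two_mul, Real.log_mul (by norm_num) hY0.ne']; ring
  have hc : ∀ i ∈ Finset.range Y, ENNReal.ofReal (nodeL 1 (Y + i)) ≤ ν (nodeI 1 (Y + i)) := by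
    intro i hi
    apply hcon
    rw [mem_cand, Real.rpow_one, Real.rpow_one]
    have : (i : ℝ) + 1 ≤ Y := by exact_mod_cast Finset.mem_range.mp hi
    push_cast
    constructor <;> linarith [Nat.cast_nonneg (α := ℝ) i]
  refine absurd hν (not_lt.mpr ?_)
  rw [← hsum, ENNReal.ofReal_sum_of_nonneg (fun i _ => nodeL_nonneg one_pos _)]
  refine (Finset.sum_le_sum hc).trans ?_
  rw [← measure_biUnion_finset]
  · exact measure_mono (Set.subset_univ _)
  · intro a _ b _ hab
    exact nodeI_disjoint one_pos (by omega) (by omega) (by omega)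
  · intro i _
    exact measurableSet_Ico

/-- Dependent choice along the levels. -/
lemma exists_chain (P : ℕ → ℕ → Prop) (R : ℕ → ℕ → ℕ → Prop) (m0 : ℕ) (h0 : P 0 m0)
    (key : ∀ j m, P j m → ∃ q, R j m q ∧ P (j + 1) q) :
    ∃ ms : ℕ → ℕ, (∀ j, P j (ms j)) ∧ ∀ j, R j (ms j) (ms (j + 1)) := by
  choose! f hf using key
  have hP : ∀ j, P j (Nat.rec (motive := fun _ => ℕ) m0 f j) := by
    intro j
    induction j with
    | zero => exact h0
    | succ j ih => exact (hf j _ ih).2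
  exact ⟨fun j => Nat.rec (motive := fun _ => ℕ) m0 f j, hP, fun j => (hf j _ (hP j)).1⟩

/-- Walking down the tree through light nodes gives a nested sequence of half-open intervals whose
upper endpoints strictly decrease, so the supremum of the lower endpoints lies in all of them. It
avoids every `t j`, since the node containing `t j` is discarded at level `j`. -/
lemma tree {d : ℕ → ℝ} (hd : ∀ j, 13 / 5 ≤ d j) (t : ℕ → ℝ) :
    ∃ θ : ℝ, 0 < θ ∧ (∀ j, θ ≠ t j) ∧ ∀ j, Nat.Prime ⌊Real.exp (θ * Cp d (j + 1))⌋₊ := by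
  obtain ⟨Y, hY, hch⟩ := charge_univ
  have hν := hch d t hd
  set ν := charge d t Y with hνdef
  have hCpos : ∀ j, 0 < Cp d j := fun j => lt_of_lt_of_le (by positivity) (Cp_ge hd j)
  have hdpos : ∀ j, 0 < d j := fun j => by linarith [hd j]
  have hw : ∀ j, 0 ≤ wt d Y j := fun j => (wt_bound hd (by omega) j).1
  let P : ℕ → ℕ → Prop := fun j m => m ∈ cand Y (Cp d j) ∧
    ν (nodeI (Cp d j) m) < ENNReal.ofReal (wt d Y j * nodeL (Cp d j) m)
  have key : ∀ j m, P j m → ∃ q, q ∈ chil (d j) m ∧ P (j + 1) q := by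
    intro j m hP
    obtain ⟨q, hq, hq2⟩ := step ν (hCpos j) (hdpos j) (hw j) (by omega) hP.1
      (not_bad_of_light (hCpos j) (hw j) hP.1 hP.2).1 hP.2
    refine ⟨q, hq, ?_, ?_⟩
    · rw [Cp_succ]; exact child_cand (hdpos j) hP.1 hq
    · rw [Cp_succ, wt]; exact hq2
  obtain ⟨m0, hm0, hm0'⟩ := root_exists ν (show 1 ≤ Y by omega) hν
  have hP0 : P 0 m0 := by
    refine ⟨?_, ?_⟩
    · simpa [Cp] using hm0
    · simpa [Cp, wt] using hm0'
  obtain ⟨ms, hms, hchil⟩ := exists_chain P (fun j m q => q ∈ chil (d j) m) m0 hP0 key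
  have hm1 : ∀ j, 1 ≤ ms j := fun j => cand_pos (by omega) (hms j).1
  set lo : ℕ → ℝ := fun j => Real.log ((ms j : ℕ) : ℝ) / Cp d j with hlo
  set hi : ℕ → ℝ := fun j => Real.log (((ms j : ℕ) : ℝ) + 1) / Cp d j with hhi
  have hlomono : Monotone lo := monotone_nat_of_le_succ fun j => by
    have := child_lo (hCpos j) (hdpos j) (hm1 j) (hchil j)
    simpa only [hlo, Cp_succ] using this
  have hhianti : StrictAnti hi := strictAnti_nat_of_succ_lt fun j => by
    have := child_hi (hCpos j) (hdpos j) (hm1 j) (hchil j)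
    simpa only [hhi, Cp_succ] using this
  have hlohi : ∀ j, lo j ≤ hi j := fun j =>
    div_le_div_of_nonneg_right (log_lt_log_succ (hm1 j)).le (hCpos j).le
  have hlh : ∀ i j, lo i ≤ hi j := fun i j =>
    (hlomono (le_max_left i j)).trans ((hlohi _).trans (hhianti.antitone (le_max_right i j)))
  have hbdd : BddAbove (Set.range lo) := ⟨hi 0, by rintro _ ⟨i, rfl⟩; exact hlh i 0⟩
  set θ := ⨆ i, lo i with hθ
  have hθlo : ∀ j, lo j ≤ θ := fun j => le_ciSup hbdd j
  have hθhi : ∀ j, θ < hi j := fun j =>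
    (ciSup_le fun i => hlh i (j + 1)).trans_lt (hhianti (Nat.lt_succ_self j))
  have hmem : ∀ j, θ ∈ nodeI (Cp d j) (ms j) := fun j => Set.mem_Ico.mpr ⟨hθlo j, hθhi j⟩
  refine ⟨θ, ?_, ?_, ?_⟩
  · refine lt_of_lt_of_le ?_ (hθlo 0)
    refine div_pos (Real.log_pos ?_) (hCpos 0)
    have h1 := (mem_cand.mp (hms 0).1).1
    simp only [Cp, Finset.range_zero, Finset.prod_empty, Real.rpow_one] at h1
    have : (4000 : ℝ) ≤ Y := by exact_mod_cast hY
    linarith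
  · intro j hj
    exact (not_bad_of_light (hCpos j) (hw j) (hms j).1 (hms j).2).2 (hj ▸ hmem j)
  · intro j
    have hC := hCpos (j + 1)
    have h0 : (0 : ℝ) < ms (j + 1) := by exact_mod_cast hm1 (j + 1)
    have hfl : ⌊Real.exp (θ * Cp d (j + 1))⌋₊ = ms (j + 1) := by
      rw [Nat.floor_eq_iff (Real.exp_pos _).le]
      have h1 := (div_le_iff₀ hC).mp (hθlo (j + 1))
      have h2 := (lt_div_iff₀ hC).mp (hθhi (j + 1))
      exact ⟨(Real.log_le_iff_le_exp h0).mp h1, (Real.lt_log_iff_exp_lt (by positivity)).mp h2⟩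
    rw [hfl]
    exact (mem_chil.mp (hchil j)).1
end Wright

/-! ### Porosity and the theorem -/

namespace Wright
open MeasureTheory Filter Topology

/-- The set `log W`: the `θ > 0` such that `exp θ` represents primes along the exponents `Cp d`. -/
def logW (d : ℕ → ℝ) : Set ℝ := {θ | 0 < θ ∧ ∀ j, Nat.Prime ⌊Real.exp (θ * Cp d (j + 1))⌋₊}

lemma measurableSet_logW (d : ℕ → ℝ) : MeasurableSet (logW d) := by
  have h : logW d = Set.Ioi 0 ∩ ⋂ j, (fun θ : ℝ => ⌊Real.exp (θ * Cp d (j + 1))⌋₊) ⁻¹' {n | n.Prime} := by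
    ext θ; simp [logW]
  rw [h]
  refine measurableSet_Ioi.inter (MeasurableSet.iInter fun j => ?_)
  exact (Nat.measurable_floor.comp (by fun_prop)) (MeasurableSet.of_discrete)

/-- `logW d` is porous: just above each of its points, at arbitrarily small scales, there is a gap of
proportional length. The gap comes from the composite even number following an odd prime. -/
lemma hole {d : ℕ → ℝ} (hd : ∀ j, 13 / 5 ≤ d j) {θ : ℝ} (hθ : θ ∈ logW d) {δ : ℝ} (hδ : 0 < δ) :
    ∃ u v : ℝ, θ < u ∧ u < v ∧ v < θ + δ ∧ v - θ ≤ 4 * (v - u) ∧ Disjoint (Set.Ioo u v) (logW d) := by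
  obtain ⟨hθ0, hpr⟩ := hθ
  obtain ⟨j, hj⟩ : ∃ j : ℕ, max (3 / θ) (2 / δ) < (2 : ℝ) ^ j := pow_unbounded_of_one_lt _ (by norm_num)
  have hp := hpr j
  have hC : (2 : ℝ) ^ (j + 1) ≤ Cp d (j + 1) := Cp_ge hd (j + 1)
  have hC2 : (2 : ℝ) ^ j < Cp d (j + 1) := lt_of_lt_of_le (by rw [pow_succ]; linarith [show (0 : ℝ) < 2 ^ j by positivity]) hC
  set C := Cp d (j + 1) with hCdef
  have hC0 : 0 < C := lt_trans (by positivity) hC2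
  have h3 : 3 < θ * C := by
    have := ((le_max_left _ _).trans_lt hj).trans hC2
    rw [div_lt_iff₀ hθ0] at this; linarith
  have h1 : 2 < δ * C := by
    have := ((le_max_right _ _).trans_lt hj).trans hC2
    rw [div_lt_iff₀ hδ] at this; linarith
  set p := ⌊Real.exp (θ * C)⌋₊ with hpdef
  have hp3 : 3 ≤ p := by
    apply Nat.le_floor
    have := Real.add_one_le_exp (θ * C)
    push_cast; linarith
  have hpr3 : (3 : ℝ) ≤ p := by exact_mod_cast hp3
  have hcomp : ¬ Nat.Prime (p + 1) := by
    intro hq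
    have := hp.eq_two_or_odd
    have := hq.eq_two_or_odd
    omega
  have hple : (p : ℝ) ≤ Real.exp (θ * C) := Nat.floor_le (Real.exp_pos _).le
  have hplt : Real.exp (θ * C) < p + 1 := Nat.lt_floor_add_one _
  have hl1 : Real.log p ≤ θ * C := (Real.log_le_iff_le_exp (by positivity)).mpr hple
  have hl2 : θ * C < Real.log (p + 1) := (Real.lt_log_iff_exp_lt (by positivity)).mpr hplt
  have hgap : 1 / ((p : ℝ) + 2) ≤ Real.log (p + 2) - Real.log (p + 1) := by
    have := log_succ_sub (m := p + 1) (by omega)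
    push_cast at this
    convert this using 2 <;> ring_nf
  have hup : Real.log (p + 2) - Real.log p ≤ 2 / p := by
    rw [← Real.log_div (by positivity) (by positivity)]
    have := Real.log_le_sub_one_of_pos (show (0 : ℝ) < ((p : ℝ) + 2) / p by positivity)
    refine this.trans (le_of_eq ?_)
    field_simp; ring
  have h2p : 2 / (p : ℝ) ≤ 4 * (1 / ((p : ℝ) + 2)) := by
    rw [mul_one_div, div_le_div_iff₀ (by positivity) (by positivity)]; linarith
  have h2p' : 2 / (p : ℝ) ≤ 2 := by rw [div_le_iff₀ (by positivity)]; linarith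
  have hgp : 0 < 1 / ((p : ℝ) + 2) := by positivity
  refine ⟨Real.log (p + 1) / C, Real.log (p + 2) / C, ?_, ?_, ?_, ?_, ?_⟩
  · rw [lt_div_iff₀ hC0]; exact hl2
  · gcongr; linarith
  · rw [div_lt_iff₀ hC0]; nlinarith
  · rw [← sub_div, sub_le_iff_le_add, div_le_iff₀ hC0, add_mul, mul_assoc, div_mul_cancel₀ _ hC0.ne']
    linarith
  · rw [Set.disjoint_left]
    rintro x ⟨hx1, hx2⟩ ⟨-, hx⟩
    rw [div_lt_iff₀ hC0] at hx1
    rw [lt_div_iff₀ hC0] at hx2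
    have hfl : ⌊Real.exp (x * C)⌋₊ = p + 1 := by
      rw [Nat.floor_eq_iff (Real.exp_pos _).le]
      push_cast
      refine ⟨((Real.log_lt_iff_lt_exp (by positivity)).mp hx1).le, ?_⟩
      have := (Real.lt_log_iff_exp_lt (by positivity)).mp hx2
      linarith
    have := hx j
    rw [← hCdef, hfl] at this
    exact hcomp this

/-- Porosity excludes density points, so the set is null by Lebesgue's density theorem. -/
lemma logW_null {d : ℕ → ℝ} (hd : ∀ j, 13 / 5 ≤ d j) : volume (logW d) = 0 := by
  have hae := Besicovitch.ae_tendsto_measure_inter_div_of_measurableSet (volume : Measure ℝ) (measurableSet_logW d)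
  rw [measure_eq_zero_iff_ae_notMem]
  filter_upwards [hae] with θ hlim hθ
  rw [Set.indicator_of_mem hθ, Pi.one_apply] at hlim
  have hev := hlim.eventually (lt_mem_nhds (show ENNReal.ofReal (7 / 8) < 1 by
    rw [ENNReal.ofReal_lt_one]; norm_num))
  rw [eventually_nhdsWithin_iff, Metric.eventually_nhds_iff] at hev
  obtain ⟨δ, hδ, hev⟩ := hev
  obtain ⟨u, v, hu, huv, hv, h4, hdis⟩ := hole hd hθ hδ
  have hr : 0 < v - θ := by linarith
  have h := hev (y := v - θ) (by rw [Real.dist_eq, sub_zero, abs_of_pos hr]; linarith) hr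
  refine absurd h (not_lt.mpr ?_)
  rw [Real.volume_closedBall]
  have hsub : logW d ∩ Metric.closedBall θ (v - θ) ⊆ Set.Icc (θ - (v - θ)) u ∪ {v} := by
    rintro x ⟨hx, hxb⟩
    rw [Real.closedBall_eq_Icc] at hxb
    rw [Set.mem_union, Set.mem_Icc, Set.mem_singleton_iff]
    have h2 := hxb.2
    by_cases hxu : x ≤ u
    · exact Or.inl ⟨hxb.1, hxu⟩
    · right
      by_contra hne
      have hxv : x < v := lt_of_le_of_ne (by linarith) hne
      exact Set.disjoint_left.mp hdis ⟨not_le.mp hxu, hxv⟩ hx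
  have hvol : volume (logW d ∩ Metric.closedBall θ (v - θ)) ≤ ENNReal.ofReal (u - (θ - (v - θ))) := by
    refine (measure_mono hsub).trans ((measure_union_le _ _).trans ?_)
    rw [Real.volume_Icc, Real.volume_singleton, add_zero]
  refine ENNReal.div_le_of_le_mul (hvol.trans ?_)
  rw [← ENNReal.ofReal_mul (by norm_num)]
  apply ENNReal.ofReal_le_ofReal
  linarith

lemma exp_logW_null {d : ℕ → ℝ} (hd : ∀ j, 13 / 5 ≤ d j) : volume (Real.exp '' logW d) = 0 :=
  addHaar_image_eq_zero_of_differentiableOn_of_addHaar_eq_zero volume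
    Real.differentiable_exp.differentiableOn (logW_null hd)

lemma exp_logW_nowhereDense {d : ℕ → ℝ} (hd : ∀ j, 13 / 5 ≤ d j) : IsNowhereDense (Real.exp '' logW d) := by
  rw [IsNowhereDense, Set.eq_empty_iff_forall_notMem]
  intro x hx
  set U := interior (closure (Real.exp '' logW d)) with hU
  have hUo : IsOpen U := isOpen_interior
  obtain ⟨_, hAU, θ, hθ, rfl⟩ := mem_closure_iff.mp (interior_subset hx) U hUo hx
  have hpre : Real.exp ⁻¹' U ∈ 𝓝 θ := Real.continuous_exp.continuousAt (hUo.mem_nhds hAU)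
  obtain ⟨δ, hδ, hball⟩ := Metric.mem_nhds_iff.mp hpre
  obtain ⟨u, v, hu, huv, hv, -, hdis⟩ := hole hd hθ hδ
  have hmid : Real.exp ((u + v) / 2) ∈ U := by
    apply hball
    rw [Metric.mem_ball, Real.dist_eq, abs_of_pos (by linarith)]; linarith
  obtain ⟨_, hI, θ', hθ', rfl⟩ := mem_closure_iff.mp (interior_subset hmid) (Set.Ioo (Real.exp u) (Real.exp v)) isOpen_Ioo
    ⟨Real.exp_lt_exp.mpr (by linarith), Real.exp_lt_exp.mpr (by linarith)⟩
  exact Set.disjoint_left.mp hdis ⟨Real.exp_lt_exp.mp hI.1, Real.exp_lt_exp.mp hI.2⟩ hθ'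

lemma exp_logW_not_countable {d : ℕ → ℝ} (hd : ∀ j, 13 / 5 ≤ d j) : ¬ (Real.exp '' logW d).Countable := by
  intro h0
  have h := Set.countable_of_injective_of_countable_image Real.exp_injective.injOn h0
  obtain ⟨f, hf⟩ := Set.countable_iff_exists_subset_range.mp h
  obtain ⟨θ, h0, hne, hp⟩ := tree hd f
  obtain ⟨j, hj⟩ := hf (show θ ∈ logW d from ⟨h0, hp⟩)
  exact hne j hj.symm

end Wright

open Real Set

/-- **Theorem (Wright).** Let `ε > 0` and let `(c_k)` satisfy `c_k ≥ 925/348 + ε` for all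
`k ≥ 1`; `C_k = c_1 ⋯ c_k`. Then `W(c_k) = {A > 1 : ⌊A^{C_k}⌋ prime for all k ≥ 1}` is
uncountable, nowhere dense, and has Lebesgue measure `0`. -/
theorem wright_prime_representing_set_properties
    (ε : ℝ) (hε : 0 < ε) (c : ℕ → ℝ) (hc : ∀ k ≥ 1, 925 / 348 + ε ≤ c k)
    (C : ℕ → ℝ) (hC : ∀ k ≥ 1, C k = ∏ i ∈ Finset.Icc 1 k, c i)
    (W : Set ℝ) (hW : W = {A : ℝ | 1 < A ∧ ∀ k ≥ 1, Nat.Prime ⌊A ^ C k⌋₊}) :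
    ¬ W.Countable ∧ IsNowhereDense W ∧ MeasureTheory.volume W = 0 := by
  have hd : ∀ j, 13 / 5 ≤ (fun j => c (j + 1)) j := fun j => by
    have := hc (j + 1) (by omega)
    norm_num at this ⊢; linarith
  have hCC : ∀ j, C (j + 1) = Wright.Cp (fun j => c (j + 1)) (j + 1) := by
    intro j
    rw [hC _ (by omega), Wright.Cp, Finset.range_eq_Ico, Finset.prod_Ico_add' c 0 (j + 1) 1]
    rfl
  have hWe : W = Real.exp '' Wright.logW (fun j => c (j + 1)) := by
    rw [hW]
    ext A
    constructor
    · rintro ⟨hA, hp⟩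
      have hA0 : 0 < A := by linarith
      refine ⟨Real.log A, ⟨Real.log_pos hA, fun j => ?_⟩, Real.exp_log hA0⟩
      rw [← hCC, ← Real.rpow_def_of_pos hA0]
      exact hp _ (by omega)
    · rintro ⟨θ, ⟨h0, hp⟩, rfl⟩
      refine ⟨Real.one_lt_exp_iff.mpr h0, fun k hk => ?_⟩
      obtain ⟨j, rfl⟩ : ∃ j, k = j + 1 := ⟨k - 1, by omega⟩
      rw [← Real.exp_mul, hCC]
      exact hp j
  rw [hWe]
  exact ⟨Wright.exp_logW_not_countable hd, Wright.exp_logW_nowhereDense hd, Wright.exp_logW_null hd⟩
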